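/- Let R be an analytically unramified Noetherian local ring and let I, J be ideals of positive height. If the bigraded Rees ring R̄(I,J) = ⊕_{r,s ≥ 0} (I^r J^s‾) t₁^r t₂^s is Cohen–Macaulay, then the Rees ring R̄(IJ) = ⊕_{n ≥ 0} ((IJ)^n‾) t^n is Cohen–Macaulay. -/

import Mathlib

/-!
Write `S = R̄(I,J)`, graded by the difference degree `r - s`. The map `t ↦ t₁ t₂` (`psi`) identifies
`R̄(IJ)` with the degree zero part `Δ` of `S`, so the theorem is a descent statement for the
Cohen–Macaulay property along `Δ ⊆ S`. It is proved through the vanishing of local cohomology.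

Local cohomology is handled through Čech complexes whose terms are subgroups of powers of one ring `L`
in which the elements involved are units (`sat`, `C`, `d`); exactness is stated elementwise, up to
multiplication by a set of multipliers (`Ex`), so that localizations of the base need not be formed.
`depth_lemma` and `end_lemma` translate between regular sequences and the vanishing of cohomology.

Since `R` is analytically unramified, it is reduced, and `I`, `J` contain non-zero-divisors. The ring
`S` is integral over the ordinary bigraded Rees ring, and Cohen–Macaulayness at its graded maximal
ideal forces it to be finite there: the lengths of the finite submodules modulo a regular sequence of
parameters are bounded (`count_main`, `S_finite`). In particular `S` is Noetherian.

For a Cohen–Macaulay ring with a nonnegative grading, induction on the height of the primes containing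
all elements of positive degree shows that local cohomology with support in these elements vanishes in
degrees `≥ 0`, provided it does so generically (`rows`). For `S`, graded by either of the two
coordinates, this yields that the local cohomology with respect to `I t₁`, and to `J t₂`, vanishes in
difference degree zero (`row_w`).

Finally let `Q` be a prime of `Δ` and `PQ Q` the largest homogeneous ideal of `S` over it, a prime. If
some product `f g` with `f ∈ I t₁`, `g ∈ J t₂` is not in `PQ Q`, then locally `PQ Q` is the radical of
`Q S`, its height is at least that of `Q`, and the vanishing below `ht Q` passes from `S` to `Δ`.
Otherwise `PQ Q` contains all elements of nonzero degree and its height is at least `ht Q + 1`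
(`ht_case2`); a Mayer–Vietoris argument (`chase_gr`) for the supports in `I t₁ + Q` and `J t₂ + Q`,
which do not contribute in degree zero, gives the vanishing below `ht Q` on `Δ` (`cm_deg0`). In both
cases `Δ` is Cohen–Macaulay at `Q` (`conclusion`).
-/

/-! ### Basic notions: integral closure of ideals, analytic unramifiedness,
lengths, regular sequences, Cohen-Macaulayness, primary ideals -/

/-- `x` is integral over the ideal `I`: it satisfies an equation
`x^n + a₁ x^(n-1) + ⋯ + aₙ = 0` with `aᵢ ∈ Iⁱ`. -/
def IsIntegralOverIdeal {R : Type*} [CommRing R] (I : Ideal R) (x : R) : Prop :=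
  ∃ n : ℕ, 0 < n ∧ ∃ c : ℕ → R, (∀ i, c i ∈ I ^ i) ∧
    x ^ n + ∑ i ∈ Finset.range n, c (i + 1) * x ^ (n - (i + 1)) = 0

/-- The integral closure `\overline{I}` of an ideal `I` (the set of elements integral
over `I` is an ideal, so it coincides with the ideal it spans). -/
noncomputable def intCl {R : Type*} [CommRing R] (I : Ideal R) : Ideal R :=
  Ideal.span {x | IsIntegralOverIdeal I x}

/-- A local ring is analytically unramified if its `𝔪`-adic completion is reduced. -/
def AnalyticallyUnramified (R : Type*) [CommRing R] [IsLocalRing R] : Prop :=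
  IsReduced (AdicCompletion (IsLocalRing.maximalIdeal R) R)

/-- The length `λ(M)` of a module, as the Krull dimension of its lattice of submodules. -/
noncomputable def moduleLength (R M : Type*) [Ring R] [AddCommGroup M] [Module R M] :
    WithBot ℕ∞ :=
  Order.krullDim (Submodule R M)

/-- `f` is a regular sequence on the module `M`. -/
def IsRegularSeq {R : Type*} (M : Type*) [CommRing R] [AddCommGroup M] [Module R M]
    {n : ℕ} (f : Fin n → R) : Prop :=
  (∀ i : Fin n, ∀ z : M,
      f i • z ∈ Ideal.span (f '' {j | j < i}) • (⊤ : Submodule R M) →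
      z ∈ Ideal.span (f '' {j | j < i}) • (⊤ : Submodule R M)) ∧
  Ideal.span (Set.range f) • (⊤ : Submodule R M) ≠ ⊤

/-- A local ring is Cohen-Macaulay if there is a regular sequence of length
`dim` inside the maximal ideal. -/
def IsCMLocalRing (A : Type*) [CommRing A] [IsLocalRing A] : Prop :=
  ∃ (n : ℕ) (f : Fin n → A), (∀ i, f i ∈ IsLocalRing.maximalIdeal A) ∧
    IsRegularSeq A f ∧ (n : WithBot ℕ∞) = ringKrullDim A

/-- A commutative ring is Cohen-Macaulay if all its localizations at primes are. -/
def IsCMRing (A : Type*) [CommRing A] : Prop :=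
  ∀ (P : Ideal A) (_ : P.IsPrime), IsCMLocalRing (Localization.AtPrime P)

/-- An ideal of a local ring is `𝔪`-primary if its radical is the maximal ideal. -/
def IsMPrimary {R : Type*} [CommRing R] [IsLocalRing R] (I : Ideal R) : Prop :=
  I.radical = IsLocalRing.maximalIdeal R

/-- `I^r J^s` for `r s : ℤ`, with the convention that nonpositive powers give the
unit ideal. -/
noncomputable def IJ {R : Type*} [CommRing R] (I J : Ideal R) (r s : ℤ) : Ideal R :=
  I ^ r.toNat * J ^ s.toNat

/-- `\overline{I^r J^s}` for `r s : ℤ`. -/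
noncomputable def IJbar {R : Type*} [CommRing R] (I J : Ideal R) (r s : ℤ) : Ideal R :=
  intCl (IJ I J r s)

/-- A good joint reduction `(a,b)` of the filtration `{\overline{I^r J^s}}`:
a joint reduction such that moreover `(a) ∩ \overline{I^r J^s} = a ⬝ \overline{I^{r-1} J^s}`
for all `s` and all `r > 0`, and symmetrically for `b`. -/
def IsGoodJointReduction {R : Type*} [CommRing R] (I J : Ideal R) (a b : R) : Prop :=
  a ∈ I ∧ b ∈ J ∧
  (∃ N : ℤ, ∀ r s : ℤ, N ≤ r → N ≤ s →
      IJbar I J r s =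
        Ideal.span {a} * IJbar I J (r - 1) s ⊔ Ideal.span {b} * IJbar I J r (s - 1)) ∧
  (∀ r s : ℤ, 0 < r →
      Ideal.span {a} ⊓ IJbar I J r s = Ideal.span {a} * IJbar I J (r - 1) s) ∧
  (∀ r s : ℤ, 0 < s →
      Ideal.span {b} ⊓ IJbar I J r s = Ideal.span {b} * IJbar I J r (s - 1))
/-! ### The (bi)graded Rees rings of the filtrations `{\overline{I^n}}` and
`{\overline{I^r J^s}}` -/

/-- the polynomial ring `R[t]`. -/
abbrev Amb1 (R : Type*) [CommRing R] := AddMonoidAlgebra R ℕ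

/-- the polynomial ring `R[t₁,t₂]`. -/
abbrev Amb2 (R : Type*) [CommRing R] := AddMonoidAlgebra R (ℕ × ℕ)

/-- the Rees ring `𝓡(I) = ⊕_{n ≥ 0} I^n t^n`. -/
noncomputable def rees1 {R : Type*} [CommRing R] (I : Ideal R) : Subalgebra R (Amb1 R) :=
  Algebra.adjoin R {x | ∃ a ∈ I, x = AddMonoidAlgebra.single 1 a}

/-- the Rees ring `\overline{𝓡}(I) = ⊕_{n ≥ 0} \overline{I^n} t^n` of the filtration
`{\overline{I^n}}`: by the theorem on integral closures of graded rings it is the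
integral closure of `𝓡(I)` in `R[t]`. -/
noncomputable def reesBar1 {R : Type*} [CommRing R] (I : Ideal R) : Subalgebra R (Amb1 R) :=
  (integralClosure (rees1 I) (Amb1 R)).restrictScalars R

/-- the bigraded Rees ring `𝓡(I,J) = ⊕_{r,s ≥ 0} I^r J^s t₁^r t₂^s`. -/
noncomputable def rees2 {R : Type*} [CommRing R] (I J : Ideal R) : Subalgebra R (Amb2 R) :=
  Algebra.adjoin R
    ({x | ∃ a ∈ I, x = AddMonoidAlgebra.single (1, 0) a} ∪
      {x | ∃ b ∈ J, x = AddMonoidAlgebra.single (0, 1) b})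

/-- the bigraded Rees ring `\overline{𝓡}(I,J) = ⊕_{r,s ≥ 0} \overline{I^r J^s} t₁^r t₂^s`
of the filtration `{\overline{I^r J^s}}`: the integral closure of `𝓡(I,J)` in
`R[t₁,t₂]`. -/
noncomputable def reesBar2 {R : Type*} [CommRing R] (I J : Ideal R) :
    Subalgebra R (Amb2 R) :=
  (integralClosure (rees2 I J) (Amb2 R)).restrictScalars R

/-- the height of an ideal: the infimum of the heights of primes containing it. -/
noncomputable def idealHeight {A : Type*} [CommRing A] (K : Ideal A) : ℕ∞ :=
  sInf {h | ∃ P : PrimeSpectrum A, K ≤ P.asIdeal ∧ h = Order.height P}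

/-! ### Čech complexes inside a ring -/

namespace Cech
open Filter

variable {L Γ : Type*} [CommRing L] [AddCommGroup Γ]

/-- A family of additive subgroups of `L` indexed by degrees: `N g` is the degree-`g` piece of a
graded module inside the ring `L`. -/
abbrev Fam (L Γ : Type*) [CommRing L] := Γ → AddSubgroup L

/-- Saturation: the degree-`g` piece of the localization of `N` at the homogeneous element `y.1` of
degree `y.2`, formed inside `L`. -/
def sat (y : L × Γ) (N : Fam L Γ) : Fam L Γ := fun g =>
  { carrier := {x | ∀ᶠ k : ℕ in atTop, y.1 ^ k * x ∈ N (g + k • y.2)}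
    zero_mem' := by simp
    add_mem' := by
      intro a b ha hb
      filter_upwards [ha, hb] with k h1 h2
      rw [mul_add]; exact add_mem h1 h2
    neg_mem' := by
      intro a ha
      filter_upwards [ha] with k h1
      rw [mul_neg]; exact neg_mem h1 }

theorem mem_sat {y : L × Γ} {N : Fam L Γ} {g : Γ} {x : L} :
    x ∈ sat y N g ↔ ∀ᶠ k : ℕ in atTop, y.1 ^ k * x ∈ N (g + k • y.2) := Iff.rfl

/-- `N` is stable under multiplication by `t.1`, which shifts degrees by `t.2`. -/
def St (t : L × Γ) (N : Fam L Γ) : Prop := ∀ g x, x ∈ N g → t.1 * x ∈ N (g + t.2)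

theorem St.pow {t : L × Γ} {N : Fam L Γ} (h : St t N) (k : ℕ) (g : Γ) (x : L) (hx : x ∈ N g) :
    t.1 ^ k * x ∈ N (g + k • t.2) := by
  induction k with
  | zero => simpa using hx
  | succ k ih =>
    have := h _ _ ih
    rw [pow_succ', mul_assoc, succ_nsmul, ← add_assoc]; exact this

theorem mem_sat_iff {y : L × Γ} {N : Fam L Γ} (h : St y N) {g : Γ} {x : L} :
    x ∈ sat y N g ↔ ∃ k : ℕ, y.1 ^ k * x ∈ N (g + k • y.2) := by
  constructor
  · intro hx; exact (mem_sat.1 hx).exists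
  · rintro ⟨k, hk⟩
    refine mem_sat.2 (eventually_atTop.2 ⟨k, fun m hm => ?_⟩)
    obtain ⟨j, rfl⟩ := Nat.exists_eq_add_of_le hm
    have := h.pow j _ _ hk
    rw [add_comm k j, pow_add, mul_assoc, add_nsmul, add_comm (j • y.2), ← add_assoc]; exact this

theorem le_sat {y : L × Γ} {N : Fam L Γ} (h : St y N) : N ≤ sat y N := fun g x hx =>
  (mem_sat_iff h).2 ⟨0, by simpa using hx⟩

theorem sat_mono {y : L × Γ} {N N' : Fam L Γ} (h : N' ≤ N) : sat y N' ≤ sat y N := fun g x hx => by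
  rw [mem_sat] at *
  exact hx.mono fun k hk => h _ hk

theorem St.sat {t y : L × Γ} {N : Fam L Γ} (h : St t N) : St t (sat y N) := fun g x hx => by
  rw [mem_sat] at *
  refine hx.mono fun k hk => ?_
  have := h _ _ hk
  rw [mul_left_comm, add_right_comm]; exact this

theorem sat_comm {x y : L × Γ} {N : Fam L Γ} (hx : St x N) (hy : St y N) :
    sat x (sat y N) = sat y (sat x N) := by
  have key : ∀ x y : L × Γ, St x N → St y N → sat x (sat y N) ≤ sat y (sat x N) := by
    intro x y hx hy g z hz
    rw [mem_sat_iff hx.sat] at hz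
    obtain ⟨k, hk⟩ := hz
    rw [mem_sat_iff hy] at hk
    obtain ⟨m, hm⟩ := hk
    rw [mem_sat_iff hy.sat]
    refine ⟨m, ?_⟩
    rw [mem_sat_iff hx]
    refine ⟨k, ?_⟩
    rw [mul_left_comm, add_right_comm]; exact hm
  exact le_antisymm (key x y hx hy) (key y x hy hx)

theorem sat_idem {y : L × Γ} {N : Fam L Γ} (h : St y N) : sat y (sat y N) = sat y N := by
  refine le_antisymm (fun g z hz => ?_) (le_sat h.sat)
  rw [mem_sat_iff h.sat] at hz
  obtain ⟨k, hk⟩ := hz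
  rw [mem_sat_iff h] at hk
  obtain ⟨m, hm⟩ := hk
  rw [mem_sat_iff h]
  refine ⟨m + k, ?_⟩
  rw [pow_add, mul_assoc, add_nsmul, add_comm (m • y.2), ← add_assoc]; exact hm

theorem sat_bot {y : L × Γ} (hy : IsUnit y.1) : sat y (⊥ : Fam L Γ) = ⊥ := by
  refine le_antisymm (fun g z hz => ?_) bot_le
  obtain ⟨k, hk⟩ := (mem_sat.1 hz).exists
  have h0 : y.1 ^ k * z = 0 := hk
  have : z = 0 := ((hy.pow k).mul_right_eq_zero).1 h0
  rw [this]; exact zero_mem _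

theorem St.bot (y : L × Γ) : St y (⊥ : Fam L Γ) := fun g x hx => by
  have : x = 0 := hx
  rw [this, mul_zero]; exact zero_mem _

theorem St.mul {s t : L × Γ} {N : Fam L Γ} (hs : St s N) (ht : St t N) :
    St (s.1 * t.1, s.2 + t.2) N := fun g x hx => by
  have := hs _ _ (ht _ _ hx)
  rw [mul_assoc, add_comm s.2, ← add_assoc]; exact this

/-- Čech cochains on a list of elements: a string of Booleans of the length of the list encodes a
subset; the entries at strings of other lengths are irrelevant. -/
abbrev Co (L : Type*) := List Bool → L

/-- The face of a cochain obtained by fixing the first letter. -/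
def hd (b : Bool) : Co L →ₗ[L] Co L := LinearMap.funLeft L L (List.cons b)

@[simp] theorem hd_apply (b : Bool) (c : Co L) (s : List Bool) : hd b c s = c (b :: s) := rfl

/-- The Čech differential, by recursion on the first letter. -/
def dAux : Co L → List Bool → L
  | _, [] => 0
  | c, false :: s => dAux (hd false c) s
  | c, true :: s => c (false :: s) - dAux (hd true c) s

/-- The Čech differential, as a linear map. -/
def d : Co L →ₗ[L] Co L where
  toFun := dAux
  map_add' := by
    intro a b; funext s
    induction s generalizing a b with
    | nil => simp [dAux]
    | cons x s ih =>
      cases x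
      · simp only [dAux, map_add, ih, Pi.add_apply]
      · simp only [dAux, map_add, ih, Pi.add_apply]; ring
  map_smul' := by
    intro r a; funext s
    induction s generalizing a with
    | nil => simp [dAux]
    | cons x s ih =>
      cases x
      · simp only [dAux, map_smul, ih, Pi.smul_apply, smul_eq_mul, RingHom.id_apply]
      · simp only [dAux, map_smul, ih, Pi.smul_apply, smul_eq_mul, RingHom.id_apply]; ring

@[simp] theorem hd_false_d (c : Co L) : hd false (d c) = d (hd false c) := rfl
@[simp] theorem hd_true_d (c : Co L) : hd true (d c) = hd false c - d (hd true c) := rfl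
@[simp] theorem d_nil (c : Co L) : d c [] = 0 := rfl

@[simp] theorem d_d (c : Co L) : d (d c) = 0 := by
  funext s
  induction s generalizing c with
  | nil => simp
  | cons x s ih =>
    cases x
    · have : d (d c) (false :: s) = hd false (d (d c)) s := rfl
      rw [this]; simp only [hd_false_d, ih]; rfl
    · have : d (d c) (true :: s) = hd true (d (d c)) s := rfl
      rw [this]; simp only [hd_true_d, hd_false_d, map_sub]
      have := ih (hd true c)
      simp [this]

/-- The cochain with prescribed faces. -/
def mk (a b : Co L) : Co L
  | [] => 0
  | false :: s => a s
  | true :: s => b s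

@[simp] theorem hd_false_mk (a b : Co L) : hd false (mk a b) = a := rfl
@[simp] theorem hd_true_mk (a b : Co L) : hd true (mk a b) = b := rfl

/-- The degree-`g` piece of the `i`-th term of the Čech complex of `N` on a list: the face `false`
lies in the complex of `N`, the face `true` in that of the localization of `N`, in cohomological
degree `i - 1`. -/
def C : Fam L Γ → List (L × Γ) → ℤ → Γ → AddSubgroup (Co L)
  | N, [], i, g => AddSubgroup.comap (Pi.evalAddMonoidHom _ []) (if i = 0 then N g else ⊥)
  | N, x :: l, i, g => (C N l i g).comap (hd false).toAddMonoidHom ⊓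
      (C (sat x N) l (i - 1) g).comap (hd true).toAddMonoidHom

theorem mem_C_nil {N : Fam L Γ} {i : ℤ} {g : Γ} {c : Co L} :
    c ∈ C N [] i g ↔ c [] ∈ (if i = 0 then N g else ⊥ : AddSubgroup L) := Iff.rfl

theorem mem_C_cons {N : Fam L Γ} {x : L × Γ} {l : List (L × Γ)} {i : ℤ} {g : Γ} {c : Co L} :
    c ∈ C N (x :: l) i g ↔ hd false c ∈ C N l i g ∧ hd true c ∈ C (sat x N) l (i - 1) g := Iff.rfl

theorem C_mono {N N' : Fam L Γ} (h : N' ≤ N) (l : List (L × Γ)) (i : ℤ) (g : Γ) :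
    C N' l i g ≤ C N l i g := by
  induction l generalizing N N' i with
  | nil =>
    intro c; rw [mem_C_nil, mem_C_nil]; split_ifs
    · exact fun hc => h g hc
    · exact id
  | cons x l ih =>
    intro c; rw [mem_C_cons, mem_C_cons]
    exact fun hc => ⟨ih h _ hc.1, ih (sat_mono h) _ hc.2⟩

theorem C_smul {N : Fam L Γ} {t : L × Γ} (h : St t N) {l : List (L × Γ)} {i : ℤ} {g : Γ} {c : Co L}
    (hc : c ∈ C N l i g) : t.1 • c ∈ C N l i (g + t.2) := by
  induction l generalizing N i c with
  | nil =>
    rw [mem_C_nil] at *; split_ifs at *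
    · exact h _ _ hc
    · have : c [] = 0 := hc
      simp [this]
  | cons x l ih =>
    rw [mem_C_cons] at *
    simp only [map_smul]
    exact ⟨ih h hc.1, ih h.sat hc.2⟩

theorem C_smul0 {N : Fam L Γ} {u : L} (h : St (u, 0) N) {l : List (L × Γ)} {i : ℤ} {g : Γ} {c : Co L}
    (hc : c ∈ C N l i g) : u • c ∈ C N l i g := by
  simpa using C_smul h hc

/-- `N` is stable under all members of `l`. -/
def StL (l : List (L × Γ)) (N : Fam L Γ) : Prop := ∀ x ∈ l, St x N

theorem StL.sat {l : List (L × Γ)} {N : Fam L Γ} (h : StL l N) {y : L × Γ} : StL l (sat y N) :=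
  fun x hx => (h x hx).sat

theorem StL.tail {l : List (L × Γ)} {x : L × Γ} {N : Fam L Γ} (h : StL (x :: l) N) : StL l N :=
  fun y hy => h y (List.mem_cons_of_mem _ hy)

theorem StL.head {l : List (L × Γ)} {x : L × Γ} {N : Fam L Γ} (h : StL (x :: l) N) : St x N :=
  h x List.mem_cons_self

theorem C_d {N : Fam L Γ} {l : List (L × Γ)} (h : StL l N) {i : ℤ} {g : Γ} {c : Co L}
    (hc : c ∈ C N l i g) : d c ∈ C N l (i + 1) g := by
  induction l generalizing N i c with
  | nil => rw [mem_C_nil]; simp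
  | cons x l ih =>
    rw [mem_C_cons] at *
    rw [hd_false_d, hd_true_d]
    refine ⟨ih h.tail hc.1, ?_⟩
    have e : i + 1 - 1 = i := by ring
    rw [e]
    refine sub_mem (C_mono (le_sat h.head) _ _ _ hc.1) ?_
    have := ih h.tail.sat hc.2
    rwa [sub_add_cancel] at this

theorem mem_C_sat {y : L × Γ} (hu : IsUnit y.1) {N : Fam L Γ} {l : List (L × Γ)} (hy : St y N)
    (hl : StL l N) {i : ℤ} {g : Γ} {c : Co L} :
    c ∈ C (sat y N) l i g ↔ ∀ᶠ k : ℕ in atTop, y.1 ^ k • c ∈ C N l i (g + k • y.2) := by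
  induction l generalizing N i c with
  | nil =>
    simp only [mem_C_nil]; split_ifs
    · rw [mem_sat]; rfl
    · constructor
      · intro h
        have : c [] = 0 := h
        simp [this]
      · intro h
        obtain ⟨k, hk⟩ := h.exists
        have hk : y.1 ^ k * c [] = 0 := hk
        exact ((hu.pow k).mul_right_eq_zero).1 hk
  | cons x l ih =>
    simp only [mem_C_cons, map_smul]
    rw [sat_comm hl.head hy, ih hy hl.tail, ih hy.sat hl.tail.sat, ← eventually_and]

theorem C_neg {N : Fam L Γ} {l : List (L × Γ)} {i : ℤ} (hi : i < 0) {g : Γ} (N' : Fam L Γ) (g' : Γ)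
    {c : Co L} (hc : c ∈ C N l i g) : c ∈ C N' l i g' := by
  induction l generalizing N i c N' with
  | nil => rw [mem_C_nil, if_neg hi.ne] at *; exact hc
  | cons x l ih =>
    rw [mem_C_cons] at *
    exact ⟨ih hi _ hc.1, ih (by omega) _ hc.2⟩

theorem C_large {N : Fam L Γ} {l : List (L × Γ)} {i : ℤ} (hi : l.length < i) {g : Γ} (N' : Fam L Γ)
    (g' : Γ) {c : Co L} (hc : c ∈ C N l i g) : c ∈ C N' l i g' := by
  induction l generalizing N i c N' with
  | nil =>
    have : i ≠ 0 := by simp at hi; omega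
    rw [mem_C_nil, if_neg this] at *; exact hc
  | cons x l ih =>
    rw [mem_C_cons] at *
    simp at hi
    exact ⟨ih (by omega) _ hc.1, ih (by omega) _ hc.2⟩

/-- The `i`-th cohomology, in degree `g`, of the Čech complex of `N / N'` on `l` is killed
elementwise by members of `T` (`N' ≤ N` in the applications). -/
def Ex (T : Set (L × Γ)) (N N' : Fam L Γ) (l : List (L × Γ)) (i : ℤ) (g : Γ) : Prop :=
  ∀ z ∈ C N l i g, d z ∈ C N' l (i + 1) g →
    ∃ t ∈ T, ∃ w ∈ C N l (i - 1) (g + t.2), t.1 • z - d w ∈ C N' l i (g + t.2)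

/-- `T` contains `(1, 0)` and is closed under products. -/
structure Mon (T : Set (L × Γ)) : Prop where
  one : (1, 0) ∈ T
  mul : ∀ s ∈ T, ∀ t ∈ T, (s.1 * t.1, s.2 + t.2) ∈ T

theorem ex_neg {T : Set (L × Γ)} (hT : Mon T) {N N' : Fam L Γ} {l : List (L × Γ)} {i : ℤ} {g : Γ}
    (hi : i < 0) : Ex T N N' l i g := fun z hz _ =>
  ⟨_, hT.one, 0, zero_mem _, by simpa using C_neg hi _ _ hz⟩

theorem ex_large {T : Set (L × Γ)} (hT : Mon T) {N N' : Fam L Γ} {l : List (L × Γ)} {i : ℤ} {g : Γ}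
    (hi : l.length < i) : Ex T N N' l i g := fun z hz _ =>
  ⟨_, hT.one, 0, zero_mem _, by simpa using C_large hi _ _ hz⟩

/-- Exactness on `x :: l` from exactness on `l` for `N` in degree `i` and for the localization at
`x` in degree `i - 1`. -/
theorem ex_cons {T : Set (L × Γ)} (hT : Mon T) {N N' : Fam L Γ} {x : L × Γ} {l : List (L × Γ)}
    {i : ℤ} {g : Γ} (hN : St x N) (hN' : St x N')
    (hTN : ∀ t ∈ T, St t N) (hTN' : ∀ t ∈ T, St t N')
    (h1 : Ex T N N' l i g)
    (h2 : ∀ t ∈ T, Ex T (sat x N) (sat x N') l (i - 1) (g + t.2)) : Ex T N N' (x :: l) i g := by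
  intro z hz hdz
  rw [mem_C_cons] at hz hdz
  rw [hd_false_d, hd_true_d, add_sub_cancel_right] at hdz
  obtain ⟨t, ht, w, hw, htw⟩ := h1 _ hz.1 hdz.1
  have hb : t.1 • hd true z - w ∈ C (sat x N) l (i - 1) (g + t.2) :=
    sub_mem (C_smul (hTN t ht).sat hz.2) (C_mono (le_sat hN) _ _ _ hw)
  have hdb : d (t.1 • hd true z - w) ∈ C (sat x N') l (i - 1 + 1) (g + t.2) := by
    have e : d (t.1 • hd true z - w) =
      (t.1 • hd false z - d w) - t.1 • (hd false z - d (hd true z)) := by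
      rw [map_sub, map_smul, smul_sub]; abel
    rw [e, sub_add_cancel]
    exact sub_mem (C_mono (le_sat hN') _ _ _ htw) (C_smul (hTN' t ht).sat hdz.2)
  obtain ⟨s, hs, w', hw', hsw⟩ := h2 t ht _ hb hdb
  have eg : g + (s.1 * t.1, s.2 + t.2).2 = g + t.2 + s.2 := by
    simp only []; abel
  refine ⟨_, hT.mul s hs t ht, mk (s.1 • w) (-w'), ?_, ?_⟩
  · rw [mem_C_cons, eg]
    exact ⟨C_smul (hTN s hs) hw, by simpa using hw'⟩
  · rw [mem_C_cons, eg]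
    constructor
    · have := C_smul (hTN' s hs) htw
      simpa [smul_sub, mul_smul] using this
    · convert hsw using 1
      simp only [map_sub, map_smul, hd_true_d, hd_false_mk, hd_true_mk, map_neg, smul_sub, mul_smul]
      abel

/-- Exactness on `l` from exactness on `x :: l` and exactness on `l` of the localization at `x`. -/
theorem ex_of_cons {T : Set (L × Γ)} (hT : Mon T) {N N' : Fam L Γ} {x : L × Γ} {l : List (L × Γ)}
    {i : ℤ} {g : Γ} (hN : St x N)
    (hTN' : ∀ t ∈ T, St t N') (hTN : ∀ t ∈ T, St t N)
    (h1 : ∀ t ∈ T, Ex T N N' (x :: l) i (g + t.2))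
    (h2 : Ex T (sat x N) (sat x N') l i g) (hN' : St x N') : Ex T N N' l i g := by
  intro z hz hdz
  obtain ⟨t, ht, w, hw, htw⟩ := h2 _ (C_mono (le_sat hN) _ _ _ hz) (C_mono (le_sat hN') _ _ _ hdz)
  obtain ⟨s, hs, v, hv, hsv⟩ := h1 t ht (mk (t.1 • z) w)
    ⟨C_smul (hTN t ht) hz, hw⟩ (by
      rw [mem_C_cons]
      refine ⟨?_, ?_⟩
      · have := C_smul (hTN' t ht) hdz
        simpa using this
      · simpa using htw)
  have eg : g + (s.1 * t.1, s.2 + t.2).2 = g + t.2 + s.2 := by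
    simp only []; abel
  refine ⟨_, hT.mul s hs t ht, hd false v, ?_, ?_⟩
  · rw [eg]; exact hv.1
  · rw [eg]
    have := hsv.1
    simpa [mul_smul] using this

/-- If a member of `l` acts invertibly on `N` and `N'`, the Čech complex on `l` is exact. -/
theorem ex_of_sat_eq {T : Set (L × Γ)} (hT : Mon T) {N N' : Fam L Γ} {l : List (L × Γ)}
    {x : L × Γ} (hx : x ∈ l)
    (hN : StL l N) (hN' : StL l N')
    (hTN : ∀ t ∈ T, St t N) (hTN' : ∀ t ∈ T, St t N')
    (e : sat x N = N) (e' : sat x N' = N') (i : ℤ) (g : Γ) : Ex T N N' l i g := by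
  induction l generalizing N N' i g with
  | nil => simp at hx
  | cons y l ih =>
    by_cases h : x = y
    · subst h
      intro z hz hdz
      rw [mem_C_cons] at hz hdz
      rw [e] at hz
      rw [e', hd_false_d, hd_true_d, add_sub_cancel_right] at hdz
      refine ⟨_, hT.one, mk (hd true z) 0, ?_, ?_⟩
      · rw [mem_C_cons]; simpa using hz.2
      · rw [mem_C_cons]; simpa using hdz.2
    · have hx' : x ∈ l := by simpa [h] using hx
      refine ex_cons hT hN.head hN'.head hTN hTN' (ih hx' hN.tail hN'.tail hTN hTN' e e' i g)
        fun t ht => ih hx' hN.tail.sat hN'.tail.sat (fun t ht => (hTN t ht).sat)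
          (fun t ht => (hTN' t ht).sat) ?_ ?_ _ _
      · rw [sat_comm (hN x hx) (hN.head), e]
      · have heq := e'
        rw [sat_comm (hN' x hx) (hN'.head), heq]

/-- The powers of a homogeneous element, with their degrees. -/
def pw (y : L × Γ) : Set (L × Γ) := Set.range fun k : ℕ => (y.1 ^ k, k • y.2)

theorem pw_mon (y : L × Γ) : Mon (pw y) := by
  constructor
  · exact ⟨0, by simp⟩
  · rintro _ ⟨j, rfl⟩ _ ⟨k, rfl⟩
    exact ⟨j + k, by simp [pow_add, add_nsmul]⟩

theorem pw_st {y : L × Γ} {N : Fam L Γ} (h : St y N) : ∀ t ∈ pw y, St t N := by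
  rintro _ ⟨j, rfl⟩ g x hx
  exact h.pow j g x hx

/-- Čech cohomology on `l` is torsion with respect to the powers of each member of `l`. -/
theorem ex_pw {N N' : Fam L Γ} {l : List (L × Γ)}
    {x : L × Γ} (hx : x ∈ l) (hu : IsUnit x.1)
    (hN : StL l N) (hN' : StL l N') (i : ℤ) (g : Γ) : Ex (pw x) N N' l i g := by
  induction l generalizing N N' i g with
  | nil => simp at hx
  | cons y l ih =>
    by_cases h : x = y
    · subst h
      intro z hz hdz
      rw [mem_C_cons] at hz hdz
      rw [hd_false_d, hd_true_d, add_sub_cancel_right] at hdz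
      rw [mem_C_sat hu hN.head hN.tail] at hz
      rw [mem_C_sat hu hN'.head hN'.tail] at hdz
      obtain ⟨k, hk1, hk2⟩ := (hz.2.and hdz.2).exists
      refine ⟨_, ⟨k, rfl⟩, mk (x.1 ^ k • hd true z) 0, ?_, ?_⟩
      · rw [mem_C_cons]; simpa using hk1
      · rw [mem_C_cons]; simpa [smul_sub] using hk2
    · have hx' : x ∈ l := by simpa [h] using hx
      exact ex_cons (pw_mon x) hN.head hN'.head (pw_st (hN x hx)) (pw_st (hN' x hx))
        (ih hx' hN.tail hN'.tail i g)
        fun t ht => ih hx' hN.tail.sat hN'.tail.sat  _ _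

/-- Exchange of the first two letters, with the sign that makes it a chain map. -/
def swp (c : Co L) : Co L
  | false :: true :: s => c (true :: false :: s)
  | true :: false :: s => c (false :: true :: s)
  | true :: true :: s => - c (true :: true :: s)
  | s => c s

/-- A permutation of the list induces chain maps `σ`, `τ` with `τ ∘ σ = id` between the Čech
complexes. -/
theorem perm_map {l l' : List (L × Γ)} (h : l.Perm l') : ∃ σ τ : Co L →ₗ[L] Co L,
    (∀ c, d (σ c) = σ (d c)) ∧ (∀ c, d (τ c) = τ (d c)) ∧ (∀ c, τ (σ c) = c) ∧
    (∀ (N : Fam L Γ) (_ : StL l N) i g c, c ∈ C N l i g → σ c ∈ C N l' i g) ∧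
    (∀ (N : Fam L Γ) (_ : StL l N) i g c, c ∈ C N l' i g → τ c ∈ C N l i g) := by
  induction h with
  | nil => exact ⟨LinearMap.id, LinearMap.id, by simp, by simp, by simp, by simp, by simp⟩
  | @cons x l l' h ih =>
    obtain ⟨σ, τ, h1, h2, h3, h4, h5⟩ := ih
    let F : (Co L →ₗ[L] Co L) → (Co L →ₗ[L] Co L) := fun σ =>
      { toFun := fun c s => match s with
          | [] => c []
          | b :: s => σ (hd b c) s
        map_add' := by intro a b; funext s; cases s <;> simp
        map_smul' := by intro a b; funext s; cases s <;> simp }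
    have hF : ∀ σ b c, hd b (F σ c) = σ (hd b c) := fun σ b c => rfl
    have hFn : ∀ σ c, F σ c [] = c [] := fun σ c => rfl
    have hext : ∀ a b : Co L, a [] = b [] → hd false a = hd false b → hd true a = hd true b → a = b := by
      intro a b h1 h2 h3
      funext s
      match s with
      | [] => exact h1
      | false :: s => exact congrFun h2 s
      | true :: s => exact congrFun h3 s
    refine ⟨F σ, F τ, ?_, ?_, ?_, ?_, ?_⟩
    · intro c; apply hext <;> simp [hF, h1, hFn]
    · intro c; apply hext <;> simp [hF, h2, hFn]
    · intro c; apply hext <;> simp [hF, h3, hFn]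
    · intro N hN i g c hc
      exact ⟨h4 _ hN.tail _ _ _ hc.1, h4 _ hN.tail.sat _ _ _ hc.2⟩
    · intro N hN i g c hc
      exact ⟨h5 _ hN.tail _ _ _ hc.1, h5 _ hN.tail.sat _ _ _ hc.2⟩
  | swap x y l =>
    let σ : Co L →ₗ[L] Co L :=
      { toFun := swp
        map_add' := by
          intro a b; funext s
          match s with
          | [] => simp [swp]
          | [false] => simp [swp]
          | [true] => simp [swp]
          | false :: false :: s => simp [swp]
          | false :: true :: s => simp [swp]
          | true :: false :: s => simp [swp]
          | true :: true :: s => simp [swp, add_comm]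
        map_smul' := by
          intro a b; funext s
          match s with
          | [] => simp [swp]
          | [false] => simp [swp]
          | [true] => simp [swp]
          | false :: false :: s => simp [swp]
          | false :: true :: s => simp [swp]
          | true :: false :: s => simp [swp]
          | true :: true :: s => simp [swp] }
    have h00 : ∀ c, hd false (hd false (σ c)) = hd false (hd false c) := fun c => rfl
    have h01 : ∀ c, hd true (hd false (σ c)) = hd false (hd true c) := fun c => rfl
    have h10 : ∀ c, hd false (hd true (σ c)) = hd true (hd false c) := fun c => rfl
    have h11 : ∀ c, hd true (hd true (σ c)) = - hd true (hd true c) := fun c => rfl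
    have hd' : ∀ c, d (σ c) = σ (d c) := by
      intro c; funext s
      match s with
      | [] => rfl
      | [false] => rfl
      | [true] => show σ c [false] - 0 = c [false] - 0; rfl
      | false :: false :: s => rfl
      | false :: true :: s =>
        show hd true (hd false (d (σ c))) s = hd false (hd true (d c)) s
        simp only [hd_false_d, hd_true_d, map_sub, h00, h01]
      | true :: false :: s =>
        show hd false (hd true (d (σ c))) s = hd true (hd false (d c)) s
        simp only [hd_false_d, hd_true_d, map_sub, h00, h10]
      | true :: true :: s =>
        show hd true (hd true (d (σ c))) s = - hd true (hd true (d c)) s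
        simp only [hd_true_d, map_sub, h01, h10, h11, map_neg, Pi.sub_apply, Pi.neg_apply]
        ring
    have hC : ∀ x y, ∀ (N : Fam L Γ) (_ : StL (y :: x :: l) N) i g c,
        c ∈ C N (y :: x :: l) i g → σ c ∈ C N (x :: y :: l) i g := by
      intro x y N hN i g c hc
      simp only [mem_C_cons] at *
      rw [h00, h01, h10, h11]
      rw [sat_comm hN.head hN.tail.head]
      exact ⟨⟨hc.1.1, hc.2.1⟩, hc.1.2, neg_mem hc.2.2⟩
    refine ⟨σ, σ, hd', hd', ?_, hC _ _, ?_⟩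
    · intro c; funext s
      match s with
      | [] => rfl
      | [false] => rfl
      | [true] => rfl
      | false :: false :: s => rfl
      | false :: true :: s => rfl
      | true :: false :: s => rfl
      | true :: true :: s => exact neg_neg _
    · intro N hN i g c hc
      refine hC _ _ N ?_ i g c hc
      intro z hz; apply hN; simp at hz ⊢; tauto
  | @trans l1 l2 l3 p q ih1 ih2 =>
    obtain ⟨σ, τ, h1, h2, h3, h4, h5⟩ := ih1
    obtain ⟨σ', τ', h1', h2', h3', h4', h5'⟩ := ih2
    have hS : ∀ N : Fam L Γ, StL l1 N → StL l2 N := fun N hN x hx => hN x (p.mem_iff.2 hx)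
    refine ⟨σ' ∘ₗ σ, τ ∘ₗ τ', ?_, ?_, ?_, ?_, ?_⟩
    · intro c; simp [h1, h1']
    · intro c; simp [h2, h2']
    · intro c; simp [h3, h3']
    · intro N hN i g c hc; exact h4' N (hS N hN) _ _ _ (h4 N hN _ _ _ hc)
    · intro N hN i g c hc; exact h5 N hN _ _ _ (h5' N (hS N hN) _ _ _ hc)

theorem Ex.perm {T : Set (L × Γ)} {N N' : Fam L Γ} {l l' : List (L × Γ)} (p : l'.Perm l)
    (hN : StL l N) (hN' : StL l N') {i : ℤ} {g : Γ}
    (h : Ex T N N' l i g) : Ex T N N' l' i g := by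
  have m : ∀ {N : Fam L Γ}, StL l N → StL l' N := fun hN x hx => hN x (p.mem_iff.1 hx)
  obtain ⟨σ, τ, h1, h2, h3, h4, h5⟩ := perm_map p
  intro z hz hdz
  obtain ⟨t, ht, w, hw, htw⟩ := h (σ z) (h4 N (m hN) _ _ _ hz) (by
    rw [h1]; exact h4 N' (m hN') _ _ _ hdz)
  refine ⟨t, ht, τ w, h5 N (m hN) _ _ _ hw, ?_⟩
  have := h5 N' (m hN') _ _ _ htw
  simpa [h3, h2] using this

/-- Exactness localizes. -/
theorem ex_sat {T : Set (L × Γ)} {N N' : Fam L Γ} {l : List (L × Γ)} {y : L × Γ} (hy : IsUnit y.1)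
    (hN : StL l N) (hN' : StL l N') (hyN : St y N) (hyN' : St y N') {i : ℤ} {g : Γ}
    (h : ∀ k : ℕ, Ex T N N' l i (g + k • y.2)) : Ex T (sat y N) (sat y N') l i g := by
  intro z hz hdz
  rw [mem_C_sat hy hyN hN] at hz
  rw [mem_C_sat hy hyN' hN'] at hdz
  obtain ⟨k, h1, h2⟩ := (hz.and hdz).exists
  obtain ⟨t, ht, w, hw, htw⟩ := h k _ h1 (by simpa using h2)
  obtain ⟨v, hv⟩ := hy.pow k
  have key : ∀ {N : Fam L Γ}, StL l N → St y N → ∀ {c i}, c ∈ C N l i (g + k • y.2 + t.2) →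
      (↑v⁻¹ : L) • c ∈ C (sat y N) l i (g + t.2) := by
    intro N hN hyN c i hc
    rw [mem_C_sat hy hyN hN]
    refine eventually_atTop.2 ⟨k, fun m hm => ?_⟩
    obtain ⟨j, rfl⟩ := Nat.exists_eq_add_of_le hm
    have h := C_smul (pw_st hyN _ ⟨j, rfl⟩) hc
    have e1 : y.1 ^ (k + j) • (↑v⁻¹ : L) • c = y.1 ^ j • c := by
      rw [smul_smul, pow_add, ← hv, mul_right_comm, Units.mul_inv, one_mul]
    have e2 : g + t.2 + (k + j) • y.2 = g + k • y.2 + t.2 + j • y.2 := by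
      rw [add_nsmul]; abel
    rw [e1, e2]; exact h
  refine ⟨t, ht, (↑v⁻¹ : L) • w, key hN hyN hw, ?_⟩
  have := key hN' hyN' htw
  convert this using 1
  rw [map_smul, smul_sub, smul_smul, smul_smul, ← hv, mul_right_comm, Units.inv_mul, one_mul]
end Cech

/-! ### Regular sequences and vanishing of Čech cohomology -/

namespace Cech
open Filter DirectSum

variable {L Γ : Type*} [CommRing L] [AddCommGroup Γ]

theorem C_dec {N N' N'' : Fam L Γ} {x : L} {l : List (L × Γ)} (hl : ∀ y ∈ l, IsUnit y.1)
    (hN : StL l N) (hN' : StL l N')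
    (h : ∀ g, ∀ v ∈ N'' g, ∃ b ∈ N g, v - x * b ∈ N' g) {i : ℤ} {g : Γ} {c : Co L}
    (hc : c ∈ C N'' l i g) : ∃ b ∈ C N l i g, c - x • b ∈ C N' l i g := by
  induction l generalizing N N' N'' i c with
  | nil =>
    rw [mem_C_nil] at hc
    by_cases hi : i = 0
    · rw [if_pos hi] at hc
      obtain ⟨b, hb, hb'⟩ := h g _ hc
      refine ⟨fun _ => b, ?_, ?_⟩
      · rw [mem_C_nil, if_pos hi]; exact hb
      · rw [mem_C_nil, if_pos hi]; exact hb'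
    · rw [if_neg hi] at hc
      exact ⟨0, zero_mem _, by rw [mem_C_nil, if_neg hi]; simpa using hc⟩
  | cons y l ih =>
    have hl' : ∀ y ∈ l, IsUnit y.1 := fun z hz => hl z (List.mem_cons_of_mem _ hz)
    obtain ⟨b1, hb1, hb1'⟩ := ih hl' hN.tail hN'.tail h hc.1
    have h2 : ∀ g, ∀ v ∈ sat y N'' g, ∃ b ∈ sat y N g, v - x * b ∈ sat y N' g := by
      intro g v hv
      obtain ⟨k, hk⟩ := (mem_sat.1 hv).exists
      obtain ⟨b, hb, hb'⟩ := h _ _ hk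
      obtain ⟨u, hu⟩ := (hl y List.mem_cons_self).pow k
      refine ⟨↑u⁻¹ * b, (mem_sat_iff hN.head).2 ⟨k, ?_⟩, (mem_sat_iff hN'.head).2 ⟨k, ?_⟩⟩
      · rw [← hu, Units.mul_inv_cancel_left]; exact hb
      · have : y.1 ^ k * (v - x * (↑u⁻¹ * b)) = y.1 ^ k * v - x * b := by
          rw [mul_sub, mul_left_comm, ← hu, Units.mul_inv_cancel_left]
        rw [this]; exact hb'
    obtain ⟨b2, hb2, hb2'⟩ := ih hl' hN.tail.sat hN'.tail.sat h2 hc.2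
    exact ⟨mk b1 b2, ⟨hb1, hb2⟩, ⟨by simpa using hb1', by simpa using hb2'⟩⟩

theorem C_reg {N N' : Fam L Γ} {x : L} {U : Submonoid L} {l : List (L × Γ)}
    (hl : ∀ y ∈ l, IsUnit y.1)
    (hN' : StL l N') (hU : ∀ u ∈ U, St (u, 0) N')
    (h : ∀ g, ∀ v ∈ N g, x * v ∈ N' g → ∃ u ∈ U, u * v ∈ N' g) {i : ℤ} {g : Γ} {c : Co L}
    (hc : c ∈ C N l i g) (hx : x • c ∈ C N' l i g) : ∃ u ∈ U, u • c ∈ C N' l i g := by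
  induction l generalizing N N' i c with
  | nil =>
    rw [mem_C_nil] at hc hx
    by_cases hi : i = 0
    · rw [if_pos hi] at hc hx
      obtain ⟨u, hu, h'⟩ := h g _ hc hx
      refine ⟨u, hu, ?_⟩
      rw [mem_C_nil, if_pos hi]; exact h'
    · rw [if_neg hi] at hc
      have : c [] = 0 := hc
      exact ⟨1, one_mem _, by rw [mem_C_nil]; simp [this]⟩
  | cons y l ih =>
    have hl' : ∀ y ∈ l, IsUnit y.1 := fun z hz => hl z (List.mem_cons_of_mem _ hz)
    obtain ⟨u, hu, h1⟩ := ih hl' hN'.tail hU h hc.1 hx.1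
    have h2 : ∀ g, ∀ v ∈ sat y N g, x * v ∈ sat y N' g → ∃ u ∈ U, u * v ∈ sat y N' g := by
      intro g v hv hv'
      obtain ⟨k, hk, hk'⟩ := ((mem_sat.1 hv).and (mem_sat.1 hv')).exists
      rw [mul_left_comm] at hk'
      obtain ⟨u, hu, hh⟩ := h _ _ hk hk'
      refine ⟨u, hu, (mem_sat_iff hN'.head).2 ⟨k, ?_⟩⟩
      rwa [mul_left_comm]
    obtain ⟨u', hu', h3⟩ := ih hl' hN'.tail.sat (fun u hu => (hU u hu).sat) h2 hc.2 hx.2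
    refine ⟨u * u', mul_mem hu hu', ?_, ?_⟩
    · have := C_smul0 (hU u' hu') h1
      rw [smul_smul, mul_comm u'] at this; exact this
    · have := C_smul0 (hU u hu).sat h3
      rw [smul_smul] at this; exact this

theorem C_mulx {x : L} {N N'' : Fam L Γ} (h : ∀ g, ∀ v ∈ N g, x * v ∈ N'' g)
    {l : List (L × Γ)} {g : Γ} {c : Co L} {i : ℤ} (hc : c ∈ C N l i g) : x • c ∈ C N'' l i g := by
  induction l generalizing N N'' c i with
  | nil =>
    rw [mem_C_nil] at *
    split_ifs at * with hi
    · exact h _ _ hc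
    · have : c [] = 0 := hc
      simp [this]
  | cons y l ih =>
    refine ⟨ih h hc.1, ih ?_ hc.2⟩
    intro g v hv
    refine (mem_sat.1 hv).mono fun k hk => ?_
    have := h _ _ hk
    rwa [mul_left_comm] at this

/-- Multipliers of degree zero taken from `U`. -/
def T0 (U : Submonoid L) : Set (L × Γ) := {t | t.1 ∈ U ∧ t.2 = 0}

theorem T0_mon (U : Submonoid L) : Mon (T0 U : Set (L × Γ)) :=
  ⟨⟨one_mem _, rfl⟩, fun s hs t ht => ⟨mul_mem hs.1 ht.1, by simp [hs.2, ht.2]⟩⟩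

theorem T0_st {U : Submonoid L} {N : Fam L Γ} (h : ∀ u ∈ U, St (u, 0) N) : ∀ t ∈ T0 U, St t N := by
  rintro ⟨u, _⟩ ⟨h1, rfl⟩; exact h u h1

theorem ex_T0 {U : Submonoid L} {N N' : Fam L Γ} {l : List (L × Γ)} {i : ℤ} {g : Γ} :
    Ex (T0 U) N N' l i g ↔ ∀ z ∈ C N l i g, d z ∈ C N' l (i + 1) g →
    ∃ u ∈ U, ∃ w ∈ C N l (i - 1) g, u • z - d w ∈ C N' l i g := by
  constructor
  · intro h z hz hdz
    obtain ⟨⟨u, e⟩, ⟨ht, ht'⟩, w, hw, htw⟩ := h z hz hdz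
    obtain rfl : e = 0 := ht'
    exact ⟨u, ht, w, by simpa using hw, by simpa using htw⟩
  · intro h z hz hdz
    obtain ⟨u, ht, w, hw, htw⟩ := h z hz hdz
    exact ⟨(u, 0), ⟨ht, rfl⟩, w, by simpa using hw, by simpa using htw⟩

theorem ex_cons0 {U : Submonoid L} {N N' : Fam L Γ} {x : L × Γ} {l : List (L × Γ)}
    {i : ℤ} {g : Γ} (hN : St x N) (hN' : St x N')
    (hTN : ∀ u ∈ U, St (u, 0) N) (hTN' : ∀ u ∈ U, St (u, 0) N')
    (h1 : Ex (T0 U) N N' l i g)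
    (h2 : Ex (T0 U) (sat x N) (sat x N') l (i - 1) g) : Ex (T0 U) N N' (x :: l) i g :=
  ex_cons (T0_mon U) hN hN' (T0_st hTN) (T0_st hTN') h1 fun t ht => by simpa [ht.2] using h2

theorem ex_of_cons0 {U : Submonoid L} {N N' : Fam L Γ} {x : L × Γ} {l : List (L × Γ)}
    {i : ℤ} {g : Γ} (hN : St x N) (hN' : St x N')
    (hTN : ∀ u ∈ U, St (u, 0) N) (hTN' : ∀ u ∈ U, St (u, 0) N')
    (h1 : Ex (T0 U) N N' (x :: l) i g)
    (h2 : Ex (T0 U) (sat x N) (sat x N') l i g) : Ex (T0 U) N N' l i g :=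
  ex_of_cons (T0_mon U) hN (T0_st hTN') (T0_st hTN) (fun t ht => by simpa [ht.2] using h1) h2
    (hN' : _)

/-- For `x` regular on `N / N'` up to multipliers and `N'' = N' + x N`: exactness for `N / N''` in
degree `i - 1` and `x`-power torsion of the cohomology of `N / N'` in degree `i` give exactness for
`N / N'` in degree `i`. -/
theorem depth_step {U : Submonoid L} {N N' N'' : Fam L Γ} {x : L} {l : List (L × Γ)}
    (hl : ∀ y ∈ l, IsUnit y.1) {i : ℤ} {g : Γ}
    (hN : StL l N) (hN' : StL l N')
    (hTN : ∀ u ∈ U, St (u, 0) N) (hTN' : ∀ u ∈ U, St (u, 0) N')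
    (hTN'' : ∀ u ∈ U, St (u, 0) N'')
    (hle : N' ≤ N'') (hx : ∀ g, ∀ v ∈ N g, x * v ∈ N'' g) (hxN : St (x, 0) N)
    (hdec : ∀ g, ∀ v ∈ N'' g, ∃ b ∈ N g, v - x * b ∈ N' g)
    (hreg : ∀ g, ∀ v ∈ N g, x * v ∈ N' g → ∃ u ∈ U, u * v ∈ N' g)
    (h1 : Ex (T0 U) N N'' l (i - 1) g)
    (htor : ∀ z ∈ C N l i g, d z ∈ C N' l (i + 1) g →
      ∃ u ∈ U, ∃ m : ℕ, ∃ w ∈ C N l (i - 1) g, (u * x ^ m) • z - d w ∈ C N' l i g) :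
    Ex (T0 U) N N' l i g := by
  rw [ex_T0] at *
  intro z hz hdz
  obtain ⟨u, hu, m, w, hw, hm⟩ := htor z hz hdz
  clear htor
  induction m generalizing u w with
  | zero => exact ⟨u, hu, w, hw, by simpa using hm⟩
  | succ m ih =>
    have hz' : x ^ m • z ∈ C N l i g := by
      simpa using C_smul (pw_st hxN _ ⟨m, rfl⟩) hz
    have hdw : d w ∈ C N'' l i g := by
      have e : d w = u • x • (x ^ m • z) - ((u * x ^ (m + 1)) • z - d w) := by
        simp only [smul_smul]
        rw [pow_succ']; abel
      rw [e]
      exact sub_mem (C_smul0 (hTN'' u hu) (C_mulx hx hz')) (C_mono hle _ _ _ hm)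
    obtain ⟨u', hu', w1, hw1, hw1'⟩ := h1 w hw (by simpa using hdw)
    obtain ⟨q, hq, hq'⟩ := C_dec hl hN hN' hdec hw1'
    have hd1 : u' • d w - x • d q ∈ C N' l i g := by
      have := C_d hN' hq'
      simp only [map_sub, map_smul, d_d, sub_zero, sub_add_cancel] at this
      exact this
    have hd2 : x • ((u' * u * x ^ m) • z - d q) ∈ C N' l i g := by
      have := add_mem (C_smul0 (hTN' u' hu') hm) hd1
      convert this using 1
      simp only [smul_sub, smul_smul]
      rw [show x * (u' * u * x ^ m) = u' * (u * x ^ (m + 1)) by ring]; abel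
    have hq1 : d q ∈ C N l i g := by simpa using C_d hN hq
    have hd3 : (u' * u * x ^ m) • z - d q ∈ C N l i g := by
      refine sub_mem ?_ hq1
      rw [mul_smul]; exact C_smul0 (hTN _ (mul_mem hu' hu)) hz'
    obtain ⟨u'', hu'', h3⟩ := C_reg hl hN' hTN' hreg hd3 hd2
    refine ih (u'' * (u' * u)) (mul_mem hu'' (mul_mem hu' hu)) (u'' • q) (C_smul0 (hTN _ hu'') hq) ?_
    convert h3 using 1
    rw [map_smul, smul_sub, smul_smul]; ring_nf

/-- For `x` regular on `N / N'` up to multipliers and `N'' = N' + x N`: exactness for `N / N'` in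
degrees `i` and `i + 1` gives exactness for `N / N''` in degree `i`. -/
theorem end_step {U : Submonoid L} {N N' N'' : Fam L Γ} {x : L} {l : List (L × Γ)}
    (hl : ∀ y ∈ l, IsUnit y.1) {i : ℤ} {g : Γ}
    (hN : StL l N) (hN' : StL l N')
    (hTN : ∀ u ∈ U, St (u, 0) N) (hTN' : ∀ u ∈ U, St (u, 0) N')
    (hle : N' ≤ N'') (hx : ∀ g, ∀ v ∈ N g, x * v ∈ N'' g) (hxN : St (x, 0) N)
    (hxN' : St (x, 0) N')
    (hdec : ∀ g, ∀ v ∈ N'' g, ∃ b ∈ N g, v - x * b ∈ N' g)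
    (hreg : ∀ g, ∀ v ∈ N g, x * v ∈ N' g → ∃ u ∈ U, u * v ∈ N' g)
    (h1 : Ex (T0 U) N N' l i g) (h2 : Ex (T0 U) N N' l (i + 1) g) :
    Ex (T0 U) N N'' l i g := by
  rw [ex_T0] at *
  intro z hz hdz
  obtain ⟨q, hq, hq'⟩ := C_dec hl hN hN' hdec hdz
  have hdq : x • d q ∈ C N' l (i + 1 + 1) g := by
    have := C_d hN' hq'
    simp only [map_sub, map_smul, d_d, zero_sub] at this
    simpa using neg_mem this
  obtain ⟨u, hu, huq⟩ := C_reg hl hN' hTN' hreg (C_d hN hq) hdq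
  obtain ⟨u', hu', p, hp, hp'⟩ := h2 (u • q) (C_smul0 (hTN u hu) hq) (by simpa using huq)
  rw [add_sub_cancel_right] at hp
  obtain ⟨u'', hu'', w, hw, hw'⟩ := h1 ((u' * u) • z - x • p)
    (sub_mem (C_smul0 (hTN _ (mul_mem hu' hu)) hz) (C_smul0 hxN hp)) (by
      have := add_mem (C_smul0 (hTN' _ (mul_mem hu' hu)) hq') (C_smul0 hxN' hp')
      convert this using 1
      simp only [map_sub, map_smul, smul_sub, smul_smul]
      rw [show x * (u' * u) = u' * u * x by ring]; abel)
  refine ⟨u'' * (u' * u), mul_mem hu'' (mul_mem hu' hu), w, hw, ?_⟩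
  have := add_mem (C_mono hle _ _ _ hw') (C_mulx hx (C_smul0 (hTN u'' hu'') hp))
  convert this using 1
  simp only [smul_sub, smul_smul, mul_comm x u'']
  abel
end Cech

namespace Cech
set_option linter.unusedSectionVars false
open Filter DirectSum

variable {L Γ S : Type*} [CommRing L] [AddCommGroup Γ] [CommRing S] [Algebra S L]

/-- The family constantly equal to the image of the ideal `𝔞`: it forgets the grading. -/
def cst (L Γ : Type*) [CommRing L] [Algebra S L] (𝔞 : Ideal S) : Fam L Γ :=
  fun _ => 𝔞.toAddSubgroup.map (algebraMap S L).toAddMonoidHom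

theorem mem_cst {𝔞 : Ideal S} {g : Γ} {x : L} : x ∈ cst L Γ 𝔞 g ↔ ∃ s ∈ 𝔞, algebraMap S L s = x :=
  Iff.rfl

theorem cst_bot : cst L Γ (⊥ : Ideal S) = ⊥ := by
  refine le_antisymm (fun g x hx => ?_) bot_le
  obtain ⟨s, hs, rfl⟩ := hx
  have : s = 0 := hs
  simp [this]

theorem cst_mono {𝔞 𝔟 : Ideal S} (h : 𝔞 ≤ 𝔟) : cst L Γ 𝔞 ≤ cst L Γ 𝔟 := by
  rintro g x ⟨s, hs, rfl⟩; exact ⟨s, h hs, rfl⟩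

theorem cst_st (𝔞 : Ideal S) (s : S) (e : Γ) : St (algebraMap S L s, e) (cst L Γ 𝔞) := by
  rintro g x ⟨t, ht, rfl⟩
  exact ⟨s * t, Ideal.mul_mem_left _ _ ht, by simp⟩

theorem cst_deg {𝔞 : Ideal S} {l : List (L × Γ)} {i : ℤ} {g : Γ} (g' : Γ) {c : Co L}
    (h : c ∈ C (cst L Γ 𝔞) l i g) : c ∈ C (cst L Γ 𝔞) l i g' := by
  have : ∀ l : List (L × Γ), ∀ N : Fam L Γ, (∀ g g', N g = N g') → ∀ i g g' (c : Co L),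
      c ∈ C N l i g → c ∈ C N l i g' := by
    intro l
    induction l with
    | nil => intro N hN i g g' c hc; rw [mem_C_nil] at *; rwa [hN g' g]
    | cons y l ih =>
      intro N hN i g g' c hc
      refine ⟨ih N hN _ _ _ _ hc.1, ih _ ?_ _ _ _ _ hc.2⟩
      intro g g'
      ext x
      rw [mem_sat, mem_sat]
      simp only [hN _ 0]
  exact this l _ (fun _ _ => rfl) _ _ _ _ h

/-- Image of a homogeneous element. -/
def im (L : Type*) [CommRing L] [Algebra S L] (p : S × Γ) : L × Γ := (algebraMap S L p.1, p.2)

/-- The image of a list of homogeneous elements. -/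
def ims (L : Type*) [CommRing L] [Algebra S L] (l : List (S × Γ)) : List (L × Γ) := l.map (im L)

/-- The ideal generated by a list. -/
def spl (l : List (S × Γ)) : Ideal S := Ideal.span {s | ∃ p ∈ l, p.1 = s}

theorem mem_spl {l : List (S × Γ)} {p : S × Γ} (h : p ∈ l) : p.1 ∈ spl l :=
  Ideal.subset_span ⟨p, h, rfl⟩

theorem spl_mono {l l' : List (S × Γ)} (h : ∀ p ∈ l, p ∈ l') : spl l ≤ spl l' :=
  Ideal.span_mono fun _ ⟨p, hp, e⟩ => ⟨p, h p hp, e⟩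

/-- The image of a multiplicative set. -/
abbrev UL (L : Type*) [CommRing L] [Algebra S L] (U : Submonoid S) : Submonoid L :=
  U.map (algebraMap S L)

/-- Čech cohomology on `l` is torsion with respect to every element of the radical of the ideal
generated by `l`. -/
theorem cst_tor {𝔞 : Ideal S} {l : List (S × Γ)} (hl : ∀ p ∈ l, IsUnit (algebraMap S L p.1))
    {i : ℤ} {g : Γ} {z : Co L}
    (hz : z ∈ C (cst L Γ (⊤ : Ideal S)) (ims L l) i g) (hdz : d z ∈ C (cst L Γ 𝔞) (ims L l) (i + 1) g)
    {p : S} (hp : p ∈ (spl l).radical) :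
    ∃ n : ℕ, ∃ w ∈ C (cst L Γ (⊤ : Ideal S)) (ims L l) (i - 1) g,
      algebraMap S L (p ^ n) • z - d w ∈ C (cst L Γ 𝔞) (ims L l) i g := by
  have hst : ∀ 𝔞 : Ideal S, StL (ims L l) (cst L Γ 𝔞) := by
    intro 𝔞 x hx
    obtain ⟨p, hp, rfl⟩ := List.mem_map.1 hx
    exact cst_st _ _ _
  let A : Ideal S :=
    { carrier := {s | ∃ w ∈ C (cst L Γ (⊤ : Ideal S)) (ims L l) (i - 1) g,
        algebraMap S L s • z - d w ∈ C (cst L Γ 𝔞) (ims L l) i g}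
      zero_mem' := ⟨0, zero_mem _, by simp⟩
      add_mem' := by
        rintro a b ⟨w, hw, h⟩ ⟨w', hw', h'⟩
        refine ⟨w + w', add_mem hw hw', ?_⟩
        convert add_mem h h' using 1
        rw [map_add, map_add, add_smul]; abel
      smul_mem' := by
        rintro a b ⟨w, hw, h⟩
        refine ⟨algebraMap S L a • w, C_smul0 (cst_st _ _ _) hw, ?_⟩
        convert C_smul0 (cst_st _ a 0) h using 1
        rw [smul_eq_mul, map_mul, smul_sub, map_smul, smul_smul] }
  have hA : spl l ≤ A.radical := by
    rw [spl, Ideal.span_le]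
    rintro _ ⟨q, hq, rfl⟩
    have hq' : im L q ∈ ims L l := List.mem_map.2 ⟨q, hq, rfl⟩
    obtain ⟨_, ⟨k, rfl⟩, w, hw, h⟩ := ex_pw hq' (hl q hq) (hst _) (hst _) i g z hz hdz
    refine ⟨k, w, cst_deg _ hw, ?_⟩
    rw [map_pow]
    exact cst_deg _ h
  have := Ideal.radical_mono hA hp
  rw [Ideal.radical_idem] at this
  obtain ⟨n, hn⟩ := this
  exact ⟨n, hn⟩

/-- The ideal generated by `x_0, …, x_{k-1}`. -/
def ini (x : ℕ → S) (k : ℕ) : Ideal S := Ideal.span (x '' {j | j < k})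

theorem ini_zero (x : ℕ → S) : ini x 0 = ⊥ := by simp [ini]

theorem ini_succ (x : ℕ → S) (k : ℕ) : ini x (k + 1) = ini x k ⊔ Ideal.span {x k} := by
  rw [ini, ini, ← Ideal.span_union]
  congr 1
  ext s
  constructor
  · rintro ⟨j, hj, rfl⟩
    rcases Nat.lt_succ_iff_lt_or_eq.1 hj with h | rfl
    · exact Or.inl ⟨j, h, rfl⟩
    · exact Or.inr rfl
  · rintro (⟨j, hj, rfl⟩ | rfl)
    · exact ⟨j, Nat.lt_succ_of_lt hj, rfl⟩
    · exact ⟨k, Nat.lt_succ_self k, rfl⟩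

/-- `x_0,…,x_{D-1}` is a regular sequence up to multipliers in `U`. -/
def URegular (U : Submonoid S) (x : ℕ → S) (D : ℕ) : Prop :=
  ∀ k < D, ∀ v, x k * v ∈ ini x k → ∃ u ∈ U, u * v ∈ ini x k

theorem cst_dec (x : ℕ → S) (k : ℕ) (g : Γ) (v : L) (hv : v ∈ cst L Γ (ini x (k + 1)) g) :
    ∃ b ∈ cst L Γ (⊤ : Ideal S) g, v - algebraMap S L (x k) * b ∈ cst L Γ (ini x k) g := by
  obtain ⟨s, hs, rfl⟩ := hv
  have hs : s ∈ ini x (k + 1) := hs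
  rw [ini_succ, Submodule.mem_sup] at hs
  obtain ⟨a, ha, b, hb, rfl⟩ := hs
  obtain ⟨c, rfl⟩ := Ideal.mem_span_singleton'.1 hb
  exact ⟨algebraMap S L c, ⟨c, trivial, rfl⟩, ⟨a, ha, by simp; ring⟩⟩

theorem cst_reg (hι : Function.Injective (algebraMap S L)) {U : Submonoid S} {x : ℕ → S} {k : ℕ}
    (h : ∀ v, x k * v ∈ ini x k → ∃ u ∈ U, u * v ∈ ini x k) (g : Γ) (v : L)
    (hv : v ∈ cst L Γ (⊤ : Ideal S) g) (hxv : algebraMap S L (x k) * v ∈ cst L Γ (ini x k) g) :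
    ∃ u ∈ UL L U, u * v ∈ cst L Γ (ini x k) g := by
  obtain ⟨s, hs, rfl⟩ := hv
  obtain ⟨t, ht, e⟩ := hxv
  have : t = x k * s := hι (by rw [map_mul]; exact e)
  rw [this] at ht
  obtain ⟨u, hu, h'⟩ := h s ht
  exact ⟨_, ⟨u, hu, rfl⟩, ⟨u * s, h', map_mul (algebraMap S L) _ _⟩⟩

theorem ims_st_cst (l : List (S × Γ)) (𝔞 : Ideal S) : StL (ims L l) (cst L Γ 𝔞) := by
  intro x hx
  obtain ⟨p, hp, rfl⟩ := List.mem_map.1 hx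
  exact cst_st _ _ _

theorem UL_st_cst (U : Submonoid S) (𝔞 : Ideal S) : ∀ u ∈ UL L U, St (u, 0) (cst L Γ 𝔞) := by
  rintro _ ⟨u, hu, rfl⟩
  exact cst_st _ _ _

theorem ims_unit {l : List (S × Γ)} (hl : ∀ p ∈ l, IsUnit (algebraMap S L p.1)) :
    ∀ y ∈ ims L l, IsUnit y.1 := by
  intro x hx
  obtain ⟨p, hp, rfl⟩ := List.mem_map.1 hx
  exact hl p hp

theorem cst_mulx (x : ℕ → S) (k : ℕ) (g : Γ) (v : L) (hv : v ∈ cst L Γ (⊤ : Ideal S) g) :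
    algebraMap S L (x k) * v ∈ cst L Γ (ini x (k + 1)) g := by
  obtain ⟨s, hs, rfl⟩ := hv
  refine ⟨x k * s, ?_, map_mul (algebraMap S L) _ _⟩
  exact Ideal.mul_mem_right _ _ (Ideal.subset_span ⟨k, Nat.lt_succ_self k, rfl⟩)

theorem ini_le (x : ℕ → S) (k : ℕ) : ini x k ≤ ini x (k + 1) := by
  rw [ini_succ]; exact le_sup_left

/-- If `x_0, …, x_{D-1}` is a regular sequence up to multipliers and lies, up to multipliers, in the
radical of the ideal generated by `l`, then the Čech cohomology on `l` vanishes, up to multipliers,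
below degree `D`. -/
theorem depth_lemma (hι : Function.Injective (algebraMap S L)) {U : Submonoid S} {x : ℕ → S}
    {D : ℕ} (hx : URegular U x D) {l : List (S × Γ)}
    (hl : ∀ p ∈ l, IsUnit (algebraMap S L p.1))
    (hrad : ∀ k < D, ∃ u ∈ U, u * x k ∈ (spl l).radical) (i : ℤ) (hi : i < D) (g : Γ) :
    Ex (T0 (UL L U)) (cst L Γ (⊤ : Ideal S)) ⊥ (ims L l) i g := by
  suffices H : ∀ j k, k + j = D → ∀ i : ℤ, i < j →
      Ex (T0 (UL L U)) (cst L Γ (⊤ : Ideal S)) (cst L Γ (ini x k)) (ims L l) i g by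
    have := H D 0 (by simp) i hi
    rwa [ini_zero, cst_bot] at this
  intro j
  induction j with
  | zero => intro k hk i hi; exact ex_neg (T0_mon _) (by simpa using hi)
  | succ j ih =>
    intro k hk i hi
    refine depth_step (N'' := cst L Γ (ini x (k + 1))) (x := algebraMap S L (x k))
      (ims_unit hl) (ims_st_cst _ _) (ims_st_cst _ _) (UL_st_cst _ _) (UL_st_cst _ _) (UL_st_cst _ _)
      (cst_mono (ini_le x k)) (cst_mulx x k) (cst_st _ _ _) (cst_dec x k)
      (cst_reg hι (hx k (by omega))) (ih (k + 1) (by omega) (i - 1) (by push_cast at hi; omega)) ?_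
    intro z hz hdz
    obtain ⟨u, hu, hux⟩ := hrad k (by omega)
    obtain ⟨n, w, hw, h⟩ := cst_tor hl hz hdz hux
    refine ⟨algebraMap S L (u ^ n), ⟨_, pow_mem hu n, rfl⟩, n, w, hw, ?_⟩
    rwa [mul_pow, map_mul, map_pow _ (x k)] at h

end Cech

/-! ### Graded rings and homogeneous components -/

namespace Cech
set_option linter.unusedSectionVars false
open Filter DirectSum

variable {L Γ S : Type*} [CommRing L] [AddCommGroup Γ] [CommRing S] [Algebra S L]
variable [DecidableEq Γ] (𝒜 : Γ → AddSubgroup S) [GradedRing 𝒜]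

/-- The component of degree `γ`. -/
def cmp (γ : Γ) (x : S) : S := (decompose 𝒜 x γ : S)

theorem cmp_mem (γ : Γ) (x : S) : cmp 𝒜 γ x ∈ 𝒜 γ := (decompose 𝒜 x γ).2
theorem cmp_add (γ : Γ) (x y : S) : cmp 𝒜 γ (x + y) = cmp 𝒜 γ x + cmp 𝒜 γ y := by
  simp [cmp]
theorem cmp_sub (γ : Γ) (x y : S) : cmp 𝒜 γ (x - y) = cmp 𝒜 γ x - cmp 𝒜 γ y := by
  simp [cmp]
theorem cmp_zero (γ : Γ) : cmp 𝒜 γ (0 : S) = 0 := by simp [cmp]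
theorem cmp_same {γ : Γ} {x : S} (h : x ∈ 𝒜 γ) : cmp 𝒜 γ x = x := decompose_of_mem_same _ h
theorem cmp_ne {γ δ : Γ} {x : S} (h : x ∈ 𝒜 γ) (hne : γ ≠ δ) : cmp 𝒜 δ x = 0 :=
  decompose_of_mem_ne _ h hne
theorem cmp_mul_left {α : Γ} {a : S} (ha : a ∈ 𝒜 α) (γ : Γ) (s : S) :
    cmp 𝒜 (α + γ) (a * s) = a * cmp 𝒜 γ s := coe_decompose_mul_add_of_left_mem 𝒜 ha
theorem cmp_mul_right {α : Γ} {a : S} (ha : a ∈ 𝒜 α) (γ : Γ) (s : S) :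
    cmp 𝒜 (γ + α) (s * a) = cmp 𝒜 γ s * a := coe_decompose_mul_add_of_right_mem 𝒜 ha
theorem cmp_ext {x y : S} (h : ∀ γ, cmp 𝒜 γ x = cmp 𝒜 γ y) : x = y := by
  apply (decompose 𝒜).injective
  ext γ; exact h γ

/-- `N` is a graded module over the graded ring `𝒜`. -/
def GS (N : Fam L Γ) : Prop := ∀ γ, ∀ s ∈ 𝒜 γ, St (algebraMap S L s, γ) N

variable {𝒜}

theorem GS.sat {N : Fam L Γ} (h : GS 𝒜 N) (y : L × Γ) : GS 𝒜 (sat y N) :=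
  fun γ s hs => (h γ s hs).sat

theorem GS.bot : GS 𝒜 (⊥ : Fam L Γ) := fun _ _ _ => St.bot _

variable (L 𝒜) in
/-- The family of the graded pieces of `S`, inside `L`. -/
def fam : Fam L Γ := fun γ => (𝒜 γ).map (algebraMap S L).toAddMonoidHom

theorem fam_gs : GS 𝒜 (fam L 𝒜) := by
  rintro γ s hs g _ ⟨t, ht, rfl⟩
  refine ⟨s * t, ?_, map_mul (algebraMap S L) _ _⟩
  rw [add_comm]; exact SetLike.mul_mem_graded hs ht

variable (L 𝒜) in
/-- The members of `l` are homogeneous and invertible in `L`. -/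
def HL (l : List (S × Γ)) : Prop := ∀ p ∈ l, p.1 ∈ 𝒜 p.2 ∧ IsUnit (algebraMap S L p.1)

theorem HL.stl {l : List (S × Γ)} (hl : HL L 𝒜 l) {N : Fam L Γ} (hN : GS 𝒜 N) : StL (ims L l) N := by
  intro x hx
  obtain ⟨p, hp, rfl⟩ := List.mem_map.1 hx
  exact hN _ _ (hl p hp).1

theorem HL.unit {l : List (S × Γ)} (hl : HL L 𝒜 l) : ∀ p ∈ l, IsUnit (algebraMap S L p.1) :=
  fun p hp => (hl p hp).2

theorem HL.append {l l' : List (S × Γ)} (hl : HL L 𝒜 l) (hl' : HL L 𝒜 l') : HL L 𝒜 (l ++ l') := by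
  intro p hp
  rcases List.mem_append.1 hp with h | h
  · exact hl p h
  · exact hl' p h

theorem HL.tail {l : List (S × Γ)} {p : S × Γ} (hl : HL L 𝒜 (p :: l)) : HL L 𝒜 l :=
  fun q hq => hl q (List.mem_cons_of_mem _ hq)

/-- Čech cohomology on `l` is torsion with respect to every homogeneous element of the radical of
the ideal generated by `l`. -/
theorem gr_tor {N N' : Fam L Γ} (hN : GS 𝒜 N) (hN' : GS 𝒜 N') {l : List (S × Γ)} (hl : HL L 𝒜 l)
    {p : S × Γ} (hp : p.1 ∈ 𝒜 p.2) (hr : p.1 ∈ (spl l).radical) (i : ℤ) (g : Γ) :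
    Ex (pw (im L p)) N N' (ims L l) i g := by
  intro z hz hdz
  let A : Ideal S :=
    { carrier := {s | ∀ γ, ∃ w ∈ C N (ims L l) (i - 1) (g + γ),
        algebraMap S L (cmp 𝒜 γ s) • z - d w ∈ C N' (ims L l) i (g + γ)}
      zero_mem' := fun γ => ⟨0, zero_mem _, by simp [cmp_zero]⟩
      add_mem' := by
        intro a b ha hb γ
        obtain ⟨w, hw, h⟩ := ha γ
        obtain ⟨w', hw', h'⟩ := hb γ
        refine ⟨w + w', add_mem hw hw', ?_⟩
        convert add_mem h h' using 1
        rw [cmp_add, map_add, map_add, add_smul]; abel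
      smul_mem' := by
        intro a s hs
        induction a using DirectSum.Decomposition.inductionOn 𝒜 with
        | zero =>
          intro γ
          exact ⟨0, zero_mem _, by simp [cmp_zero]⟩
        | @homogeneous α a =>
          intro γ
          obtain ⟨w, hw, h⟩ := hs (γ - α)
          have e : g + γ = g + (γ - α) + α := by abel
          refine ⟨algebraMap S L a • w, ?_, ?_⟩
          · rw [e]; exact C_smul (hN α a a.2) hw
          · rw [e]
            convert C_smul (hN' α a a.2) h using 1
            have := cmp_mul_left 𝒜 a.2 (γ - α) s
            rw [add_sub_cancel] at this
            rw [smul_eq_mul, this, map_mul, smul_sub, map_smul, smul_smul]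
        | add a b ha hb =>
          intro γ
          obtain ⟨w, hw, h⟩ := ha γ
          obtain ⟨w', hw', h'⟩ := hb γ
          refine ⟨w + w', add_mem hw hw', ?_⟩
          convert add_mem h h' using 1
          rw [add_smul, cmp_add, map_add, map_add, add_smul]; abel }
  have hA : spl l ≤ A.radical := by
    rw [spl, Ideal.span_le]
    rintro _ ⟨q, hq, rfl⟩
    have hq' : im L q ∈ ims L l := List.mem_map.2 ⟨q, hq, rfl⟩
    obtain ⟨_, ⟨k, rfl⟩, w, hw, h⟩ := ex_pw hq' (hl q hq).2 (hl.stl hN) (hl.stl hN') i g z hz hdz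
    refine ⟨k, fun γ => ?_⟩
    have hk : q.1 ^ k ∈ 𝒜 (k • q.2) := SetLike.pow_mem_graded k (hl q hq).1
    by_cases e : k • q.2 = γ
    · subst e
      refine ⟨w, hw, ?_⟩
      rw [cmp_same 𝒜 hk, map_pow]
      exact h
    · refine ⟨0, zero_mem _, ?_⟩
      rw [cmp_ne 𝒜 hk e]; simp
  have := Ideal.radical_mono hA hr
  rw [Ideal.radical_idem] at this
  obtain ⟨n, hn⟩ := this
  obtain ⟨w, hw, h⟩ := hn (n • p.2)
  refine ⟨_, ⟨n, rfl⟩, w, hw, ?_⟩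
  rw [cmp_same 𝒜 (SetLike.pow_mem_graded n hp), map_pow] at h
  exact h

/-- Localizing at an element `f` of the radical of the ideal generated by `l` (up to multipliers)
makes the Čech complex on `l` exact. -/
theorem ex_unit {U : Submonoid S} (hU : ∀ u ∈ U, u ∈ 𝒜 0) {N N' : Fam L Γ} (hN : GS 𝒜 N)
    (hN' : GS 𝒜 N') {l : List (S × Γ)} (hl : HL L 𝒜 l)
    {f : S × Γ} (hf : f.1 ∈ 𝒜 f.2) (hfu : IsUnit (algebraMap S L f.1))
    (hr : ∃ u ∈ U, u * f.1 ∈ (spl l).radical) (i : ℤ) (g : Γ) :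
    Ex (T0 (UL L U)) (sat (im L f) N) (sat (im L f) N') (ims L l) i g := by
  obtain ⟨u, hu, hr⟩ := hr
  intro z hz hdz
  have hm : (u * f.1, f.2).1 ∈ 𝒜 (u * f.1, f.2).2 := by
    simpa using SetLike.mul_mem_graded (hU u hu) hf
  obtain ⟨_, ⟨k, rfl⟩, w, hw, h⟩ := gr_tor (hN.sat _) (hN'.sat _) hl hm hr i g z hz hdz
  have hfN : ∀ {N : Fam L Γ}, GS 𝒜 N → St (im L f) N := fun hN => hN _ _ hf
  obtain ⟨v, hv⟩ := hfu.pow k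
  have key : ∀ {N : Fam L Γ}, GS 𝒜 N → ∀ {c i}, c ∈ C (sat (im L f) N) (ims L l) i (g + k • f.2) →
      (↑v⁻¹ : L) • c ∈ C (sat (im L f) N) (ims L l) i g := by
    intro N hN c i hc
    rw [← sat_idem (hfN hN), mem_C_sat hfu (hfN hN).sat (hl.stl hN).sat]
    refine eventually_atTop.2 ⟨k, fun m hm => ?_⟩
    obtain ⟨j, rfl⟩ := Nat.exists_eq_add_of_le hm
    have h := C_smul (pw_st (hfN hN).sat _ ⟨j, rfl⟩) hc
    have e1 : (im L f).1 ^ (k + j) • (↑v⁻¹ : L) • c = (im L f).1 ^ j • c := by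
      show algebraMap S L f.1 ^ (k + j) • (↑v⁻¹ : L) • c = _
      rw [smul_smul, pow_add, ← hv, mul_right_comm, Units.mul_inv, one_mul]; rfl
    have e2 : g + (k + j) • (im L f).2 = g + k • f.2 + j • (im L f).2 := by
      rw [add_nsmul, ← add_assoc]; rfl
    rw [e1, e2]; exact h
  refine ⟨(algebraMap S L (u ^ k), 0), ⟨⟨_, pow_mem hu k, rfl⟩, rfl⟩, (↑v⁻¹ : L) • w, ?_, ?_⟩
  · rw [add_zero]; exact key hN hw
  · rw [add_zero]
    convert key hN' h using 1
    rw [map_smul, smul_sub, smul_smul]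
    congr 2
    show algebraMap S L (u ^ k) = _ * (algebraMap S L (u * f.1)) ^ k
    rw [map_mul, mul_pow, ← hv, mul_comm, mul_assoc, Units.mul_inv, mul_one, map_pow]

theorem UL_st {U : Submonoid S} (hU : ∀ u ∈ U, u ∈ 𝒜 0) {N : Fam L Γ} (hN : GS 𝒜 N) :
    ∀ u ∈ UL L U, St (u, 0) N := by
  rintro _ ⟨u, hu, rfl⟩; exact hN _ _ (hU u hu)

/-- Exactness survives adding elements of the radical of the ideal generated by the list. -/
theorem ex_append {U : Submonoid S} (hU : ∀ u ∈ U, u ∈ 𝒜 0) {N N' : Fam L Γ} (hN : GS 𝒜 N)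
    (hN' : GS 𝒜 N') {l1 l2 : List (S × Γ)} (h1 : HL L 𝒜 l1) (h2 : HL L 𝒜 l2)
    (hr : ∀ p ∈ l1, ∃ u ∈ U, u * p.1 ∈ (spl l2).radical) {i : ℤ} {g : Γ}
    (h : Ex (T0 (UL L U)) N N' (ims L l2) i g) :
    Ex (T0 (UL L U)) N N' (ims L (l1 ++ l2)) i g := by
  induction l1 with
  | nil => exact h
  | cons p l1 ih =>
    refine ex_cons0 (hN _ _ (h1 p (by simp)).1) (hN' _ _ (h1 p (by simp)).1) (UL_st hU hN) (UL_st hU hN')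
      (ih h1.tail fun q hq => hr q (by simp [hq])) ?_
    obtain ⟨u, hu, hur⟩ := hr p (by simp)
    exact ex_unit hU hN hN' (h1.tail.append h2) (h1 p (by simp)).1 (h1 p (by simp)).2
      ⟨u, hu, Ideal.radical_mono (spl_mono fun q hq => List.mem_append_right _ hq) hur⟩ _ _

/-- Converse to `ex_append`. -/
theorem ex_of_append {U : Submonoid S} (hU : ∀ u ∈ U, u ∈ 𝒜 0) {N N' : Fam L Γ} (hN : GS 𝒜 N)
    (hN' : GS 𝒜 N') {l1 l2 : List (S × Γ)} (h1 : HL L 𝒜 l1) (h2 : HL L 𝒜 l2)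
    (hr : ∀ p ∈ l1, ∃ u ∈ U, u * p.1 ∈ (spl l2).radical) {i : ℤ} {g : Γ}
    (h : Ex (T0 (UL L U)) N N' (ims L (l1 ++ l2)) i g) :
    Ex (T0 (UL L U)) N N' (ims L l2) i g := by
  induction l1 with
  | nil => exact h
  | cons p l1 ih =>
    refine ih h1.tail (fun q hq => hr q (by simp [hq])) ?_
    refine ex_of_cons0 (hN _ _ (h1 p (by simp)).1) (hN' _ _ (h1 p (by simp)).1) (UL_st hU hN) (UL_st hU hN')
      h ?_
    obtain ⟨u, hu, hur⟩ := hr p (by simp)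
    exact ex_unit hU hN hN' (h1.tail.append h2) (h1 p (by simp)).1 (h1 p (by simp)).2
      ⟨u, hu, Ideal.radical_mono (spl_mono fun q hq => List.mem_append_right _ hq) hur⟩ _ _

theorem ims_append (l1 l2 : List (S × Γ)) : ims L (l1 ++ l2) = ims L l1 ++ ims L l2 :=
  List.map_append

/-- Čech exactness depends on the list only through the radical of the ideal it generates, up to
multipliers. -/
theorem ex_indep {U : Submonoid S} (hU : ∀ u ∈ U, u ∈ 𝒜 0) {N N' : Fam L Γ} (hN : GS 𝒜 N)
    (hN' : GS 𝒜 N') {l1 l2 : List (S × Γ)} (h1 : HL L 𝒜 l1) (h2 : HL L 𝒜 l2)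
    (hr : ∀ p ∈ l1, ∃ u ∈ U, u * p.1 ∈ (spl l2).radical)
    (hr' : ∀ p ∈ l2, ∃ u ∈ U, u * p.1 ∈ (spl l1).radical) {i : ℤ} {g : Γ}
    (h : Ex (T0 (UL L U)) N N' (ims L l2) i g) :
    Ex (T0 (UL L U)) N N' (ims L l1) i g := by
  have := ex_append hU hN hN' h1 h2 hr h
  refine ex_of_append hU hN hN' h2 h1 hr' ?_
  refine this.perm ?_ ((h1.append h2).stl hN) ((h1.append h2).stl hN')
  exact (List.perm_append_comm).map _

variable (𝒜) in
/-- `y` is the degree `g` part of `x`. -/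
def IsPart (g : Γ) (x y : L) : Prop := ∃ e, ∃ φ ∈ 𝒜 e, IsUnit (algebraMap S L φ) ∧
  ∃ s : S, algebraMap S L φ * x = algebraMap S L s ∧ algebraMap S L φ * y = algebraMap S L (cmp 𝒜 (e + g) s)

theorem IsPart.mul_fst {g : Γ} {x y : L} (hι : Function.Injective (algebraMap S L)) (h : IsPart 𝒜 g x y)
    {e : Γ} {ψ : S} (hψ : ψ ∈ 𝒜 e) {s : S} (hs : algebraMap S L ψ * x = algebraMap S L s) :
    algebraMap S L ψ * y = algebraMap S L (cmp 𝒜 (e + g) s) := by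
  obtain ⟨e', φ, hφ, hu, t, h1, h2⟩ := h
  have e1 : φ * s = ψ * t := hι (by rw [map_mul, map_mul, ← hs, ← h1]; ring)
  apply hu.mul_left_cancel
  rw [mul_left_comm, h2, ← map_mul, ← map_mul, ← cmp_mul_left 𝒜 hφ, ← cmp_mul_left 𝒜 hψ, e1]
  congr 2; abel

theorem IsPart.sub {g : Γ} {x y x' y' : L} (h : IsPart 𝒜 g x y) (h' : IsPart 𝒜 g x' y') :
    IsPart 𝒜 g (x - x') (y - y') := by
  obtain ⟨e, φ, hφ, hu, t, h1, h2⟩ := h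
  obtain ⟨e', φ', hφ', hu', t', h1', h2'⟩ := h'
  refine ⟨e + e', φ * φ', SetLike.mul_mem_graded hφ hφ', by simpa using hu.mul hu', φ' * t - φ * t', ?_, ?_⟩
  · rw [map_mul, map_sub, map_mul, map_mul, ← h1, ← h1']; ring
  · have a1 : cmp 𝒜 (e + e' + g) (φ' * t) = φ' * cmp 𝒜 (e + g) t := by
      rw [← cmp_mul_left 𝒜 hφ']; congr 1; abel
    have a2 : cmp 𝒜 (e + e' + g) (φ * t') = φ * cmp 𝒜 (e' + g) t' := by
      rw [← cmp_mul_left 𝒜 hφ]; congr 1; abel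
    rw [cmp_sub, a1, a2, map_mul, map_sub, map_mul, map_mul, ← h2, ← h2']; ring

theorem IsPart.zero {g : Γ} {y : L} (h : IsPart 𝒜 g 0 y) (hι : Function.Injective (algebraMap S L)) :
    y = 0 := by
  have := h.mul_fst hι SetLike.GradedOne.one_mem (s := 0) (by simp)
  simpa [cmp_zero] using this

variable (𝒜) in
/-- The relation `IsPart` entrywise, on strings of length `n`. -/
def Rl (n : ℕ) (g : Γ) (a b : Co L) : Prop := ∀ s : List Bool, s.length = n → IsPart 𝒜 g (a s) (b s)

theorem isPart_zero (g : Γ) : IsPart 𝒜 g (0 : L) 0 :=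
  ⟨0, 1, SetLike.GradedOne.one_mem, by simp, 0, by simp, by simp [cmp_zero]⟩

theorem Rl.sub {n : ℕ} {g : Γ} {a b a' b' : Co L} (h : Rl 𝒜 n g a b) (h' : Rl 𝒜 n g a' b') :
    Rl 𝒜 n g (a - a') (b - b') := fun s hs => (h s hs).sub (h' s hs)

theorem Rl.d {n : ℕ} {g : Γ} {a b : Co L} (h : Rl 𝒜 n g a b) : Rl 𝒜 n g (d a) (d b) := by
  induction n generalizing a b with
  | zero =>
    intro s hs
    obtain rfl := List.length_eq_zero_iff.1 hs
    exact isPart_zero g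
  | succ n ih =>
    have hh : ∀ x, Rl 𝒜 n g (hd x a) (hd x b) := fun x s hs => h (x :: s) (by simp [hs])
    intro s hs
    match s with
    | false :: s => exact ih (hh false) s (by simpa using hs)
    | true :: s => exact (hh false s (by simpa using hs)).sub (ih (hh true) s (by simpa using hs))

theorem mem_C_bot {l : List (L × Γ)} (hl : ∀ y ∈ l, IsUnit y.1) {i : ℤ} {g : Γ} {c : Co L} :
    c ∈ C (⊥ : Fam L Γ) l i g ↔ ∀ s : List Bool, s.length = l.length → c s = 0 := by
  induction l generalizing i c with
  | nil =>
    have e : (if i = 0 then (⊥ : Fam L Γ) g else ⊥) = (⊥ : AddSubgroup L) := by split_ifs <;> rfl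
    rw [mem_C_nil, e, AddSubgroup.mem_bot]
    constructor
    · intro h s hs
      obtain rfl := List.length_eq_zero_iff.1 hs
      exact h
    · intro h; exact h [] rfl
  | cons y l ih =>
    have hl' : ∀ y ∈ l, IsUnit y.1 := fun z hz => hl z (List.mem_cons_of_mem _ hz)
    rw [mem_C_cons, sat_bot (hl y List.mem_cons_self), ih hl', ih hl']
    constructor
    · rintro ⟨h1, h2⟩ s hs
      match s with
      | false :: s => exact h1 s (by simpa using hs)
      | true :: s => exact h2 s (by simpa using hs)
    · intro h
      exact ⟨fun s hs => h _ (by simp [hs]), fun s hs => h _ (by simp [hs])⟩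

theorem exists_part {N0 N : Fam L Γ} (hN : GS 𝒜 N)
    (h : ∀ g' g x, x ∈ N0 g' → ∃ y ∈ N g, IsPart 𝒜 g x y) {l : List (S × Γ)} (hl : HL L 𝒜 l)
    {i : ℤ} {g' : Γ} (g : Γ) {c : Co L} (hc : c ∈ C N0 (ims L l) i g') :
    ∃ b ∈ C N (ims L l) i g, Rl 𝒜 l.length g c b := by
  induction l generalizing N0 N i c with
  | nil =>
    simp only [ims, List.map_nil] at *
    rw [mem_C_nil] at hc
    by_cases hi : i = 0
    · rw [if_pos hi] at hc
      obtain ⟨y, hy, hxy⟩ := h _ g _ hc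
      refine ⟨fun _ => y, ?_, ?_⟩
      · rw [mem_C_nil, if_pos hi]; exact hy
      · intro s hs
        obtain rfl := List.length_eq_zero_iff.1 hs
        exact hxy
    · rw [if_neg hi] at hc
      refine ⟨0, zero_mem _, ?_⟩
      intro s hs
      obtain rfl := List.length_eq_zero_iff.1 hs
      have : c [] = 0 := hc
      rw [this]; exact isPart_zero g
  | cons p l ih =>
    obtain ⟨b1, hb1, r1⟩ := ih hN h hl.tail hc.1
    obtain ⟨hp, hu⟩ := hl p (by simp)
    have h' : ∀ g' g x, x ∈ sat (im L p) N0 g' → ∃ y ∈ sat (im L p) N g, IsPart 𝒜 g x y := by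
      intro g' g x hx
      obtain ⟨k, hk⟩ := (mem_sat.1 hx).exists
      obtain ⟨y, hy, e, φ, hφ, hφu, s, h1, h2⟩ := h _ (g + k • p.2) _ hk
      obtain ⟨v, hv⟩ := hu.pow k
      have hv' : (im L p).1 ^ k * (↑v⁻¹ * y) = y := by
        show algebraMap S L p.1 ^ k * _ = _
        rw [← hv, Units.mul_inv_cancel_left]
      refine ⟨↑v⁻¹ * y, (mem_sat_iff (hN _ _ hp)).2 ⟨k, ?_⟩, e + k • p.2, φ * p.1 ^ k,
        SetLike.mul_mem_graded hφ (SetLike.pow_mem_graded k hp), ?_, s, ?_, ?_⟩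
      · show (im L p).1 ^ k * (↑v⁻¹ * y) ∈ N (g + k • p.2)
        rw [hv']; exact hy
      · rw [map_mul, map_pow]; exact hφu.mul (hu.pow k)
      · rw [← h1, map_mul, map_pow, mul_assoc]; rfl
      · rw [map_mul, map_pow, mul_assoc]
        have : algebraMap S L p.1 ^ k * (↑v⁻¹ * y) = y := hv'
        rw [this, h2]; congr 2; abel
    obtain ⟨b2, hb2, r2⟩ := ih (hN.sat (im L p)) h' hl.tail hc.2
    refine ⟨mk b1 b2, ⟨hb1, hb2⟩, fun s hs => ?_⟩
    match s with
    | false :: s => exact r1 s (by simpa using hs)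
    | true :: s => exact r2 s (by simpa using hs)

theorem part_smul {N : Fam L Γ}
    (h : ∀ g x, x ∈ N g → ∃ e, ∃ φ ∈ 𝒜 e, IsUnit (algebraMap S L φ) ∧ ∃ s ∈ 𝒜 (e + g),
      algebraMap S L φ * x = algebraMap S L s) {l : List (S × Γ)} (hl : HL L 𝒜 l)
    {i : ℤ} {g : Γ} {c : Co L} (hc : c ∈ C N (ims L l) i g) (u : S) (δ : Γ) :
    Rl 𝒜 l.length (g + δ) (algebraMap S L u • c) (algebraMap S L (cmp 𝒜 δ u) • c) := by
  induction l generalizing N i c with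
  | nil =>
    simp only [ims, List.map_nil] at *
    rw [mem_C_nil] at hc
    intro s hs
    obtain rfl := List.length_eq_zero_iff.1 hs
    simp only [Pi.smul_apply, smul_eq_mul]
    by_cases hi : i = 0
    · rw [if_pos hi] at hc
      obtain ⟨e, φ, hφ, hu, s, hs, h1⟩ := h _ _ hc
      refine ⟨e, φ, hφ, hu, u * s, ?_, ?_⟩
      · rw [mul_left_comm, h1, map_mul]
      · rw [mul_left_comm, h1, ← map_mul, ← cmp_mul_right 𝒜 hs]
        congr 2; abel
    · rw [if_neg hi] at hc
      have : c [] = 0 := hc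
      rw [this, mul_zero, mul_zero]; exact isPart_zero _
  | cons p l ih =>
    obtain ⟨hp, hu⟩ := hl p (by simp)
    have r1 := ih h hl.tail hc.1
    have r2 := ih (N := sat (im L p) N) ?_ hl.tail hc.2
    · intro s hs
      match s with
      | false :: s => exact r1 s (by simpa using hs)
      | true :: s => exact r2 s (by simpa using hs)
    · intro g x hx
      obtain ⟨k, hk⟩ := (mem_sat.1 hx).exists
      obtain ⟨e, φ, hφ, hφu, s, hs, h1⟩ := h _ _ hk
      refine ⟨e + k • p.2, φ * p.1 ^ k,
        SetLike.mul_mem_graded hφ (SetLike.pow_mem_graded k hp), ?_, s, ?_, ?_⟩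
      · rw [map_mul, map_pow]; exact hφu.mul (hu.pow k)
      · have e1 : e + k • p.2 + g = e + (g + k • (im L p).2) := by
          show _ = e + (g + k • p.2)
          abel
        rw [e1]; exact hs
      · rw [← h1, map_mul, map_pow, mul_assoc]; rfl

/-- Projection of a primitive to a homogeneous component. -/
theorem proj (hι : Function.Injective (algebraMap S L)) {l : List (S × Γ)} (hl : HL L 𝒜 l)
    {i : ℤ} {g : Γ} {z w : Co L} (hz : z ∈ C (fam L 𝒜) (ims L l) i g) {g' : Γ}
    (hw : w ∈ C (cst L Γ (⊤ : Ideal S)) (ims L l) (i - 1) g') {u : S}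
    (h : algebraMap S L u • z - d w ∈ C ⊥ (ims L l) i g') (δ : Γ) :
    ∃ w' ∈ C (fam L 𝒜) (ims L l) (i - 1) (g + δ),
      algebraMap S L (cmp 𝒜 δ u) • z - d w' ∈ C ⊥ (ims L l) i (g + δ) := by
  obtain ⟨w', hw', r⟩ := exists_part (𝒜 := 𝒜) fam_gs (by
    rintro g' g x ⟨s, _, rfl⟩
    exact ⟨algebraMap S L (cmp 𝒜 g s), ⟨_, cmp_mem 𝒜 g s, rfl⟩, 0, 1, SetLike.GradedOne.one_mem,
      by simp, s, by simp, by simp⟩) hl (g + δ) hw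
  refine ⟨w', hw', ?_⟩
  have r2 := part_smul (𝒜 := 𝒜) (by
    rintro g x ⟨s, hs, rfl⟩
    exact ⟨0, 1, SetLike.GradedOne.one_mem, by simp, s, by simpa using hs, by simp⟩) hl hz u δ
  have r3 := r2.sub r.d
  rw [mem_C_bot (ims_unit hl.unit)] at *
  intro s hs
  have := r3 s (by simpa [ims] using hs)
  rw [h s hs] at this
  exact this.zero hι

theorem fam_le_cst : fam L 𝒜 ≤ cst L Γ (⊤ : Ideal S) := by
  rintro g _ ⟨s, _, rfl⟩; exact ⟨s, trivial, rfl⟩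

/-- Exactness of the ungraded complex with multipliers `U` gives exactness of the graded one with
multipliers `V`, if every `u ∈ U` has a component that some homogeneous element of opposite degree
carries into `V`. -/
theorem ex_fam_of_cst (hι : Function.Injective (algebraMap S L)) {l : List (S × Γ)} (hl : HL L 𝒜 l)
    {U V : Submonoid S} {i : ℤ} {g : Γ}
    (h : Ex (T0 (UL L U)) (cst L Γ (⊤ : Ideal S)) ⊥ (ims L l) i g)
    (hUV : ∀ u ∈ U, ∃ δ : Γ, ∃ a ∈ 𝒜 (-δ), a * cmp 𝒜 δ u ∈ V) :
    Ex (T0 (UL L V)) (fam L 𝒜) ⊥ (ims L l) i g := by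
  rw [ex_T0] at *
  intro z hz hdz
  obtain ⟨_, ⟨u, hu, rfl⟩, w, hw, hzw⟩ := h z (C_mono fam_le_cst _ _ _ hz) hdz
  obtain ⟨δ, a, ha, hV⟩ := hUV u hu
  obtain ⟨w', hw', h'⟩ := proj hι hl hz hw hzw δ
  have e : g = g + δ + -δ := by abel
  refine ⟨_, ⟨_, hV, rfl⟩, algebraMap S L a • w', ?_, ?_⟩
  · rw [e]; exact C_smul (fam_gs (𝒜 := 𝒜) _ _ ha) hw'
  · rw [e]
    convert C_smul (t := (algebraMap S L a, -δ)) (St.bot _) h' using 1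
    rw [map_mul, smul_sub, smul_smul, map_smul]
end Cech

/-! ### The Cohen–Macaulay property through Čech cohomology -/

namespace Cech
set_option linter.unusedSectionVars false

section CM
variable {S : Type*} [CommRing S]

/-- Elementwise form of the Cohen–Macaulay property of the localization at `P`: there are `ht P`
elements of `P` forming a regular sequence up to multipliers outside `P`. -/
def CMAt (P : Ideal S) [P.IsPrime] : Prop :=
  ∃ (D : ℕ) (x : ℕ → S), (D : ℕ∞) = P.height ∧ (∀ k < D, x k ∈ P) ∧ URegular P.primeCompl x D

theorem cmAt_of_isCM {P : Ideal S} [P.IsPrime] (h : IsCMLocalRing (Localization.AtPrime P)) :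
    CMAt P := by
  obtain ⟨n, f, hf, ⟨hreg, -⟩, hn⟩ := h
  have hs : ∀ i : Fin n, ∃ s : S, ∃ v : (Localization.AtPrime P)ˣ,
      algebraMap S (Localization.AtPrime P) s = f i * v := by
    intro i
    obtain ⟨⟨s, u⟩, h⟩ := IsLocalization.surj P.primeCompl (f i)
    obtain ⟨v, hv⟩ := IsLocalization.map_units (Localization.AtPrime P) u
    exact ⟨s, v, by rw [hv]; exact h.symm⟩
  choose s v hsv using hs
  let x : ℕ → S := fun k => if h : k < n then s ⟨k, h⟩ else 0
  have hx : ∀ i : Fin n, x i = s i := fun i => by simp [x]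
  have hini : ∀ i : Fin n, (ini x i).map (algebraMap S (Localization.AtPrime P)) =
      Ideal.span (f '' {j | j < i}) := by
    intro i
    rw [ini, Ideal.map_span]
    apply le_antisymm
    · rw [Ideal.span_le]
      rintro _ ⟨_, ⟨j, hj, rfl⟩, rfl⟩
      have hj : j < i := hj
      have := hx ⟨j, hj.trans i.2⟩
      simp only at this
      rw [this, hsv]
      exact Ideal.mul_mem_right _ _ (Ideal.subset_span ⟨_, hj, rfl⟩)
    · rw [Ideal.span_le]
      rintro _ ⟨j, hj, rfl⟩
      have : f j = algebraMap S (Localization.AtPrime P) (x j) * ↑(v j)⁻¹ := by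
        rw [hx, hsv, mul_assoc, Units.mul_inv, mul_one]
      rw [this]
      exact Ideal.mul_mem_right _ _ (Ideal.subset_span ⟨_, ⟨j, hj, rfl⟩, rfl⟩)
  refine ⟨n, x, ?_, ?_, ?_⟩
  · have := IsLocalization.AtPrime.ringKrullDim_eq_height P (Localization.AtPrime P)
    rw [this] at hn
    exact_mod_cast hn
  · intro k hk
    have := hx ⟨k, hk⟩
    simp only at this
    rw [this, ← IsLocalization.AtPrime.to_map_mem_maximal_iff (Localization.AtPrime P) P, hsv]
    exact Ideal.mul_mem_right _ _ (hf _)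
  · intro k hk w hw
    have h1 : algebraMap S (Localization.AtPrime P) w ∈ (ini x k).map (algebraMap S _) := by
      have h2 := hreg ⟨k, hk⟩ (algebraMap S (Localization.AtPrime P) w)
      simp only [smul_eq_mul, Ideal.mul_top] at h2
      have h3 := hini ⟨k, hk⟩
      simp only at h3
      rw [h3]
      refine h2 ?_
      rw [← h3]
      have h4 := Ideal.mem_map_of_mem (algebraMap S (Localization.AtPrime P)) hw
      have := hx ⟨k, hk⟩
      simp only at this
      rw [map_mul, this, hsv] at h4
      have := Ideal.mul_mem_left _ (↑(v ⟨k, hk⟩)⁻¹ : Localization.AtPrime P) h4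
      convert this using 1
      rw [mul_right_comm, mul_comm _ (↑(v _) : Localization.AtPrime P), Units.inv_mul_cancel_left]
    rw [IsLocalization.algebraMap_mem_map_algebraMap_iff P.primeCompl] at h1
    exact h1

theorem isCM_of_cmAt {P : Ideal S} [P.IsPrime] (h : CMAt P) :
    IsCMLocalRing (Localization.AtPrime P) := by
  obtain ⟨n, x, hn, hxP, hreg⟩ := h
  set A := Localization.AtPrime P
  let f : Fin n → A := fun i => algebraMap S A (x i)
  have hf : ∀ i, f i ∈ IsLocalRing.maximalIdeal A := fun i =>
    (IsLocalization.AtPrime.to_map_mem_maximal_iff A P _).2 (hxP _ i.2)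
  have hini : ∀ i : Fin n, (ini x i).map (algebraMap S A) = Ideal.span (f '' {j | j < i}) := by
    intro i
    rw [ini, Ideal.map_span]
    congr 1
    ext a
    constructor
    · rintro ⟨_, ⟨j, hj, rfl⟩, rfl⟩
      exact ⟨⟨j, lt_trans (b := (i : ℕ)) hj i.2⟩, hj, rfl⟩
    · rintro ⟨j, hj, rfl⟩
      exact ⟨_, ⟨j, hj, rfl⟩, rfl⟩
  refine ⟨n, f, hf, ⟨fun i z hz => ?_, fun h => ?_⟩, ?_⟩
  · simp only [smul_eq_mul, Ideal.mul_top] at *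
    rw [← hini] at *
    obtain ⟨⟨s, u⟩, h⟩ := IsLocalization.surj P.primeCompl z
    obtain ⟨v, hv⟩ := IsLocalization.map_units A u
    simp only at h
    have h1 : algebraMap S A (x i * s) ∈ (ini x i).map (algebraMap S A) := by
      rw [map_mul, ← h, ← mul_assoc]
      exact Ideal.mul_mem_right _ _ hz
    rw [IsLocalization.algebraMap_mem_map_algebraMap_iff P.primeCompl] at h1
    obtain ⟨u1, hu1, h1⟩ := h1
    obtain ⟨u2, hu2, h2⟩ := hreg i i.2 (u1 * s) (by convert h1 using 1; ring)
    have h3 : algebraMap S A s ∈ (ini x i).map (algebraMap S A) := by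
      rw [IsLocalization.algebraMap_mem_map_algebraMap_iff P.primeCompl]
      exact ⟨u2 * u1, mul_mem hu2 hu1, by rwa [mul_assoc]⟩
    rw [← h, ← hv] at h3
    have := Ideal.mul_mem_right (↑v⁻¹ : A) _ h3
    rwa [mul_assoc, Units.mul_inv, mul_one] at this
  · simp only [smul_eq_mul, Ideal.mul_top] at h
    have : Ideal.span (Set.range f) ≤ IsLocalRing.maximalIdeal A := by
      rw [Ideal.span_le]; rintro _ ⟨i, rfl⟩; exact hf i
    rw [h] at this
    exact IsLocalRing.maximalIdeal.isMaximal A |>.ne_top (top_le_iff.1 this)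
  · rw [IsLocalization.AtPrime.ringKrullDim_eq_height P A, ← hn]; rfl

end CM

section End
variable {L Γ S : Type*} [CommRing L] [AddCommGroup Γ] [CommRing S] [Algebra S L]

/-- The cochain of cohomological degree zero with value `v`. -/
def z0 (v : L) : Co L := fun s => if s.all (! ·) then v else 0

theorem hd_false_z0 (v : L) : hd false (z0 v) = z0 v := by funext s; simp [z0]
theorem hd_true_z0 (v : L) : hd true (z0 v) = 0 := by funext s; simp [z0]

theorem z0_mem {N : Fam L Γ} {g : Γ} {v : L} (hv : v ∈ N g) (l : List (L × Γ)) :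
    z0 v ∈ C N l 0 g := by
  induction l generalizing N with
  | nil => simpa [mem_C_nil, z0] using hv
  | cons y l ih =>
    rw [mem_C_cons, hd_false_z0, hd_true_z0]
    exact ⟨ih hv, zero_mem _⟩

theorem d_z0_mem {N : Fam L Γ} {g : Γ} {v : L} {l : List (L × Γ)} (hv : ∀ y ∈ l, v ∈ sat y N g)
    (hl : StL l N) : d (z0 v) ∈ C N l (0 + 1) g := by
  induction l generalizing N with
  | nil => simp [mem_C_nil]
  | cons y l ih =>
    rw [mem_C_cons, hd_false_d, hd_true_d, hd_false_z0, hd_true_z0, map_zero, sub_zero,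
      add_sub_cancel_right]
    exact ⟨ih (fun x hx => hv x (by simp [hx])) hl.tail, z0_mem (hv y (by simp)) _⟩

theorem d_replicate (c : Co L) (n : ℕ) : d c (List.replicate n false) = 0 := by
  induction n generalizing c with
  | zero => simp
  | succ n ih => exact ih (hd false c)

theorem z0_replicate (v : L) (n : ℕ) : z0 v (List.replicate n false) = v := by
  simp [z0]

theorem eval_replicate {N : Fam L Γ} {l : List (L × Γ)} {g : Γ} {c : Co L} (hc : c ∈ C N l 0 g) :
    c (List.replicate l.length false) ∈ N g := by
  induction l generalizing c with
  | nil => simpa [mem_C_nil] using hc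
  | cons y l ih => exact ih hc.1

theorem ex_zero {U : Submonoid L} {N N' : Fam L Γ} {l : List (L × Γ)} {g : Γ} (hl : StL l N')
    (h : Ex (T0 U) N N' l 0 g) {v : L} (hv : v ∈ N g) (hv' : ∀ y ∈ l, v ∈ sat y N' g) :
    ∃ u ∈ U, u * v ∈ N' g := by
  obtain ⟨u, hu, w, hw, huw⟩ := ex_T0.1 h (z0 v) (z0_mem hv _) (d_z0_mem hv' hl)
  refine ⟨u, hu, ?_⟩
  have := eval_replicate huw
  rwa [Pi.sub_apply, d_replicate, sub_zero, Pi.smul_apply, z0_replicate] at this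

/-- Saturation of an ideal at a multiplicative set. -/
def usat (U : Submonoid S) (𝔷 : Ideal S) : Ideal S where
  carrier := {v | ∃ u ∈ U, u * v ∈ 𝔷}
  zero_mem' := ⟨1, U.one_mem, by simp⟩
  add_mem' := by
    rintro a b ⟨u, hu, h⟩ ⟨u', hu', h'⟩
    refine ⟨u * u', U.mul_mem hu hu', ?_⟩
    have e : u * u' * (a + b) = u' * (u * a) + u * (u' * b) := by ring
    rw [e]
    exact add_mem (Ideal.mul_mem_left _ _ h) (Ideal.mul_mem_left _ _ h')
  smul_mem' := by
    rintro c a ⟨u, hu, h⟩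
    exact ⟨u, hu, by rw [smul_eq_mul, mul_left_comm]; exact Ideal.mul_mem_left _ _ h⟩

/-- Prime avoidance: if, up to multipliers, only elements of `𝔷` are carried into `𝔷` by all of `Q`,
then `Q` contains an element regular modulo `𝔷` up to multipliers. -/
theorem exists_reg [IsNoetherianRing S] {Q : Ideal S} [Q.IsPrime] {𝔷 : Ideal S}
    (h : ∀ v, (∀ q ∈ Q, ∃ u ∈ Q.primeCompl, u * (q * v) ∈ 𝔷) → ∃ u ∈ Q.primeCompl, u * v ∈ 𝔷) :
    ∃ z ∈ Q, ∀ v, z * v ∈ 𝔷 → ∃ u ∈ Q.primeCompl, u * v ∈ 𝔷 := by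
  set 𝔷' := usat Q.primeCompl 𝔷 with h𝔷'
  by_contra hcon
  push Not at hcon
  have hfin : (associatedPrimes S (S ⧸ 𝔷')).Finite := associatedPrimes.finite S (S ⧸ 𝔷')
  have key : ((Q : Ideal S) : Set S) ⊆ ⋃ 𝔮 ∈ (hfin.toFinset : Set (Ideal S)), ((id 𝔮 : Ideal S) : Set S) := by
    intro z hz
    obtain ⟨v, hv, hv'⟩ := hcon z hz
    have : z ∈ ⋃ p ∈ associatedPrimes S (S ⧸ 𝔷'), (p : Set S) := by
      rw [biUnion_associatedPrimes_eq_zero_divisors]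
      refine ⟨Ideal.Quotient.mk 𝔷' v, ?_, ?_⟩
      · rw [Ne, Ideal.Quotient.eq_zero_iff_mem]
        rintro ⟨u, hu, h⟩
        exact hv' u hu h
      · rw [← Ideal.Quotient.mk_eq_mk, ← Submodule.Quotient.mk_smul, Ideal.Quotient.mk_eq_mk,
          Ideal.Quotient.eq_zero_iff_mem]
        exact ⟨1, one_mem _, by simpa using hv⟩
    simpa using this
  rw [Ideal.subset_union_prime (f := id) ⊥ ⊥ (fun 𝔮 h𝔮 _ _ => by
    have : 𝔮 ∈ associatedPrimes S (S ⧸ 𝔷') := by simpa using h𝔮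
    exact this.isPrime)] at key
  obtain ⟨𝔮, h𝔮, hQ⟩ := key
  have h1 : 𝔮 ∈ associatedPrimes S (S ⧸ 𝔷') := by simpa using h𝔮
  obtain ⟨hp, m, hm⟩ := (isAssociatedPrime_iff).1 h1
  obtain ⟨v, rfl⟩ := Ideal.Quotient.mk_surjective m
  have hmem : ∀ s, s ∈ 𝔮 ↔ ∃ u ∈ Q.primeCompl, u * (s * v) ∈ 𝔷 := by
    intro s
    rw [hm, Submodule.mem_colon_singleton, Submodule.mem_bot, ← Ideal.Quotient.mk_eq_mk,
      ← Submodule.Quotient.mk_smul, Ideal.Quotient.mk_eq_mk, Ideal.Quotient.eq_zero_iff_mem]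
    rfl
  obtain ⟨u, hu, huv⟩ := h v (fun q hq => (hmem q).1 (hQ hq))
  exact hp.ne_top ((Ideal.eq_top_iff_one _).2 ((hmem 1).2 ⟨u, hu, by simpa using huv⟩))

theorem ini_congr {x x' : ℕ → S} {k : ℕ} (h : ∀ j < k, x j = x' j) : ini x k = ini x' k := by
  rw [ini, ini]; congr 1; exact Set.image_congr (fun j hj => h j hj)

/-- Converse to `depth_lemma`: if the Čech cohomology on a list in `Q` vanishes, locally at `Q`,
below degree `ht Q`, then the ring is Cohen–Macaulay at `Q`. -/
theorem end_lemma (hι : Function.Injective (algebraMap S L)) [IsNoetherianRing S] {Q : Ideal S}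
    [Q.IsPrime] {l : List (S × Γ)} (hl : ∀ p ∈ l, IsUnit (algebraMap S L p.1)) (hlQ : ∀ p ∈ l, p.1 ∈ Q)
    {g : Γ} (h : ∀ i : ℤ, 0 ≤ i → (i.toNat : ℕ∞) < Q.height →
      Ex (T0 (UL L Q.primeCompl)) (cst L Γ (⊤ : Ideal S)) ⊥ (ims L l) i g) : CMAt Q := by
  obtain ⟨D, hD⟩ := ENat.ne_top_iff_exists.1 (Ideal.height_ne_top (I := Q) (Ideal.IsPrime.ne_top ‹_›))
  have h' : ∀ i : ℤ, i < D → Ex (T0 (UL L Q.primeCompl)) (cst L Γ (⊤ : Ideal S)) ⊥ (ims L l) i g := by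
    intro i hi
    rcases lt_or_ge i 0 with h0 | h0
    · exact ex_neg (T0_mon _) h0
    · refine h i h0 ?_
      rw [← hD]
      have : i.toNat < D := by omega
      exact_mod_cast this
  suffices H : ∀ k ≤ D, ∃ x : ℕ → S, (∀ j < k, x j ∈ Q) ∧ URegular Q.primeCompl x k ∧
      ∀ i : ℤ, i < D - k → Ex (T0 (UL L Q.primeCompl)) (cst L Γ (⊤ : Ideal S))
        (cst L Γ (ini x k)) (ims L l) i g by
    obtain ⟨x, h1, h2, -⟩ := H D le_rfl
    exact ⟨D, x, hD, h1, h2⟩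
  intro k
  induction k with
  | zero =>
    intro _
    refine ⟨0, by simp, fun k hk => by omega, fun i hi => ?_⟩
    rw [ini_zero, cst_bot]; exact h' i (by simpa using hi)
  | succ k ih =>
    intro hk
    obtain ⟨x, h1, h2, h3⟩ := ih (by omega)
    obtain ⟨z, hz, hzr⟩ := exists_reg (Q := Q) (𝔷 := ini x k) (by
      intro v hv
      have hlv : ∀ p ∈ l, ∃ u ∈ Q.primeCompl, u * (p.1 * v) ∈ ini x k := fun p hp => hv _ (hlQ p hp)
      -- common multiplier
      have : ∀ l : List (S × Γ), (∀ p ∈ l, ∃ u ∈ Q.primeCompl, u * (p.1 * v) ∈ ini x k) →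
          ∃ u ∈ Q.primeCompl, ∀ p ∈ l, u * (p.1 * v) ∈ ini x k := by
        intro l
        induction l with
        | nil => exact fun _ => ⟨1, one_mem _, by simp⟩
        | cons p l ih =>
          intro h
          obtain ⟨u, hu, h⟩ := (List.forall_mem_cons.1 h).imp id ih |>.imp id id |>.2
          obtain ⟨u', hu', h'⟩ := (List.forall_mem_cons.1 ‹∀ q ∈ p :: l, _›).1
          refine ⟨u * u', mul_mem hu hu', ?_⟩
          intro q hq
          rcases List.mem_cons.1 hq with rfl | hq
          · rw [mul_assoc]; exact Ideal.mul_mem_left _ _ h'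
          · rw [mul_comm u, mul_assoc]; exact Ideal.mul_mem_left _ _ (h q hq)
      obtain ⟨u, hu, huv⟩ := this l hlv
      obtain ⟨_, ⟨u', hu', rfl⟩, w, hw, e⟩ := ex_zero (ims_st_cst l _) (h3 0 (by omega))
        (v := algebraMap S L (u * v)) ⟨_, trivial, rfl⟩ (by
          intro y hy
          obtain ⟨p, hp, rfl⟩ := List.mem_map.1 hy
          rw [mem_sat_iff (ims_st_cst l _ _ hy)]
          refine ⟨1, p.1 * (u * v), ?_, ?_⟩
          · rw [mul_left_comm]; exact huv p hp
          · simp [im])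
      refine ⟨u' * u, mul_mem hu' hu, ?_⟩
      have : w = u' * u * v := hι (by
        rw [mul_assoc, map_mul]; exact e)
      rw [← this]; exact hw)
    have hxk : ∀ j < k, Function.update x k z j = x j := fun j hj => by
      rw [Function.update_of_ne hj.ne]
    refine ⟨Function.update x k z, ?_, ?_, ?_⟩
    · intro j hj
      rcases Nat.lt_succ_iff_lt_or_eq.1 hj with hj | rfl
      · rw [hxk j hj]; exact h1 j hj
      · simpa using hz
    · intro j hj
      rcases Nat.lt_succ_iff_lt_or_eq.1 hj with hj | rfl
      · rw [hxk j hj, ini_congr (fun a ha => hxk a (ha.trans hj))]; exact h2 j hj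
      · rw [ini_congr hxk]; simpa using hzr
    · intro i hi
      have e := ini_congr hxk
      refine end_step (x := algebraMap S L z) (ims_unit hl) (ims_st_cst l _) (ims_st_cst l _) (UL_st_cst _ _)
        (UL_st_cst _ (ini x k)) (by rw [← e]; exact cst_mono (ini_le _ _))
        ?_ (cst_st _ _ _) (cst_st _ _ _) ?_ ?_ (h3 i (by push_cast at hi; omega))
          (h3 (i + 1) (by push_cast at hi; omega))
      · have := cst_mulx (L := L) (Γ := Γ) (Function.update x k z) k
        rwa [Function.update_self] at this
      · have := cst_dec (L := L) (Γ := Γ) (Function.update x k z) k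
        rwa [Function.update_self, e] at this
      · have := cst_reg (L := L) (Γ := Γ) (x := Function.update x k z) (k := k) hι
          (U := Q.primeCompl) (by rwa [e, Function.update_self])
        rwa [e, Function.update_self] at this
end End
end Cech

/-! ### Determinant trick and prime avoidance -/

namespace Cech
set_option linter.unusedSectionVars false
open nonZeroDivisors

section util
variable {S : Type*} [CommRing S]

theorem rad_of_unique {I M : Ideal S} [M.IsPrime]
    (h : ∀ P : Ideal S, P.IsPrime → I ≤ P → P ≤ M → P = M) {x : S} (hx : x ∈ M) :
    ∃ u ∈ M.primeCompl, u * x ∈ I.radical := by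
  by_contra hcon
  push Not at hcon
  have hd : Disjoint (I : Set S) (M.primeCompl ⊔ Submonoid.powers x : Submonoid S) := by
    rw [Set.disjoint_left]
    intro y hy hy'
    obtain ⟨u, hu, _, ⟨k, rfl⟩, rfl⟩ := Submonoid.mem_sup.1 hy'
    refine hcon u hu ⟨k + 1, ?_⟩
    have : (u * x) ^ (k + 1) = u ^ k * x * (u * x ^ k) := by ring
    rw [this]; exact Ideal.mul_mem_left _ _ hy
  obtain ⟨P, hP, hIP, hPd⟩ := Ideal.exists_le_prime_disjoint _ _ hd
  rw [Set.disjoint_right] at hPd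
  have := h P hP hIP fun y hy => by
    by_contra hyM
    exact hPd (Submonoid.mem_sup_left (show y ∈ M.primeCompl from hyM)) hy
  exact hPd (Submonoid.mem_sup_right (Submonoid.mem_powers x)) (this ▸ hx)

/-- Determinant trick: Nakayama's lemma, with one element outside `𝔓` as multiplier. -/
theorem det_trick {A : Type*} [CommRing A] [Algebra A S] {𝔓 : Ideal A} [𝔓.IsPrime] {m : ℕ}
    (e : Fin m → S) {𝔟 : Ideal S} {τ : A} (hτ : τ ∉ 𝔓)
    (h : ∀ i, ∃ c : Fin m → A, (∀ j, c j ∈ 𝔓) ∧ algebraMap A S τ * e i - ∑ j, algebraMap A S (c j) * e j ∈ 𝔟) :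
    ∃ τ' : A, τ' ∉ 𝔓 ∧ ∀ j, algebraMap A S τ' * e j ∈ 𝔟 := by
  choose c hc h using h
  let B : Matrix (Fin m) (Fin m) A := Matrix.scalar _ τ - Matrix.of c
  refine ⟨B.det, ?_, ?_⟩
  · rw [← Ideal.Quotient.eq_zero_iff_mem, RingHom.map_det]
    have : (Ideal.Quotient.mk 𝔓).mapMatrix B = Matrix.scalar _ (Ideal.Quotient.mk 𝔓 τ) := by
      ext i j
      simp only [B, RingHom.mapMatrix_apply, Matrix.map_apply, Matrix.sub_apply, Matrix.of_apply,
        map_sub, Ideal.Quotient.eq_zero_iff_mem.2 (hc i j), sub_zero]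
      by_cases hij : i = j
      · subst hij; simp
      · simp [hij]
    rw [this]
    simp only [Matrix.scalar_apply, Matrix.det_diagonal, Finset.prod_const]
    exact pow_ne_zero _ (by rwa [Ne, Ideal.Quotient.eq_zero_iff_mem])
  · intro j
    let B' := (algebraMap A S).mapMatrix B
    have h1 : ∀ i, B'.mulVec e i ∈ 𝔟 := by
      intro i
      convert h i using 1
      simp only [B', B, Matrix.mulVec, dotProduct, RingHom.mapMatrix_apply, Matrix.map_apply, Matrix.sub_apply,
        Matrix.of_apply, map_sub, sub_mul, Finset.sum_sub_distrib]
      congr 1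
      rw [Finset.sum_eq_single i]
      · simp
      · intro b _ hb; simp [hb.symm]
      · simp
    have h2 : B'.adjugate.mulVec (B'.mulVec e) j = B'.det * e j := by
      rw [Matrix.mulVec_mulVec, Matrix.adjugate_mul, Matrix.smul_mulVec, Matrix.one_mulVec]; rfl
    rw [RingHom.map_det]
    change B'.det * e j ∈ 𝔟
    rw [← h2]
    simp only [Matrix.mulVec.eq_def B'.adjugate, dotProduct]
    exact Submodule.sum_mem _ fun i _ => Ideal.mul_mem_left _ _ (h1 i)

/-- An ideal containing an element whose image is a non-zero-divisor is generated by such elements.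
-/
theorem nzd_gen [IsNoetherianRing S] {A : Type*} [CommRing A] (φ : A →+* S) {𝔓 : Ideal A} {p0 : A}
    (hp0 : p0 ∈ 𝔓) (h0 : φ p0 ∈ S⁰) : 𝔓 ≤ Ideal.span {p | p ∈ 𝔓 ∧ φ p ∈ S⁰} := by
  classical
  let f : Option (Ideal S) → Ideal A := fun o => match o with
    | none => Ideal.span {p | p ∈ 𝔓 ∧ φ p ∈ S⁰}
    | some 𝔮 => 𝔮.comap φ
  have hfin : (associatedPrimes S S).Finite := associatedPrimes.finite S S
  let s : Finset (Option (Ideal S)) := insert none (hfin.toFinset.image some)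
  have hsub : (𝔓 : Set A) ⊆ ⋃ i ∈ (s : Set (Option (Ideal S))), f i := by
    intro p hp
    by_cases hpn : φ p ∈ S⁰
    · exact Set.mem_biUnion (x := none) (by simp [s]) (Ideal.subset_span ⟨hp, hpn⟩)
    · have : φ p ∈ ⋃ p ∈ associatedPrimes S S, (p : Set S) := by
        rw [biUnion_associatedPrimes_eq_compl_nonZeroDivisors]; exact hpn
      obtain ⟨𝔮, h𝔮, h⟩ := Set.mem_iUnion₂.1 this
      exact Set.mem_biUnion (x := some 𝔮) (by simpa [s] using h𝔮) h
  rw [Ideal.subset_union_prime none none] at hsub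
  · obtain ⟨i, hi, h⟩ := hsub
    match i with
    | none => exact h
    | some 𝔮 =>
      exfalso
      have h𝔮 : 𝔮 ∈ associatedPrimes S S := by simpa [s] using hi
      have : φ p0 ∈ ⋃ p ∈ associatedPrimes S S, (p : Set S) := Set.mem_biUnion h𝔮 (h hp0)
      rw [biUnion_associatedPrimes_eq_compl_nonZeroDivisors] at this
      exact this h0
  · intro i hi hn _
    match i with
    | none => exact absurd rfl hn
    | some 𝔮 =>
      have h𝔮 : 𝔮 ∈ associatedPrimes S S := by simpa [s] using hi
      have := h𝔮.isPrime
      exact Ideal.IsPrime.comap φ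

variable (𝒜 : ℤ → AddSubgroup S) [GradedRing 𝒜]

/-- Homogeneous prime avoidance in positive degrees. -/
theorem hom_avoid (F : Finset (Ideal S)) (hF : ∀ 𝔮 ∈ F, 𝔮.IsPrime)
    (h : ∀ 𝔮 ∈ F, ∃ e : ℕ, 1 ≤ e ∧ ∃ f ∈ 𝒜 e, f ∉ 𝔮) :
    ∃ e : ℕ, 1 ≤ e ∧ ∃ f ∈ 𝒜 e, ∀ 𝔮 ∈ F, f ∉ 𝔮 := by
  classical
  induction hn : F.card generalizing F with
  | zero =>
    obtain rfl := Finset.card_eq_zero.1 hn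
    exact ⟨1, le_rfl, 0, zero_mem _, by simp⟩
  | succ n ih =>
    by_cases hc : ∃ 𝔮 ∈ F, ∃ 𝔮' ∈ F, 𝔮 ≠ 𝔮' ∧ ∀ e, ∀ f ∈ 𝒜 e, f ∈ 𝔮 → f ∈ 𝔮'
    · obtain ⟨𝔮, h𝔮, 𝔮', h𝔮', hne, hle⟩ := hc
      obtain ⟨e, he, f, hf, hf'⟩ := ih (F.erase 𝔮) (fun 𝔭 h𝔭 => hF _ (Finset.mem_of_mem_erase h𝔭))
        (fun 𝔭 h𝔭 => h _ (Finset.mem_of_mem_erase h𝔭)) (by rw [Finset.card_erase_of_mem h𝔮]; omega)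
      refine ⟨e, he, f, hf, fun 𝔭 h𝔭 => ?_⟩
      by_cases hp : 𝔭 = 𝔮
      · subst hp
        exact fun h => hf' 𝔮' (Finset.mem_erase.2 ⟨hne.symm, h𝔮'⟩) (hle _ f hf h)
      · exact hf' 𝔭 (Finset.mem_erase.2 ⟨hp, h𝔭⟩)
    · push Not at hc
      obtain ⟨𝔮, h𝔮⟩ : F.Nonempty := Finset.card_pos.1 (by omega)
      obtain ⟨e, he, f, hf, hf'⟩ := ih (F.erase 𝔮) (fun 𝔭 h𝔭 => hF _ (Finset.mem_of_mem_erase h𝔭))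
        (fun 𝔭 h𝔭 => h _ (Finset.mem_of_mem_erase h𝔭)) (by rw [Finset.card_erase_of_mem h𝔮]; omega)
      by_cases hfq : f ∈ 𝔮
      swap
      · refine ⟨e, he, f, hf, fun 𝔭 h𝔭 => ?_⟩
        by_cases hp : 𝔭 = 𝔮
        · exact hp ▸ hfq
        · exact hf' 𝔭 (Finset.mem_erase.2 ⟨hp, h𝔭⟩)
      -- an element of the other primes
      have hprod : ∀ G : Finset (Ideal S), G ⊆ F.erase 𝔮 → ∃ e : ℕ, 1 ≤ e ∧ ∃ g ∈ 𝒜 e, g ∉ 𝔮 ∧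
          ∀ 𝔭 ∈ G, g ∈ 𝔭 := by
        intro G
        induction G using Finset.induction_on with
        | empty =>
          intro _
          obtain ⟨e, he, g, hg, hgq⟩ := h 𝔮 h𝔮
          exact ⟨e, he, g, hg, hgq, by simp⟩
        | insert 𝔭 G h𝔭 ihG =>
          intro hG
          obtain ⟨e, he, g, hg, hgq, hgG⟩ := ihG ((Finset.subset_insert _ _).trans hG)
          have h𝔭F := hG (Finset.mem_insert_self _ _)
          obtain ⟨k, a, ha, hap, haq⟩ := hc 𝔭 (Finset.mem_of_mem_erase h𝔭F) 𝔮 h𝔮 (Finset.ne_of_mem_erase h𝔭F)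
          have hq := hF 𝔮 h𝔮
          -- make the degree positive by multiplying with a power of `g`
          refine ⟨(k + (k.natAbs + 1) * e).toNat, ?_, a * g ^ (k.natAbs + 1), ?_, ?_, ?_⟩
          · have : (k.natAbs + 1 : ℤ) ≤ (k.natAbs + 1) * e := by
              nlinarith [Int.natCast_nonneg k.natAbs, (Int.ofNat_le.2 he : (1:ℤ) ≤ e)]
            omega
          · have h1 := SetLike.mul_mem_graded ha (SetLike.pow_mem_graded (k.natAbs + 1) hg)
            have : (k.natAbs + 1 : ℤ) ≤ (k.natAbs + 1) * e := by
              nlinarith [Int.natCast_nonneg k.natAbs, (Int.ofNat_le.2 he : (1:ℤ) ≤ e)]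
            rw [Int.toNat_of_nonneg (by omega)]
            simpa using h1
          · intro hmem
            rcases hq.mem_or_mem hmem with h1 | h1
            · exact haq h1
            · exact hgq (hq.mem_of_pow_mem _ h1)
          · intro 𝔭' h'
            rcases Finset.mem_insert.1 h' with rfl | h'
            · exact Ideal.mul_mem_right _ _ hap
            · exact Ideal.mul_mem_left _ _ (Ideal.pow_mem_of_mem _ (hgG _ h') _ (by omega))
      obtain ⟨e', he', g, hg, hgq, hgG⟩ := hprod _ subset_rfl
      refine ⟨e * e', Nat.mul_pos he he', f ^ e' + g ^ e, ?_, ?_⟩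
      · refine add_mem ?_ ?_
        · have := SetLike.pow_mem_graded e' hf
          push_cast; rw [mul_comm]; simpa using this
        · have := SetLike.pow_mem_graded e hg
          push_cast; simpa using this
      · intro 𝔭 h𝔭 hmem
        have hpp := hF 𝔭 h𝔭
        by_cases hp : 𝔭 = 𝔮
        · subst hp
          have : g ^ e ∈ 𝔭 := by
            have := sub_mem hmem (Ideal.pow_mem_of_mem 𝔭 hfq e' (by omega))
            simpa using this
          exact hgq (hpp.mem_of_pow_mem _ this)
        · have h1 : 𝔭 ∈ F.erase 𝔮 := Finset.mem_erase.2 ⟨hp, h𝔭⟩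
          have : f ^ e' ∈ 𝔭 := by
            have := sub_mem hmem (Ideal.pow_mem_of_mem 𝔭 (hgG 𝔭 h1) e (by omega))
            simpa using this
          exact hf' 𝔭 h1 (hpp.mem_of_pow_mem _ this)
end util
end Cech

/-! ### Nonnegatively graded rings -/

namespace Cech
set_option linter.unusedSectionVars false
open nonZeroDivisors DirectSum Filter

section basics
variable {S : Type*} [CommRing S] (𝒜 : ℤ → AddSubgroup S) [GradedRing 𝒜]

/-- `𝒜` has no elements of negative degree. -/
def NN : Prop := ∀ n < 0, ∀ x ∈ 𝒜 n, x = 0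

/-- `M` contains all elements of positive degree. -/
def Pos (M : Ideal S) : Prop := ∀ n : ℤ, 0 < n → ∀ x ∈ 𝒜 n, x ∈ M

variable {𝒜}

theorem cmp0_mul (hn : NN 𝒜) (x y : S) : cmp 𝒜 0 (x * y) = cmp 𝒜 0 x * cmp 𝒜 0 y := by
  refine DirectSum.Decomposition.inductionOn 𝒜 (motive := fun x => cmp 𝒜 0 (x * y) = cmp 𝒜 0 x * cmp 𝒜 0 y)
    ?_ ?_ ?_ x
  · simp [cmp_zero]
  · intro n m
    rcases lt_trichotomy n 0 with h | h | h
    · have : (m : S) = 0 := hn n h _ m.2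
      simp [this, cmp_zero]
    · subst h
      have := cmp_mul_left 𝒜 m.2 0 y
      rw [zero_add] at this
      rw [this, cmp_same 𝒜 m.2]
    · have := cmp_mul_left 𝒜 m.2 (-n) y
      rw [add_neg_cancel] at this
      have h0 : cmp 𝒜 (-n) y = 0 := hn (-n) (by omega) _ (cmp_mem _ _ _)
      rw [this, h0, cmp_ne 𝒜 m.2 h.ne', mul_zero, zero_mul]
  · intro a b ha hb
    rw [add_mul, cmp_add, cmp_add, ha, hb, add_mul]

theorem sub_cmp0 (hn : NN 𝒜) {M : Ideal S} (hM : Pos 𝒜 M) (x : S) : x - cmp 𝒜 0 x ∈ M := by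
  refine DirectSum.Decomposition.inductionOn 𝒜 (motive := fun x => x - cmp 𝒜 0 x ∈ M) ?_ ?_ ?_ x
  · simp [cmp_zero]
  · intro n m
    rcases lt_trichotomy n 0 with h | h | h
    · have : (m : S) = 0 := hn n h _ m.2
      simp [this, cmp_zero]
    · subst h
      rw [cmp_same 𝒜 m.2, sub_self]; exact zero_mem _
    · rw [cmp_ne 𝒜 m.2 h.ne', sub_zero]; exact hM n h _ m.2
  · intro a b ha hb
    have := add_mem ha hb
    rw [cmp_add]; convert this using 1; ring

theorem cmp0_mem_iff (hn : NN 𝒜) {M : Ideal S} (hM : Pos 𝒜 M) (x : S) : cmp 𝒜 0 x ∈ M ↔ x ∈ M := by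
  have := sub_cmp0 hn hM x
  constructor
  · intro h; simpa using add_mem this h
  · intro h; simpa using sub_mem h this

variable (𝒜) in
/-- The elements of degree zero outside a prime. -/
def U0 (M : Ideal S) [M.IsPrime] : Submonoid S where
  carrier := {u | u ∈ 𝒜 0 ∧ u ∉ M}
  one_mem' := ⟨SetLike.one_mem_graded 𝒜, fun h => Ideal.IsPrime.ne_top ‹_› ((Ideal.eq_top_iff_one _).2 h)⟩
  mul_mem' := by
    rintro a b ⟨ha, ha'⟩ ⟨hb, hb'⟩
    refine ⟨by simpa using SetLike.mul_mem_graded ha hb, fun h => ?_⟩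
    rcases Ideal.IsPrime.mem_or_mem ‹_› h with h | h
    · exact ha' h
    · exact hb' h

theorem U0_deg {M : Ideal S} [M.IsPrime] : ∀ u ∈ U0 𝒜 M, u ∈ 𝒜 0 := fun _ h => h.1

variable {L : Type*} [CommRing L] [Algebra S L]

/-- Exactness with multipliers `W` can be tested at the primes that contain all elements of positive
degree and are disjoint from `W`. -/
theorem glob (hn : NN 𝒜) {W : Submonoid S} (hW : ∀ w ∈ W, w ∈ 𝒜 0) {N : Fam L ℤ} (hN : GS 𝒜 N)
    {l : List (L × ℤ)} {i r : ℤ}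
    (h : ∀ (M : Ideal S) [M.IsPrime], Pos 𝒜 M → (∀ w ∈ W, w ∉ M) →
      Ex (T0 (UL L (U0 𝒜 M))) N ⊥ l i r) :
    Ex (T0 (UL L W)) N ⊥ l i r := by
  rw [ex_T0]
  intro z hz hdz
  let 𝔞 : Ideal S :=
    { carrier := {s | ∃ w ∈ C N l (i - 1) r, algebraMap S L (cmp 𝒜 0 s) • z - d w ∈ C (⊥ : Fam L ℤ) l i r}
      zero_mem' := ⟨0, zero_mem _, by simp [cmp_zero]⟩
      add_mem' := by
        rintro a b ⟨w, hw, h⟩ ⟨w', hw', h'⟩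
        refine ⟨w + w', add_mem hw hw', ?_⟩
        have := add_mem h h'
        rw [cmp_add, map_add, add_smul, map_add]
        convert this using 1; abel
      smul_mem' := by
        rintro c a ⟨w, hw, h⟩
        refine ⟨algebraMap S L (cmp 𝒜 0 c) • w, C_smul0 (hN 0 _ (cmp_mem _ _ _)) hw, ?_⟩
        have := C_smul0 (St.bot (algebraMap S L (cmp 𝒜 0 c), 0)) h
        rw [smul_eq_mul, cmp0_mul hn, map_mul, mul_smul, map_smul, ← smul_sub]; exact this }
  have hpos : Pos 𝒜 𝔞 := by
    intro n h x hx
    refine ⟨0, zero_mem _, ?_⟩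
    rw [cmp_ne 𝒜 hx h.ne']; simp
  by_cases hd : Disjoint (𝔞 : Set S) W
  · obtain ⟨M, hM, hle, hMW⟩ := Ideal.exists_le_prime_disjoint _ _ hd
    rw [Set.disjoint_right] at hMW
    have := h M (fun n h x hx => hle (hpos n h x hx)) (fun w hw => hMW hw)
    rw [ex_T0] at this
    obtain ⟨_, ⟨u, hu, rfl⟩, w, hw, h⟩ := this z hz hdz
    exact absurd (hle (show u ∈ 𝔞 from ⟨w, hw, by rw [cmp_same 𝒜 hu.1]; exact h⟩)) hu.2
  · rw [Set.not_disjoint_iff] at hd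
    obtain ⟨s, ⟨w, hw, h⟩, hs⟩ := hd
    rw [cmp_same 𝒜 (hW s hs)] at h
    exact ⟨_, ⟨s, hs, rfl⟩, w, hw, h⟩
end basics

section case1
variable {L : Type*} [CommRing L]

/-- In nonnegative degrees, `N` lies in `N0` up to multipliers. -/
def KK (U : Submonoid L) (N0 N : Fam L ℤ) : Prop := ∀ r : ℤ, 0 ≤ r → ∀ x ∈ N r, ∃ τ ∈ U, τ * x ∈ N0 r

theorem KK.sat {U : Submonoid L} {N0 N : Fam L ℤ} (h : KK U N0 N) {y : L × ℤ} (hy : 0 ≤ y.2)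
    (hN0 : St y N0) : KK U (sat y N0) (sat y N) := by
  intro r hr x hx
  obtain ⟨k, hk⟩ := (mem_sat.1 hx).exists
  obtain ⟨τ, hτ, h'⟩ := h _ (by positivity) _ hk
  refine ⟨τ, hτ, (mem_sat_iff hN0).2 ⟨k, ?_⟩⟩
  rwa [mul_left_comm]

theorem KK.C {U : Submonoid L} {N0 N : Fam L ℤ} (h : KK U N0 N) (hU : ∀ u ∈ U, St (u, 0) N0)
    {l : List (L × ℤ)} (hl : ∀ y ∈ l, 0 ≤ y.2) (hN0 : StL l N0) {i r : ℤ} (hr : 0 ≤ r) {c : Co L}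
    (hc : c ∈ C N l i r) : ∃ τ ∈ U, τ • c ∈ C N0 l i r := by
  induction l generalizing N N0 i c with
  | nil =>
    rw [mem_C_nil] at hc
    simp only [mem_C_nil]
    split_ifs with hi
    · rw [if_pos hi] at hc
      exact h r hr _ hc
    · rw [if_neg hi] at hc
      exact ⟨1, one_mem _, by simpa using hc⟩
  | cons y l ih =>
    rw [mem_C_cons] at hc
    have hl' : ∀ y ∈ l, 0 ≤ y.2 := fun y hy => hl y (List.mem_cons_of_mem _ hy)
    obtain ⟨τ, hτ, h1⟩ := ih h hU hl' hN0.tail hc.1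
    obtain ⟨σ, hσ, h2⟩ := ih (h.sat (hl y List.mem_cons_self) hN0.head)
      (fun u hu => (hU u hu).sat) hl' hN0.tail.sat hc.2
    refine ⟨σ * τ, mul_mem hσ hτ, ?_⟩
    rw [mem_C_cons, map_smul, map_smul]
    refine ⟨?_, ?_⟩
    · rw [mul_smul]; exact C_smul0 (hU σ hσ) h1
    · rw [mul_comm, mul_smul]; exact C_smul0 (hU τ hτ).sat h2

/-- If `N0` already agrees, in nonnegative degrees and up to multipliers, with its localization at a
member of `l`, the Čech complex on `l` is exact in nonnegative degrees. -/
theorem KK.ex {U : Submonoid L} {N0 : Fam L ℤ} (hU : ∀ u ∈ U, St (u, 0) N0)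
    {l : List (L × ℤ)} (hl : ∀ y ∈ l, 0 ≤ y.2) (hlu : ∀ y ∈ l, IsUnit y.1) (hN0 : StL l N0) {y : L × ℤ} (hy : y ∈ l)
    (h : KK U N0 (Cech.sat y N0)) {i r : ℤ} (hr : 0 ≤ r) : Ex (T0 U) N0 ⊥ l i r := by
  have h1 : Ex (T0 U) (Cech.sat y N0) ⊥ l i r :=
    ex_of_sat_eq (T0_mon U) hy hN0.sat (fun y _ => St.bot y) (T0_st fun u hu => (hU u hu).sat)
      (fun t _ => St.bot t) (sat_idem (hN0 y hy)) (sat_bot (hlu y hy)) i r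
  rw [ex_T0] at h1 ⊢
  intro z hz hdz
  obtain ⟨u, hu, w, hw, h2⟩ := h1 z (C_mono (le_sat (hN0 y hy)) _ _ _ hz) hdz
  obtain ⟨τ, hτ, h3⟩ := h.C hU hl hN0 hr hw
  refine ⟨τ * u, mul_mem hτ hu, τ • w, h3, ?_⟩
  rw [mul_smul, map_smul, ← smul_sub]
  exact C_smul0 (St.bot _) h2
end case1
end Cech

/-! ### Homogeneous parameters -/

namespace Cech
set_option linter.unusedSectionVars false
open nonZeroDivisors DirectSum Filter

section gens
variable {S : Type*} [CommRing S] {𝒜 : ℤ → AddSubgroup S} [GradedRing 𝒜]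

theorem spl_append {S Γ : Type*} [CommRing S] (l l' : List (S × Γ)) : spl (l ++ l') = spl l ⊔ spl l' := by
  rw [spl, spl, spl, ← Ideal.span_union]
  congr 1; ext s
  simp only [List.mem_append, Set.mem_ofPred_eq, Set.mem_union]
  constructor
  · rintro ⟨p, hp | hp, rfl⟩
    · exact Or.inl ⟨p, hp, rfl⟩
    · exact Or.inr ⟨p, hp, rfl⟩
  · rintro (⟨p, hp, rfl⟩ | ⟨p, hp, rfl⟩)
    · exact ⟨p, Or.inl hp, rfl⟩
    · exact ⟨p, Or.inr hp, rfl⟩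

theorem spl_le {S Γ : Type*} [CommRing S] {l : List (S × Γ)} {I : Ideal S} : spl l ≤ I ↔ ∀ p ∈ l, p.1 ∈ I := by
  rw [spl, Ideal.span_le]
  constructor
  · intro h p hp; exact h ⟨p, hp, rfl⟩
  · rintro h _ ⟨p, hp, rfl⟩; exact h p hp

/-- Non-zero-divisors of degree zero generating the degree zero part of `M`. -/
theorem zero_gens [IsNoetherianRing S] {M : Ideal S} {p0 : S} (h0 : p0 ∈ 𝒜 0) (h0M : p0 ∈ M)
    (h0z : p0 ∈ S⁰) : ∃ c : List (S × ℤ),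
      (∀ p ∈ c, p.2 = 0 ∧ p.1 ∈ 𝒜 0 ∧ p.1 ∈ M ∧ p.1 ∈ S⁰) ∧ ∀ x ∈ 𝒜 0, x ∈ M → x ∈ spl c := by
  let A := SetLike.GradeZero.subring 𝒜
  let 𝔓 : Ideal A := M.comap A.subtype
  have hgen := nzd_gen A.subtype (𝔓 := 𝔓) (p0 := ⟨p0, h0⟩) h0M h0z
  obtain ⟨s', hs', hs⟩ := (Submodule.fg_span_iff_fg_span_finset_subset (R := S)
    {p : S | p ∈ 𝒜 0 ∧ p ∈ M ∧ p ∈ S⁰}).1 (IsNoetherian.noetherian _)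
  refine ⟨s'.toList.map fun p => (p, 0), ?_, ?_⟩
  · intro p hp
    simp only [List.mem_map, Finset.mem_toList] at hp
    obtain ⟨q, hq, rfl⟩ := hp
    exact ⟨rfl, hs' hq⟩
  · intro x hx hxM
    have h1 : (⟨x, hx⟩ : A) ∈ Ideal.span {p | p ∈ 𝔓 ∧ A.subtype p ∈ S⁰} := hgen hxM
    have h2 := Ideal.mem_map_of_mem A.subtype h1
    rw [Ideal.map_span] at h2
    have h3 : x ∈ Ideal.span {p : S | p ∈ 𝒜 0 ∧ p ∈ M ∧ p ∈ S⁰} := by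
      refine Ideal.span_mono ?_ h2
      rintro _ ⟨p, hp, rfl⟩
      exact ⟨p.2, hp.1, hp.2⟩
    have h4 : x ∈ Submodule.span S (s' : Set S) := hs ▸ h3
    refine Ideal.span_mono ?_ h4
    intro p hp
    exact ⟨(p, 0), by simpa using hp, rfl⟩

theorem le_of_pos (hn : NN 𝒜) {M P : Ideal S} (hM : Pos 𝒜 M) (hP : Pos 𝒜 P)
    (h : ∀ x ∈ 𝒜 0, x ∈ M → x ∈ P) : M ≤ P := fun x hx =>
  (cmp0_mem_iff hn hP x).1 (h _ (cmp_mem _ _ _) ((cmp0_mem_iff hn hM x).2 hx))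

theorem ht_pos_of_nzd {P : Ideal S} [P.IsPrime] {x : S} (hx : x ∈ P) (hz : x ∈ S⁰) : 1 ≤ P.height := by
  rw [Order.one_le_iff_ne_zero, Ne, Ideal.height_eq_zero_iff]
  intro h
  exact Set.disjoint_left.1 (Ideal.disjoint_nonZeroDivisors_of_mem_minimalPrimes h) hx hz

theorem eq_of_ht {P M : Ideal S} [P.IsPrime] [M.IsPrime] (h : P ≤ M) {D : ℕ} (hD : M.height = D)
    (hP : (D : ℕ∞) ≤ P.height) : P = M := by
  by_contra hne
  have := Ideal.height_add_one_le_of_lt_of_isPrime (lt_of_le_of_ne h hne)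
  rw [hD] at this
  have h2 := (add_le_add_left hP 1).trans this
  have : D + 1 ≤ D := by exact_mod_cast h2
  omega

/-- Homogeneous non-zero-divisors of positive degree which, with the degree zero part of `M`, cut
out primes of large height. -/
theorem pos_params [IsNoetherianRing S] (hn : NN 𝒜) {M : Ideal S} [M.IsPrime] (hM : Pos 𝒜 M)
    {D : ℕ} (hD : M.height = D) {φ : S} {e : ℕ} (he : 1 ≤ e) (hφ : φ ∈ 𝒜 e) (hφz : φ ∈ S⁰)
    {c : List (S × ℤ)} {p0 : S × ℤ} (hp0 : p0 ∈ c) (hp0z : p0.1 ∈ S⁰)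
    (hc : ∀ x ∈ 𝒜 0, x ∈ M → x ∈ spl c) (k : ℕ) (hk : k + 1 ≤ D) :
    ∃ f : List (S × ℤ), f.length = k ∧ (∀ p ∈ f, 0 < p.2 ∧ p.1 ∈ 𝒜 p.2 ∧ p.1 ∈ S⁰) ∧
      ∀ P : Ideal S, P.IsPrime → spl (c ++ f) ≤ P → P ≤ M → ((k + 1 : ℕ) : ℕ∞) ≤ P.height := by
  classical
  induction k with
  | zero =>
    refine ⟨[], rfl, by simp, fun P hP h _ => ?_⟩
    simpa using ht_pos_of_nzd (h (mem_spl (by simpa using hp0))) hp0z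
  | succ k ih =>
    obtain ⟨f, hf, hfp, hfP⟩ := ih (by omega)
    have hfin := Ideal.finite_minimalPrimes_of_isNoetherianRing S (spl (c ++ f))
    let F : Finset (Ideal S) := (associatedPrimes.finite S S).toFinset ∪
      hfin.toFinset.filter fun 𝔮 => 𝔮 ≤ M ∧ 𝔮 ≠ M
    obtain ⟨e', he', g, hg, hgF⟩ := hom_avoid 𝒜 F (by
      intro 𝔮 h𝔮
      simp only [F, Finset.mem_union, Set.Finite.mem_toFinset, Finset.mem_filter] at h𝔮
      rcases h𝔮 with h | h
      · exact h.isPrime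
      · exact h.1.1.1) (by
      intro 𝔮 h𝔮
      simp only [F, Finset.mem_union, Set.Finite.mem_toFinset, Finset.mem_filter] at h𝔮
      rcases h𝔮 with h | ⟨h, hle, hne⟩
      · refine ⟨e, he, φ, hφ, fun hmem => ?_⟩
        have : φ ∈ ⋃ p ∈ associatedPrimes S S, (p : Set S) := Set.mem_biUnion h hmem
        rw [biUnion_associatedPrimes_eq_compl_nonZeroDivisors] at this
        exact this hφz
      · by_contra hcon
        push Not at hcon
        apply hne
        refine le_antisymm hle (le_of_pos hn hM ?_ ?_)
        · intro n hn x hx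
          exact hcon n.toNat (by omega) x (by rwa [Int.toNat_of_nonneg hn.le])
        · intro x hx hxM
          have := h.1.2
          rw [spl_append] at this
          exact this (Ideal.mem_sup_left (hc x hx hxM)))
    refine ⟨(g, e') :: f, by simp [hf], ?_, ?_⟩
    · intro p hp
      rcases List.mem_cons.1 hp with rfl | hp
      · refine ⟨by simp; omega, hg, ?_⟩
        by_contra hgz
        have : g ∈ ⋃ p ∈ associatedPrimes S S, (p : Set S) := by
          rw [biUnion_associatedPrimes_eq_compl_nonZeroDivisors]; exact hgz
        obtain ⟨𝔮, h𝔮, h⟩ := Set.mem_iUnion₂.1 this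
        exact hgF 𝔮 (by simp only [F, Finset.mem_union, Set.Finite.mem_toFinset]; exact Or.inl h𝔮) h
      · exact hfp p hp
    · intro P hP hle hPM
      have hle' : spl (c ++ f) ≤ P := (spl_mono (by intro p; simp; tauto)).trans hle
      obtain ⟨𝔮, h𝔮, h𝔮P⟩ := Ideal.exists_minimalPrimes_le hle'
      have h𝔮p := h𝔮.1.1
      by_cases hne : 𝔮 = M
      · have : P = M := le_antisymm hPM (hne ▸ h𝔮P)
        rw [this, hD]
        exact_mod_cast hk
      · have hg𝔮 : g ∉ 𝔮 := hgF 𝔮 (by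
          simp only [F, Finset.mem_union, Set.Finite.mem_toFinset, Finset.mem_filter]
          exact Or.inr ⟨h𝔮, h𝔮P.trans hPM, hne⟩)
        have hlt : 𝔮 < P := lt_of_le_of_ne h𝔮P fun h => hg𝔮 (h ▸ hle (mem_spl (p := (g, (e' : ℤ))) (by simp)))
        have h1 := hfP 𝔮 h𝔮p h𝔮.1.2 (h𝔮P.trans hPM)
        have h2 := Ideal.height_add_one_le_of_lt_of_isPrime hlt
        refine le_trans ?_ h2
        rw [Nat.cast_add _ 1]
        exact add_le_add_left h1 _

theorem cmp_zero_of_neg (hn : NN 𝒜) {n : ℤ} (h : n < 0) (x : S) : cmp 𝒜 n x = 0 := hn n h _ (cmp_mem _ _ _)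

/-- Components of elements of an ideal generated by homogeneous elements. -/
theorem cmp_span {s : Set S} {e : S → ℤ} (hs : ∀ x ∈ s, x ∈ 𝒜 (e x)) {𝔟 : Ideal S} {n : ℤ}
    (h : ∀ x ∈ s, ∀ t ∈ 𝒜 (n - e x), t * x ∈ 𝔟) {y : S} (hy : y ∈ Ideal.span s) : cmp 𝒜 n y ∈ 𝔟 := by
  suffices ∀ t, cmp 𝒜 n (t * y) ∈ 𝔟 by simpa using this 1
  refine Submodule.span_induction (p := fun y _ => ∀ t, cmp 𝒜 n (t * y) ∈ 𝔟) ?_ ?_ ?_ ?_ hy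
  · intro x hx t
    have := cmp_mul_right 𝒜 (hs x hx) (n - e x) t
    rw [sub_add_cancel] at this
    rw [this]; exact h x hx _ (cmp_mem _ _ _)
  · intro t; rw [mul_zero, cmp_zero]; exact zero_mem _
  · intro x y _ _ hx hy t
    rw [mul_add, cmp_add]; exact add_mem (hx t) (hy t)
  · intro a x _ hx t
    rw [smul_eq_mul, ← mul_assoc]; exact hx _

/-- Elements of large degree lie in large powers of the ideal generated by the elements of positive
degree. -/
theorem large_deg [IsNoetherianRing S] : ∃ m : ℕ, ∀ K : ℕ, ∀ N : ℤ, (K * m : ℕ) < N →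
    ∀ x ∈ 𝒜 N, x ∈ (Ideal.span {x : S | ∃ n : ℤ, 0 < n ∧ x ∈ 𝒜 n}) ^ K := by
  classical
  obtain ⟨s', hs', hs⟩ := (Submodule.fg_span_iff_fg_span_finset_subset (R := S)
    {x : S | ∃ n : ℤ, 0 < n ∧ x ∈ 𝒜 n}).1 (IsNoetherian.noetherian _)
  have hs'' : ∀ x ∈ s', ∃ n : ℤ, 0 < n ∧ x ∈ 𝒜 n := fun x hx => hs' hx
  choose! e he using hs''
  refine ⟨s'.sup fun x => (e x).toNat, fun K => ?_⟩
  induction K with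
  | zero => intro N _ x _; simp
  | succ K ih =>
    intro N hN x hx
    have hN0 : 0 < N := lt_of_le_of_lt (Int.natCast_nonneg _) hN
    have h1 : x ∈ Ideal.span (s' : Set S) := by
      have : x ∈ Submodule.span S {x : S | ∃ n : ℤ, 0 < n ∧ x ∈ 𝒜 n} := Submodule.subset_span ⟨N, hN0, hx⟩
      rwa [hs] at this
    rw [← cmp_same 𝒜 hx]
    refine cmp_span (fun x hx => (he x hx).2) ?_ h1
    intro y hy t ht
    have hle : e y ≤ ((s'.sup fun x => (e x).toNat : ℕ) : ℤ) := by
      have := Finset.le_sup (f := fun x => (e x).toNat) hy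
      have h2 : (e y).toNat ≤ s'.sup fun x => (e x).toNat := this
      omega
    rw [pow_succ]
    refine Ideal.mul_mem_mul (ih _ ?_ t ht) (Ideal.subset_span ⟨_, he y hy⟩)
    push_cast at hN ⊢
    linarith
end gens
end Cech

namespace Cech
set_option linter.unusedSectionVars false
open nonZeroDivisors DirectSum Filter

section kill
variable {S : Type*} [CommRing S] {𝒜 : ℤ → AddSubgroup S} [GradedRing 𝒜]

theorem usat_single {U : Submonoid S} {𝔟 : Ideal S} {m : ℕ} {x : Fin m → S} (h : ∀ i, x i ∈ usat U 𝔟) :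
    ∃ u ∈ U, ∀ i, u * x i ∈ 𝔟 := by
  choose u hu h using h
  refine ⟨∏ i, u i, prod_mem fun i _ => hu i, fun i => ?_⟩
  classical
  rw [← Finset.mul_prod_erase _ _ (Finset.mem_univ i), mul_right_comm]
  exact Ideal.mul_mem_right _ _ (h i)

/-- Locally at `M`, elements of positive degree are nilpotent modulo the parameters of positive degree. -/
theorem kill [IsNoetherianRing S] (hn : NN 𝒜) {M : Ideal S} [M.IsPrime] (hM : Pos 𝒜 M)
    {c f : List (S × ℤ)} (hc0 : ∀ p ∈ c, p.2 = 0 ∧ p.1 ∈ 𝒜 0 ∧ p.1 ∈ M)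
    (hf : ∀ p ∈ f, p.1 ∈ 𝒜 p.2)
    (h : ∀ P : Ideal S, P.IsPrime → spl (c ++ f) ≤ P → P ≤ M → P = M)
    {e : ℤ} (he : 0 < e) {x : S} (hx : x ∈ 𝒜 e) : ∃ u ∈ U0 𝒜 M, u * x ∈ (spl f).radical := by
  classical
  set 𝔟 := spl (c ++ f) with h𝔟
  let 𝔸 : Ideal S := Ideal.span {x : S | ∃ n : ℤ, 0 < n ∧ x ∈ 𝒜 n}
  have hhom : ∀ n y, y ∈ 𝔟 → cmp 𝒜 n y ∈ 𝔟 := by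
    intro n y hy
    have hg : ∀ z ∈ {s | ∃ p ∈ c ++ f, p.1 = s}, ∃ e : ℤ, z ∈ 𝒜 e := by
      rintro _ ⟨p, hp, rfl⟩
      rcases List.mem_append.1 hp with hp | hp
      · exact ⟨0, (hc0 p hp).2.1⟩
      · exact ⟨_, hf p hp⟩
    choose! e he using hg
    exact cmp_span he (fun z hz t _ => Ideal.mul_mem_left _ _ (Ideal.subset_span hz)) hy
  have h1 : 𝔸 ≤ (usat (U0 𝒜 M) 𝔟).radical := by
    rw [Ideal.span_le]
    rintro y ⟨n, hn0, hy⟩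
    obtain ⟨s, hs, k, hk⟩ := rad_of_unique h (hM n hn0 y hy)
    refine ⟨k, cmp 𝒜 0 (s ^ k), ⟨cmp_mem _ _ _, ?_⟩, ?_⟩
    · rw [cmp0_mem_iff hn hM]
      exact fun hh => hs (Ideal.IsPrime.mem_of_pow_mem ‹_› _ hh)
    · have hyk : y ^ k ∈ 𝒜 (k • n) := SetLike.pow_mem_graded k hy
      have := cmp_mul_right 𝒜 hyk 0 (s ^ k)
      rw [← this, ← mul_pow]
      exact hhom _ _ hk
  obtain ⟨K, hK⟩ := Ideal.exists_pow_le_of_le_radical_of_fg h1 (IsNoetherian.noetherian _)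
  obtain ⟨m, hm⟩ := large_deg (𝒜 := 𝒜)
  -- degree `N = (K * m + 1) * e`
  let N0 := K * m + 1
  let N : ℤ := N0 • e
  have hNbig : ((K * m : ℕ) : ℤ) < N := by
    simp only [N, N0, nsmul_eq_mul]; push_cast
    have h0 : (0 : ℤ) ≤ K * m := by positivity
    nlinarith
  have hNA : ∀ y ∈ 𝒜 N, y ∈ usat (U0 𝒜 M) 𝔟 := fun y hy => hK (hm K N hNbig y hy)
  obtain ⟨s', hs', hs⟩ := (Submodule.fg_span_iff_fg_span_finset_subset (R := S)
    (𝒜 N : Set S)).1 (IsNoetherian.noetherian _)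
  let E : Fin s'.card → S := fun i => (s'.equivFin.symm i : S)
  have hE : ∀ i, E i ∈ 𝒜 N := fun i => hs' (s'.equivFin.symm i).2
  let A := SetLike.GradeZero.subring 𝒜
  have hgen : ∀ y ∈ 𝒜 N, ∃ a : Fin s'.card → A, y = ∑ j, algebraMap A S (a j) * E j := by
    intro y hy
    have : y ∈ Submodule.span S (Set.range E) := by
      have h1 : y ∈ Submodule.span S (𝒜 N : Set S) := Submodule.subset_span hy
      rw [hs] at h1
      refine Submodule.span_mono ?_ h1
      intro z hz
      exact ⟨s'.equivFin ⟨z, hz⟩, by simp [E]⟩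
    obtain ⟨b, hb⟩ := (Submodule.mem_span_range_iff_exists_fun S).1 this
    refine ⟨fun j => ⟨cmp 𝒜 0 (b j), cmp_mem _ _ _⟩, ?_⟩
    have hadd : ∀ (t : Finset (Fin s'.card)), cmp 𝒜 N (∑ j ∈ t, b j * E j) = ∑ j ∈ t, cmp 𝒜 0 (b j) * E j := by
      intro t
      induction t using Finset.induction_on with
      | empty => simp [cmp_zero]
      | insert j t hj ih =>
        rw [Finset.sum_insert hj, Finset.sum_insert hj, cmp_add, ih]
        have := cmp_mul_right 𝒜 (hE j) 0 (b j)
        rw [zero_add] at this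
        rw [this]
    have h2 := hadd Finset.univ
    simp only [smul_eq_mul] at hb
    rw [hb, cmp_same 𝒜 hy] at h2
    exact h2
  obtain ⟨u, hu, huE⟩ := usat_single (fun i => hNA (E i) (hE i))
  let 𝔓 : Ideal A := M.comap A.subtype
  have : 𝔓.IsPrime := Ideal.IsPrime.comap _
  obtain ⟨τ, hτ, hτE⟩ := det_trick (A := A) (𝔓 := 𝔓) E (𝔟 := spl f) (τ := ⟨u, hu.1⟩) hu.2 (by
    intro i
    have key : ∀ y ∈ 𝔟, ∀ t, ∃ c : Fin s'.card → A, (∀ j, c j ∈ 𝔓) ∧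
        cmp 𝒜 N (t * y) - ∑ j, algebraMap A S (c j) * E j ∈ spl f := by
      intro y hy
      refine Submodule.span_induction (p := fun y _ => ∀ t, ∃ c : Fin s'.card → A, (∀ j, c j ∈ 𝔓) ∧
        cmp 𝒜 N (t * y) - ∑ j, algebraMap A S (c j) * E j ∈ spl f) ?_ ?_ ?_ ?_ hy
      · rintro _ ⟨p, hp, rfl⟩ t
        rcases List.mem_append.1 hp with hp | hp
        · obtain ⟨-, hp0, hpM⟩ := hc0 p hp
          obtain ⟨a, ha⟩ := hgen (cmp 𝒜 N t) (cmp_mem _ _ _)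
          refine ⟨fun j => ⟨p.1, hp0⟩ * a j, fun j => Ideal.mul_mem_right _ _ hpM, ?_⟩
          have := cmp_mul_right 𝒜 hp0 N t
          rw [add_zero] at this
          rw [this, ha, Finset.sum_mul, ← Finset.sum_sub_distrib]
          convert zero_mem (spl f) using 1
          refine Finset.sum_eq_zero fun j _ => ?_
          rw [map_mul, sub_eq_zero, mul_comm, mul_assoc]; rfl
        · refine ⟨0, fun j => zero_mem _, ?_⟩
          have := cmp_mul_right 𝒜 (hf p hp) (N - p.2) t
          rw [sub_add_cancel] at this
          rw [this]
          simpa using Ideal.mul_mem_left _ _ (mem_spl hp)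
      · intro t
        exact ⟨0, fun j => zero_mem _, by simp [cmp_zero]⟩
      · intro y z _ _ hy hz t
        obtain ⟨a, ha, ha'⟩ := hy t
        obtain ⟨b, hb, hb'⟩ := hz t
        refine ⟨a + b, fun j => add_mem (ha j) (hb j), ?_⟩
        have := add_mem ha' hb'
        rw [mul_add, cmp_add]
        convert this using 1
        simp only [Pi.add_apply, map_add, add_mul, Finset.sum_add_distrib]; ring
      · intro b y _ hy t
        obtain ⟨a, ha, ha'⟩ := hy (t * b)
        refine ⟨a, ha, ?_⟩
        rwa [smul_eq_mul, ← mul_assoc]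
    obtain ⟨a, ha, h⟩ := key _ (huE i) 1
    refine ⟨a, ha, ?_⟩
    rw [one_mul] at h
    rw [cmp_same 𝒜 (by simpa using SetLike.mul_mem_graded hu.1 (hE i))] at h
    exact h)
  refine ⟨τ, ⟨τ.2, hτ⟩, N0, ?_⟩
  have hxN : x ^ N0 ∈ 𝒜 N := SetLike.pow_mem_graded N0 hx
  obtain ⟨a, ha⟩ := hgen _ hxN
  have h3 : (τ : S) * x ^ N0 ∈ spl f := by
    rw [ha, Finset.mul_sum]
    refine Submodule.sum_mem _ fun j _ => ?_
    rw [mul_left_comm]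
    exact Ideal.mul_mem_left _ _ (hτE j)
  have : ((τ : S) * x) ^ N0 = (τ : S) ^ (K * m) * (τ * x ^ N0) := by
    simp only [N0]; ring
  rw [this]
  exact Ideal.mul_mem_left _ _ h3
end kill
end Cech

/-! ### Vanishing of local cohomology in nonnegative degrees -/

namespace Cech
set_option linter.unusedSectionVars false
open nonZeroDivisors DirectSum Filter

section rows
variable {S : Type*} [CommRing S] {𝒜 : ℤ → AddSubgroup S} [GradedRing 𝒜]
variable {L : Type*} [CommRing L] [Algebra S L]

/-- Powers of `p` among the multipliers may be traded for localizing at `p`. -/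
theorem ex_div {U : Submonoid S} {p : S} (hpu : IsUnit (algebraMap S L p)) {N : Fam L ℤ}
    {l : List (L × ℤ)} (hl : StL l N) (hp : St (algebraMap S L p, 0) N) {i r : ℤ}
    (h : Ex (T0 (UL L (U ⊔ Submonoid.powers p))) N ⊥ l i r) :
    Ex (T0 (UL L U)) (sat (algebraMap S L p, 0) N) ⊥ l i r := by
  have h1 : Ex (T0 (UL L (U ⊔ Submonoid.powers p))) (sat (algebraMap S L p, 0) N)
      (sat (algebraMap S L p, 0) ⊥) l i r :=
    ex_sat (y := (algebraMap S L p, 0)) hpu hl (fun y _ => St.bot y) hp (St.bot _) (fun k => by simpa using h)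
  rw [sat_bot (y := (algebraMap S L p, 0)) hpu, ex_T0] at h1
  rw [ex_T0]
  intro z hz hdz
  obtain ⟨_, ⟨v, hv, rfl⟩, w, hw, h2⟩ := h1 z hz hdz
  obtain ⟨u, hu, _, ⟨m, rfl⟩, rfl⟩ := Submonoid.mem_sup.1 hv
  obtain ⟨v, hv⟩ := hpu.pow m
  refine ⟨_, ⟨u, hu, rfl⟩, (↑v⁻¹ : L) • w, ?_, ?_⟩
  · rw [← sat_idem hp, mem_C_sat (y := (algebraMap S L p, 0)) hpu hp.sat hl.sat]
    refine eventually_atTop.2 ⟨m, fun k hk => ?_⟩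
    obtain ⟨j, rfl⟩ := Nat.exists_eq_add_of_le hk
    have h := C_smul (pw_st (hp.sat (y := (algebraMap S L p, 0))) _ ⟨j, rfl⟩) hw
    have e1 : (algebraMap S L p) ^ (m + j) • (↑v⁻¹ : L) • w = (algebraMap S L p) ^ j • w := by
      rw [smul_smul, pow_add, ← hv, mul_right_comm, Units.mul_inv, one_mul]
    simpa only [e1, smul_zero, add_zero] using h
  · have := C_smul0 (St.bot ((↑v⁻¹ : L), 0)) h2
    convert this using 1
    change algebraMap S L u • z - _ = _ • (algebraMap S L (u * p ^ m) • z - _)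
    rw [map_smul, smul_sub, smul_smul, map_mul, map_pow, ← hv, mul_left_comm, Units.inv_mul, mul_one]

/-- Exactness in all cohomological degrees survives adding elements of degree zero. -/
theorem ex_cs {U : Submonoid S} (hU : ∀ u ∈ U, u ∈ 𝒜 0) {c f : List (S × ℤ)} (hc : HL L 𝒜 c) (hc0 : ∀ p ∈ c, p.2 = 0)
    (hf : HL L 𝒜 f) {N : Fam L ℤ} (hN : GS 𝒜 N) {r : ℤ}
    (h : ∀ i, Ex (T0 (UL L U)) N ⊥ (ims L f) i r) (i : ℤ) :
    Ex (T0 (UL L U)) N ⊥ (ims L (c ++ f)) i r := by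
  induction c generalizing N i with
  | nil => exact h i
  | cons p c ih =>
    have hp := hc p List.mem_cons_self
    have hp0 := hc0 p List.mem_cons_self
    have hpN : ∀ {N : Fam L ℤ}, GS 𝒜 N → St (im L p) N := fun hN => hN p.2 p.1 hp.1
    have hc' : ∀ q ∈ c, q.2 = 0 := fun q hq => hc0 q (List.mem_cons_of_mem _ hq)
    refine ex_cons0 (hpN hN) (St.bot _) (UL_st hU hN) (UL_st hU GS.bot) (ih hc.tail hc' hN h i) ?_
    rw [sat_bot hp.2]
    refine ih hc.tail hc' (hN.sat _) (fun i => ?_) _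
    have := ex_sat (T := T0 (UL L U)) (N' := ⊥) (y := im L p) (i := i) (g := r) hp.2 (hf.stl hN) (hf.stl GS.bot) (hpN hN) (St.bot _)
      (fun k => by simpa [im, hp0] using h i)
    rwa [sat_bot hp.2] at this

/-- Elements of degree zero may be removed from the list when the localizations at them have exact
complexes. -/
theorem ex_of_cs {U : Submonoid S} (hU : ∀ u ∈ U, u ∈ 𝒜 0) {c f : List (S × ℤ)} (hc : HL L 𝒜 c)
    (hc0 : ∀ p ∈ c, p.2 = 0)
    (hf : HL L 𝒜 f) {N : Fam L ℤ} (hN : GS 𝒜 N) {r : ℤ}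
    (h : ∀ p ∈ c, ∀ i, Ex (T0 (UL L U)) (sat (im L p) N) ⊥ (ims L f) i r) {i : ℤ}
    (h' : Ex (T0 (UL L U)) N ⊥ (ims L (c ++ f)) i r) : Ex (T0 (UL L U)) N ⊥ (ims L f) i r := by
  induction c with
  | nil => exact h'
  | cons p c ih =>
    have hp := hc p List.mem_cons_self
    have hpN : St (im L p) N := hN p.2 p.1 hp.1
    have hc' : ∀ q ∈ c, q.2 = 0 := fun q hq => hc0 q (List.mem_cons_of_mem _ hq)
    refine ih hc.tail hc' (fun q hq => h q (List.mem_cons_of_mem _ hq)) ?_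
    refine ex_of_cons0 hpN (St.bot _) (UL_st hU hN) (UL_st hU GS.bot) h' ?_
    rw [sat_bot hp.2]
    exact ex_cs hU hc.tail hc' hf (hN.sat _) (h p List.mem_cons_self) i

variable [IsFractionRing S L]

/-- In degrees `r ≥ 0`, the local cohomology with support in the elements of positive degree
vanishes locally at `M`. The proof is by induction on the height of `M`. -/
theorem rows_loc [IsNoetherianRing S] (hn : NN 𝒜) (hCM : ∀ (P : Ideal S) [P.IsPrime], CMAt P)
    {Φ : List (S × ℤ)} (hΦ : ∀ p ∈ Φ, p.2 = 1 ∧ p.1 ∈ 𝒜 1 ∧ p.1 ∈ S⁰) (hΦ0 : Φ ≠ [])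
    (hrad : ∀ e : ℤ, 0 < e → ∀ x ∈ 𝒜 e, x ∈ (spl Φ).radical)
    (hbase : ∀ e : ℤ, 0 ≤ e → ∀ y ∈ 𝒜 e, y ∈ S⁰ → ∀ r : ℤ, 0 ≤ r → ∀ x : L,
      algebraMap S L y * x ∈ fam L 𝒜 (r + e) → ∃ τ ∈ 𝒜 0, τ ∈ S⁰ ∧ algebraMap S L τ * x ∈ fam L 𝒜 r)
    (D : ℕ) : ∀ (M : Ideal S) [M.IsPrime], Pos 𝒜 M → M.height = D → ∀ (i r : ℤ), 0 ≤ r →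
      Ex (T0 (UL L (U0 𝒜 M))) (fam L 𝒜) ⊥ (ims L Φ) i r := by
  induction D using Nat.strong_induction_on with
  | _ D ih =>
  intro M _ hM hD i r hr
  have hι : Function.Injective (algebraMap S L) := IsFractionRing.injective S L
  have hun : ∀ x ∈ S⁰, IsUnit (algebraMap S L x) := fun x hx => IsLocalization.map_units L ⟨x, hx⟩
  obtain ⟨φ, hφ⟩ := List.exists_mem_of_ne_nil Φ hΦ0
  have hΦH : HL L 𝒜 Φ := fun p hp => ⟨by rw [(hΦ p hp).1]; exact (hΦ p hp).2.1, hun _ (hΦ p hp).2.2⟩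
  by_cases hz : ∃ p0 ∈ 𝒜 0, p0 ∈ M ∧ p0 ∈ S⁰
  swap
  · push Not at hz
    refine KK.ex (y := im L φ) (UL_st U0_deg fam_gs) ?_ (ims_unit hΦH.unit) (hΦH.stl fam_gs)
      (List.mem_map_of_mem hφ) ?_ hr
    · intro y hy
      obtain ⟨p, hp, rfl⟩ := List.mem_map.1 hy
      simp [im, (hΦ p hp).1]
    · intro r hr x hx
      obtain ⟨k, hk⟩ := (mem_sat.1 hx).exists
      have hφ1 := hΦ φ hφ
      obtain ⟨τ, hτ, hτz, h⟩ := hbase k (by positivity) (φ.1 ^ k)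
        (by simpa using SetLike.pow_mem_graded k hφ1.2.1) (pow_mem hφ1.2.2 k) r hr x
        (by simpa [im, hφ1.1] using hk)
      exact ⟨_, ⟨τ, ⟨hτ, fun hh => hz τ hτ hh hτz⟩, rfl⟩, h⟩
  obtain ⟨p0, h0, h0M, h0z⟩ := hz
  obtain ⟨c, hc, hcg⟩ := zero_gens h0 h0M h0z
  have hD1 : 1 ≤ D := by
    have := ht_pos_of_nzd h0M h0z
    rw [hD] at this; exact_mod_cast this
  -- `c` is replaced by `(p0, 0) :: c` so that it is visibly nonempty
  have hc' : ∀ p ∈ (p0, (0 : ℤ)) :: c, p.2 = 0 ∧ p.1 ∈ 𝒜 0 ∧ p.1 ∈ M ∧ p.1 ∈ S⁰ := by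
    intro p hp
    rcases List.mem_cons.1 hp with rfl | hp
    · exact ⟨rfl, h0, h0M, h0z⟩
    · exact hc p hp
  have hcg' : ∀ x ∈ 𝒜 0, x ∈ M → x ∈ spl ((p0, (0 : ℤ)) :: c) := fun x hx hxM =>
    spl_mono (by intro p; simp; tauto) (hcg x hx hxM)
  generalize hcc : (p0, (0 : ℤ)) :: c = cc at hc' hcg'
  have hp0c : (p0, (0 : ℤ)) ∈ cc := by simp [← hcc]
  obtain ⟨f, hfl, hf, hfP⟩ := pos_params hn hM hD (e := 1) le_rfl (by simpa using (hΦ φ hφ).2.1)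
    (hΦ φ hφ).2.2 hp0c h0z hcg' (D - 1) (by omega)
  have huniq : ∀ P : Ideal S, P.IsPrime → spl (cc ++ f) ≤ P → P ≤ M → P = M := by
    intro P hP h1 h2
    refine eq_of_ht h2 hD ?_
    have := hfP P hP h1 h2
    rwa [Nat.sub_add_cancel hD1] at this
  have hcH : HL L 𝒜 cc := fun p hp => ⟨by rw [(hc' p hp).1]; exact (hc' p hp).2.1, hun _ (hc' p hp).2.2.2⟩
  have hfH : HL L 𝒜 f := fun p hp => ⟨(hf p hp).2.1, hun _ (hf p hp).2.2⟩
  have hkill : ∀ {e : ℤ}, 0 < e → ∀ {x : S}, x ∈ 𝒜 e → ∃ u ∈ U0 𝒜 M, u * x ∈ (spl f).radical :=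
    fun he x hx => kill hn hM (fun p hp => ⟨(hc' p hp).1, (hc' p hp).2.1, (hc' p hp).2.2.1⟩)
      (fun p hp => (hf p hp).2.1) huniq he hx
  have hr1 : ∀ p ∈ Φ, ∃ u ∈ U0 𝒜 M, u * p.1 ∈ (spl f).radical := fun p hp =>
    hkill one_pos (hΦ p hp).2.1
  have hr2 : ∀ p ∈ f, ∃ u ∈ U0 𝒜 M, u * p.1 ∈ (spl Φ).radical := fun p hp =>
    ⟨1, one_mem _, by rw [one_mul]; exact hrad _ (hf p hp).1 _ (hf p hp).2.1⟩
  -- saturations with respect to `c`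
  have hsat : ∀ p ∈ cc, ∀ i, Ex (T0 (UL L (U0 𝒜 M))) (sat (im L p) (fam L 𝒜)) ⊥ (ims L f) i r := by
    intro p hp i
    obtain ⟨hp0, hpA, hpM, hpz⟩ := hc' p hp
    refine ex_indep U0_deg (fam_gs.sat _) GS.bot hfH hΦH hr2 hr1 ?_
    have him : im L p = (algebraMap S L p.1, 0) := by simp [im, hp0]
    rw [him]
    refine ex_div (hun _ hpz) (hΦH.stl fam_gs) (fam_gs 0 _ hpA) ?_
    refine glob hn ?_ fam_gs ?_
    · intro w hw
      obtain ⟨u, hu, _, ⟨m, rfl⟩, rfl⟩ := Submonoid.mem_sup.1 hw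
      have : p.1 ^ m ∈ 𝒜 0 := by simpa using SetLike.pow_mem_graded m hpA
      simpa using SetLike.mul_mem_graded hu.1 this
    · intro M' _ hM' hW
      have hle : M' ≤ M := le_of_pos hn hM' hM fun x hx hxM' => by
        by_contra hxM
        exact hW x (Submonoid.mem_sup_left ⟨hx, hxM⟩) hxM'
      have hlt : M' < M := lt_of_le_of_ne hle fun h =>
        hW p.1 (Submonoid.mem_sup_right (Submonoid.mem_powers _)) (h ▸ hpM)
      have hht := Ideal.height_add_one_le_of_lt_of_isPrime hlt
      rw [hD] at hht
      obtain ⟨D', hD'⟩ := ENat.ne_top_iff_exists.1 (show M'.height ≠ ⊤ by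
        intro h; rw [h] at hht; simp at hht)
      rw [← hD'] at hht
      exact ih D' (by have : D' + 1 ≤ D := by exact_mod_cast hht
                      omega) M' hM' hD'.symm i r hr
  -- the local cohomology vanishing at `M`
  have hmain : Ex (T0 (UL L (U0 𝒜 M))) (fam L 𝒜) ⊥ (ims L f) i r := by
    rcases lt_or_ge i D with hi | hi
    swap
    · refine ex_large (T0_mon _) ?_
      simp only [ims, List.length_map, hfl]; omega
    refine ex_of_cs U0_deg hcH (fun p hp => (hc' p hp).1) hfH fam_gs hsat ?_
    obtain ⟨D', x, hD', hxM, hxr⟩ := hCM M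
    obtain rfl : D' = D := by rw [hD] at hD'; exact_mod_cast hD'
    have hll := hcH.append hfH
    refine ex_fam_of_cst hι hll (depth_lemma hι hxr hll.unit (fun k hk => rad_of_unique huniq (hxM k hk)) i hi r) ?_
    intro u hu
    refine ⟨0, 1, by simpa using SetLike.one_mem_graded 𝒜, ?_⟩
    rw [one_mul]
    exact ⟨cmp_mem _ _ _, fun h => hu ((cmp0_mem_iff hn hM u).1 h)⟩
  exact ex_indep U0_deg fam_gs GS.bot hΦH hfH hr1 hr2 hmain

/-- Over a Cohen–Macaulay ring whose graded pieces of nonnegative degree generically agree with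
those of its localizations (`hbase`), the local cohomology with support in the elements of positive
degree vanishes in all degrees `r ≥ 0`. -/
theorem rows [IsNoetherianRing S] (hn : NN 𝒜) (hCM : ∀ (P : Ideal S) [P.IsPrime], CMAt P)
    {Φ : List (S × ℤ)} (hΦ : ∀ p ∈ Φ, p.2 = 1 ∧ p.1 ∈ 𝒜 1 ∧ p.1 ∈ S⁰) (hΦ0 : Φ ≠ [])
    (hrad : ∀ e : ℤ, 0 < e → ∀ x ∈ 𝒜 e, x ∈ (spl Φ).radical)
    (hbase : ∀ e : ℤ, 0 ≤ e → ∀ y ∈ 𝒜 e, y ∈ S⁰ → ∀ r : ℤ, 0 ≤ r → ∀ x : L,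
      algebraMap S L y * x ∈ fam L 𝒜 (r + e) → ∃ τ ∈ 𝒜 0, τ ∈ S⁰ ∧ algebraMap S L τ * x ∈ fam L 𝒜 r)
    (i r : ℤ) (hr : 0 ≤ r) : Ex (T0 (UL L (⊥ : Submonoid S))) (fam L 𝒜) ⊥ (ims L Φ) i r := by
  refine glob hn (by rintro w (rfl : w = 1); exact SetLike.one_mem_graded 𝒜) fam_gs ?_
  intro M _ hM _
  obtain ⟨D, _, hD, _⟩ := hCM M
  exact rows_loc hn hCM hΦ hΦ0 hrad hbase D M hM hD.symm i r hr
end rows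
end Cech

/-! ### Lengths and regular sequences -/

namespace Cech
set_option linter.unusedSectionVars false
open Pointwise

section Count
variable {Λ : Type*} [CommRing Λ] {T : Type*} [AddCommGroup T] [Module Λ T]

/-- `xs` is a (weakly) regular sequence on `T ⧸ F`. -/
def WR : Submodule Λ T → List Λ → Prop
  | _, [] => True
  | F, x :: ys => (∀ t, x • t ∈ F → t ∈ F) ∧ WR (F ⊔ x • ⊤) ys

/-- The submodule `F + xs T`. -/
def fl : Submodule Λ T → List Λ → Submodule Λ T
  | F, [] => F
  | F, x :: ys => fl (F ⊔ x • ⊤) ys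

theorem mem_sup_smul {F G : Submodule Λ T} {x : Λ} {t : T} :
    t ∈ F ⊔ x • G ↔ ∃ w ∈ G, t - x • w ∈ F := by
  rw [Submodule.mem_sup]
  constructor
  · rintro ⟨a, ha, b, hb, rfl⟩
    obtain ⟨w, hw, rfl⟩ := (Submodule.mem_smul_pointwise_iff_exists _ _ _).1 hb
    exact ⟨w, hw, by simpa using ha⟩
  · rintro ⟨w, hw, h⟩
    exact ⟨_, h, x • w, Submodule.smul_mem_pointwise_smul _ _ _ hw, by simp⟩

theorem mem_sup_smul_top {F : Submodule Λ T} {x : Λ} {t : T} :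
    t ∈ F ⊔ x • (⊤ : Submodule Λ T) ↔ ∃ w, t - x • w ∈ F := by
  simp [mem_sup_smul]

theorem fl_eq (F : Submodule Λ T) (ys : List Λ) : fl F ys = F ⊔ Ideal.ofList ys • ⊤ := by
  induction ys generalizing F with
  | nil => simp [fl]
  | cons y zs ih =>
    rw [fl, ih, Ideal.ofList_cons, Submodule.sup_smul, Submodule.ideal_span_singleton_smul,
      sup_assoc]

theorem fl_mono {F G : Submodule Λ T} (h : F ≤ G) (ys : List Λ) : fl F ys ≤ fl G ys := by
  simp only [fl_eq]
  exact sup_le_sup_right h _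

theorem le_fl (F : Submodule Λ T) (ys : List Λ) : F ≤ fl F ys := by
  rw [fl_eq]; exact le_sup_left

theorem smul_mem_fl {F F' : Submodule Λ T} {a : Λ} (h : ∀ t ∈ F, a • t ∈ F') {ys : List Λ} {t : T}
    (ht : t ∈ fl F ys) : a • t ∈ fl F' ys := by
  rw [fl_eq, Submodule.mem_sup] at *
  obtain ⟨p, hp, q, hq, rfl⟩ := ht
  exact ⟨a • p, h _ hp, a • q, Submodule.smul_mem _ _ hq, by simp⟩

theorem WR_top (ys : List Λ) : WR (⊤ : Submodule Λ T) ys := by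
  induction ys with
  | nil => trivial
  | cons y zs ih => exact ⟨fun t _ => trivial, by simpa using ih⟩

theorem WR_ext {F F1 F' : Submodule Λ T} {a : Λ} (h : ∀ t, a • t ∈ F ↔ t ∈ F1)
    (h' : F' = F ⊔ a • ⊤) {ys : List Λ} (h1 : WR F1 ys) (h2 : WR F' ys) : WR F ys := by
  induction ys generalizing F F1 F' with
  | nil => trivial
  | cons y zs ih =>
    have hle : F ≤ F' := h' ▸ le_sup_left
    have hm : ∀ t, t ∈ F' ↔ ∃ w, t - a • w ∈ F := fun t => by rw [h', mem_sup_smul_top]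
    refine ⟨fun t ht => ?_, ih (F1 := F1 ⊔ y • ⊤) (F' := F' ⊔ y • ⊤) ?_ ?_ h1.2 h2.2⟩
    · obtain ⟨w, hw⟩ := (hm _).1 (h2.1 t (hle ht))
      have : w ∈ F1 := by
        apply h1.1
        rw [← h]
        have := F.sub_mem ht (F.smul_mem y hw)
        rwa [smul_sub, sub_sub_cancel, smul_comm] at this
      have := F.add_mem hw ((h w).2 this)
      simpa using this
    · intro t
      rw [mem_sup_smul_top, mem_sup_smul_top]
      constructor
      · rintro ⟨w, hw⟩
        have : w ∈ F' := by
          apply h2.1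
          have h3 : a • t ∈ F' := (hm _).2 ⟨t, by simp⟩
          have := F'.sub_mem h3 (hle hw)
          simpa using this
        obtain ⟨w', hw'⟩ := (hm _).1 this
        refine ⟨w', (h _).1 ?_⟩
        have := F.add_mem hw (F.smul_mem y hw')
        rw [smul_sub, sub_add_sub_cancel, smul_comm y a, ← smul_sub] at this
        exact this
      · rintro ⟨w, hw⟩
        refine ⟨a • w, ?_⟩
        rw [smul_comm, ← smul_sub]
        exact (h _).2 hw
    · rw [h', sup_right_comm]

theorem pow_reg {F : Submodule Λ T} {x : Λ} (h : ∀ t, x • t ∈ F → t ∈ F) (n : ℕ) {t : T}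
    (ht : x ^ n • t ∈ F) : t ∈ F := by
  induction n with
  | zero => simpa using ht
  | succ n ih => exact ih (h _ (by rwa [pow_succ', mul_smul] at ht))

theorem WR_pow {F : Submodule Λ T} {x : Λ} {ys : List Λ} (h : WR F (x :: ys)) (n : ℕ) :
    WR (F ⊔ x ^ n • ⊤) ys := by
  induction n with
  | zero => simpa using WR_top ys
  | succ n ih =>
    refine WR_ext (F1 := F ⊔ x • ⊤) (F' := F ⊔ x ^ n • ⊤) (a := x ^ n) ?_ ?_ h.2 ih
    · intro t
      rw [mem_sup_smul_top, mem_sup_smul_top]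
      refine exists_congr fun w => ?_
      rw [pow_succ, mul_smul, ← smul_sub]
      exact ⟨pow_reg h.1 n, F.smul_mem _⟩
    · rw [sup_assoc]
      congr 1
      refine (sup_eq_right.2 ?_).symm
      intro t ht
      obtain ⟨w, -, rfl⟩ := (Submodule.mem_smul_pointwise_iff_exists _ _ _).1 ht
      rw [pow_succ, mul_smul]
      exact Submodule.smul_mem_pointwise_smul _ _ _ trivial

theorem WR_inter {F F' : Submodule Λ T} (hF : F ≤ F') {ys : List Λ} (h : WR F' ys) {t : T}
    (h1 : t ∈ F') (h2 : t ∈ fl F ys) : t ∈ F ⊔ Ideal.ofList ys • F' := by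
  induction ys generalizing F F' t with
  | nil => exact le_sup_left (α := Submodule Λ T) h2
  | cons y zs ih =>
    have h3 := ih (F := F ⊔ y • ⊤) (F' := F' ⊔ y • ⊤) (sup_le_sup_right hF _) h.2
      (le_sup_left (α := Submodule Λ T) h1) h2
    have h4 : t ∈ (F ⊔ Ideal.ofList zs • F') ⊔ y • (⊤ : Submodule Λ T) := by
      refine SetLike.le_def.1 ?_ h3
      rw [Submodule.smul_sup]
      refine sup_le (sup_le_sup_right le_sup_left _) (sup_le ?_ ?_)
      · exact le_sup_right.trans le_sup_left
      · exact Submodule.smul_le_right.trans le_sup_right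
    obtain ⟨w, hw⟩ := mem_sup_smul_top.1 h4
    have h5 : w ∈ F' := by
      apply h.1
      have : F ⊔ Ideal.ofList zs • F' ≤ F' := sup_le hF Submodule.smul_le_right
      have := F'.sub_mem h1 (this hw)
      simpa using this
    rw [Ideal.ofList_cons, Submodule.sup_smul, Submodule.ideal_span_singleton_smul, sup_left_comm,
      sup_comm]
    exact mem_sup_smul.2 ⟨w, h5, hw⟩

theorem WR_pow_mem {F : Submodule Λ T} {x : Λ} {ys : List Λ} (h : WR F (x :: ys)) (i : ℕ) (t : T) :
    x ^ i • t ∈ fl (F ⊔ x ^ (i + 1) • ⊤) ys ↔ t ∈ fl (F ⊔ x • ⊤) ys := by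
  constructor
  · intro ht
    have hle : F ⊔ x ^ (i + 1) • ⊤ ≤ F ⊔ x ^ i • (⊤ : Submodule Λ T) := by
      refine sup_le_sup_left ?_ _
      intro t ht
      obtain ⟨w, -, rfl⟩ := (Submodule.mem_smul_pointwise_iff_exists _ _ _).1 ht
      rw [pow_succ, mul_smul]
      exact Submodule.smul_mem_pointwise_smul _ _ _ trivial
    have h1 := WR_inter hle (WR_pow h i) (t := x ^ i • t)
      (mem_sup_smul_top.2 ⟨t, by simp⟩) ht
    have h2 : F ⊔ x ^ (i + 1) • ⊤ ⊔ Ideal.ofList ys • (F ⊔ x ^ i • (⊤ : Submodule Λ T)) ≤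
        F ⊔ x ^ i • (x • ⊤ ⊔ Ideal.ofList ys • ⊤) := by
      rw [Submodule.smul_sup]
      refine sup_le (sup_le le_sup_left ?_) (sup_le ?_ ?_)
      · refine le_trans ?_ le_sup_right
        rw [pow_succ, mul_smul]
        exact smul_mono_right _ le_sup_left
      · exact Submodule.smul_le_right.trans le_sup_left
      · refine le_trans ?_ le_sup_right
        rw [← Submodule.ideal_span_singleton_smul, ← Submodule.ideal_span_singleton_smul,
          ← mul_smul, mul_comm, mul_smul]
        exact smul_mono_right _ le_sup_right
    obtain ⟨w, hw, h3⟩ := mem_sup_smul.1 (h2 h1)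
    rw [← smul_sub] at h3
    have h4 := pow_reg h.1 i h3
    rw [fl_eq, sup_assoc]
    exact Submodule.mem_sup.2 ⟨_, h4, w, hw, by simp⟩
  · apply smul_mem_fl
    intro t ht
    obtain ⟨w, hw⟩ := mem_sup_smul_top.1 ht
    refine mem_sup_smul_top.2 ⟨w, ?_⟩
    rw [pow_succ, mul_smul, ← smul_sub]
    exact F.smul_mem _ hw

theorem len_ge {M : Type*} [AddCommGroup M] [Module Λ M] {A B C : Submodule Λ M} (hAB : A ≤ B)
    (φ : M →ₗ[Λ] M) (h1 : ∀ t, φ t ∈ B) (h2 : ∀ t, φ t ∈ A ↔ t ∈ C) :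
    Module.length Λ (M ⧸ B) + Module.length Λ (M ⧸ C) ≤ Module.length Λ (M ⧸ A) := by
  have h := Module.length_eq_add_of_exact (LinearMap.ker (Submodule.factor hAB)).subtype
    (Submodule.factor hAB) (Submodule.subtype_injective _) (Submodule.factor_surjective hAB)
    (LinearMap.exact_subtype_ker_map _)
  rw [h, add_comm]
  gcongr
  have hC : C ≤ A.comap φ := fun t ht => (h2 t).2 ht
  let g : (M ⧸ C) →ₗ[Λ] M ⧸ A := Submodule.mapQ C A φ hC
  refine Module.length_le_of_injective (LinearMap.codRestrict _ g ?_) ?_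
  · intro c
    obtain ⟨t, rfl⟩ := Submodule.mkQ_surjective C c
    simpa [g] using h1 t
  · rw [← LinearMap.ker_eq_bot, LinearMap.ker_codRestrict, Submodule.ker_mapQ]
    rw [eq_bot_iff, Submodule.map_le_iff_le_comap]
    intro t ht
    simpa using (h2 t).1 ht

theorem len_le {M : Type*} [AddCommGroup M] [Module Λ M] {A B C : Submodule Λ M} (hAB : A ≤ B)
    (φ : M →ₗ[Λ] M) (h1 : ∀ t ∈ B, ∃ w, t - φ w ∈ A) (h2 : ∀ t, φ t ∈ B) (h3 : ∀ t ∈ C, φ t ∈ A) :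
    Module.length Λ (M ⧸ A) ≤ Module.length Λ (M ⧸ B) + Module.length Λ (M ⧸ C) := by
  have h := Module.length_eq_add_of_exact (LinearMap.ker (Submodule.factor hAB)).subtype
    (Submodule.factor hAB) (Submodule.subtype_injective _) (Submodule.factor_surjective hAB)
    (LinearMap.exact_subtype_ker_map _)
  rw [h, add_comm]
  gcongr
  let g : (M ⧸ C) →ₗ[Λ] M ⧸ A := Submodule.mapQ C A φ h3
  refine Module.length_le_of_surjective (LinearMap.codRestrict _ g ?_) ?_
  · intro c
    obtain ⟨t, rfl⟩ := Submodule.mkQ_surjective C c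
    simpa [g] using h2 t
  · rintro ⟨c, hc⟩
    obtain ⟨t, rfl⟩ := Submodule.mkQ_surjective A c
    have ht : t ∈ B := by simpa using hc
    obtain ⟨w, hw⟩ := h1 t ht
    refine ⟨Submodule.Quotient.mk w, Subtype.ext ?_⟩
    simp only [LinearMap.codRestrict_apply, g]
    exact ((Submodule.Quotient.eq A).2 hw).symm

theorem fl_anti {F : Submodule Λ T} {x : Λ} (ys : List Λ) (i : ℕ) :
    fl (F ⊔ x ^ (i + 1) • ⊤) ys ≤ fl (F ⊔ x ^ i • ⊤) ys := by
  refine fl_mono (sup_le_sup_left ?_ _) _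
  intro t ht
  obtain ⟨w, -, rfl⟩ := (Submodule.mem_smul_pointwise_iff_exists _ _ _).1 ht
  rw [pow_succ, mul_smul]
  exact Submodule.smul_mem_pointwise_smul _ _ _ trivial

/-- Regularity gives the lower bound `n ^ r` for the growth of lengths modulo `n`-th powers. -/
theorem count_ge {E : Type*} [AddCommGroup E] [Module Λ E] (f : E →ₗ[Λ] T) (n : ℕ)
    {F : Submodule Λ T} {rs : List Λ} (h : WR F rs) :
    (n : ℕ∞) ^ rs.length * Module.length Λ (E ⧸ (fl F rs).comap f) ≤
      Module.length Λ (E ⧸ (fl F (rs.map (· ^ n))).comap f) := by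
  induction rs generalizing F with
  | nil => rw [List.length_nil, pow_zero, one_mul]; exact le_rfl
  | cons x ys ih =>
    have step : ∀ i : ℕ, (i : ℕ∞) * Module.length Λ (E ⧸ (fl F (x :: ys)).comap f) ≤
        Module.length Λ (E ⧸ (fl (F ⊔ x ^ i • ⊤) ys).comap f) := by
      intro i
      induction i with
      | zero => simp
      | succ i ihi =>
        have := len_ge (Submodule.comap_mono (f := f) (fl_anti (F := F) (x := x) ys i))
          (C := (fl F (x :: ys)).comap f) (LinearMap.lsmul Λ E (x ^ i))
          (fun t => by
            simp only [LinearMap.lsmul_apply, Submodule.mem_comap, map_smul]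
            exact le_fl _ _ (mem_sup_smul_top.2 ⟨f t, by simp⟩))
          (fun t => by
            simp only [LinearMap.lsmul_apply, Submodule.mem_comap, map_smul]
            exact WR_pow_mem h i _)
        refine le_trans ?_ this
        push_cast
        rw [add_mul, one_mul]
        gcongr
    calc _ = (n : ℕ∞) ^ ys.length * (n * Module.length Λ (E ⧸ (fl F (x :: ys)).comap f)) := by
          rw [List.length_cons, pow_succ, mul_assoc]
      _ ≤ (n : ℕ∞) ^ ys.length * Module.length Λ (E ⧸ (fl (F ⊔ x ^ n • ⊤) ys).comap f) := by
          gcongr; exact step n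
      _ ≤ _ := ih (WR_pow h n)

/-- The upper bound for the growth of lengths modulo `n`-th powers, valid for any sequence. -/
theorem count_le (n : ℕ) (F : Submodule Λ T) (rs : List Λ) :
      Module.length Λ (T ⧸ (fl F (rs.map (· ^ n)))) ≤
    (n : ℕ∞) ^ rs.length * Module.length Λ (T ⧸ (fl F rs)) := by
  induction rs generalizing F with
  | nil => rw [List.length_nil, pow_zero, one_mul]; exact le_rfl
  | cons x ys ih =>
    have step : ∀ i : ℕ, Module.length Λ (T ⧸ (fl (F ⊔ x ^ i • ⊤) ys)) ≤
        (i : ℕ∞) * Module.length Λ (T ⧸ (fl F (x :: ys))) := by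
      intro i
      induction i with
      | zero =>
        have : fl (F ⊔ x ^ 0 • ⊤) ys = ⊤ := by
          rw [fl_eq]; simp
        rw [this]
        simp
      | succ i ihi =>
        have := len_le (fl_anti (F := F) (x := x) ys i)
          (C := (fl F (x :: ys))) (LinearMap.lsmul Λ T (x ^ i))
          (fun t ht => by
            simp only [LinearMap.lsmul_apply]
            rw [fl_eq, sup_right_comm] at ht
            obtain ⟨w, hw⟩ := mem_sup_smul_top.1 ht
            refine ⟨w, ?_⟩
            rw [fl_eq, sup_right_comm]
            exact le_sup_left (α := Submodule Λ T) hw)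
          (fun t => by
            simp only [LinearMap.lsmul_apply]
            exact le_fl _ _ (mem_sup_smul_top.2 ⟨t, by simp⟩))
          (fun t ht => by
            simp only [LinearMap.lsmul_apply]
            refine smul_mem_fl ?_ ht
            intro t ht
            obtain ⟨w, hw⟩ := mem_sup_smul_top.1 ht
            refine mem_sup_smul_top.2 ⟨w, ?_⟩
            rw [pow_succ, mul_smul, ← smul_sub]
            exact F.smul_mem _ hw)
        refine this.trans ?_
        push_cast
        rw [add_mul, one_mul]
        gcongr
    calc _ ≤ (n : ℕ∞) ^ ys.length * Module.length Λ (T ⧸ (fl (F ⊔ x ^ n • ⊤) ys)) := ih _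
      _ ≤ (n : ℕ∞) ^ ys.length * (n * Module.length Λ (T ⧸ (fl F (x :: ys)))) := by
          gcongr; exact step n
      _ = _ := by
          rw [List.length_cons, pow_succ, mul_assoc]

end Count
end Cech

namespace Cech
set_option linter.unusedSectionVars false
open Pointwise IsLocalRing

section Local
variable {Λ : Type*} [CommRing Λ] [IsLocalRing Λ] [IsNoetherianRing Λ]

theorem fin_len {W : Type*} [AddCommGroup W] [Module Λ W] [Module.Finite Λ W] (𝔮 : Ideal Λ)
    (h𝔮 : maximalIdeal Λ ≤ 𝔮.radical) (hW : ∀ a ∈ 𝔮, ∀ w : W, a • w = 0) :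
    Module.length Λ W ≠ ⊤ := by
  rw [Module.length_ne_top_iff, isFiniteLength_iff_isNoetherian_isArtinian]
  refine ⟨inferInstance, ?_⟩
  have hA : IsArtinianRing (Λ ⧸ 𝔮) := by
    by_cases h : 𝔮 = ⊤
    · subst h
      have : Subsingleton (Λ ⧸ (⊤ : Ideal Λ)) := Submodule.Quotient.subsingleton_iff.2 rfl
      infer_instance
    · apply IsLocalRing.quotient_artinian_of_mem_minimalPrimes_of_isLocalRing
      refine ⟨⟨inferInstance, le_maximalIdeal h⟩, fun P hP _ => ?_⟩
      exact h𝔮.trans (hP.1.radical_le_iff.2 hP.2)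
  have ht : Module.IsTorsionBySet Λ W 𝔮 := fun w a => hW a a.2 w
  let _ := ht.module
  have : Module.Finite (Λ ⧸ 𝔮) W := Module.Finite.of_restrictScalars_finite Λ _ _
  have : IsArtinian (Λ ⧸ 𝔮) W := inferInstance
  exact isArtinian_of_surjective_algebraMap (R := Λ ⧸ 𝔮) Ideal.Quotient.mk_surjective

theorem exists_sop {v : Λ} (hv : v ∈ maximalIdeal Λ) (hv0 : v ∈ nonZeroDivisors Λ) {xs : List Λ}
    (hx : ∀ x ∈ xs, x ∈ maximalIdeal Λ) (hrad : maximalIdeal Λ ≤ (Ideal.ofList xs).radical) :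
    ∃ zs : List Λ, zs.length + 1 ≤ xs.length ∧ (∀ z ∈ zs, z ∈ maximalIdeal Λ) ∧
      maximalIdeal Λ ≤ (Ideal.ofList zs ⊔ Ideal.span {v}).radical := by
  classical
  have hxle : Ideal.ofList xs ≤ maximalIdeal Λ := by
    rw [Ideal.ofList, Ideal.span_le]; exact hx
  have hht : (maximalIdeal Λ).height ≤ xs.length := by
    have : maximalIdeal Λ ∈ (Ideal.span (xs.toFinset : Set Λ)).minimalPrimes := by
      have h : Ideal.span (xs.toFinset : Set Λ) = Ideal.ofList xs := by
        rw [Ideal.ofList]; congr 1; ext; simp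
      rw [h]
      refine ⟨⟨inferInstance, hxle⟩, fun P hP _ => ?_⟩
      exact hrad.trans (hP.1.radical_le_iff.2 hP.2)
    refine (Ideal.height_le_card_of_mem_minimalPrimes_span_finset this).trans ?_
    exact_mod_cast xs.toFinset_card_le
  have hne : Ideal.span {v} ≠ ⊤ := by
    rw [Ne, Ideal.span_singleton_eq_top]
    exact (mem_maximalIdeal _).1 hv
  have : Nontrivial (Λ ⧸ Ideal.span {v}) := Ideal.Quotient.nontrivial_iff.2 hne
  have : IsLocalRing (Λ ⧸ Ideal.span {v}) := IsLocalRing.of_surjective' _ Ideal.Quotient.mk_surjective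
  have hdim := ringKrullDim_quotient_succ_le_of_nonZeroDivisor hv0
  rw [← maximalIdeal_height_eq_ringKrullDim, ← maximalIdeal_height_eq_ringKrullDim] at hdim
  obtain ⟨Z, hZ, hc⟩ := Ideal.exists_finset_card_eq_height_of_isNoetherianRing
    (maximalIdeal (Λ ⧸ Ideal.span {v}))
  have hlen : Z.card + 1 ≤ xs.length := by
    rw [← hc] at hdim
    have h1 : ((Z.card : ℕ∞) + 1) ≤ (maximalIdeal Λ).height := by exact_mod_cast hdim
    exact_mod_cast h1.trans hht
  choose o ho using (Ideal.Quotient.mk_surjective (I := Ideal.span {v}))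
  refine ⟨Z.toList.map o, by simpa using hlen, ?_, ?_⟩
  · intro z hz
    obtain ⟨y, hy, rfl⟩ := List.mem_map.1 hz
    have hy : y ∈ maximalIdeal (Λ ⧸ Ideal.span {v}) := hZ.1.2 (Ideal.subset_span (by simpa using hy))
    rw [mem_maximalIdeal, mem_nonunits_iff] at hy ⊢
    intro hu
    apply hy
    rw [← ho y]
    exact hu.map _
  · rw [Ideal.radical_eq_sInf]
    refine le_sInf ?_
    rintro P ⟨hP, hPp⟩
    have hvP : Ideal.span {v} ≤ P := le_sup_right.trans hP
    have hker : RingHom.ker (Ideal.Quotient.mk (Ideal.span {v})) ≤ P := by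
      rw [Ideal.mk_ker]; exact hvP
    have hP' : (P.map (Ideal.Quotient.mk (Ideal.span {v}))).IsPrime :=
      Ideal.map_isPrime_of_surjective Ideal.Quotient.mk_surjective hker
    have h2 := hZ.2 ⟨hP', ?_⟩ (le_maximalIdeal hP'.ne_top)
    · intro x hx
      have hx' : Ideal.Quotient.mk (Ideal.span {v}) x ∈ maximalIdeal (Λ ⧸ Ideal.span {v}) := by
        rw [mem_maximalIdeal, mem_nonunits_iff] at hx ⊢
        intro hu
        apply hx
        obtain ⟨y, hy⟩ := hu.exists_right_inv
        obtain ⟨y, rfl⟩ := Ideal.Quotient.mk_surjective y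
        rw [← map_mul, ← map_one (Ideal.Quotient.mk _), Ideal.Quotient.eq] at hy
        have hy := (Ideal.span_singleton_le_iff_mem (I := maximalIdeal Λ)).2 hv hy
        by_contra hxu
        have h1 := Ideal.mul_mem_right y _ ((mem_maximalIdeal x).2 hxu)
        have h2 := (maximalIdeal Λ).sub_mem h1 hy
        rw [sub_sub_cancel] at h2
        exact (Ideal.ne_top_iff_one _).1 (Ideal.IsPrime.ne_top') h2
      have := h2 hx'
      rw [← Ideal.mem_comap, Ideal.comap_map_of_surjective' _ Ideal.Quotient.mk_surjective,
        sup_eq_left.2 hker] at this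
      exact this
    · rw [Ideal.span_le]
      intro y hy
      rw [← ho y]
      apply Ideal.mem_map_of_mem
      apply hP
      apply Ideal.mem_sup_left
      exact Ideal.subset_span (List.mem_map.2 ⟨y, by simpa using hy, rfl⟩)

theorem ofList_pow_le (xs : List Λ) (n : ℕ) :
    (Ideal.ofList xs) ^ (xs.length * n + 1) ≤ Ideal.ofList (xs.map (· ^ n)) := by
  induction xs with
  | nil => simp
  | cons x ys ih =>
    rw [List.map_cons, Ideal.ofList_cons, Ideal.ofList_cons]
    have : (x :: ys).length * n + 1 = n + (ys.length * n + 1) := by simp; ring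
    rw [this]
    refine Ideal.sup_pow_add_le_pow_sup_pow.trans (sup_le_sup ?_ ih)
    rw [Ideal.span_singleton_pow]

variable {T : Type*} [AddCommGroup T] [Module Λ T]

/-- The length of `E / (xs T ∩ E)` is at most that of `Λ / (xs)`, by comparing the growth of lengths
modulo the powers of `xs`; the bound does not depend on `E`. -/
theorem count_main {xs : List Λ} (hx : ∀ x ∈ xs, x ∈ maximalIdeal Λ)
    (hrad : maximalIdeal Λ ≤ (Ideal.ofList xs).radical) (hreg : WR (⊥ : Submodule Λ T) xs) {t0 : T}
    {E : Submodule Λ T} (hE : E.FG) (ht0 : t0 ∈ E) {v : Λ} (hv : v ∈ maximalIdeal Λ)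
    (hv0 : v ∈ nonZeroDivisors Λ) (hvE : ∀ e ∈ E, ∃ r : Λ, v • e = r • t0) :
    Module.length Λ (E ⧸ (fl ⊥ xs).comap E.subtype) ≤ Module.length Λ (Λ ⧸ Ideal.ofList xs) := by
  classical
  obtain ⟨zs, hlen, hz, hzrad⟩ := exists_sop hv hv0 hx hrad
  have : Module.Finite Λ E := Module.Finite.iff_fg.2 hE
  let e0 : E := ⟨t0, ht0⟩
  let B : Submodule Λ E := Submodule.span Λ {e0}
  have hBv : ∀ e : E, v • e ∈ B := by
    intro e
    obtain ⟨r, hr⟩ := hvE e e.2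
    exact Submodule.mem_span_singleton.2 ⟨r, Subtype.ext hr.symm⟩
  -- the contribution of `E ⧸ Λ t0`
  have hfin : Module.length Λ (E ⧸ fl B zs) ≠ ⊤ := by
    refine fin_len _ hzrad ?_
    intro a ha w
    obtain ⟨e, rfl⟩ := Submodule.mkQ_surjective _ w
    rw [← map_smul, Submodule.mkQ_apply, Submodule.Quotient.mk_eq_zero, fl_eq]
    obtain ⟨b, hb, c, hc, rfl⟩ := Submodule.mem_sup.1 ha
    obtain ⟨d, rfl⟩ := Ideal.mem_span_singleton'.1 hc
    rw [add_smul, add_comm]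
    refine Submodule.add_mem_sup ?_ (Submodule.smul_mem_smul hb trivial)
    rw [mul_smul]
    exact B.smul_mem _ (hBv e)
  obtain ⟨W, hW⟩ := ENat.ne_top_iff_exists.1 hfin
  have hfinx : Module.length Λ (Λ ⧸ Ideal.ofList xs) ≠ ⊤ := by
    refine fin_len _ hrad ?_
    intro a ha w
    obtain ⟨e, rfl⟩ := Submodule.mkQ_surjective _ w
    rw [← map_smul, Submodule.mkQ_apply, Submodule.Quotient.mk_eq_zero]
    exact Ideal.mul_mem_right _ _ ha
  obtain ⟨ℓ, hℓ⟩ := ENat.ne_top_iff_exists.1 hfinx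
  obtain ⟨c, hc⟩ := Ideal.exists_pow_le_of_le_radical_of_fg hrad
    (isNoetherian_def.1 inferInstance (maximalIdeal Λ))
  set D := xs.length with hD
  have key : ∀ n : ℕ, 0 < n → (n : ℕ∞) ^ D * Module.length Λ (E ⧸ (fl ⊥ xs).comap E.subtype) ≤
      (n ^ D * ℓ + ((c + 1) * (D + 1) * n) ^ (D - 1) * W : ℕ) := by
    intro n hn
    refine (count_ge E.subtype n hreg).trans ?_
    set N := (c + 1) * (D + 1) * n with hN
    have hzN : ∀ z ∈ zs, z ^ N ∈ Ideal.ofList (xs.map (· ^ n)) := by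
      intro z hz'
      apply ofList_pow_le
      have h1 : z ^ (c * (D * n + 1)) ∈ Ideal.ofList xs ^ (D * n + 1) := by
        rw [pow_mul]
        exact Ideal.pow_mem_pow (hc (Ideal.pow_mem_pow (hz z hz') _)) _
      have h2 : c * (D * n + 1) ≤ N := by
        rw [hN]; nlinarith [Nat.zero_le (c * D * n), Nat.zero_le (D * n), Nat.zero_le (c * (n - 1))]
      rw [← Nat.add_sub_cancel' h2, pow_add z]
      exact Ideal.mul_mem_right _ _ h1
    have hA : fl (⊥ : Submodule Λ E) (xs.map (· ^ n)) ≤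
        (fl ⊥ (xs.map (· ^ n))).comap E.subtype := by
      rw [fl_eq, fl_eq, bot_sup_eq, bot_sup_eq, Submodule.smul_le]
      intro r hr e _
      exact Submodule.smul_mem_smul hr trivial
    have h1 : Module.length Λ (E ⧸ (fl ⊥ (xs.map (· ^ n))).comap E.subtype) ≤
        Module.length Λ (E ⧸ fl (⊥ : Submodule Λ E) (xs.map (· ^ n))) :=
      Module.length_le_of_surjective _ (Submodule.factor_surjective hA)
    have hAB : fl (⊥ : Submodule Λ E) (xs.map (· ^ n)) ≤ fl B (xs.map (· ^ n)) := fl_mono bot_le _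
    have h2 := Module.length_eq_add_of_exact (LinearMap.ker (Submodule.factor hAB)).subtype
      (Submodule.factor hAB) (Submodule.subtype_injective _) (Submodule.factor_surjective hAB)
      (LinearMap.exact_subtype_ker_map _)
    have h3 : Module.length Λ (LinearMap.ker (Submodule.factor hAB)) ≤ (n ^ D * ℓ : ℕ) := by
      have : Module.length Λ (Λ ⧸ fl (⊥ : Ideal Λ) (xs.map (· ^ n))) ≤ (n ^ D * ℓ : ℕ) := by
        refine (count_le n ⊥ xs).trans ?_
        rw [fl_eq, bot_sup_eq, smul_eq_mul, Ideal.mul_top, ← hℓ]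
        push_cast
        exact le_rfl
      refine le_trans ?_ this
      have hφ : fl (⊥ : Ideal Λ) (xs.map (· ^ n)) ≤
          (fl (⊥ : Submodule Λ E) (xs.map (· ^ n))).comap (LinearMap.toSpanSingleton Λ E e0) := by
        intro r hr
        rw [fl_eq, bot_sup_eq, smul_eq_mul, Ideal.mul_top] at hr
        rw [fl_eq, bot_sup_eq]
        exact Submodule.smul_mem_smul hr trivial
      let φ := Submodule.mapQ _ _ (LinearMap.toSpanSingleton Λ E e0) hφ
      refine Module.length_le_of_surjective (LinearMap.codRestrict _ φ ?_) ?_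
      · intro r
        obtain ⟨r, rfl⟩ := Submodule.mkQ_surjective _ r
        simp only [φ, LinearMap.mem_ker, Submodule.mkQ_apply, Submodule.mapQ_apply,
          Submodule.Quotient.mk_eq_zero]
        exact le_fl _ _ (B.smul_mem r (Submodule.mem_span_singleton_self _))
      · rintro ⟨w, hw⟩
        obtain ⟨e, rfl⟩ := Submodule.mkQ_surjective _ w
        have he : e ∈ fl B (xs.map (· ^ n)) := by simpa using hw
        rw [fl_eq] at he
        obtain ⟨b, hb, d, hd, rfl⟩ := Submodule.mem_sup.1 he
        obtain ⟨r, rfl⟩ := Submodule.mem_span_singleton.1 hb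
        refine ⟨Submodule.Quotient.mk r, Subtype.ext ?_⟩
        simp only [φ, LinearMap.codRestrict_apply, Submodule.mapQ_apply, Submodule.mkQ_apply]
        rw [Submodule.Quotient.eq, fl_eq, bot_sup_eq]
        simpa using hd
    have h4 : Module.length Λ (E ⧸ fl B (xs.map (· ^ n))) ≤ (N ^ (D - 1) * W : ℕ) := by
      have hle : fl B (zs.map (· ^ N)) ≤ fl B (xs.map (· ^ n)) := by
        rw [fl_eq, fl_eq]
        refine sup_le_sup_left (Submodule.smul_mono_left ?_) _
        rw [Ideal.ofList, Ideal.span_le]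
        intro z hz
        obtain ⟨y, hy, rfl⟩ := List.mem_map.1 hz
        exact hzN y hy
      refine (Module.length_le_of_surjective _ (Submodule.factor_surjective hle)).trans ?_
      refine (count_le N B zs).trans ?_
      rw [← hW]
      have hN1 : 1 ≤ N := by rw [hN]; exact Nat.mul_pos (by positivity) hn
      exact_mod_cast Nat.mul_le_mul_right _ (Nat.pow_le_pow_right hN1 (by omega))
    refine h1.trans (h2.le.trans ?_)
    push_cast at h3 h4 ⊢
    exact add_le_add h3 h4
  obtain ⟨a, ha⟩ : ∃ a : ℕ, (a : ℕ∞) = Module.length Λ (E ⧸ (fl ⊥ xs).comap E.subtype) := by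
    apply ENat.ne_top_iff_exists.1
    have := key 1 one_pos
    intro h
    rw [h, Nat.cast_one, one_pow, one_mul, top_le_iff] at this
    exact ENat.natCast_ne_top _ this
  rw [← ha, ← hℓ]
  simp only [← ha] at key
  have hD1 : D = (D - 1) + 1 := by omega
  set C := ((c + 1) * (D + 1)) ^ (D - 1) * W with hC
  have hk := key (C + 1) (by omega)
  have hk : (C + 1) ^ D * a ≤ (C + 1) ^ D * ℓ + ((c + 1) * (D + 1) * (C + 1)) ^ (D - 1) * W := by
    exact_mod_cast hk
  have h5 : ((c + 1) * (D + 1) * (C + 1)) ^ (D - 1) * W = (C + 1) ^ (D - 1) * C := by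
    rw [mul_pow, hC]; ring
  rw [h5] at hk
  by_contra hlt
  have hlt : ℓ + 1 ≤ a := by
    by_contra h
    exact hlt (by exact_mod_cast (by omega : a ≤ ℓ))
  have h6 : (C + 1) ^ D = (C + 1) ^ (D - 1) * (C + 1) := by
    conv_lhs => rw [hD1]
    rw [pow_succ]
  have h7 : (C + 1) ^ D * (ℓ + 1) ≤ (C + 1) ^ D * ℓ + (C + 1) ^ (D - 1) * C :=
    (Nat.mul_le_mul_left _ hlt).trans hk
  have h8 : 0 < (C + 1) ^ (D - 1) := by positivity
  rw [h6] at h7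
  nlinarith

/-- As the lengths of `E / (xs T ∩ E)` are bounded independently of `E`, the module `T` is finitely
generated modulo `xs`. -/
theorem count_fg {xs : List Λ} (hx : ∀ x ∈ xs, x ∈ maximalIdeal Λ)
    (hrad : maximalIdeal Λ ≤ (Ideal.ofList xs).radical) (hreg : WR (⊥ : Submodule Λ T) xs) {t0 : T}
    (hv : ∀ E : Submodule Λ T, E.FG → t0 ∈ E → ∃ v ∈ maximalIdeal Λ, v ∈ nonZeroDivisors Λ ∧
      ∀ e ∈ E, ∃ r : Λ, v • e = r • t0) :
    ∃ E : Submodule Λ T, E.FG ∧ E ⊔ Ideal.ofList xs • ⊤ = ⊤ := by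
  classical
  by_contra hcon
  push Not at hcon
  have hfinx : Module.length Λ (Λ ⧸ Ideal.ofList xs) ≠ ⊤ := by
    refine fin_len _ hrad ?_
    intro a ha w
    obtain ⟨e, rfl⟩ := Submodule.mkQ_surjective _ w
    rw [← map_smul, Submodule.mkQ_apply, Submodule.Quotient.mk_eq_zero]
    exact Ideal.mul_mem_right _ _ ha
  obtain ⟨ℓ, hℓ⟩ := ENat.ne_top_iff_exists.1 hfinx
  have grow : ∀ n : ℕ, ∃ E : Submodule Λ T, E.FG ∧ t0 ∈ E ∧
      (n : ℕ∞) ≤ Module.length Λ (E ⧸ (fl ⊥ xs).comap E.subtype) := by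
    intro n
    induction n with
    | zero => exact ⟨Submodule.span Λ {t0}, Submodule.fg_span_singleton t0,
        Submodule.mem_span_singleton_self _, by simp⟩
    | succ n ih =>
      obtain ⟨E, hE, ht0, hn⟩ := ih
      obtain ⟨t, ht⟩ : ∃ t, t ∉ E ⊔ Ideal.ofList xs • (⊤ : Submodule Λ T) := by
        by_contra h
        push Not at h
        exact hcon E hE (eq_top_iff.2 fun t _ => h t)
      obtain ⟨E', hE', hle, htm⟩ : ∃ E' : Submodule Λ T, E'.FG ∧ E ≤ E' ∧ t ∈ E' :=
        ⟨E ⊔ Submodule.span Λ {t}, hE.sup (Submodule.fg_span_singleton t), le_sup_left,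
          Submodule.mem_sup_right (Submodule.mem_span_singleton_self t)⟩
      refine ⟨E', hE', hle ht0, ?_⟩
      let φ : (E ⧸ (fl ⊥ xs).comap E.subtype) →ₗ[Λ] (E' ⧸ (fl ⊥ xs).comap E'.subtype) :=
        Submodule.mapQ _ _ (Submodule.inclusion hle) (fun x hx => hx)
      have hφ : Function.Injective φ := by
        rw [injective_iff_map_eq_zero]
        intro y hy
        obtain ⟨e, rfl⟩ := Submodule.mkQ_surjective _ y
        have hy : (Submodule.Quotient.mk (Submodule.inclusion hle e) :
          E' ⧸ (fl ⊥ xs).comap E'.subtype) = 0 := hy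
        rw [Submodule.Quotient.mk_eq_zero] at hy
        exact (Submodule.Quotient.mk_eq_zero _).2 hy
      have h2 := Module.length_eq_add_of_exact φ (LinearMap.range φ).mkQ hφ
        (Submodule.mkQ_surjective _) (LinearMap.exact_iff.2 (Submodule.ker_mkQ _))
      rw [h2]
      push_cast
      refine add_le_add hn (Order.one_le_iff_pos.2 ?_)
      rw [Module.length_pos_iff, Submodule.Quotient.nontrivial_iff]
      intro htop
      have : (Submodule.Quotient.mk ⟨t, htm⟩ : E' ⧸ (fl ⊥ xs).comap E'.subtype) ∈
        LinearMap.range φ := htop ▸ trivial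
      obtain ⟨y, hy⟩ := this
      obtain ⟨e, rfl⟩ := Submodule.mkQ_surjective _ y
      have hy : (Submodule.Quotient.mk (Submodule.inclusion hle e) :
          E' ⧸ (fl ⊥ xs).comap E'.subtype) = Submodule.Quotient.mk ⟨t, htm⟩ := hy
      rw [Submodule.Quotient.eq, Submodule.mem_comap, fl_eq, bot_sup_eq] at hy
      apply ht
      refine Submodule.mem_sup.2 ⟨e, e.2, t - e, ?_, by simp⟩
      have := Submodule.neg_mem _ hy
      simpa using this
  obtain ⟨E, hE, ht0, hn⟩ := grow (ℓ + 1)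
  obtain ⟨v, hvm, hv0, hvE⟩ := hv E hE ht0
  have := hn.trans (count_main hx hrad hreg hE ht0 hvm hv0 hvE)
  rw [← hℓ] at this
  have : ℓ + 1 ≤ ℓ := by exact_mod_cast this
  omega

theorem fg_pow {E : Submodule Λ T} {𝔞 : Ideal Λ} (h : E ⊔ 𝔞 • ⊤ = ⊤) (k : ℕ) :
    E ⊔ 𝔞 ^ k • ⊤ = ⊤ := by
  induction k with
  | zero => simp
  | succ k ih =>
    rw [eq_top_iff]
    calc ⊤ = E ⊔ 𝔞 • (E ⊔ 𝔞 ^ k • ⊤) := by rw [ih, h]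
      _ ≤ _ := by
        rw [Submodule.smul_sup, ← mul_smul, ← pow_succ']
        exact sup_le le_sup_left (sup_le (Submodule.smul_le_right.trans le_sup_left) le_sup_right)

end Local
end Cech

/-! ### Finiteness from Cohen–Macaulayness -/

namespace Cech
set_option linter.unusedSectionVars false
open Pointwise IsLocalRing

section Heights
variable {S : Type*} [CommRing S]

theorem ht_ge {M : Ideal S} [M.IsPrime] {x : ℕ → S} {D : ℕ} (hx : URegular M.primeCompl x D) (k : ℕ)
    (hk : k ≤ D) {P : Ideal S} [P.IsPrime] (hP : P ≤ M) (h : ini x k ≤ P) :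
    (k : ℕ∞) ≤ P.height := by
  induction k generalizing P with
  | zero => simp
  | succ k ih =>
    have hU : ∀ {P : Ideal S}, P.IsPrime → P ≤ M → ini x k ≤ P → usat M.primeCompl (ini x k) ≤ P := by
      rintro P hPp hP h v ⟨u, hu, huv⟩
      exact (hPp.mem_or_mem (h huv)).resolve_left (fun h => hu (hP h))
    have h1 : ini x k ≤ P := (ini_le x k).trans h
    obtain ⟨𝔮, h𝔮, hle⟩ := Ideal.exists_minimalPrimes_le (hU inferInstance hP h1)
    have h𝔮p := h𝔮.1.1
    have hsub : ini x k ≤ 𝔮 := fun v hv =>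
      h𝔮.1.2 (show v ∈ usat M.primeCompl (ini x k) from ⟨1, one_mem _, by simpa using hv⟩)
    have h2 := ih (by omega) (hle.trans hP) hsub
    have h3 : x k ∉ 𝔮 := by
      intro hm
      obtain ⟨y, hy, u, hu, huy⟩ := Ideal.exists_mul_mem_of_mem_minimalPrimes h𝔮 hm
      obtain ⟨u', hu', h'⟩ := hx k (by omega) (u * y) (by rwa [mul_left_comm])
      exact hy ⟨u' * u, mul_mem hu' hu, by rwa [mul_assoc]⟩
    have h4 : x k ∈ P := h (Ideal.subset_span ⟨k, by simp, rfl⟩)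
    have hlt : 𝔮 < P := lt_of_le_of_ne hle (fun e => h3 (e ▸ h4))
    have := Ideal.height_add_one_le_of_lt_of_isPrime hlt
    push_cast
    exact (add_le_add_left h2 1).trans this

end Heights

section Loc
variable {A : Type*} [CommRing A] {S : Type*} [AddCommGroup S] [Module A S] (U : Submonoid A)

/-- Localization of a submodule. -/
noncomputable abbrev Loc (N : Submodule A S) : Submodule (Localization U) (LocalizedModule U S) :=
  Submodule.localized' (Localization U) U (LocalizedModule.mkLinearMap U S) N

/-- The localization map. -/
noncomputable abbrev lm : S →ₗ[A] LocalizedModule U S := LocalizedModule.mkLinearMap U S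

theorem smul_mem_loc {F : Submodule (Localization U) (LocalizedModule U S)} {u : A} (hu : u ∈ U)
    {t : LocalizedModule U S} : u • t ∈ F ↔ t ∈ F := by
  rw [← algebraMap_smul (Localization U)]
  obtain ⟨v, hv⟩ := IsLocalization.map_units (Localization U) ⟨u, hu⟩
  simp only at hv
  rw [← hv]
  exact Submodule.smul_mem_iff'' _

theorem exists_num (t : LocalizedModule U S) : ∃ u ∈ U, ∃ s : S, u • t = lm U s := by
  obtain ⟨⟨s, u⟩, h⟩ := IsLocalizedModule.surj U (lm U (S := S)) t
  exact ⟨u, u.2, s, h⟩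

theorem mem_loc {N : Submodule A S} {s : S} : lm U s ∈ Loc U N ↔ ∃ u ∈ U, u • s ∈ N := by
  rw [Submodule.mem_localized']
  constructor
  · rintro ⟨m, hm, w, h⟩
    rw [IsLocalizedModule.mk'_eq_iff, Submonoid.smul_def, ← map_smul] at h
    obtain ⟨c, hc⟩ := IsLocalizedModule.exists_of_eq (S := U) h
    refine ⟨c * w, mul_mem c.2 w.2, ?_⟩
    rw [mul_smul]
    have : (c : A) • (w : A) • s = (c : A) • m := hc.symm
    rw [this]
    exact N.smul_mem _ hm
  · rintro ⟨u, hu, h⟩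
    refine ⟨_, h, ⟨u, hu⟩, ?_⟩
    rw [IsLocalizedModule.mk'_eq_iff, Submonoid.smul_def, map_smul]

theorem le_loc {F : Submodule (Localization U) (LocalizedModule U S)} {N : Submodule A S}
    (h : ∀ s ∈ N, lm U s ∈ F) : Loc U N ≤ F := by
  intro t ht
  obtain ⟨u, hu, s, hs⟩ := exists_num U t
  rw [← smul_mem_loc U hu, hs] at ht
  obtain ⟨u', hu', h'⟩ := (mem_loc U).1 ht
  rw [← smul_mem_loc U hu, hs, ← smul_mem_loc U hu', ← map_smul]
  exact h _ h'

end Loc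

section Fin
variable {A : Type*} [CommRing A] [IsNoetherianRing A] {S : Type*} [CommRing S] [Algebra A S]

/-- `S` is finitely generated over `A`, locally at `M` and modulo each power of the ideal of the
parameters, by one finite set `E`. -/
theorem fin_mod [Algebra.IsIntegral A S] (hinj : Function.Injective (algebraMap A S))
    {M : Ideal S} [M.IsPrime] (huniq : ∀ P : Ideal S, P.IsPrime →
      P.comap (algebraMap A S) = M.comap (algebraMap A S) → P = M)
    {D : ℕ} {ξ : ℕ → A} (hD : (D : ℕ∞) = M.height) (hM : ∀ k < D, algebraMap A S (ξ k) ∈ M)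
    (hreg : URegular M.primeCompl (fun k => algebraMap A S (ξ k)) D)
    (hv : ∀ E : Finset S, ∃ v ∈ nonZeroDivisors A, algebraMap A S v ∈ M ∧
      ∀ e ∈ E, v • e ∈ (algebraMap A S).range) :
    ∃ E : Finset S, ∀ k : ℕ, ∀ s : S, ∃ u : A, algebraMap A S u ∉ M ∧
      ∃ e ∈ Submodule.span A (E : Set S), u • s - e ∈ (ini (fun k => algebraMap A S (ξ k)) D) ^ k := by
  classical
  set x : ℕ → S := fun k => algebraMap A S (ξ k) with hx
  set M0 := M.comap (algebraMap A S) with hM0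
  have hM0p : M0.IsPrime := Ideal.comap_isPrime _ _
  -- the regularity of `x` is already witnessed by multipliers from `A`
  have hreg' : ∀ k < D, ∀ v, x k * v ∈ ini x k → ∃ u : A, u ∉ M0 ∧ u • v ∈ ini x k := by
    intro k hk v hvk
    let 𝔠 : Ideal S := Submodule.comap (LinearMap.mulRight S v) (ini x k)
    by_contra hcon
    push Not at hcon
    have hle : 𝔠.comap (algebraMap A S) ≤ M0 := by
      intro u hu
      by_contra h
      apply hcon u h
      rw [Algebra.smul_def]
      exact hu
    obtain ⟨Q, hQ, hQp, hQe⟩ := Ideal.exists_ideal_over_prime_of_isIntegral M0 𝔠 hle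
    obtain ⟨u, hu, huv⟩ := hreg k hk v hvk
    have : u ∈ M := by
      rw [← huniq Q hQp hQe]
      exact hQ huv
    exact hu this
  let Λ := Localization.AtPrime M0
  let U := M0.primeCompl
  let T := LocalizedModule U S
  let F : ℕ → Submodule Λ T := fun k => Loc U ((ini x k).restrictScalars A)
  have hF0 : F 0 = ⊥ := by
    rw [eq_bot_iff]
    refine le_loc U ?_
    intro s hs
    have hs : s ∈ ini x 0 := hs
    rw [ini_zero] at hs
    have : s = 0 := hs
    rw [this, map_zero]
    exact zero_mem _
  have hsm : ∀ k (w : T), algebraMap A Λ (ξ k) • w = ξ k • w := fun k w => algebraMap_smul Λ (ξ k) w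
  have hF : ∀ k, F (k + 1) = F k ⊔ algebraMap A Λ (ξ k) • ⊤ := by
    intro k
    apply le_antisymm
    · refine le_loc U ?_
      intro s hs
      have hs : s ∈ ini x (k + 1) := hs
      rw [ini_succ] at hs
      obtain ⟨a, ha, b, hb, rfl⟩ := Submodule.mem_sup.1 hs
      obtain ⟨c, rfl⟩ := Ideal.mem_span_singleton'.1 hb
      rw [mem_sup_smul_top]
      refine ⟨lm U c, ?_⟩
      rw [hsm, ← map_smul, ← map_sub, Algebra.smul_def, mul_comm c, add_sub_cancel_right]
      exact (mem_loc U).2 ⟨1, one_mem _, by rw [one_smul]; exact ha⟩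
    · refine sup_le (le_loc U fun s hs => (mem_loc U).2 ⟨1, one_mem _, ?_⟩) ?_
      · rw [one_smul]; exact ini_le x k hs
      · intro t ht
        obtain ⟨w, -, rfl⟩ := (Submodule.mem_smul_pointwise_iff_exists _ _ _).1 ht
        obtain ⟨u, hu, s, hs⟩ := exists_num U w
        rw [← smul_mem_loc U hu, hsm, smul_comm, hs, ← map_smul]
        refine (mem_loc U).2 ⟨1, one_mem _, ?_⟩
        rw [one_smul, Algebra.smul_def]
        exact Ideal.mul_mem_right _ _ (Ideal.subset_span ⟨k, by simp, rfl⟩)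
  let ys : ℕ → ℕ → List Λ := fun k n => (List.range' k n).map (fun k => algebraMap A Λ (ξ k))
  have hWR : ∀ n k, k + n ≤ D → WR (F k) (ys k n) := by
    intro n
    induction n with
    | zero => intro k _; trivial
    | succ n ih =>
      intro k hk
      change WR (F k) ((List.range' k (n + 1)).map _)
      rw [List.range'_succ, List.map_cons]
      refine ⟨?_, ?_⟩
      · intro t ht
        obtain ⟨u, hu, s, hs⟩ := exists_num U t
        rw [← smul_mem_loc U hu, hsm, smul_comm, hs, ← map_smul] at ht
        obtain ⟨u', hu', h'⟩ := (mem_loc U).1 ht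
        rw [Algebra.smul_def, Algebra.smul_def, mul_left_comm] at h'
        obtain ⟨u2, hu2, h2⟩ := hreg' k (by omega) _ h'
        rw [← smul_mem_loc U hu, hs]
        refine (mem_loc U).2 ⟨u2 * u', U.mul_mem hu2 hu', ?_⟩
        rw [mul_smul, Algebra.smul_def u']
        exact h2
      · rw [← hF]
        exact ih (k + 1) (by omega)
  have hini : Ideal.ofList (ys 0 D) ≤ maximalIdeal Λ := by
    rw [Ideal.ofList, Ideal.span_le]
    intro y hy
    obtain ⟨k, hk, rfl⟩ := List.mem_map.1 hy
    have hk : k < D := by simpa using hk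
    exact (IsLocalization.AtPrime.to_map_mem_maximal_iff Λ M0 _).2 (hM k hk)
  have hrad : maximalIdeal Λ ≤ (Ideal.ofList (ys 0 D)).radical := by
    rw [Ideal.radical_eq_sInf]
    refine le_sInf ?_
    rintro P ⟨hP, hPp⟩
    have hP0 : (P.comap (algebraMap A Λ)).IsPrime := Ideal.comap_isPrime _ _
    have hPM : P.comap (algebraMap A Λ) ≤ M0 := by
      intro a ha
      have : algebraMap A Λ a ∈ maximalIdeal Λ := le_maximalIdeal hPp.ne_top ha
      exact (IsLocalization.AtPrime.to_map_mem_maximal_iff Λ M0 _).1 this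
    obtain ⟨Q, -, hQp, hQ⟩ := Ideal.exists_ideal_over_prime_of_isIntegral
      (P.comap (algebraMap A Λ)) (⊥ : Ideal S) (by
        intro a ha
        have : algebraMap A S a = 0 := ha
        rw [hinj (this.trans (map_zero _).symm)]
        exact zero_mem _)
    obtain ⟨Q', hQQ', hQ'p, hQ'⟩ := Ideal.exists_ideal_over_prime_of_isIntegral M0 Q (hQ ▸ hPM)
    have hQM : Q ≤ M := huniq Q' hQ'p hQ' ▸ hQQ'
    have hxQ : ini x D ≤ Q := by
      rw [ini, Ideal.span_le]
      rintro _ ⟨k, hk, rfl⟩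
      have hk : k < D := hk
      have : ξ k ∈ Q.comap (algebraMap A S) := by
        rw [hQ]
        apply hP
        exact Ideal.subset_span (List.mem_map.2 ⟨k, by simpa using hk, rfl⟩)
      exact this
    have hQe : Q = M := eq_of_ht hQM hD.symm (ht_ge hreg D le_rfl hQM hxQ)
    have : M0 = P.comap (algebraMap A Λ) := by rw [← hQ, hQe]
    rw [← IsLocalization.AtPrime.map_eq_maximalIdeal M0 Λ, Ideal.map_le_iff_le_comap]
    exact this.le
  obtain ⟨E, hE, hEtop⟩ := count_fg (T := T) (t0 := lm U 1)
    (fun y hy => hini (Ideal.subset_span hy)) hrad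
    (hF0 ▸ hWR D 0 (by omega)) (by
      intro E hE _
      obtain ⟨G, rfl⟩ := hE
      choose u hu s hs using exists_num (S := S) U
      obtain ⟨v, hv0, hvM, hve⟩ := hv (G.image s)
      refine ⟨algebraMap A Λ v, (IsLocalization.AtPrime.to_map_mem_maximal_iff Λ M0 _).2 hvM,
        IsLocalization.map_nonZeroDivisors_le U Λ ⟨v, hv0, rfl⟩, ?_⟩
      suffices h : ∀ e ∈ Submodule.span Λ (G : Set T), algebraMap A Λ v • e ∈
          Submodule.span Λ {lm U (1 : S)} by
        intro e he
        obtain ⟨r, hr⟩ := Submodule.mem_span_singleton.1 (h e he)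
        exact ⟨r, hr.symm⟩
      intro e he
      induction he using Submodule.span_induction with
      | mem t ht =>
        rw [algebraMap_smul, ← smul_mem_loc U (hu t), smul_comm, hs, ← map_smul]
        obtain ⟨a, ha⟩ := hve _ (Finset.mem_image_of_mem s ht)
        rw [← ha, Algebra.algebraMap_eq_smul_one, map_smul, ← algebraMap_smul Λ]
        exact Submodule.smul_mem _ _ (Submodule.mem_span_singleton_self _)
      | zero => rw [smul_zero]; exact zero_mem _
      | add a b _ _ ha hb => rw [smul_add]; exact add_mem ha hb
      | smul r a _ ha => rw [smul_comm]; exact Submodule.smul_mem _ _ ha)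
  obtain ⟨G, rfl⟩ := hE
  choose u hu s hs using exists_num (S := S) U
  refine ⟨G.image s, fun k => ?_⟩
  set N : Submodule A S := Submodule.span A ((G.image s : Finset S) : Set S) ⊔
    ((ini x D) ^ k).restrictScalars A with hN
  have hpow := fg_pow hEtop k
  have hmul : ∀ (j : ℕ) (r : S), r ∈ ini x D ^ j → lm U r ∈ Loc U (((ini x D) ^ j).restrictScalars A) :=
    fun j r hr => (mem_loc U).2 ⟨1, one_mem _, by rw [one_smul]; exact hr⟩
  have hpow' : ∀ j : ℕ, Ideal.ofList (ys 0 D) ^ j • (⊤ : Submodule Λ T) ≤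
      Loc U (((ini x D) ^ j).restrictScalars A) := by
    intro j
    induction j with
    | zero =>
      intro t _
      obtain ⟨u, hu, s, hs⟩ := exists_num U t
      rw [← smul_mem_loc U hu, hs]
      exact hmul 0 s (by simp)
    | succ j ih =>
      rw [pow_succ', Submodule.mul_smul]
      refine (smul_mono_right _ ih).trans ?_
      rw [Ideal.ofList, Submodule.smul_le]
      intro y hy t ht
      induction hy using Submodule.span_induction with
      | zero => rw [zero_smul]; exact zero_mem _
      | add a b _ _ ha hb => rw [add_smul]; exact add_mem ha hb
      | smul c a _ ha => rw [smul_assoc]; exact Submodule.smul_mem _ _ ha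
      | mem y hy =>
        obtain ⟨i, hi, rfl⟩ := List.mem_map.1 hy
        have hi : i < D := by simpa using hi
        obtain ⟨u, hu, s, hs⟩ := exists_num U t
        rw [← smul_mem_loc U hu, hs] at ht
        obtain ⟨u', hu', h'⟩ := (mem_loc U).1 ht
        rw [← smul_mem_loc U hu, hsm, smul_comm, hs, ← map_smul]
        refine (mem_loc U).2 ⟨u', hu', ?_⟩
        rw [smul_comm, Algebra.smul_def]
        change _ ∈ ini x D ^ (j + 1)
        rw [pow_succ']
        exact Ideal.mul_mem_mul (Ideal.subset_span ⟨i, hi, rfl⟩) h'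
  have htop : (⊤ : Submodule Λ T) ≤ Loc U N := by
    rw [← hpow]
    refine sup_le ?_ ?_
    · rw [Submodule.span_le]
      intro t ht
      change t ∈ Loc U N
      rw [← smul_mem_loc U (hu t), hs]
      refine (mem_loc U).2 ⟨1, one_mem _, ?_⟩
      rw [one_smul]
      exact Submodule.mem_sup_left (Submodule.subset_span (Finset.mem_coe.2
        (Finset.mem_image_of_mem s ht)))
    · refine (hpow' k).trans (le_loc U fun s hs => (mem_loc U).2 ⟨1, one_mem _, ?_⟩)
      rw [one_smul]
      exact Submodule.mem_sup_right hs
  intro s0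
  obtain ⟨w, hw, h⟩ := (mem_loc U).1 (htop (trivial : lm U s0 ∈ ⊤))
  obtain ⟨e, he, f, hf, hef⟩ := Submodule.mem_sup.1 h
  refine ⟨w, hw, e, he, ?_⟩
  rw [← hef, add_sub_cancel_left]
  exact hf

end Fin
end Cech

/-! ### The bigraded Rees ring -/

namespace Cech
set_option linter.unusedSectionVars false
open AddMonoidAlgebra

section Comp
variable {R : Type*} [CommRing R] (I J : Ideal R)

theorem mem_rees2 {x : Amb2 R} : x ∈ rees2 I J ↔ ∀ d, x.coeff d ∈ I ^ d.1 * J ^ d.2 := by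
  classical
  constructor
  · intro hx
    induction hx using Algebra.adjoin_induction with
    | mem x hx =>
      intro d
      rcases hx with ⟨a, ha, rfl⟩ | ⟨a, ha, rfl⟩
      all_goals
        rw [coeff_single, Finsupp.single_apply]
        split_ifs with h
        · subst h; simpa using ha
        · exact zero_mem _
    | algebraMap r =>
      intro d
      rw [AddMonoidAlgebra.coe_algebraMap, Function.comp_apply, coeff_single, Finsupp.single_apply]
      split_ifs with h
      · subst h; simp
      · exact zero_mem _
    | add x y _ _ hx hy => intro d; exact add_mem (hx d) (hy d)
    | mul x y _ _ hx hy =>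
      intro d
      rw [coeff_mul]
      refine sum_mem fun d1 _ => sum_mem fun d2 _ => ?_
      dsimp only
      split_ifs with h
      · subst h
        have := Ideal.mul_mem_mul (hx d1) (hy d2)
        rwa [mul_mul_mul_comm, ← pow_add, ← pow_add] at this
      · exact zero_mem _
  · intro h
    let K : ℕ × ℕ → Ideal R := fun d =>
      (Subalgebra.toSubmodule (rees2 I J)).comap (lsingle (R := R) (S := R) d)
    have hK : ∀ d e, K d * K e ≤ K (d + e) := by
      intro d e
      rw [Ideal.mul_le]
      intro a ha b hb
      have := (rees2 I J).mul_mem (show single d a ∈ rees2 I J from ha)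
        (show single e b ∈ rees2 I J from hb)
      rwa [single_mul_single] at this
    have hK0 : K 0 = ⊤ := by
      rw [eq_top_iff]
      intro r _
      exact (rees2 I J).algebraMap_mem r
    have hI : ∀ n : ℕ, I ^ n ≤ K (n, 0) := by
      intro n
      induction n with
      | zero => exact le_top.trans hK0.ge
      | succ n ih =>
        rw [pow_succ]
        refine (Ideal.mul_mono ih (show I ≤ K (1, 0) from ?_)).trans (hK _ _)
        intro a ha
        exact Algebra.subset_adjoin (Or.inl ⟨a, ha, rfl⟩)
    have hJ : ∀ n : ℕ, J ^ n ≤ K (0, n) := by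
      intro n
      induction n with
      | zero => exact le_top.trans hK0.ge
      | succ n ih =>
        rw [pow_succ]
        refine (Ideal.mul_mono ih (show J ≤ K (0, 1) from ?_)).trans (hK _ _)
        intro a ha
        exact Algebra.subset_adjoin (Or.inr ⟨a, ha, rfl⟩)
    have hIJ : ∀ d, I ^ d.1 * J ^ d.2 ≤ K d := by
      rintro ⟨r, s⟩
      refine (Ideal.mul_mono (hI r) (hJ s)).trans ((hK _ _).trans ?_)
      simp
    rw [← sum_coeff_single x]
    exact sum_mem fun d _ => hIJ d (h d)

theorem single_mem_rees1 (K : Ideal R) (n : ℕ) {a : R} (ha : a ∈ K ^ n) : single n a ∈ rees1 K := by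
  let N : ℕ → Ideal R := fun d =>
      (Subalgebra.toSubmodule (rees1 K)).comap (lsingle (R := R) (S := R) d)
  suffices h : K ^ n ≤ N n from h ha
  clear ha
  induction n with
  | zero =>
    intro r _
    exact (rees1 K).algebraMap_mem r
  | succ n ih =>
    rw [pow_succ, Ideal.mul_le]
    intro a ha b hb
    have := (rees1 K).mul_mem (show single n a ∈ rees1 K from ih ha)
      (show single 1 b ∈ rees1 K from Algebra.subset_adjoin ⟨b, hb, rfl⟩)
    rwa [single_mul_single] at this

variable {I J}

theorem mem_reesBar2 {x : Amb2 R} : x ∈ reesBar2 I J ↔ IsIntegral (rees2 I J) x := Iff.rfl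

/-- The part of `x` of weight `k`. -/
noncomputable def prt (w : ℕ × ℕ →+ ℕ) (k : ℕ) (x : Amb2 R) : Amb2 R :=
  ofCoeff (x.coeff.filter (fun d => w d = k))

theorem prt_coeff (w : ℕ × ℕ →+ ℕ) (k : ℕ) (x : Amb2 R) (d) :
    (prt w k x).coeff d = if w d = k then x.coeff d else 0 := by
  simp [prt, Finsupp.filter_apply]

/-- The homomorphism recording the weight by an additional variable. -/
noncomputable def wt (w : ℕ × ℕ →+ ℕ) : Amb2 R →ₐ[R] Polynomial (Amb2 R) :=
  AddMonoidAlgebra.lift R (Polynomial (Amb2 R)) (ℕ × ℕ)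
    { toFun := fun d => Polynomial.monomial (w d.toAdd) (single d.toAdd 1)
      map_one' := by
        rw [toAdd_one, map_zero, ← one_def]; rfl
      map_mul' := fun d e => by
        rw [Polynomial.monomial_mul_monomial, single_mul_single]; simp }

theorem wt_single (w : ℕ × ℕ →+ ℕ) (d : ℕ × ℕ) (r : R) :
    wt w (single d r) = Polynomial.monomial (w d) (single d r) := by
  rw [wt, AddMonoidAlgebra.lift_single]
  simp [Polynomial.smul_monomial]

theorem wt_coeff (w : ℕ × ℕ →+ ℕ) (k : ℕ) (x : Amb2 R) : (wt w x).coeff k = prt w k x := by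
  induction x using AddMonoidAlgebra.induction_linear with
  | zero => ext; simp [prt_coeff]
  | add f g hf hg =>
    rw [map_add, Polynomial.coeff_add, hf, hg]
    ext d
    rw [coeff_add, Finsupp.add_apply, prt_coeff, prt_coeff, prt_coeff]
    split_ifs <;> simp
  | single d r =>
    rw [wt_single, Polynomial.coeff_monomial]
    ext e
    rw [prt_coeff, apply_ite coeff, apply_ite (fun f : ℕ × ℕ →₀ R => f e), coeff_single,
      Finsupp.single_apply]
    by_cases h : d = e
    · subst h; simp
    · simp [h]

attribute [local instance] Polynomial.algebra in
/-- The weight components of an element integral over the Rees ring are integral. -/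
theorem prt_mem (w : ℕ × ℕ →+ ℕ) (k : ℕ) {x : Amb2 R} (hx : x ∈ reesBar2 I J) :
    prt w k x ∈ reesBar2 I J := by
  rw [mem_reesBar2] at hx ⊢
  rw [← wt_coeff]
  refine Polynomial.isIntegral_iff_isIntegral_coeff.1 ?_ k
  obtain ⟨p, hp, hpx⟩ := hx
  have key : ∀ a : rees2 I J, ∃ q : Polynomial (rees2 I J),
      q.map (algebraMap (rees2 I J) (Amb2 R)) = wt w (a : Amb2 R) := by
    intro a
    have : wt w (a : Amb2 R) ∈ Polynomial.lifts (algebraMap (rees2 I J) (Amb2 R)) := by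
      rw [Polynomial.lifts_iff_coeff_lifts]
      intro n
      refine ⟨⟨(wt w (a : Amb2 R)).coeff n, ?_⟩, rfl⟩
      rw [wt_coeff, mem_rees2]
      intro d
      rw [prt_coeff]
      split_ifs
      · exact (mem_rees2 I J).1 a.2 d
      · exact zero_mem _
    exact (Polynomial.mem_lifts _).1 this
  have hInt : ((wt w : Amb2 R →ₐ[R] _).toRingHom.comp (algebraMap (rees2 I J) (Amb2 R))).IsIntegralElem
      (wt w x) := by
    refine ⟨p, hp, ?_⟩
    have := congrArg (wt w) hpx
    rw [map_zero] at this
    rw [← this]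
    exact (Polynomial.hom_eval₂ p _ (wt w : Amb2 R →ₐ[R] _).toRingHom x).symm
  obtain ⟨p, hp, hpx⟩ := hInt
  rw [← Polynomial.eval_map] at hpx
  have hl : p.map ((wt w : Amb2 R →ₐ[R] _).toRingHom.comp (algebraMap (rees2 I J) (Amb2 R))) ∈
      Polynomial.lifts (algebraMap (Polynomial (rees2 I J)) (Polynomial (Amb2 R))) := by
    rw [Polynomial.lifts_iff_coeff_lifts]
    intro n
    rw [Polynomial.coeff_map]
    obtain ⟨q, hq⟩ := key (p.coeff n)
    exact ⟨q, by rw [Polynomial.algebraMap_def]; exact hq⟩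
  obtain ⟨q, hq, -, hqm⟩ := Polynomial.lifts_and_natDegree_eq_and_monic hl (hp.map _)
  refine ⟨q, hqm, ?_⟩
  rw [← Polynomial.eval_map, hq, hpx]

/-- The bigraded components of an element integral over the Rees ring are integral. -/
theorem comp_mem {x : Amb2 R} (hx : x ∈ reesBar2 I J) (d : ℕ × ℕ) :
    single d (x.coeff d) ∈ reesBar2 I J := by
  have := prt_mem (AddMonoidHom.snd ℕ ℕ) d.2 (prt_mem (AddMonoidHom.fst ℕ ℕ) d.1 hx)
  convert this using 1
  ext e
  rw [prt_coeff, prt_coeff, coeff_single, Finsupp.single_apply]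
  by_cases h : d = e
  · subst h; simp
  · rw [if_neg h]
    split_ifs with h1 h2
    · exact absurd (Prod.ext h2 h1).symm h
    · rfl
    · rfl

end Comp

section Grading
variable {R : Type*} [CommRing R] (I J : Ideal R)
variable {Γ : Type*} [AddCommGroup Γ] [DecidableEq Γ] (w : ℕ × ℕ →+ Γ)

/-- The grading of the bigraded Rees ring by a weight function. -/
def gr : Γ → AddSubgroup (reesBar2 I J) := fun γ =>
  { carrier := {x | ∀ d, (x : Amb2 R).coeff d ≠ 0 → w d = γ}
    zero_mem' := fun d h => absurd rfl h
    add_mem' := by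
      intro x y hx hy d h
      by_cases hxd : (x : Amb2 R).coeff d = 0
      · apply hy d
        intro hyd
        exact h (by simp [hxd, hyd])
      · exact hx d hxd
    neg_mem' := by
      intro x hx d h
      exact hx d (fun h' => h (by simp [h'])) }

variable {I J w}
theorem mem_gr {γ : Γ} {x : reesBar2 I J} :
    x ∈ gr I J w γ ↔ ∀ d, (x : Amb2 R).coeff d ≠ 0 → w d = γ := Iff.rfl

theorem mem_gr_of_single {d : ℕ × ℕ} {r : R} {x : reesBar2 I J} (h : (x : Amb2 R) = single d r) :
    x ∈ gr I J w (w d) := by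
  intro e he
  rw [h, coeff_single, Finsupp.single_apply] at he
  split_ifs at he with h'
  · rw [h']
  · exact absurd rfl he

instance gr_mon : SetLike.GradedMonoid (gr I J w) where
  one_mem := by
    rw [← map_zero w]
    exact mem_gr_of_single (r := 1) rfl
  mul_mem := by
    classical
    intro γ γ' x y hx hy d hd
    have hd : ((x : Amb2 R) * (y : Amb2 R)).coeff d ≠ 0 := hd
    rw [coeff_mul] at hd
    obtain ⟨d1, h1, hd⟩ := Finset.exists_ne_zero_of_sum_ne_zero hd
    obtain ⟨d2, h2, hd⟩ := Finset.exists_ne_zero_of_sum_ne_zero hd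
    dsimp only at hd
    split_ifs at hd with h
    · rw [← h, map_add, hx d1 (Finsupp.mem_support_iff.1 h1), hy d2 (Finsupp.mem_support_iff.1 h2)]
    · exact absurd rfl hd

/-- A homogeneous component, as an element of the bigraded Rees ring. -/
noncomputable def cp (x : reesBar2 I J) (d : ℕ × ℕ) : reesBar2 I J :=
  ⟨single d ((x : Amb2 R).coeff d), comp_mem x.2 d⟩

theorem sum_cp (x : reesBar2 I J) : ∑ d ∈ (x : Amb2 R).coeff.support, cp x d = x := by
  apply Subtype.ext
  rw [AddSubmonoidClass.coe_finsetSum]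
  exact sum_coeff_single (x : Amb2 R)

theorem gr_internal : DirectSum.IsInternal (gr I J w) := by
  constructor
  · rw [injective_iff_map_eq_zero]
    intro v hv
    have key : ∀ (v : DirectSum Γ fun γ => gr I J w γ) (d), ((DirectSum.coeAddMonoidHom (gr I J w) v : reesBar2 I J) : Amb2 R).coeff d =
        ((v (w d) : reesBar2 I J) : Amb2 R).coeff d := by
      intro v d
      induction v using DirectSum.induction_on with
      | zero => simp
      | of γ x =>
        rw [DirectSum.coeAddMonoidHom_of]
        by_cases h : γ = w d
        · subst h; rw [DirectSum.of_eq_same]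
        · rw [DirectSum.of_eq_of_ne _ _ _ (Ne.symm h)]
          by_contra hne
          exact h (x.2 d (by simpa using hne)).symm
      | add u v hu hv =>
        rw [map_add, DirectSum.add_apply]
        exact congrArg₂ (· + ·) hu hv
    ext γ d
    by_cases h : w d = γ
    · subst h
      rw [← key v, hv]
      simp
    · by_contra hne
      exact h ((v γ).2 d (by simpa using hne))
  · intro x
    change x ∈ AddMonoidHom.mrange (DirectSum.coeAddMonoidHom (gr I J w))
    rw [← sum_cp x]
    refine sum_mem fun d _ => ⟨DirectSum.of (fun γ => gr I J w γ) (w d) ⟨cp x d, mem_gr_of_single rfl⟩, ?_⟩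
    rw [DirectSum.coeAddMonoidHom_of]

noncomputable instance gr_graded : GradedRing (gr I J w) where
  toGradedMonoid := gr_mon
  toDecomposition := gr_internal.chooseDecomposition

end Grading
end Cech

namespace Cech
set_option linter.unusedSectionVars false
open AddMonoidAlgebra IsLocalRing

section Basic
variable {R : Type*} [CommRing R] {I J : Ideal R}

theorem rees2_le : rees2 I J ≤ reesBar2 I J := fun x hx =>
  isIntegral_algebraMap (R := rees2 I J) (A := Amb2 R) (x := ⟨x, hx⟩)

noncomputable instance algA : Algebra (rees2 I J) (reesBar2 I J) :=
  (Subalgebra.inclusion (rees2_le (I := I) (J := J))).toRingHom.toAlgebra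

theorem coe_algA (a : rees2 I J) : ((algebraMap (rees2 I J) (reesBar2 I J) a : reesBar2 I J) : Amb2 R) = a :=
  rfl

theorem algA_inj : Function.Injective (algebraMap (rees2 I J) (reesBar2 I J)) := fun _ _ h =>
  Subtype.ext (congrArg (fun x : reesBar2 I J => (x : Amb2 R)) h)

instance intA : Algebra.IsIntegral (rees2 I J) (reesBar2 I J) where
  isIntegral x := by
    obtain ⟨p, hp, h⟩ := x.2
    refine ⟨p, hp, Subtype.ext ?_⟩
    exact (Polynomial.hom_eval₂ p _ (reesBar2 I J).val.toRingHom x).trans h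

theorem rees2_noeth [IsNoetherianRing R] : IsNoetherianRing (rees2 I J) := by
  classical
  obtain ⟨s, hs⟩ := IsNoetherian.noetherian I
  obtain ⟨t, ht⟩ := IsNoetherian.noetherian J
  have : rees2 I J = Algebra.adjoin R ((s.image (fun a => (single (1, 0) a : Amb2 R)) ∪
      t.image (fun a => (single (0, 1) a : Amb2 R)) : Finset (Amb2 R)) : Set (Amb2 R)) := by
    apply le_antisymm
    · refine Algebra.adjoin_le ?_
      rintro _ (⟨a, ha, rfl⟩ | ⟨a, ha, rfl⟩)
      · rw [← hs] at ha
        change a ∈ (Subalgebra.toSubmodule (Algebra.adjoin R _)).comap (lsingle (R := R) (S := R) (1, 0))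
        refine Submodule.span_le.2 ?_ ha
        intro a ha
        exact Algebra.subset_adjoin (by
          rw [Finset.coe_union]; exact Or.inl (Finset.mem_coe.2 (Finset.mem_image_of_mem _ ha)))
      · rw [← ht] at ha
        change a ∈ (Subalgebra.toSubmodule (Algebra.adjoin R _)).comap (lsingle (R := R) (S := R) (0, 1))
        refine Submodule.span_le.2 ?_ ha
        intro a ha
        exact Algebra.subset_adjoin (by
          rw [Finset.coe_union]; exact Or.inr (Finset.mem_coe.2 (Finset.mem_image_of_mem _ ha)))
    · refine Algebra.adjoin_mono ?_
      intro x hx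
      rw [Finset.coe_union, Finset.coe_image, Finset.coe_image] at hx
      rcases hx with ⟨a, ha, rfl⟩ | ⟨a, ha, rfl⟩
      · exact Or.inl ⟨a, hs ▸ Submodule.subset_span ha, rfl⟩
      · exact Or.inr ⟨a, ht ▸ Submodule.subset_span ha, rfl⟩
  rw [this]
  have := (Subalgebra.fg_iff_finiteType _).1 (Subalgebra.fg_adjoin_finset (R := R)
    (s.image (fun a => (single (1, 0) a : Amb2 R)) ∪ t.image (fun a => (single (0, 1) a : Amb2 R))))
  exact Algebra.FiniteType.isNoetherianRing R _

/-- The constant term. -/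
noncomputable def c0 : Amb2 R →+* R where
  toFun x := x.coeff 0
  map_one' := by rw [one_def]; simp
  map_zero' := rfl
  map_add' _ _ := rfl
  map_mul' x y := by
    rw [coeff_mul_antidiag x y 0 {(0, 0)} (by rintro ⟨p, q⟩; simp)]
    simp

theorem c0_apply (x : Amb2 R) : c0 x = x.coeff 0 := rfl

/-- The constant term of an element of the bigraded Rees ring. -/
noncomputable def k0 : reesBar2 I J →+* R := c0.comp (reesBar2 I J).val.toRingHom

theorem k0_apply (x : reesBar2 I J) : k0 x = (x : Amb2 R).coeff 0 := rfl

theorem k0_alg (r : R) : k0 (algebraMap R (reesBar2 I J) r) = r := by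
  rw [k0_apply]
  change (single 0 r : Amb2 R).coeff 0 = r
  simp

/-- A homogeneous element of the bigraded Rees ring satisfies a homogeneous equation of integral
dependence. -/
theorem hom_eq {d : ℕ × ℕ} {r : R} (hx : single d r ∈ reesBar2 I J) : ∃ n : ℕ, ∃ γ : ℕ → rees2 I J,
    (∀ i < n, ∃ c, (γ i : Amb2 R) = single ((n - i) • d) c) ∧
    (⟨single d r, hx⟩ : reesBar2 I J) ^ n =
      - ∑ i ∈ Finset.range n, algebraMap _ (reesBar2 I J) (γ i) * ⟨single d r, hx⟩ ^ i := by
  obtain ⟨p, hp, h⟩ := hx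
  set n := p.natDegree with hn
  rw [Polynomial.eval₂_eq_sum_range, ← hn] at h
  let γ : ℕ → rees2 I J := fun i => ⟨single ((n - i) • d) ((p.coeff i : Amb2 R).coeff ((n - i) • d)), by
    rw [mem_rees2]
    intro e
    rw [coeff_single, Finsupp.single_apply]
    split_ifs with h
    · subst h; exact (mem_rees2 I J).1 (p.coeff i).2 _
    · exact zero_mem _⟩
  refine ⟨n, γ, fun i _ => ⟨_, rfl⟩, ?_⟩
  rw [eq_neg_iff_add_eq_zero]
  apply Subtype.ext
  rw [Subalgebra.coe_add, AddSubmonoidClass.coe_finsetSum, Subalgebra.coe_pow, Subalgebra.coe_zero]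
  simp only [Subalgebra.coe_mul, Subalgebra.coe_pow, coe_algA]
  have hγ : ∀ i ∈ Finset.range (n + 1), (γ i : Amb2 R) * single d r ^ i =
      single (n • d) (((p.coeff i : Amb2 R) * single d r ^ i).coeff (n • d)) := by
    intro i hi
    have hi : i ≤ n := by simpa [Nat.lt_succ_iff] using hi
    have hd : (n - i) • d + i • d = n • d := by rw [← add_smul, Nat.sub_add_cancel hi]
    rw [single_pow, coeff_mul_single_eq_coeff_mul (m₂ := (n - i) • d)]
    · change single _ _ * single _ _ = _
      rw [single_mul_single, hd]
    · intro m _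
      rw [← hd]
      exact add_left_inj _
  have hs : ∑ i ∈ Finset.range (n + 1), (γ i : Amb2 R) * single d r ^ i = 0 := by
    rw [Finset.sum_congr rfl hγ]
    have : ∀ f : ℕ → R, ∑ i ∈ Finset.range (n + 1), (single (n • d) (f i) : Amb2 R) =
        single (n • d) (∑ i ∈ Finset.range (n + 1), f i) := fun f =>
      (map_sum (singleAddHom (R := R) (n • d)) f _).symm
    rw [this]
    have h' := congrArg (fun x : Amb2 R => x.coeff (n • d)) h
    simp only [coeff_sum, Finsupp.finsetSum_apply] at h'
    have h'' : ∑ i ∈ Finset.range (n + 1), ((p.coeff i : Amb2 R) * single d r ^ i).coeff (n • d) = 0 := h'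
    rw [h'', single_zero]
  rw [Finset.sum_range_succ] at hs
  rw [add_comm]
  convert hs using 2
  have : (γ n : Amb2 R) = 1 := by
    change single _ _ = _
    have h1 : p.coeff n = 1 := hp
    rw [h1]
    simp [one_def]
  rw [this, one_mul]

end Basic

section Local
variable {R : Type*} [CommRing R] [IsLocalRing R] (I J : Ideal R)

/-- The graded maximal ideal of the bigraded Rees ring. -/
noncomputable def MM : Ideal (reesBar2 I J) := (maximalIdeal R).comap k0

instance MM_max : (MM I J).IsMaximal :=
  Ideal.comap_isMaximal_of_surjective _ (fun r => ⟨_, k0_alg r⟩)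

/-- Its trace on the Rees ring. -/
noncomputable def MA : Ideal (rees2 I J) := (MM I J).comap (algebraMap _ _)

variable {I J}
theorem mem_MM {x : reesBar2 I J} : x ∈ MM I J ↔ (x : Amb2 R).coeff 0 ∈ maximalIdeal R := Iff.rfl

theorem MM_le : MM I J ≤ ((MA I J).map (algebraMap _ (reesBar2 I J))).radical := by
  intro x hx
  rw [← sum_cp x]
  refine sum_mem fun d _ => ?_
  by_cases hd : d = 0
  · subst hd
    refine Ideal.le_radical (Ideal.mem_map_of_mem (x := (algebraMap R (rees2 I J) ((x : Amb2 R).coeff 0))) _ ?_)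
    change (single 0 ((x : Amb2 R).coeff 0) : Amb2 R).coeff 0 ∈ maximalIdeal R
    rw [coeff_single, Finsupp.single_eq_same]
    exact hx
  · obtain ⟨n, γ, h, he⟩ := hom_eq (comp_mem x.2 d)
    refine ⟨n, ?_⟩
    unfold cp
    rw [he]
    refine neg_mem (sum_mem fun i hi => Ideal.mul_mem_right _ _ (Ideal.mem_map_of_mem _ ?_))
    obtain ⟨c, hc⟩ := h i (Finset.mem_range.1 hi)
    change (γ i : Amb2 R).coeff 0 ∈ maximalIdeal R
    rw [hc, coeff_single, Finsupp.single_apply, if_neg]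
    · exact zero_mem _
    · have : n - i ≠ 0 := Nat.sub_ne_zero_of_lt (Finset.mem_range.1 hi)
      intro h0
      rcases smul_eq_zero.1 h0 with h | h
      · exact this h
      · exact hd h

/-- `MM` is the only prime lying over its trace on the Rees ring. -/
theorem MM_uniq {P : Ideal (reesBar2 I J)} (hP : P.IsPrime)
    (h : MA I J ≤ P.comap (algebraMap _ _)) : P = MM I J := by
  refine ((MM_max I J).eq_of_le hP.ne_top ?_).symm
  exact MM_le.trans (hP.radical_le_iff.2 (Ideal.map_le_iff_le_comap.2 h))

end Local
end Cech

/-! ### The bigraded Rees ring is Noetherian -/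

namespace Cech
set_option linter.unusedSectionVars false
open AddMonoidAlgebra IsLocalRing

section Abs
variable {A S : Type*} [CommRing A] [CommRing S] [Algebra A S] [IsNoetherianRing A]
  [Algebra.IsIntegral A S]

/-- If `S` is Cohen-Macaulay at a maximal ideal `M` that is the only prime over its trace on `A`,
then `S` is finite modulo the extension of this trace. -/
theorem fin_mod_radical {M : Ideal S} [M.IsMaximal]
    (huniq : ∀ P : Ideal S, P.IsPrime →
      M.comap (algebraMap A S) ≤ P.comap (algebraMap A S) → P = M)
    (hrad : M ≤ ((M.comap (algebraMap A S)).map (algebraMap A S)).radical)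
    (hconst : ∀ u ∉ M, ∃ r : A, IsUnit r ∧ u - algebraMap A S r ∈ M)
    (hv : ∀ E : Finset S, ∃ v : A, (∀ s : S, algebraMap A S v * s = 0 → s = 0) ∧ algebraMap A S v ∈ M ∧
      ∀ e ∈ E, v • e ∈ (algebraMap A S).range)
    (hCM : CMAt M) : ∃ E : Finset S, Submodule.span A (E : Set S) ⊔
      ((M.comap (algebraMap A S)).map (algebraMap A S)).restrictScalars A = ⊤ := by
  classical
  obtain ⟨D, x, hD, hxM, hreg⟩ := hCM
  let A0 : Subalgebra A S := Algebra.adjoin A (x '' {k | k < D})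
  have hfin : Module.Finite A A0 := by
    have hs : (x '' {k | k < D}).Finite := (Set.finite_lt_nat D).image x
    exact Module.Finite.of_fg (fg_adjoin_of_finite hs fun y _ => Algebra.IsIntegral.isIntegral y)
  have hnoeth : IsNoetherianRing A0 := IsNoetherianRing.of_finite A A0
  have hInt : Algebra.IsIntegral A0 S := Algebra.IsIntegral.tower_top (R := A)
  let ξ : ℕ → A0 := fun k => if h : k < D then ⟨x k, Algebra.subset_adjoin ⟨k, h, rfl⟩⟩ else 0
  have hξ : ∀ k < D, algebraMap A0 S (ξ k) = x k := by
    intro k hk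
    simp only [ξ, dif_pos hk]
    rfl
  have hini : ∀ k ≤ D, ini (fun k => algebraMap A0 S (ξ k)) k = ini x k :=
    fun k hk => ini_congr fun j hj => hξ j (lt_of_lt_of_le hj hk)
  obtain ⟨E, hE⟩ := fin_mod (A := A0) (S := S) (M := M) (ξ := ξ) (D := D)
    Subtype.coe_injective (by
      intro P hP h
      refine huniq P hP fun y hy => ?_
      have h1 : algebraMap A A0 y ∈ M.comap (algebraMap A0 S) := hy
      rw [← h] at h1
      exact h1) hD (fun k hk => by rw [hξ k hk]; exact hxM k hk)
    (by
      intro k hk v hv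
      rw [hini k hk.le]
      refine hreg k hk v ?_
      rw [← hini k hk.le, ← hξ k hk]
      exact hv)
    (by
      intro E
      obtain ⟨v, hv0, hvM, hvE⟩ := hv E
      refine ⟨algebraMap A A0 v, ?_, hvM, ?_⟩
      · rw [mem_nonZeroDivisors_iff_left]
        intro y hy
        exact Subtype.ext (hv0 y (congrArg Subtype.val hy))
      · intro e he
        obtain ⟨q, hq⟩ := hvE e he
        exact ⟨algebraMap A A0 q, by rw [algebraMap_smul, ← hq]; rfl⟩)
  set 𝔫 := (M.comap (algebraMap A S)).map (algebraMap A S) with h𝔫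
  obtain ⟨N, hN⟩ : ∃ N : ℕ, ini x D ^ N ≤ 𝔫 := by
    refine Ideal.exists_pow_le_of_le_radical_of_fg (le_trans ?_ hrad) ?_
    · rw [ini, Ideal.span_le]
      rintro _ ⟨k, hk, rfl⟩
      exact hxM k hk
    · exact Submodule.fg_span ((Set.finite_lt_nat D).image x)
  rw [hini D le_rfl] at hE
  have htop : ∀ s : S, ∃ e ∈ Submodule.span A0 (E : Set S), s - e ∈ 𝔫 := by
    intro s
    obtain ⟨u, hu, e, he, hue⟩ := hE N s
    have hue := hN hue
    obtain ⟨r, hr, hru⟩ := hconst _ hu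
    let m : A0 := algebraMap A A0 r - u
    have hmM : algebraMap A0 S m ∈ M := by
      rw [map_sub, ← neg_sub]
      exact neg_mem hru
    obtain ⟨n, hn⟩ := hrad hmM
    -- `r ^ n = w u + m ^ n` where `m = r - u` is nilpotent modulo `𝔫`
    obtain ⟨w, hw⟩ : ∃ w, algebraMap A A0 r ^ n - m ^ n = u * w := by
      have : u = algebraMap A A0 r - m := by simp [m]
      rw [this]
      exact sub_dvd_pow_sub_pow _ _ n
    obtain ⟨ρ, hρ⟩ := (hr.pow n).exists_left_inv
    refine ⟨algebraMap A A0 ρ • w • e, Submodule.smul_mem _ _ (Submodule.smul_mem _ _ he), ?_⟩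
    have h1 : algebraMap A S ρ * algebraMap A S r ^ n = 1 := by rw [← map_pow, ← map_mul, hρ, map_one]
    have h2 : algebraMap A S r ^ n - algebraMap A0 S m ^ n = algebraMap A0 S u * algebraMap A0 S w :=
      congrArg (algebraMap A0 S) hw
    have h3 : s - algebraMap A A0 ρ • w • e = algebraMap A S ρ * (algebraMap A0 S m ^ n * s +
        algebraMap A0 S w * (u • s - e)) := by
      rw [algebraMap_smul, Algebra.smul_def, Algebra.smul_def, Algebra.smul_def]
      linear_combination (-s) * h1 + algebraMap A S ρ * s * h2
    rw [h3]
    exact Ideal.mul_mem_left _ _ (add_mem (Ideal.mul_mem_right _ _ hn) (Ideal.mul_mem_left _ _ hue))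
  obtain ⟨G, hG⟩ : (Submodule.span A0 (E : Set S)).restrictScalars A |>.FG := by
    have : Module.Finite A0 (Submodule.span A0 (E : Set S)) := Module.Finite.span_finset A0 E
    have : Module.Finite A (Submodule.span A0 (E : Set S)) := Module.Finite.trans A0 _
    exact Module.Finite.iff_fg.1 this
  refine ⟨G, ?_⟩
  rw [eq_top_iff, hG]
  intro s _
  obtain ⟨e, he, hs⟩ := htop s
  rw [← add_sub_cancel e s]
  exact Submodule.add_mem_sup he hs

end Abs

section Nak
variable {R : Type*} [CommRing R] {I J : Ideal R}

theorem cp_add (x y : reesBar2 I J) (d) : cp (x + y) d = cp x d + cp y d :=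
  Subtype.ext (single_add d _ _)

theorem cp_zero (d) : cp (0 : reesBar2 I J) d = 0 :=
  Subtype.ext (single_zero d)

theorem cp_cp (x : reesBar2 I J) (d e) : cp (cp x d) e = if d = e then cp x d else 0 := by
  apply Subtype.ext
  rw [cp]
  simp only [cp, coeff_single, Finsupp.single_apply]
  split_ifs with h
  · subst h; rfl
  · exact single_zero e

theorem cp_mul (x y : reesBar2 I J) (d) : cp (x * y) d =
    ∑ d1 ∈ (x : Amb2 R).coeff.support, ∑ d2 ∈ (y : Amb2 R).coeff.support,
      if d1 + d2 = d then cp x d1 * cp y d2 else 0 := by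
  apply Subtype.ext
  rw [AddSubmonoidClass.coe_finsetSum]
  simp only [AddSubmonoidClass.coe_finsetSum]
  change single d (((x : Amb2 R) * (y : Amb2 R)).coeff d) = _
  rw [coeff_mul]
  have hs : ∀ (s : Finset (ℕ × ℕ)) (f : ℕ × ℕ → R), (single d (∑ i ∈ s, f i) : Amb2 R) =
        ∑ i ∈ s, single d (f i) := fun s f => map_sum (singleAddHom (R := R) d) f _
  rw [Finsupp.sum, hs]
  refine Finset.sum_congr rfl fun d1 _ => ?_
  rw [Finsupp.sum, hs]
  refine Finset.sum_congr rfl fun d2 _ => ?_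
  split_ifs with h
  · subst h
    change _ = single d1 _ * single d2 _
    rw [single_mul_single]
  · exact single_zero d

theorem cp_algA (a : rees2 I J) (d) : ∃ a' : rees2 I J, (∃ c, (a' : Amb2 R) = single d c) ∧
    algebraMap _ (reesBar2 I J) a' = cp (algebraMap _ (reesBar2 I J) a) d := by
  refine ⟨⟨single d ((a : Amb2 R).coeff d), ?_⟩, ⟨_, rfl⟩, rfl⟩
  rw [mem_rees2]
  intro e
  rw [coeff_single, Finsupp.single_apply]
  split_ifs with h
  · subst h; exact (mem_rees2 I J).1 a.2 _
  · exact zero_mem _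

/-- Graded Nakayama lemma for the bigraded Rees ring. -/
theorem graded_nak [IsLocalRing R] [IsNoetherianRing R] (E : Finset (reesBar2 I J))
    (hE : Submodule.span (rees2 I J) (E : Set (reesBar2 I J)) ⊔
      ((MA I J).map (algebraMap _ (reesBar2 I J))).restrictScalars (rees2 I J) = ⊤) :
    Module.Finite (rees2 I J) (reesBar2 I J) := by
  classical
  let E' : Finset (reesBar2 I J) := E.biUnion fun x => (x : Amb2 R).coeff.support.image (cp x)
  let F := Submodule.span (rees2 I J) (E' : Set (reesBar2 I J))
  have hEF : Submodule.span (rees2 I J) (E : Set (reesBar2 I J)) ≤ F := by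
    rw [Submodule.span_le]
    intro x hx
    rw [← sum_cp x]
    exact sum_mem fun d hd => Submodule.subset_span (Finset.mem_coe.2 (Finset.mem_biUnion.2
      ⟨x, hx, Finset.mem_image_of_mem _ hd⟩))
  have hcF : ∀ f ∈ F, ∀ d, cp f d ∈ F := by
    intro f hf
    induction hf using Submodule.span_induction with
    | mem x hx =>
      intro d
      obtain ⟨y, hy, hx'⟩ := Finset.mem_biUnion.1 (Finset.mem_coe.1 hx)
      obtain ⟨e, he, rfl⟩ := Finset.mem_image.1 hx'
      rw [cp_cp]
      split_ifs
      · exact Submodule.subset_span hx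
      · exact zero_mem _
    | zero => intro d; rw [cp_zero]; exact zero_mem _
    | add x y _ _ hx hy => intro d; rw [cp_add]; exact add_mem (hx d) (hy d)
    | smul a x _ hx =>
      intro d
      rw [Algebra.smul_def, cp_mul]
      refine sum_mem fun d1 _ => sum_mem fun d2 _ => ?_
      split_ifs
      · obtain ⟨a', -, ha'⟩ := cp_algA a d1
        rw [← ha', ← Algebra.smul_def]
        exact Submodule.smul_mem _ _ (hx d2)
      · exact zero_mem _
  let Sd : ℕ × ℕ → Ideal R := fun d =>
    (Subalgebra.toSubmodule (reesBar2 I J)).comap (lsingle (R := R) (S := R) d)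
  -- the elements of a graded piece lying in `F`
  let Fd : ℕ × ℕ → Ideal R := fun d =>
    { carrier := {r | ∃ f ∈ F, (f : Amb2 R) = single d r}
      zero_mem' := ⟨0, zero_mem _, (single_zero d).symm⟩
      add_mem' := by
        rintro r r' ⟨f, hf, h⟩ ⟨f', hf', h'⟩
        exact ⟨f + f', add_mem hf hf', by rw [Subalgebra.coe_add, h, h', single_add]⟩
      smul_mem' := by
        rintro c r ⟨f, hf, h⟩
        refine ⟨algebraMap R (rees2 I J) c • f, Submodule.smul_mem _ _ hf, ?_⟩
        rw [Algebra.smul_def, Subalgebra.coe_mul, h]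
        change single 0 c * single d r = _
        rw [single_mul_single, zero_add]; rfl }
  have hmain : ∀ n : ℕ, ∀ d : ℕ × ℕ, d.1 + d.2 = n → Sd d ≤ Fd d := by
    intro n
    induction n using Nat.strong_induction_on with
    | _ n ih =>
      intro d hd
      have hstep : ∀ x : reesBar2 I J, (x : Amb2 R).coeff d ∈ Fd d ⊔ maximalIdeal R • Sd d := by
        intro x
        have hx : x ∈ (⊤ : Submodule (rees2 I J) (reesBar2 I J)) := trivial
        rw [← hE] at hx
        obtain ⟨f, hf, m, hm, rfl⟩ := Submodule.mem_sup.1 hx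
        refine add_mem (Submodule.mem_sup_left ⟨_, hcF f (hEF hf) d, rfl⟩) ?_
        replace hm : m ∈ (MA I J).map (algebraMap _ (reesBar2 I J)) := hm
        clear hx
        suffices h : ∀ s : reesBar2 I J, ((s * m : reesBar2 I J) : Amb2 R).coeff d ∈
            Fd d ⊔ maximalIdeal R • Sd d by
          have := h 1
          rwa [one_mul] at this
        induction hm using Submodule.span_induction with
        | zero => intro s; rw [mul_zero]; exact zero_mem _
        | add x y _ _ hx hy => intro s; rw [mul_add]; exact add_mem (hx s) (hy s)
        | smul c m hm h =>
          intro s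
          have := h (s * c)
          rwa [mul_assoc] at this
        | mem m hm =>
          intro s
          obtain ⟨m0, hm0, rfl⟩ := hm
          have hm0 : (m0 : Amb2 R).coeff 0 ∈ maximalIdeal R := hm0
          rw [Subalgebra.coe_mul, coeff_mul]
          refine sum_mem fun d1 _ => sum_mem fun d2 _ => ?_
          dsimp only
          split_ifs with h12
          · by_cases h2 : d2 = 0
            · subst h2
              obtain rfl : d1 = d := by simpa using h12
              refine Submodule.mem_sup_right ?_
              rw [mul_comm]
              exact Submodule.smul_mem_smul hm0 (comp_mem s.2 d1)
            · have hlt : d1.1 + d1.2 < n := by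
                rw [← hd, ← h12]
                have : d2.1 ≠ 0 ∨ d2.2 ≠ 0 := by
                  by_contra hcon
                  push Not at hcon
                  exact h2 (Prod.ext hcon.1 hcon.2)
                simp only [Prod.fst_add, Prod.snd_add]
                omega
              obtain ⟨f, hf, hfs⟩ := ih _ hlt d1 rfl (comp_mem s.2 d1)
              obtain ⟨a', -, ha'⟩ := cp_algA m0 d2
              refine Submodule.mem_sup_left ⟨a' • f, Submodule.smul_mem _ _ hf, ?_⟩
              rw [Algebra.smul_def, ha', Subalgebra.coe_mul, hfs, mul_comm]
              change single d1 _ * single d2 _ = _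
              rw [single_mul_single, h12]
          · exact zero_mem _
      have hfg : (Sd d).FG := IsNoetherian.noetherian _
      refine Submodule.le_of_le_smul_of_le_jacobson_bot hfg (jacobson_eq_maximalIdeal ⊥ bot_ne_top).ge ?_
      intro r hr
      have := hstep ⟨single d r, hr⟩
      simpa using this
  refine ⟨⟨E', ?_⟩⟩
  rw [eq_top_iff]
  intro x _
  rw [← sum_cp x]
  refine sum_mem fun d _ => ?_
  obtain ⟨f, hf, h⟩ := hmain _ d rfl (comp_mem x.2 d)
  have : cp x d = f := Subtype.ext h.symm
  rw [this]
  exact hf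

theorem single_nzd {c : R} (hc : c ∈ nonZeroDivisors R) (d : ℕ × ℕ) {x : Amb2 R}
    (h : single d c * x = 0) : x = 0 := by
  ext e
  have := congrArg (fun y : Amb2 R => y.coeff (d + e)) h
  simp only [coeff_zero, Finsupp.coe_zero, Pi.zero_apply] at this
  rw [coeff_single_mul_eq_mul_coeff (m₂ := e) (H := fun m _ => add_right_inj d)] at this
  simpa using (mul_left_mem_nonZeroDivisors_eq_zero_iff hc).1 this

theorem den_mem {a b : R} (ha : a ∈ I) (hb : b ∈ J) {K : ℕ} {x : Amb2 R}
    (hK : ∀ d, x.coeff d ≠ 0 → d.1 ≤ K ∧ d.2 ≤ K) : (a * b) ^ K • x ∈ rees2 I J := by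
  rw [mem_rees2]
  intro d
  rw [coeff_smul_apply, smul_eq_mul]
  by_cases hd : x.coeff d = 0
  · rw [hd, mul_zero]; exact zero_mem _
  · apply Ideal.mul_mem_right
    rw [mul_pow]
    exact Ideal.mul_mem_mul (Ideal.pow_le_pow_right (hK d hd).1 (Ideal.pow_mem_pow ha K))
      (Ideal.pow_le_pow_right (hK d hd).2 (Ideal.pow_mem_pow hb K))

/-- Cohen–Macaulayness at the graded maximal ideal forces the integral closure to be finite over the
Rees ring. -/
theorem S_finite [IsLocalRing R] [IsNoetherianRing R] {a b : R} (ha : a ∈ I) (hb : b ∈ J)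
    (ha0 : a ∈ nonZeroDivisors R) (hb0 : b ∈ nonZeroDivisors R) (hCM : CMAt (MM I J)) :
    Module.Finite (rees2 I J) (reesBar2 I J) := by
  classical
  have : IsNoetherianRing (rees2 I J) := rees2_noeth
  obtain ⟨E, hE⟩ := fin_mod_radical (A := rees2 I J) (S := reesBar2 I J) (M := MM I J)
    (fun P hP h => MM_uniq hP h) MM_le (by
      intro u hu
      refine ⟨algebraMap R _ (k0 u), (not_not.1 hu : IsUnit (k0 u)).map _, ?_⟩
      change k0 (u - algebraMap R (reesBar2 I J) (k0 u)) ∈ maximalIdeal R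
      rw [map_sub, k0_alg, sub_self]
      exact zero_mem _) (by
      intro E
      obtain ⟨K, hK⟩ : ∃ K : ℕ, ∀ e ∈ E, ∀ d, (e : Amb2 R).coeff d ≠ 0 → d.1 ≤ K ∧ d.2 ≤ K := by
        refine ⟨E.sup fun e => (e : Amb2 R).coeff.support.sup fun d => d.1 + d.2, ?_⟩
        intro e he d hd
        have h1 : d.1 + d.2 ≤ (e : Amb2 R).coeff.support.sup fun d => d.1 + d.2 :=
          Finset.le_sup (f := fun d : ℕ × ℕ => d.1 + d.2) (Finsupp.mem_support_iff.2 hd)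
        have h2 := Finset.le_sup (f := fun e : reesBar2 I J =>
          (e : Amb2 R).coeff.support.sup fun d => d.1 + d.2) he
        have h2 := h1.trans h2
        omega
      have ht : (single (1, 0) a : Amb2 R) ∈ rees2 I J := Algebra.subset_adjoin (Or.inl ⟨a, ha, rfl⟩)
      have hc : (a * b) ^ K * a ∈ nonZeroDivisors R := mul_mem (pow_mem (mul_mem ha0 hb0) K) ha0
      let v0 : rees2 I J := (a * b) ^ K • ⟨single (1, 0) a, ht⟩
      have hv0 : (v0 : Amb2 R) = single (1, 0) ((a * b) ^ K * a) := smul_single' _ _ _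
      refine ⟨v0, ?_, ?_, ?_⟩
      · intro y hy
        have h1 : (v0 : Amb2 R) * (y : Amb2 R) = 0 :=
          congrArg (fun z : reesBar2 I J => (z : Amb2 R)) hy
        rw [hv0] at h1
        exact Subtype.ext (single_nzd hc _ h1)
      · change (v0 : Amb2 R).coeff 0 ∈ maximalIdeal R
        rw [hv0, coeff_single, Finsupp.single_apply, if_neg (by simp)]
        exact zero_mem _
      · intro e he
        let q : rees2 I J := ⟨single (1, 0) a, ht⟩ * ⟨_, den_mem ha hb (hK e he)⟩
        refine ⟨q, Subtype.ext ?_⟩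
        change (single (1, 0) a : Amb2 R) * ((a * b) ^ K • (e : Amb2 R)) = (v0 : Amb2 R) * (e : Amb2 R)
        rw [mul_smul_comm, ← smul_mul_assoc]
        rfl) hCM
  exact graded_nak E hE

theorem S_noeth [IsLocalRing R] [IsNoetherianRing R] {a b : R} (ha : a ∈ I) (hb : b ∈ J)
    (ha0 : a ∈ nonZeroDivisors R) (hb0 : b ∈ nonZeroDivisors R) (hCM : CMAt (MM I J)) :
    IsNoetherianRing (reesBar2 I J) := by
  have : IsNoetherianRing (rees2 I J) := rees2_noeth
  have := S_finite ha hb ha0 hb0 hCM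
  exact IsNoetherianRing.of_finite (rees2 I J) (reesBar2 I J)

end Nak
end Cech

/-! ### The diagonal subring -/

namespace Cech
set_option linter.unusedSectionVars false
open AddMonoidAlgebra IsLocalRing nonZeroDivisors

section Reduced
variable {R : Type*} [CommRing R] [IsNoetherianRing R]

theorem reduced_of [IsLocalRing R] (h : AnalyticallyUnramified R) : IsReduced R := by
  have : IsReduced (AdicCompletion (maximalIdeal R) R) := h
  refine isReduced_of_injective (algebraMap R (AdicCompletion (maximalIdeal R) R)) ?_
  exact AdicCompletion.of_injective (maximalIdeal R) R

/-- In a reduced Noetherian ring, an ideal of positive height contains a non-zero-divisor. -/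
theorem exists_nzd [IsReduced R] {K : Ideal R} (h : 0 < idealHeight K) : ∃ a ∈ K, a ∈ R⁰ := by
  classical
  have hfin : (minimalPrimes R).Finite := minimalPrimes.finite_of_isNoetherianRing R
  have hn : ¬ (K : Set R) ⊆ ⋃ P ∈ (hfin.toFinset : Set (Ideal R)), (P : Set R) := by
    intro hs
    obtain ⟨P, hP, hKP⟩ := (Ideal.subset_union_prime (f := fun P : Ideal R => P) ⊥ ⊥ (by
      intro P hP _ _
      exact Ideal.IsMinimalPrime.isPrime (hfin.mem_toFinset.1 hP))).1 hs
    have hPm : P ∈ minimalPrimes R := hfin.mem_toFinset.1 hP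
    have hPp := Ideal.IsMinimalPrime.isPrime hPm
    have h0 : Order.height (⟨P, hPp⟩ : PrimeSpectrum R) = 0 := by
      rw [Order.height_eq_zero]
      intro Q hQ
      exact hPm.2 ⟨Q.2, bot_le⟩ hQ
    have : idealHeight K ≤ 0 := sInf_le ⟨⟨P, hPp⟩, hKP, h0.symm⟩
    exact absurd h (not_lt.2 this)
  obtain ⟨a, ha, hn⟩ := Set.not_subset.1 hn
  refine ⟨a, ha, mem_nonZeroDivisors_iff_right.2 fun b hb => ?_⟩
  have hb' : b ∈ nilradical R := by
    rw [nilradical, ← Ideal.sInf_minimalPrimes, Ideal.mem_sInf]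
    intro P hP
    have hPp := Ideal.IsMinimalPrime.isPrime hP
    refine (hPp.mem_or_mem (x := b) (y := a) (by rw [hb]; exact zero_mem _)).resolve_right fun h => ?_
    exact hn (Set.mem_biUnion (show P ∈ (hfin.toFinset : Set (Ideal R)) from by simpa using hP) h)
  rwa [nilradical_eq_zero] at hb'
end Reduced

section Diag
variable {R : Type*} [CommRing R]

/-- The diagonal embedding `t ↦ t₁ t₂`. -/
noncomputable def dg : Amb1 R →ₐ[R] Amb2 R :=
  mapDomainAlgHom R R ((AddMonoidHom.id ℕ).prod (AddMonoidHom.id ℕ))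

theorem dg_single (n : ℕ) (a : R) : dg (single n a) = single (n, n) a := by
  simp [dg]

theorem dg_coeff (x : Amb1 R) (n m : ℕ) : (dg x).coeff (n, m) = if n = m then x.coeff n else 0 := by
  induction x using AddMonoidAlgebra.induction_linear with
  | zero => simp
  | add f g hf hg =>
    rw [map_add, coeff_add, coeff_add, Finsupp.add_apply, Finsupp.add_apply, hf, hg]; split_ifs <;> simp
  | single d r =>
    rw [dg_single, coeff_single, coeff_single, Finsupp.single_apply, Finsupp.single_apply]
    simp only [Prod.mk.injEq]
    split_ifs <;> first | rfl | omega

theorem dg_inj : Function.Injective (dg (R := R)) := by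
  intro x y h
  ext n
  have := congrArg (fun z : Amb2 R => z.coeff (n, n)) h
  simpa [dg_coeff] using this

/-- The diagonal part. -/
noncomputable def dp (x : Amb2 R) : Amb1 R :=
  ofCoeff (x.coeff.comapDomain (fun n : ℕ => (n, n)) (fun _ _ _ _ h => (Prod.mk.inj h).1))

theorem dp_coeff (x : Amb2 R) (n : ℕ) : (dp x).coeff n = x.coeff (n, n) := rfl

theorem dp_add (x y : Amb2 R) : dp (x + y) = dp x + dp y := by
  ext n; simp [dp_coeff]

theorem dp_zero : dp (0 : Amb2 R) = 0 := by
  ext n; simp [dp_coeff]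

theorem dp_single (n m : ℕ) (a : R) : dp (single (n, m) a) = if n = m then single n a else 0 := by
  ext k
  rw [dp_coeff]
  split_ifs with h
  · subst h; simp only [coeff_single, Finsupp.single_apply, Prod.mk.injEq, and_self]
  · rw [coeff_single, Finsupp.single_apply, if_neg]
    · simp
    · intro h'; simp only [Prod.mk.injEq] at h'; omega

theorem dp_mul (x : Amb2 R) (y : Amb1 R) : dp (x * dg y) = dp x * y := by
  induction x using AddMonoidAlgebra.induction_linear with
  | zero => simp [dp_zero]
  | add f g hf hg => rw [add_mul, dp_add, hf, hg, dp_add, add_mul]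
  | single d r =>
    obtain ⟨n, m⟩ := d
    induction y using AddMonoidAlgebra.induction_linear with
    | zero => simp [dp_zero]
    | add f g hf hg => rw [map_add, mul_add, dp_add, hf, hg, mul_add]
    | single k b =>
      rw [dg_single, single_mul_single, Prod.mk_add_mk, dp_single, dp_single]
      by_cases h : n = m
      · subst h; simp [single_mul_single]
      · rw [if_neg h, if_neg (by omega), zero_mul]

theorem dp_sum {ι : Type*} (s : Finset ι) (f : ι → Amb2 R) : dp (∑ i ∈ s, f i) = ∑ i ∈ s, dp (f i) :=
  map_sum (AddMonoidHom.mk' dp dp_add) f s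

variable {I J : Ideal R}

theorem dg_rees (x : Amb1 R) (hx : x ∈ rees1 (I * J)) : dg x ∈ rees2 I J := by
  change x ∈ (rees2 I J).comap dg
  refine Algebra.adjoin_le ?_ hx
  rintro _ ⟨a, ha, rfl⟩
  change dg _ ∈ rees2 I J
  rw [dg_single, mem_rees2]
  intro d
  rw [coeff_single, Finsupp.single_apply]
  split_ifs with h
  · subst h; simpa using ha
  · exact zero_mem _

theorem dp_rees (x : Amb2 R) (hx : x ∈ rees2 I J) : dp x ∈ rees1 (I * J) := by
  rw [mem_rees2] at hx
  rw [← sum_coeff_single (dp x)]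
  refine sum_mem fun n _ => single_mem_rees1 _ _ ?_
  rw [dp_coeff, mul_pow]
  exact hx (n, n)

theorem dg_bar {x : Amb1 R} (hx : x ∈ reesBar1 (I * J)) : dg x ∈ reesBar2 I J := by
  obtain ⟨p, hp, h⟩ := hx
  let φ : rees1 (I * J) →+* rees2 I J :=
    (dg.comp (rees1 (I * J)).val).toRingHom.codRestrict (rees2 I J) (fun x => dg_rees _ x.2)
  refine ⟨p.map φ, hp.map _, ?_⟩
  rw [Polynomial.eval₂_map]
  have := congrArg dg h
  rw [map_zero] at this
  rw [← this]
  exact (Polynomial.hom_eval₂ p _ dg.toRingHom x).symm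

theorem dg_bar' {x : Amb1 R} (hx : dg x ∈ reesBar2 I J) : x ∈ reesBar1 (I * J) := by
  obtain ⟨p, hp, h⟩ := hx
  let q : Polynomial (rees1 (I * J)) := ∑ i ∈ Finset.range (p.natDegree + 1),
    Polynomial.monomial i (if i = p.natDegree then 1 else ⟨dp (p.coeff i), dp_rees _ (p.coeff i).2⟩)
  refine ⟨q, ?_, ?_⟩
  · refine Polynomial.monic_of_natDegree_le_of_coeff_eq_one p.natDegree ?_ ?_
    · refine Polynomial.natDegree_sum_le_of_forall_le _ _ fun i hi => ?_
      exact (Polynomial.natDegree_monomial_le _).trans (Nat.lt_succ_iff.1 (Finset.mem_range.1 hi))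
    · simp [q, Polynomial.coeff_monomial]
  · rw [Polynomial.eval₂_eq_sum_range] at h
    have h' := congrArg dp h
    rw [dp_zero, dp_sum] at h'
    rw [← h']
    simp only [q, Polynomial.eval₂_finsetSum, Polynomial.eval₂_monomial]
    refine Finset.sum_congr rfl fun i hi => ?_
    rw [← map_pow, dp_mul]
    congr 1
    split_ifs with hi'
    · rw [hi', Polynomial.coeff_natDegree, hp]
      ext n
      rw [dp_coeff, map_one, map_one, one_def, one_def, coeff_single, coeff_single, Finsupp.single_apply,
        Finsupp.single_apply]
      simp [Prod.ext_iff, eq_comm]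
    · rfl

/-- The embedding of `R̄(IJ)` as the diagonal subring. -/
noncomputable def psi : reesBar1 (I * J) →+* reesBar2 I J :=
  (dg.comp (reesBar1 (I * J)).val).toRingHom.codRestrict (reesBar2 I J) (fun x => dg_bar x.2)

theorem psi_inj : Function.Injective (psi (I := I) (J := J)) := fun _ _ h =>
  Subtype.ext (dg_inj (congrArg Subtype.val h))

/-- The weight `r - s`. -/
def wd : ℕ × ℕ →+ ℤ :=
  ((Nat.castAddMonoidHom ℤ).comp (AddMonoidHom.fst ℕ ℕ)) - ((Nat.castAddMonoidHom ℤ).comp (AddMonoidHom.snd ℕ ℕ))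

theorem wd_apply (d : ℕ × ℕ) : wd d = (d.1 : ℤ) - d.2 := rfl

/-- The image of `psi` is the part of degree `r - s = 0`. -/
theorem psi_range (x : reesBar2 I J) : x ∈ gr I J wd 0 ↔ ∃ y, psi y = x := by
  constructor
  · intro hx
    have e : dg (dp (x : Amb2 R)) = x := by
      ext ⟨n, m⟩
      rw [dg_coeff, dp_coeff]
      split_ifs with h
      · rw [h]
      · by_contra hne
        have := hx (n, m) (Ne.symm hne)
        rw [wd_apply] at this
        simp only at this
        omega
    exact ⟨⟨dp x, dg_bar' (by rw [e]; exact x.2)⟩, Subtype.ext e⟩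
  · rintro ⟨y, rfl⟩ ⟨n, m⟩ h
    have h : (dg (y : Amb1 R)).coeff (n, m) ≠ 0 := h
    rw [dg_coeff] at h
    rw [wd_apply]
    split_ifs at h with h'
    · simp [h']
    · exact absurd rfl h
end Diag
end Cech

/-! ### The two coordinate directions -/

namespace Cech
set_option linter.unusedSectionVars false
open AddMonoidAlgebra IsLocalRing nonZeroDivisors

section RowsS
variable {R : Type*} [CommRing R] {I J : Ideal R}

theorem pow_antitone {d d' : ℕ × ℕ} (h : d' ≤ d) : I ^ d.1 * J ^ d.2 ≤ I ^ d'.1 * J ^ d'.2 :=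
  Ideal.mul_mono (Ideal.pow_le_pow_right h.1) (Ideal.pow_le_pow_right h.2)

/-- The filtration `I^r J^s‾` is decreasing. -/
theorem single_down {d d' : ℕ × ℕ} (hd : d' ≤ d) {r : R} (h : single d r ∈ reesBar2 I J) :
    single d' r ∈ reesBar2 I J := by
  obtain ⟨n, γ, hγ, he⟩ := hom_eq h
  choose! c hc using hγ
  have hcm : ∀ i < n, (single ((n - i) • d') (c i) : Amb2 R) ∈ rees2 I J := by
    intro i hi
    have h1 := (mem_rees2 I J).1 (γ i).2 ((n - i) • d)
    rw [hc i hi, coeff_single, Finsupp.single_eq_same] at h1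
    rw [mem_rees2]
    intro e
    rw [coeff_single, Finsupp.single_apply]
    split_ifs with h
    · subst h; exact pow_antitone (nsmul_le_nsmul_right hd _) h1
    · exact zero_mem _
  have hr : r ^ n = - ∑ i ∈ Finset.range n, c i * r ^ i := by
    have := congrArg (fun x : reesBar2 I J => (x : Amb2 R).coeff (n • d)) he
    rw [Subalgebra.coe_pow, Subalgebra.coe_neg, AddSubmonoidClass.coe_finsetSum] at this
    have h2 : ∀ i ∈ Finset.range n, ((algebraMap (rees2 I J) (reesBar2 I J) (γ i) * ⟨single d r, h⟩ ^ i : reesBar2 I J) : Amb2 R) =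
        single (n • d) (c i * r ^ i) := by
      intro i hi
      have hi := Finset.mem_range.1 hi
      rw [Subalgebra.coe_mul, Subalgebra.coe_pow, coe_algA, hc i hi, single_pow, single_mul_single, ← add_smul,
        Nat.sub_add_cancel hi.le]
    rw [Finset.sum_congr rfl h2] at this
    simpa [single_pow, coeff_sum] using this
  have hX : (single d' r : Amb2 R) ^ n + ∑ i ∈ Finset.range n, single ((n - i) • d') (c i) * single d' r ^ i = 0 := by
    have : ∀ i ∈ Finset.range n, (single ((n - i) • d') (c i) : Amb2 R) * single d' r ^ i =
        single (n • d') (c i * r ^ i) := by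
      intro i hi
      have hi := Finset.mem_range.1 hi
      rw [single_pow, single_mul_single, ← add_smul, Nat.sub_add_cancel hi.le]
    have hs : ∀ f : ℕ → R, ∑ i ∈ Finset.range n, (single (n • d') (f i) : Amb2 R) =
        single (n • d') (∑ i ∈ Finset.range n, f i) := fun f =>
      (map_sum (singleAddHom (R := R) (n • d')) f _).symm
    rw [Finset.sum_congr rfl this, hs, single_pow, hr, single_neg, neg_add_cancel]
  let γ' : ℕ → rees2 I J := fun i => if hi : i < n then ⟨_, hcm i hi⟩ else 0
  refine ⟨Polynomial.X ^ n + ∑ i ∈ Finset.range n, Polynomial.monomial i (γ' i), ?_, ?_⟩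
  · refine Polynomial.monic_X_pow_add (Polynomial.mem_degreeLT.1 (sum_mem fun i hi => ?_))
    rw [Polynomial.mem_degreeLT]
    exact lt_of_le_of_lt (Polynomial.degree_monomial_le _ _) (by exact_mod_cast Finset.mem_range.1 hi)
  · rw [Polynomial.eval₂_add, Polynomial.eval₂_X_pow, Polynomial.eval₂_finsetSum, ← hX]
    congr 1
    refine Finset.sum_congr rfl fun i hi => ?_
    rw [Polynomial.eval₂_monomial]
    simp only [γ', dif_pos (Finset.mem_range.1 hi)]
    rfl

/-- One of the two coordinate directions: `u` is the degree in this direction, `v` the corresponding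
unit vector and `K` the corresponding ideal, `I` or `J`. -/
structure Dir (I J K : Ideal R) (u : ℕ × ℕ →+ ℕ) (v : ℕ × ℕ) : Prop where
  one : u v = 1
  le : ∀ e d, e ≤ u d → e • v ≤ d
  ideal : ∀ d, 1 ≤ u d → I ^ d.1 * J ^ d.2 ≤ K * (I ^ (d - v).1 * J ^ (d - v).2)
  mem : K ≤ I ^ v.1 * J ^ v.2

theorem dir_fst : Dir I J I (AddMonoidHom.fst ℕ ℕ) (1, 0) where
  one := rfl
  le e d h := by
    have h : e ≤ d.1 := h
    exact ⟨by simpa using h, by simp⟩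
  ideal d h := by
    have h : 1 ≤ d.1 := h
    obtain ⟨k, hk⟩ := Nat.exists_eq_add_of_le h
    rw [← mul_assoc, hk, pow_add, pow_one]
    simp [hk]
  mem := by simp

theorem dir_snd : Dir I J J (AddMonoidHom.snd ℕ ℕ) (0, 1) where
  one := rfl
  le e d h := by
    have h : e ≤ d.2 := h
    exact ⟨by simp, by simpa using h⟩
  ideal d h := by
    have h : 1 ≤ d.2 := h
    obtain ⟨k, hk⟩ := Nat.exists_eq_add_of_le h
    rw [mul_left_comm, hk, pow_add, pow_one]
    simp [hk]
  mem := by simp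

/-- An integer valued weight from a natural number valued one. -/
def wz (u : ℕ × ℕ →+ ℕ) : ℕ × ℕ →+ ℤ := (Nat.castAddMonoidHom ℤ).comp u

theorem wz_apply (u : ℕ × ℕ →+ ℕ) (d) : wz u d = (u d : ℤ) := rfl

theorem single_mem_S {d : ℕ × ℕ} {a : R} (h : a ∈ I ^ d.1 * J ^ d.2) : single d a ∈ reesBar2 I J := by
  refine rees2_le ((mem_rees2 I J).2 fun e => ?_)
  rw [coeff_single, Finsupp.single_apply]
  split_ifs with h'
  · subst h'; exact h
  · exact zero_mem _

variable {K : Ideal R} {u : ℕ × ℕ →+ ℕ} {v : ℕ × ℕ}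

theorem shift_down (D : Dir I J K u v) {r e : ℕ} {y : reesBar2 I J} (hy : y ∈ gr I J (wz u) ((r + e : ℕ) : ℤ)) :
    ∃ y0 ∈ gr I J (wz u) (r : ℤ), (y : Amb2 R) = single (e • v) 1 * (y0 : Amb2 R) := by
  classical
  refine ⟨∑ d ∈ (y : Amb2 R).coeff.support, ⟨single (d - e • v) ((y : Amb2 R).coeff d),
    single_down tsub_le_self (comp_mem y.2 d)⟩, ?_, ?_⟩
  · refine sum_mem fun d hd => ?_
    have hu : u d = r + e := by
      have := hy d (Finsupp.mem_support_iff.1 hd); rw [wz_apply] at this; exact_mod_cast this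
    have : wz u (d - e • v) = r := by
      have h1 : u (d - e • v) + u (e • v) = u d := by
        rw [← map_add, tsub_add_cancel_of_le (D.le e d (by omega))]
      rw [map_nsmul, D.one, smul_eq_mul, mul_one] at h1
      rw [wz_apply]
      have : u (d - e • v) = r := by omega
      exact_mod_cast this
    rw [← this]
    exact mem_gr_of_single rfl
  · rw [AddSubmonoidClass.coe_finsetSum, Finset.mul_sum]
    conv_lhs => rw [← sum_coeff_single (y : Amb2 R)]
    refine Finset.sum_congr rfl fun d hd => ?_
    have hu : u d = r + e := by
      have := hy d (Finsupp.mem_support_iff.1 hd); rw [wz_apply] at this; exact_mod_cast this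
    rw [single_mul_single, one_mul, add_tsub_cancel_of_le (D.le e d (by omega))]

theorem hom_rad (D : Dir I J K u v) {𝔟 : Ideal (reesBar2 I J)}
    (hK : ∀ k (hk : k ∈ K), (⟨single v k, single_mem_S (D.mem hk)⟩ : reesBar2 I J) ∈ 𝔟)
    {e : ℤ} (he : 0 < e) {x : reesBar2 I J} (hx : x ∈ gr I J (wz u) e) : x ∈ 𝔟.radical := by
  rw [← sum_cp x]
  refine sum_mem fun d hd => ?_
  have hu : 1 ≤ u d := by
    have := hx d (Finsupp.mem_support_iff.1 hd); rw [wz_apply] at this; omega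
  obtain ⟨n, γ, hγ, he⟩ := hom_eq (comp_mem x.2 d)
  refine ⟨n, ?_⟩
  change (⟨single d _, _⟩ : reesBar2 I J) ^ n ∈ 𝔟
  rw [he]
  refine neg_mem (sum_mem fun i hi => Ideal.mul_mem_right _ _ ?_)
  have hi := Finset.mem_range.1 hi
  obtain ⟨c, hc⟩ := hγ i hi
  have h1 := (mem_rees2 I J).1 (γ i).2 ((n - i) • d)
  rw [hc, coeff_single, Finsupp.single_eq_same] at h1
  have hu' : 1 ≤ u ((n - i) • d) := by
    rw [map_nsmul, smul_eq_mul]; exact Nat.mul_pos (by omega) hu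
  have hle := D.le 1 _ hu'
  rw [one_smul] at hle
  have key : ∀ c ∈ K * (I ^ ((n - i) • d - v).1 * J ^ ((n - i) • d - v).2),
      ∃ z ∈ 𝔟, (z : Amb2 R) = single ((n - i) • d) c := by
    intro c hc
    induction hc using Submodule.mul_induction_on' with
    | mem_mul_mem k hk m hm =>
      refine ⟨_, Ideal.mul_mem_right ⟨single ((n - i) • d - v) m, single_mem_S hm⟩ _ (hK k hk), ?_⟩
      change single _ _ * single _ _ = _
      rw [single_mul_single, add_tsub_cancel_of_le hle]
    | add a _ b _ ha hb =>
      obtain ⟨z, hz, e1⟩ := ha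
      obtain ⟨z', hz', e2⟩ := hb
      exact ⟨z + z', add_mem hz hz', by rw [Subalgebra.coe_add, e1, e2, single_add]⟩
  obtain ⟨z, hz, e1⟩ := key c (D.ideal _ hu' h1)
  have : algebraMap (rees2 I J) (reesBar2 I J) (γ i) = z := Subtype.ext (by rw [coe_algA, hc, e1])
  rw [this]; exact hz

variable {L : Type*} [CommRing L] [Algebra (reesBar2 I J) L] [IsFractionRing (reesBar2 I J) L]

theorem nzd_S {x : reesBar2 I J} (h : ∀ y : Amb2 R, (x : Amb2 R) * y = 0 → y = 0) : x ∈ (reesBar2 I J)⁰ :=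
  mem_nonZeroDivisors_iff_left.2 fun y hy => Subtype.ext (h y (congrArg Subtype.val hy))

/-- `rows` for the grading of the bigraded Rees ring by the degree in one direction. -/
theorem rows_S (D : Dir I J K u v) (hS : IsNoetherianRing (reesBar2 I J))
    (hCM : ∀ (P : Ideal (reesBar2 I J)) [P.IsPrime], CMAt P)
    {Φ : List (reesBar2 I J)} (hΦ : ∀ f ∈ Φ, ∃ a ∈ R⁰, (f : Amb2 R) = single v a) (hΦ0 : Φ ≠ [])
    (hK : ∀ k (hk : k ∈ K), (⟨single v k, single_mem_S (D.mem hk)⟩ : reesBar2 I J) ∈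
      spl (Φ.map fun f => (f, (1 : ℤ))))
    (i r : ℤ) (hr : 0 ≤ r) :
    Ex (T0 (UL L (⊥ : Submonoid (reesBar2 I J)))) (fam L (gr I J (wz u))) ⊥
      (ims L (Φ.map fun f => (f, (1 : ℤ)))) i r := by
  have hv : wz u v = 1 := by rw [wz_apply, D.one]; rfl
  refine rows ?_ hCM ?_ (by simpa using hΦ0) ?_ ?_ i r hr
  · intro n hn x hx
    apply Subtype.ext
    ext d
    by_contra hne
    have := hx d hne
    rw [wz_apply] at this
    omega
  · intro p hp
    obtain ⟨f, hf, rfl⟩ := List.mem_map.1 hp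
    obtain ⟨a, ha, e⟩ := hΦ f hf
    refine ⟨rfl, ?_, nzd_S fun y hy => ?_⟩
    · rw [← hv]; exact mem_gr_of_single e
    · dsimp only at hy
      rw [e] at hy; exact single_nzd ha _ hy
  · intro e he x hx
    exact hom_rad D hK he hx
  · intro e he y hy hy0 r hr x hx
    lift e to ℕ using he
    lift r to ℕ using hr
    obtain ⟨z, hz, hzx⟩ := hx
    obtain ⟨y0, hy0', ey⟩ := shift_down D (r := 0) (e := e) (y := y) (by simpa using hy)
    obtain ⟨z0, hz0, ez⟩ := shift_down D (r := r) (e := e) (y := z) (by simpa using hz)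
    have hzx : algebraMap (reesBar2 I J) L z = algebraMap (reesBar2 I J) L y * x := hzx
    refine ⟨y0, hy0', ?_, z0, hz0, ?_⟩
    · refine mem_nonZeroDivisors_iff_left.2 fun s hs => mem_nonZeroDivisors_iff_left.1 hy0 s ?_
      have hs := congrArg Subtype.val hs
      apply Subtype.ext
      rw [Subalgebra.coe_mul, ey, mul_assoc]
      rw [Subalgebra.coe_mul] at hs
      rw [hs]; simp
    · have h1 : y * z0 = y0 * z := by
        apply Subtype.ext
        rw [Subalgebra.coe_mul, Subalgebra.coe_mul, ey, ez]
        ring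
      have hu : IsUnit (algebraMap (reesBar2 I J) L y) := IsLocalization.map_units L ⟨y, hy0⟩
      change algebraMap (reesBar2 I J) L z0 = _
      apply hu.mul_left_cancel
      rw [← map_mul, h1, map_mul, hzx]
      ring
end RowsS
end Cech

/-! ### Change of grading -/

namespace Cech
set_option linter.unusedSectionVars false
open DirectSum nonZeroDivisors

section push
variable {L Γ Γ' : Type*} [AddCommGroup Γ] [AddCommGroup Γ'] [CommRing L]

/-- Compatibility of two lists with a relation between the grading groups. -/
def LRel (ρ : Γ → Γ' → Prop) (l : List (L × Γ)) (l' : List (L × Γ')) : Prop :=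
  (List.Forall₂ (fun p q => p.1 = q.1 ∧ ∀ g g', ρ g g' → ρ (g + p.2) (g' + q.2)) l l' : Prop)

/-- Change of the grading group. -/
theorem C_push {ρ : Γ → Γ' → Prop} {N : Fam L Γ} {N' : Fam L Γ'} (hN : ∀ g g', ρ g g' → N g ≤ N' g')
    {l : List (L × Γ)} {l' : List (L × Γ')} (hl : LRel ρ l l') {g : Γ} {g' : Γ'} (h : ρ g g') {i : ℤ} :
    C N l i g ≤ C N' l' i g' := by
  induction hl generalizing N N' i with
  | nil =>
    intro c; rw [mem_C_nil, mem_C_nil]; split_ifs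
    · exact fun hc => hN _ _ h hc
    · exact id
  | @cons p q l l' hpq hl ih =>
    intro c; rw [mem_C_cons, mem_C_cons]
    refine fun hc => ⟨ih hN hc.1, ih ?_ hc.2⟩
    intro g g' h v hv
    rw [mem_sat] at *
    refine hv.mono fun k hk => ?_
    rw [← hpq.1]
    refine hN _ _ ?_ hk
    clear hk hv
    induction k with
    | zero => simpa using h
    | succ k ihk =>
      rw [succ_nsmul, succ_nsmul, ← add_assoc, ← add_assoc]
      exact hpq.2 _ _ ihk

theorem lrel_map {A : Type*} {ρ : Γ → Γ' → Prop} (f : A → L × Γ) (f' : A → L × Γ') (l : List A)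
    (h : ∀ a ∈ l, (f a).1 = (f' a).1 ∧ ∀ g g', ρ g g' → ρ (g + (f a).2) (g' + (f' a).2)) :
    LRel ρ (l.map f) (l.map f') := by
  induction l with
  | nil => exact List.Forall₂.nil
  | cons a l ih => exact List.Forall₂.cons (h a (by simp)) (ih fun b hb => h b (by simp [hb]))
end push

section sum
variable {L Γ Γ' S : Type*} [CommRing L] [AddCommGroup Γ] [AddCommGroup Γ'] [CommRing S] [Algebra S L]
variable [DecidableEq Γ] [DecidableEq Γ'] {ℬ : Γ → AddSubgroup S} [GradedRing ℬ]
  {𝒜 : Γ' → AddSubgroup S} {π : Γ →+ Γ'}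

theorem entry {N : Fam L Γ'} (hN : ∀ g, ∀ x ∈ N g, ∃ e, ∃ φ ∈ ℬ e, IsUnit (algebraMap S L φ) ∧
      ∃ y ∈ 𝒜 (g + π e), algebraMap S L φ * x = algebraMap S L y)
    {l : List (S × Γ)} (hl : HL L ℬ l) {i : ℤ} {g : Γ'} {z : Co L}
    (hz : z ∈ C N (ims L (l.map fun p => (p.1, π p.2))) i g) (s : List Bool) (hs : s.length = l.length) :
    ∃ e, ∃ φ ∈ ℬ e, IsUnit (algebraMap S L φ) ∧
      ∃ y ∈ 𝒜 (g + π e), algebraMap S L φ * z s = algebraMap S L y := by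
  induction l generalizing N i z s with
  | nil =>
    obtain rfl := List.length_eq_zero_iff.1 hs
    rw [List.map_nil, ims, List.map_nil, mem_C_nil] at hz
    split_ifs at hz
    · exact hN _ _ hz
    · rw [AddSubgroup.mem_bot] at hz
      exact ⟨0, 1, SetLike.GradedOne.one_mem, by simp, 0, zero_mem _, by simp [hz]⟩
  | cons p l ih =>
    rw [List.map_cons, ims, List.map_cons, mem_C_cons] at hz
    match s with
    | false :: s => exact ih hN hl.tail hz.1 s (by simpa using hs)
    | true :: s =>
      refine ih ?_ hl.tail hz.2 s (by simpa using hs)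
      intro g x hx
      obtain ⟨k, hk⟩ := (mem_sat.1 hx).exists
      obtain ⟨e, φ, hφ, hu, y, hy, e1⟩ := hN _ _ hk
      obtain ⟨hp, hpu⟩ := hl p (by simp)
      have hpk : p.1 ^ k ∈ ℬ (k • p.2) := SetLike.pow_mem_graded k hp
      refine ⟨e + k • p.2, φ * p.1 ^ k, SetLike.mul_mem_graded hφ hpk, ?_, y, ?_, ?_⟩
      · rw [map_mul, map_pow]; exact hu.mul (hpu.pow k)
      · rw [map_add, map_nsmul]
        have e2 : g + (π e + k • π p.2) = g + k • π p.2 + π e := by abel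
        rw [e2]; exact hy
      · rw [← e1, map_mul, map_pow, mul_assoc]; rfl

/-- Exactness for a finer grading in all degrees over `0` gives exactness for the coarser grading in
degree `0`. -/
theorem sum_ex (hι : Function.Injective (algebraMap S L)) (hle : ∀ g, ℬ g ≤ 𝒜 (π g))
    (hc : ∀ g', ∀ y ∈ 𝒜 g', ∀ g, π g ≠ g' → cmp ℬ g y = 0)
    {l : List (S × Γ)} (hl : HL L ℬ l) {i : ℤ}
    (h : ∀ g, π g = 0 → Ex (T0 (UL L (⊥ : Submonoid S))) (fam L ℬ) ⊥ (ims L l) i g) :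
    Ex (T0 (UL L (⊥ : Submonoid S))) (fam L 𝒜) ⊥ (ims L (l.map fun p => (p.1, π p.2))) i 0 := by
  classical
  rw [ex_T0]
  intro z hz hdz
  have hl' : ∀ y ∈ ims L (l.map fun p => (p.1, π p.2)), IsUnit y.1 := by
    intro y hy
    simp only [ims, List.map_map, List.mem_map] at hy
    obtain ⟨p, hp, rfl⟩ := hy
    exact (hl p hp).2
  have hlen : (ims L (l.map fun p => (p.1, π p.2))).length = l.length := by simp [ims]
  have hlen' : (ims L l).length = l.length := by simp [ims]
  have hz0 : z ∈ C (cst L Γ (⊤ : Ideal S)) (ims L l) i 0 := by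
    refine C_push (ρ := fun _ _ => True) ?_ ?_ trivial hz
    · rintro g g' - _ ⟨s, _, rfl⟩; exact ⟨s, trivial, rfl⟩
    · simp only [ims, List.map_map]
      exact lrel_map _ _ _ fun a _ => ⟨rfl, fun _ _ _ => trivial⟩
  have key : ∀ g, π g = 0 → ∃ w ∈ C (fam L ℬ) (ims L l) (i - 1) g,
      Rl ℬ l.length g z (d w) := by
    intro g hg
    obtain ⟨b, hb, hR⟩ := exists_part (𝒜 := ℬ) (N0 := cst L Γ (⊤ : Ideal S)) (N := fam L ℬ) fam_gs (by
      rintro g' g x ⟨s, _, rfl⟩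
      exact ⟨algebraMap S L (cmp ℬ g s), ⟨_, cmp_mem ℬ g s, rfl⟩, 0, 1, SetLike.GradedOne.one_mem,
        by simp, s, by simp, by simp⟩) hl g hz0
    have hdb : d b ∈ C ⊥ (ims L l) (i + 1) g := by
      rw [mem_C_bot (ims_unit hl.unit)]
      rw [mem_C_bot hl', hlen] at hdz
      intro s hs
      rw [hlen'] at hs
      have := hR.d s hs
      rw [hdz s hs] at this
      exact this.zero hι
    obtain ⟨_, ⟨u, hu, rfl⟩, w, hw, e⟩ := ex_T0.1 (h g hg) b hb hdb
    obtain rfl : u = 1 := hu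
    refine ⟨w, hw, fun s hs => ?_⟩
    rw [mem_C_bot (ims_unit hl.unit), hlen'] at e
    have e1 := e s hs
    have e2 : d w s = b s := by
      have : b s - d w s = 0 := by simpa using e1
      exact (sub_eq_zero.1 this).symm
    rw [e2]; exact hR s hs
  choose! w hw hwR using key
  have hent := entry (L := L) (ℬ := ℬ) (𝒜 := 𝒜) (π := π) (N := fam L 𝒜) (by
    rintro g _ ⟨x, hx, rfl⟩
    exact ⟨0, 1, SetLike.GradedOne.one_mem, by simp, x, by simpa using hx, by simp⟩) hl hz
  choose! e φ hφ hu y hy hφy using hent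
  let T := (List.finite_length_eq Bool l.length).toFinset
  let F : Finset Γ := (T.biUnion fun s => (decompose ℬ (y s)).support.image (fun γ => γ - e s)).filter fun g => π g = 0
  refine ⟨1, one_mem _, ∑ g ∈ F, w g, sum_mem fun g hg => ?_, ?_⟩
  · have hg0 : π g = 0 := (Finset.mem_filter.1 hg).2
    refine C_push (ρ := fun g g' => π g = g') ?_ ?_ hg0 (hw g hg0)
    · rintro g _ rfl _ ⟨s, hs, rfl⟩; exact ⟨s, hle _ hs, rfl⟩
    · simp only [ims, List.map_map]
      exact lrel_map _ _ _ fun a _ => ⟨rfl, fun g g' h => by rw [← h, map_add]; rfl⟩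
  · rw [mem_C_bot hl', hlen]
    intro s hs
    have hφs := hφy s hs
    apply ((hu s hs).mul_right_eq_zero).1
    have h1 : ∀ g ∈ F, algebraMap S L (φ s) * d (w g) s = algebraMap S L (cmp ℬ (e s + g) (y s)) := by
      intro g hg
      exact (hwR g (Finset.mem_filter.1 hg).2 s hs).mul_fst hι (hφ s hs) hφs
    have h2 : ∑ g ∈ F, cmp ℬ (e s + g) (y s) = y s := by
      apply cmp_ext ℬ
      intro γ
      have h3 : ∀ f : Γ → S, cmp ℬ γ (∑ g ∈ F, f g) = ∑ g ∈ F, cmp ℬ γ (f g) := fun f =>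
        map_sum (AddMonoidHom.mk' (cmp ℬ γ) (cmp_add ℬ γ)) f F
      rw [h3]
      by_cases hγ : γ - e s ∈ F
      · rw [Finset.sum_eq_single (γ - e s)]
        · rw [add_sub_cancel, cmp_same ℬ (cmp_mem _ _ _)]
        · intro b _ hb
          refine cmp_ne ℬ (cmp_mem _ _ _) fun h => hb ?_
          rw [← h]; abel
        · intro h; exact absurd hγ h
      · have h0 : cmp ℬ γ (y s) = 0 := by
          by_contra hne
          apply hγ
          refine Finset.mem_filter.2 ⟨Finset.mem_biUnion.2 ⟨s, by simpa [T] using hs, Finset.mem_image.2 ⟨γ, ?_, rfl⟩⟩, ?_⟩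
          · rw [DFinsupp.mem_support_iff]
            intro h; exact hne (by rw [cmp, h]; rfl)
          · by_contra hπ
            refine hne (hc _ _ (hy s hs) γ ?_)
            rw [map_sub, sub_eq_zero] at hπ
            rwa [zero_add]
        rw [h0]
        refine Finset.sum_eq_zero fun g hg => cmp_ne ℬ (cmp_mem _ _ _) fun h => hγ ?_
        rw [← h, add_sub_cancel_left]; exact hg
    rw [map_sum, one_smul]
    simp only [Pi.sub_apply, Finset.sum_apply]
    rw [mul_sub, hφs, Finset.mul_sum, Finset.sum_congr rfl h1, ← map_sum, h2, sub_self]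

/-- Refinement of a grading. -/
theorem refine_ex (hι : Function.Injective (algebraMap S L)) (hle : ∀ g, ℬ g ≤ 𝒜 (π g))
    {l : List (S × Γ)} (hl : HL L ℬ l) {i : ℤ} {g : Γ}
    (h : Ex (T0 (UL L (⊥ : Submonoid S))) (fam L 𝒜) ⊥ (ims L (l.map fun p => (p.1, π p.2))) i (π g)) :
    Ex (T0 (UL L (⊥ : Submonoid S))) (fam L ℬ) ⊥ (ims L l) i g := by
  have hrel : LRel (fun g g' => π g = g') (ims L l) (ims L (l.map fun p => (p.1, π p.2))) := by
    simp only [ims, List.map_map]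
    exact lrel_map _ _ _ fun a _ => ⟨rfl, fun g g' h => by rw [← h, map_add]; rfl⟩
  have hrel' : LRel (fun _ _ => True) (ims L (l.map fun p => (p.1, π p.2))) (ims L l) := by
    simp only [ims, List.map_map]
    exact lrel_map _ _ _ fun a _ => ⟨rfl, fun _ _ _ => trivial⟩
  rw [ex_T0] at *
  intro z hz hdz
  obtain ⟨_, ⟨u, hu, rfl⟩, w, hw, e⟩ := h z
    (C_push (by rintro g _ rfl _ ⟨s, hs, rfl⟩; exact ⟨s, hle _ hs, rfl⟩) hrel rfl hz)
    (C_push (by rintro g _ _ ; exact bot_le) hrel rfl hdz)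
  obtain rfl : u = 1 := hu
  have hw' : w ∈ C (cst L Γ (⊤ : Ideal S)) (ims L l) (i - 1) 0 :=
    C_push (by rintro g g' - _ ⟨s, _, rfl⟩; exact ⟨s, trivial, rfl⟩) hrel' trivial hw
  have e' : algebraMap S L 1 • z - d w ∈ C ⊥ (ims L l) i (0 : Γ) :=
    C_push (by rintro g _ _ ; exact bot_le) hrel' trivial e
  obtain ⟨w', hw', h'⟩ := proj hι hl hz hw' e' 0
  refine ⟨1, one_mem _, w', by simpa using hw', ?_⟩
  rw [cmp_same ℬ SetLike.GradedOne.one_mem] at h'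
  simpa using h'
end sum
end Cech

/-! ### Vanishing in difference degree zero -/

namespace Cech
set_option linter.unusedSectionVars false
open AddMonoidAlgebra nonZeroDivisors

section RowW
variable {R : Type*} [CommRing R] {I J : Ideal R}

/-- The bigrading, with values in `ℤ × ℤ`. -/
def wb : ℕ × ℕ →+ ℤ × ℤ := (wz (AddMonoidHom.fst ℕ ℕ)).prod (wz (AddMonoidHom.snd ℕ ℕ))

/-- The difference homomorphism. -/
def df : ℤ × ℤ →+ ℤ := AddMonoidHom.fst ℤ ℤ - AddMonoidHom.snd ℤ ℤ

theorem df_apply (g : ℤ × ℤ) : df g = g.1 - g.2 := rfl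
theorem df_wb (d : ℕ × ℕ) : df (wb d) = wd d := rfl

variable {K : Ideal R} {u : ℕ × ℕ →+ ℕ} {v : ℕ × ℕ}
variable {L : Type*} [CommRing L] [Algebra (reesBar2 I J) L] [IsFractionRing (reesBar2 I J) L]

theorem gr_cmp_zero {Γ Γ' : Type*} [AddCommGroup Γ] [DecidableEq Γ] [AddCommGroup Γ'] [DecidableEq Γ']
    {w : ℕ × ℕ →+ Γ} {w' : ℕ × ℕ →+ Γ'} {π : Γ →+ Γ'} (hπ : ∀ d, π (w d) = w' d) (g' : Γ')
    (y : reesBar2 I J) (hy : y ∈ gr I J w' g') (g : Γ) (hg : π g ≠ g') : cmp (gr I J w) g y = 0 := by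
  have h3 : ∀ f : ℕ × ℕ → reesBar2 I J, cmp (gr I J w) g (∑ d ∈ (y : Amb2 R).coeff.support, f d) =
      ∑ d ∈ (y : Amb2 R).coeff.support, cmp (gr I J w) g (f d) := fun f =>
    map_sum (AddMonoidHom.mk' (cmp (gr I J w) g) (cmp_add _ g)) f _
  rw [← sum_cp y, h3]
  refine Finset.sum_eq_zero fun d hd => ?_
  refine cmp_ne _ (mem_gr_of_single (d := d) rfl) fun h => hg ?_
  rw [← h, hπ]
  exact hy d (Finsupp.mem_support_iff.1 hd)

/-- The Čech complex on generators of `K` in bidegree `v` is exact in degree `r - s = 0`: in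
bidegree `(n, n)` with `n ≥ 0` this is `rows_S`, and for `n < 0` all terms vanish. -/
theorem row_w (D : Dir I J K u v) (πu πo : ℤ × ℤ →+ ℤ) (hπu : ∀ d, πu (wb d) = wz u d)
    (hdu : ∀ n, πu (n, n) = n) (hdo : ∀ n, πo (n, n) = n) (hov : πo (wb v) = 0)
    (ho : ∀ d, 0 ≤ πo (wb d)) (hS : IsNoetherianRing (reesBar2 I J))
    (hCM : ∀ (P : Ideal (reesBar2 I J)) [P.IsPrime], CMAt P)
    {Φ : List (reesBar2 I J)} (hΦ : ∀ f ∈ Φ, ∃ a ∈ R⁰, (f : Amb2 R) = single v a) (hΦ0 : Φ ≠ [])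
    (hK : ∀ k (hk : k ∈ K), (⟨single v k, single_mem_S (D.mem hk)⟩ : reesBar2 I J) ∈
      spl (Φ.map fun f => (f, (1 : ℤ)))) (i : ℤ) :
    Ex (T0 (UL L (⊥ : Submonoid (reesBar2 I J)))) (fam L (gr I J wd)) ⊥
      (ims L (Φ.map fun f => (f, wd v))) i 0 := by
  have hι : Function.Injective (algebraMap (reesBar2 I J) L) := IsFractionRing.injective _ _
  have hl : HL L (gr I J wb) (Φ.map fun f => (f, wb v)) := by
    intro p hp
    obtain ⟨f, hf, rfl⟩ := List.mem_map.1 hp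
    obtain ⟨a, ha, e⟩ := hΦ f hf
    refine ⟨mem_gr_of_single e, IsLocalization.map_units L (M := (reesBar2 I J)⁰) ⟨f, nzd_S fun y hy => ?_⟩⟩
    rw [e] at hy; exact single_nzd ha _ hy
  have := sum_ex (L := L) (ℬ := gr I J wb) (𝒜 := gr I J wd) (π := df) hι ?_ (fun g' y hy g hg =>
    gr_cmp_zero df_wb g' y hy g hg) hl (i := i) ?_
  · simpa only [List.map_map, Function.comp_def, df_wb] using this
  · intro g x hx d hd
    rw [← hx d hd, df_wb]
  · rintro ⟨n, m⟩ hg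
    rw [df_apply] at hg
    obtain rfl : n = m := by simpa [sub_eq_zero] using hg
    rcases le_or_gt 0 n with hn | hn
    · refine refine_ex (𝒜 := gr I J (wz u)) (π := πu) hι ?_ hl ?_
      · intro g x hx d hd
        rw [← hx d hd, hπu]
      · have := rows_S (L := L) D hS hCM hΦ hΦ0 hK i n hn
        rw [hdu]
        have h1 : πu (wb v) = 1 := by rw [hπu, wz_apply, D.one]; rfl
        simpa only [List.map_map, Function.comp_def, h1] using this
    · rw [ex_T0]
      intro z hz _
      refine ⟨1, one_mem _, 0, zero_mem _, ?_⟩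
      rw [map_zero, sub_zero, one_smul]
      refine C_push (ρ := fun g _ => πo g < 0) ?_ ?_ ?_ hz
      · rintro g g' h _ ⟨s, hs, rfl⟩
        have : s = 0 := by
          apply Subtype.ext
          ext d
          by_contra hne
          have h1 := hs d hne
          rw [← h1] at h
          exact absurd (ho d) (not_le.2 h)
        rw [this]
        simp
      · simp only [ims, List.map_map]
        refine lrel_map _ _ _ fun a _ => ⟨rfl, fun g g' h => ?_⟩
        change πo (g + wb v) < 0
        rwa [map_add, hov, add_zero]
      · rw [hdo]; exact hn
end RowW
end Cech

/-! ### A Mayer–Vietoris argument -/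

namespace Cech
set_option linter.unusedSectionVars false

section chase
variable {L Γ : Type*} [CommRing L] [AddCommGroup Γ] [DecidableEq Γ]

/-- Cochains vanishing on all strings of length `k`. -/
def Zk (L : Type*) [CommRing L] (k : ℕ) : Submodule L (Co L) where
  carrier := {c | ∀ s : List Bool, s.length = k → c s = 0}
  zero_mem' := fun _ _ => rfl
  add_mem' := fun ha hb s hs => by rw [Pi.add_apply, ha s hs, hb s hs, add_zero]
  smul_mem' := fun r c hc s hs => by rw [Pi.smul_apply, hc s hs, smul_zero]

theorem mem_Zk_succ {k : ℕ} {c : Co L} : c ∈ Zk L (k + 1) ↔ hd false c ∈ Zk L k ∧ hd true c ∈ Zk L k := by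
  constructor
  · intro h
    exact ⟨fun s hs => h (false :: s) (by simp [hs]), fun s hs => h (true :: s) (by simp [hs])⟩
  · rintro ⟨h1, h2⟩ s hs
    match s with
    | false :: s => exact h1 s (by simpa using hs)
    | true :: s => exact h2 s (by simpa using hs)

theorem d_Zk {k : ℕ} {c : Co L} (h : c ∈ Zk L k) : d c ∈ Zk L k := by
  induction k generalizing c with
  | zero =>
    intro s hs
    obtain rfl := List.length_eq_zero_iff.1 hs
    exact d_nil c
  | succ k ih =>
    rw [mem_Zk_succ] at *
    rw [hd_false_d, hd_true_d]
    exact ⟨ih h.1, sub_mem h.1 (ih h.2)⟩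

theorem mem_bot_Zk {l : List (L × Γ)} (hl : ∀ y ∈ l, IsUnit y.1) {i : ℤ} {g : Γ} {c : Co L} :
    c ∈ C (⊥ : Fam L Γ) l i g ↔ c ∈ Zk L l.length := mem_C_bot hl

/-- Exactness, up to multipliers from `V`, of a complex of cochains. -/
def Acy (V : Submonoid L) (k : ℕ) (E : ℤ → AddSubgroup (Co L)) (i : ℤ) : Prop :=
  ∀ z ∈ E i, d z ∈ Zk L k → ∃ u ∈ V, ∃ w ∈ E (i - 1), u • z - d w ∈ Zk L k

theorem ex_iff_acy {V : Submonoid L} {N : Fam L Γ} {l : List (L × Γ)} (hl : ∀ y ∈ l, IsUnit y.1) {i : ℤ} {g : Γ} :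
    Ex (T0 V) N ⊥ l i g ↔ Acy V l.length (fun i => C N l i g) i := by
  rw [ex_T0]
  simp only [mem_bot_Zk hl]
  rfl

/-- The complex with prescribed faces. -/
def cone (E1 E2 : ℤ → AddSubgroup (Co L)) : ℤ → AddSubgroup (Co L) := fun i =>
  (E1 i).comap (hd false).toAddMonoidHom ⊓ (E2 (i - 1)).comap (hd true).toAddMonoidHom

theorem mem_cone {E1 E2 : ℤ → AddSubgroup (Co L)} {i : ℤ} {c : Co L} :
    c ∈ cone E1 E2 i ↔ hd false c ∈ E1 i ∧ hd true c ∈ E2 (i - 1) := Iff.rfl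

theorem acy_cone {V : Submonoid L} {k : ℕ} {E1 E2 : ℤ → AddSubgroup (Co L)} {i : ℤ}
    (hle : ∀ i, E1 i ≤ E2 i) (h1V : ∀ u ∈ V, ∀ i, ∀ c ∈ E1 i, u • c ∈ E1 i) (h2V : ∀ u ∈ V, ∀ i, ∀ c ∈ E2 i, u • c ∈ E2 i)
    (h1 : Acy V k E1 i) (h2 : Acy V k E2 (i - 1)) : Acy V (k + 1) (cone E1 E2) i := by
  rintro z ⟨ha, hb⟩ hz
  change hd false z ∈ E1 i at ha
  change hd true z ∈ E2 (i - 1) at hb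
  rw [mem_Zk_succ, hd_false_d, hd_true_d] at hz
  obtain ⟨u, hu, α, hα, e1⟩ := h1 _ ha hz.1
  obtain ⟨u', hu', β, hβ, e2⟩ := h2 (u • hd true z - α) (sub_mem (h2V u hu _ _ hb) (hle _ hα)) (by
    have : d (u • hd true z - α) = (u • hd false z - d α) - u • (hd false z - d (hd true z)) := by
      rw [map_sub, map_smul]; module
    rw [this]
    exact sub_mem e1 (Submodule.smul_mem _ _ hz.2))
  refine ⟨u' * u, V.mul_mem hu' hu, mk (u' • α) (-β), ⟨h1V _ hu' _ _ hα, neg_mem hβ⟩, ?_⟩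
  rw [mem_Zk_succ]
  simp only [map_sub, map_smul, hd_false_d, hd_true_d, hd_false_mk, hd_true_mk, map_neg]
  constructor
  · have : (u' * u) • hd false z - u' • d α = u' • (u • hd false z - d α) := by module
    rw [this]; exact Submodule.smul_mem _ _ e1
  · have : (u' * u) • hd true z - (u' • α - -d β) = u' • (u • hd true z - α) - d β := by module
    rw [this]; exact e2

variable (g : Γ)

/-- Cochains on `A ++ Λ` whose faces with empty `A`-part vanish. -/
def K0 (Λ : List (L × Γ)) : Fam L Γ → List (L × Γ) → ℤ → AddSubgroup (Co L)
  | _, [] => fun _ => (Zk L Λ.length).toAddSubgroup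
  | M, a :: A => cone (K0 Λ M A) (fun i => C (sat a M) (A ++ Λ) i g)

/-- Cochains on `B ++ A ++ Λ` whose faces with empty `A`-part vanish. -/
def KB (Λ A : List (L × Γ)) : Fam L Γ → List (L × Γ) → ℤ → AddSubgroup (Co L)
  | M, [] => K0 g Λ M A
  | M, b :: B => cone (KB Λ A M B) (KB Λ A (sat b M) B)

variable {g} {Λ A B : List (L × Γ)}

theorem Zk_le_C {Λ : List (L × Γ)} (hΛ : ∀ y ∈ Λ, IsUnit y.1) (N : Fam L Γ) (i : ℤ) {c : Co L}
    (hc : c ∈ Zk L Λ.length) : c ∈ C N Λ i g :=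
  C_mono bot_le _ _ _ ((mem_bot_Zk hΛ).2 hc)

theorem K0_le (hΛ : ∀ y ∈ Λ, IsUnit y.1) {N M : Fam L Γ} (h : N ≤ M) {A : List (L × Γ)} (hA : StL A M) (i : ℤ) :
    K0 g Λ N A i ≤ C M (A ++ Λ) i g := by
  induction A generalizing N M i with
  | nil => exact fun c hc => Zk_le_C hΛ _ _ hc
  | cons a A ih =>
    rintro c ⟨h1, h2⟩
    exact ⟨ih h hA.tail _ h1, C_mono (sat_mono h) _ _ _ h2⟩

theorem K0_mono {N M : Fam L Γ} (h : N ≤ M) (A : List (L × Γ)) (i : ℤ) : K0 g Λ N A i ≤ K0 g Λ M A i := by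
  induction A generalizing N M i with
  | nil => exact le_rfl
  | cons a A ih =>
    rintro c ⟨h1, h2⟩
    exact ⟨ih h _ h1, C_mono (sat_mono h) _ _ _ h2⟩

theorem KB_mono {N M : Fam L Γ} (h : N ≤ M) (B : List (L × Γ)) (i : ℤ) : KB g Λ A N B i ≤ KB g Λ A M B i := by
  induction B generalizing N M i with
  | nil => exact K0_mono h _ _
  | cons a B ih =>
    rintro c ⟨h1, h2⟩
    exact ⟨ih h _ h1, ih (sat_mono h) _ h2⟩

theorem KB_le (hΛ : ∀ y ∈ Λ, IsUnit y.1) {N : Fam L Γ} (hA : StL A N) (i : ℤ) :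
    KB g Λ A N B i ≤ C N (B ++ (A ++ Λ)) i g := by
  induction B generalizing N i with
  | nil => exact K0_le hΛ le_rfl hA i
  | cons b B ih =>
    rintro c ⟨h1, h2⟩
    exact ⟨ih hA _ h1, ih hA.sat _ h2⟩

theorem K0_smul {V : Submonoid L} {N : Fam L Γ} (hV : ∀ u ∈ V, St (u, 0) N) (A : List (L × Γ)) :
    ∀ u ∈ V, ∀ i, ∀ c ∈ K0 g Λ N A i, u • c ∈ K0 g Λ N A i := by
  intro u hu i c hc
  induction A generalizing i c with
  | nil => exact Submodule.smul_mem _ _ hc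
  | cons a A ih => exact ⟨ih _ _ hc.1, C_smul0 (hV u hu).sat hc.2⟩

theorem KB_smul {V : Submonoid L} {N : Fam L Γ} (hV : ∀ u ∈ V, St (u, 0) N) (B : List (L × Γ)) :
    ∀ u ∈ V, ∀ i, ∀ c ∈ KB g Λ A N B i, u • c ∈ KB g Λ A N B i := by
  intro u hu i c hc
  induction B generalizing N i c with
  | nil => exact K0_smul hV A u hu i c hc
  | cons a B ih => exact ⟨ih hV _ _ hc.1, ih (fun u hu => (hV u hu).sat) _ _ hc.2⟩

theorem K0_acy {V : Submonoid L} (hΛ : ∀ y ∈ Λ, IsUnit y.1) {M : Fam L Γ} (hA : ∀ y ∈ A, IsUnit y.1) (hAM : StL A M)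
    (hV : ∀ u ∈ V, St (u, 0) M)
    (h : ∀ a ∈ A, ∀ l : List (L × Γ), (∀ y ∈ l, y ∈ A) → ∀ i, Ex (T0 V) (sat a M) ⊥ (l ++ Λ) i g) (i : ℤ) :
    Acy V (A.length + Λ.length) (K0 g Λ M A) i := by
  induction A generalizing i with
  | nil =>
    intro z hz _
    refine ⟨1, V.one_mem, 0, zero_mem _, ?_⟩
    rw [one_smul, map_zero, sub_zero]
    simpa using (show z ∈ Zk L Λ.length from hz)
  | cons a A ih =>
    have hAl : ∀ y ∈ A ++ Λ, IsUnit y.1 := by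
      intro y hy
      rcases List.mem_append.1 hy with hy | hy
      · exact hA y (by simp [hy])
      · exact hΛ y hy
    have h2 := (ex_iff_acy hAl).1 (h a (by simp) A (fun y hy => by simp [hy]) (i - 1))
    have e : (a :: A).length + Λ.length = (A.length + Λ.length) + 1 := by simp; omega
    rw [e]
    refine acy_cone (fun i => ?_) (K0_smul hV A) (fun u hu i c hc => C_smul0 (hV u hu).sat hc)
      (ih (fun y hy => hA y (by simp [hy])) hAM.tail
        (fun a' ha' l hl i => h a' (by simp [ha']) l (fun y hy => by simp [hl y hy]) i) i) ?_
    · exact K0_le hΛ (le_sat hAM.head) hAM.tail.sat i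
    · rw [List.length_append] at h2; exact h2

/-- A class of families, stable under saturation at `B`, on which the complexes `K0` are exact. -/
structure Cls (g : Γ) (V : Submonoid L) (Λ A B : List (L × Γ)) (X : Set (Fam L Γ)) : Prop where
  stB : ∀ M ∈ X, StL B M
  stV : ∀ M ∈ X, ∀ u ∈ V, St (u, 0) M
  sat : ∀ M ∈ X, ∀ b ∈ B, sat b M ∈ X
  acy : ∀ M ∈ X, ∀ i, Acy V (A.length + Λ.length) (K0 g Λ M A) i

theorem Cls.tail {V : Submonoid L} {b : L × Γ} {X : Set (Fam L Γ)} (h : Cls g V Λ A (b :: B) X) : Cls g V Λ A B X :=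
  ⟨fun M hM => (h.stB M hM).tail, h.stV, fun M hM b hb => h.sat M hM b (by simp [hb]), h.acy⟩

theorem KB_acy {V : Submonoid L} {X : Set (Fam L Γ)} (hX : Cls g V Λ A B X) {M : Fam L Γ} (hM : M ∈ X) (i : ℤ) :
    Acy V (B.length + (A.length + Λ.length)) (KB g Λ A M B) i := by
  induction B generalizing M i with
  | nil => rw [List.length_nil, zero_add]; exact hX.acy M hM i
  | cons b B ih =>
    have e : (b :: B).length + (A.length + Λ.length) = (B.length + (A.length + Λ.length)) + 1 := by
      simp; omega
    rw [e]
    have hs := hX.sat M hM b (by simp)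
    exact acy_cone (KB_mono (le_sat (hX.stB M hM).head) B) (KB_smul (hX.stV M hM) B) (KB_smul (hX.stV _ hs) B)
      (ih hX.tail hM i) (ih hX.tail hs (i - 1))

/-- Restriction to the strings starting with `m` letters `false`. -/
def pf : ℕ → (Co L →ₗ[L] Co L)
  | 0 => LinearMap.id
  | m + 1 => (pf m).comp (hd false)

theorem pf_d (m : ℕ) (c : Co L) : pf m (d c) = d (pf m c) := by
  induction m generalizing c with
  | zero => rfl
  | succ m ih => exact ih (hd false c)

theorem pf_Zk (m k : ℕ) {c : Co L} (h : c ∈ Zk L (m + k)) : pf m c ∈ Zk L k := by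
  induction m generalizing c with
  | zero => rw [zero_add] at h; exact h
  | succ m ih =>
    rw [show m + 1 + k = (m + k) + 1 by omega, mem_Zk_succ] at h
    exact ih h.1

theorem pf_C {N : Fam L Γ} (B l : List (L × Γ)) {i : ℤ} {c : Co L} (h : c ∈ C N (B ++ l) i g) :
    pf B.length c ∈ C N l i g := by
  induction B generalizing c with
  | nil => exact h
  | cons b B ih => exact ih h.1

/-- Apply `f` to the faces obtained by fixing the first `m` letters. -/
def und (f : Co L →ₗ[L] Co L) : ℕ → (Co L →ₗ[L] Co L)
  | 0 => f
  | m + 1 =>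
    { toFun := fun c s => match s with
        | [] => 0
        | b :: s => und f m (hd b c) s
      map_add' := by intro a b; funext s; cases s <;> simp
      map_smul' := by intro a b; funext s; cases s <;> simp }

theorem hd_und (f : Co L →ₗ[L] Co L) (m : ℕ) (b : Bool) (c : Co L) :
    hd b (und f (m + 1) c) = und f m (hd b c) := rfl

theorem und_d {f : Co L →ₗ[L] Co L} (hf : ∀ c, f (d c) = d (f c)) (m : ℕ) (c : Co L) :
    und f m (d c) = d (und f m c) := by
  induction m generalizing c with
  | zero => exact hf c
  | succ m ih =>
    funext s
    match s with
    | [] => rw [d_nil]; rfl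
    | false :: s =>
      change hd false (und f (m + 1) (d c)) s = hd false (d _) s
      rw [hd_und, hd_false_d, hd_false_d, hd_und, ih]
    | true :: s =>
      change hd true (und f (m + 1) (d c)) s = hd true (d _) s
      rw [hd_und, hd_true_d, hd_true_d, hd_und, hd_und, map_sub, ih]

theorem und_Zk {f : Co L →ₗ[L] Co L} {k k' : ℕ} (hf : ∀ c ∈ Zk L k, f c ∈ Zk L k') (m : ℕ) {c : Co L}
    (h : c ∈ Zk L (m + k)) : und f m c ∈ Zk L (m + k') := by
  induction m generalizing c with
  | zero => rw [zero_add] at *; exact hf c h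
  | succ m ih =>
    rw [show ∀ k, m + 1 + k = (m + k) + 1 by intro k; omega, mem_Zk_succ] at *
    exact ⟨ih h.1, ih h.2⟩

theorem und_C {N : Fam L Γ} (B A Λ : List (L × Γ)) {i : ℤ} {c : Co L} (h : c ∈ C N (B ++ (A ++ Λ)) i g) :
    und (pf A.length) B.length c ∈ C N (B ++ Λ) i g := by
  induction B generalizing c N i with
  | nil => exact pf_C A Λ h
  | cons b B ih => exact ⟨ih h.1, ih h.2⟩

theorem pf_und (f : Co L →ₗ[L] Co L) (m : ℕ) (c : Co L) : pf m (und f m c) = f (pf m c) := by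
  induction m generalizing c with
  | zero => rfl
  | succ m ih => exact ih _

theorem pf_K0 {N : Fam L Γ} {i : ℤ} {c : Co L} (h : c ∈ K0 g Λ N A i) : pf A.length c ∈ Zk L Λ.length := by
  induction A generalizing c with
  | nil => exact h
  | cons a A ih => exact ih h.1

theorem mem_K0 {N : Fam L Γ} {i : ℤ} {c : Co L} (h : c ∈ C N (A ++ Λ) i g) (h' : pf A.length c ∈ Zk L Λ.length) :
    c ∈ K0 g Λ N A i := by
  induction A generalizing c with
  | nil => exact h'
  | cons a A ih => exact ⟨ih h.1 h', h.2⟩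

theorem und_KB {N : Fam L Γ} {i : ℤ} {c : Co L} (h : c ∈ KB g Λ A N B i) :
    und (pf A.length) B.length c ∈ Zk L (B.length + Λ.length) := by
  induction B generalizing c N i with
  | nil => rw [List.length_nil, zero_add]; exact pf_K0 h
  | cons b B ih =>
    rw [List.length_cons, show B.length + 1 + Λ.length = (B.length + Λ.length) + 1 by omega, mem_Zk_succ]
    exact ⟨ih h.1, ih h.2⟩

/-- Extension by zero. -/
def ez : ℕ → Co L → Co L
  | 0, z => z
  | n + 1, z => mk (ez n z) 0

theorem pf_ez (n : ℕ) (z : Co L) : pf n (ez n z) = z := by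
  induction n with
  | zero => rfl
  | succ n ih => change pf n (hd false (mk _ _)) = z; rw [hd_false_mk]; exact ih

theorem ez_C {N : Fam L Γ} (A : List (L × Γ)) {i : ℤ} {z : Co L} (h : z ∈ C N Λ i g) :
    ez A.length z ∈ C N (A ++ Λ) i g := by
  induction A with
  | nil => exact h
  | cons a A ih =>
    rw [List.cons_append, mem_C_cons]
    refine ⟨?_, ?_⟩
    · change hd false (mk _ _) ∈ _; rw [hd_false_mk]; exact ih
    · change hd true (mk _ _) ∈ _; rw [hd_true_mk]; exact zero_mem _

/-- Cocycles of `K0` lift to cocycles of `KB`. -/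
theorem lift_KB {V : Submonoid L} {X : Set (Fam L Γ)} (hX : Cls g V Λ A B X) {N : Fam L Γ} (hN : StL B N)
    (hV : ∀ u ∈ V, St (u, 0) N) (hNX : ∀ b ∈ B, sat b N ∈ X) {j : ℤ} {y : Co L} (hy : y ∈ K0 g Λ N A j)
    (hdy : d y ∈ Zk L (A.length + Λ.length)) :
    ∃ u ∈ V, ∃ ξ ∈ KB g Λ A N B j, d ξ ∈ Zk L (B.length + (A.length + Λ.length)) ∧
      pf B.length ξ - u • y ∈ Zk L (A.length + Λ.length) := by
  induction B with
  | nil =>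
    refine ⟨1, V.one_mem, y, hy, by simpa using hdy, ?_⟩
    rw [one_smul]; simp [pf]
  | cons b B ih =>
    obtain ⟨u, hu, ξ, hξ, hdξ, e⟩ := ih hX.tail hN.tail (fun b hb => hNX b (by simp [hb]))
    obtain ⟨u', hu', η, hη, e'⟩ := KB_acy hX.tail (hNX b (by simp)) j ξ (KB_mono (le_sat hN.head) B j hξ) hdξ
    refine ⟨u' * u, V.mul_mem hu' hu, mk (u' • ξ) η, ⟨?_, ?_⟩, ?_, ?_⟩
    · change hd false (mk (u' • ξ) η) ∈ KB g Λ A N B j; rw [hd_false_mk]; exact KB_smul hV B u' hu' _ _ hξ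
    · change hd true (mk (u' • ξ) η) ∈ KB g Λ A (sat b N) B (j - 1); rw [hd_true_mk]; exact hη
    · rw [List.length_cons, show B.length + 1 + (A.length + Λ.length) = (B.length + (A.length + Λ.length)) + 1 by omega,
        mem_Zk_succ, hd_false_d, hd_true_d, hd_false_mk, hd_true_mk, map_smul]
      exact ⟨Submodule.smul_mem _ _ hdξ, e'⟩
    · have : pf (b :: B).length (mk (u' • ξ) η) - (u' * u) • y = u' • (pf B.length ξ - u • y) := by
        change pf B.length (hd false (mk _ _)) - _ = _
        rw [hd_false_mk, map_smul]; module
      rw [this]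
      exact Submodule.smul_mem _ _ e

/-- A Mayer–Vietoris argument: exactness on `A ++ Λ`, `B ++ Λ` and, in one degree more, on `B ++ A ++ Λ` implies
exactness on `Λ`. -/
theorem chase {V : Submonoid L} {X : Set (Fam L Γ)} (hX : Cls g V Λ A B X) {N : Fam L Γ} (hB : StL B N)
    (hA : StL A N) (hL : StL Λ N) (uA : ∀ y ∈ A, IsUnit y.1) (uB : ∀ y ∈ B, IsUnit y.1) (uL : ∀ y ∈ Λ, IsUnit y.1)
    (hV : ∀ u ∈ V, St (u, 0) N) (hNX : ∀ b ∈ B, sat b N ∈ X) {i : ℤ}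
    (h1 : Ex (T0 V) N ⊥ (B ++ (A ++ Λ)) (i + 1) g) (h2 : Ex (T0 V) N ⊥ (A ++ Λ) i g)
    (h3 : Ex (T0 V) N ⊥ (B ++ Λ) i g) : Ex (T0 V) N ⊥ Λ i g := by
  have app : ∀ {l l' : List (L × Γ)}, (∀ y ∈ l, IsUnit y.1) → (∀ y ∈ l', IsUnit y.1) → ∀ y ∈ l ++ l', IsUnit y.1 :=
    fun h h' y hy => (List.mem_append.1 hy).elim (h y) (h' y)
  have app' : ∀ {l l' : List (L × Γ)}, StL l N → StL l' N → StL (l ++ l') N :=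
    fun h h' y hy => (List.mem_append.1 hy).elim (h y) (h' y)
  have uAL := app uA uL
  rw [ex_iff_acy (app uB uAL), List.length_append, List.length_append] at h1
  rw [ex_iff_acy uAL, List.length_append] at h2
  rw [ex_iff_acy (app uB uL), List.length_append] at h3
  rw [ex_iff_acy uL]
  intro z hz hdz
  change z ∈ C N Λ i g at hz
  have hα := ez_C (g := g) A hz
  have hy : d (ez A.length z) ∈ K0 g Λ N A (i + 1) := by
    refine mem_K0 (C_d (app' hA hL) hα) ?_
    rw [pf_d, pf_ez]; exact hdz
  obtain ⟨u0, hu0, ξ, hξ, hdξ, e0⟩ := lift_KB hX hB hV hNX hy (by rw [d_d]; exact zero_mem _)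
  obtain ⟨u1, hu1, γ, hγ, e1⟩ := h1 ξ (KB_le uL hA _ hξ) hdξ
  rw [add_sub_cancel_right] at hγ
  change γ ∈ C N (B ++ (A ++ Λ)) i g at hγ
  have e1' : und (pf A.length) B.length (u1 • ξ - d γ) ∈ Zk L (B.length + Λ.length) :=
    und_Zk (fun c hc => pf_Zk _ _ hc) _ e1
  rw [map_sub, map_smul, und_d (pf_d _)] at e1'
  have e1'' : d (und (pf A.length) B.length γ) ∈ Zk L (B.length + Λ.length) := by
    have := sub_mem (Submodule.smul_mem _ u1 (und_KB hξ)) e1'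
    rwa [sub_sub_cancel] at this
  obtain ⟨u2, hu2, ε, hε, e2⟩ := h3 _ (und_C B A Λ hγ) e1''
  change ε ∈ C N (B ++ Λ) (i - 1) g at hε
  have e3 := pf_Zk _ _ e1
  rw [map_sub, map_smul, pf_d] at e3
  obtain ⟨u3, hu3, η, hη, e4⟩ := h2 (pf B.length γ - (u1 * u0) • ez A.length z)
    (sub_mem (pf_C B _ hγ) (C_smul0 (hV _ (V.mul_mem hu1 hu0)) hα)) (by
      have : d (pf B.length γ - (u1 * u0) • ez A.length z) =
          u1 • (pf B.length ξ - u0 • d (ez A.length z)) - (u1 • pf B.length ξ - d (pf B.length γ)) := by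
        rw [map_sub, map_smul]; module
      rw [this]
      exact sub_mem (Submodule.smul_mem _ _ e0) e3)
  change η ∈ C N (A ++ Λ) (i - 1) g at hη
  have e5 := pf_Zk _ _ e2
  have e6 := pf_Zk _ _ e4
  rw [map_sub, map_smul, pf_d, pf_und] at e5
  rw [map_sub, map_smul, map_sub, map_smul, pf_d, pf_ez] at e6
  refine ⟨u3 * u2 * u1 * u0, V.mul_mem (V.mul_mem (V.mul_mem hu3 hu2) hu1) hu0,
    u3 • pf B.length ε - u2 • pf A.length η,
    sub_mem (C_smul0 (hV _ hu3) (pf_C _ _ hε)) (C_smul0 (hV _ hu2) (pf_C _ _ hη)), ?_⟩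
  have : (u3 * u2 * u1 * u0) • z - d (u3 • pf B.length ε - u2 • pf A.length η) =
      u3 • (u2 • pf A.length (pf B.length γ) - d (pf B.length ε)) -
      u2 • (u3 • (pf A.length (pf B.length γ) - (u1 * u0) • z) - d (pf A.length η)) := by
    rw [map_sub, map_smul, map_smul]; module
  rw [this]
  exact sub_mem (Submodule.smul_mem _ _ e5) (Submodule.smul_mem _ _ e6)
end chase

section
variable {L Γ S : Type*} [CommRing L] [AddCommGroup Γ] [CommRing S] [Algebra S L]
variable [DecidableEq Γ] {𝒜 : Γ → AddSubgroup S} [GradedRing 𝒜]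

/-- The Mayer–Vietoris argument for homogeneous lists, when the ideal generated
by `Λ` contains all products of an element of `A` with one of `B`. -/
theorem chase_gr {V : Submonoid S} (hV : ∀ u ∈ V, u ∈ 𝒜 0) {N : Fam L Γ} (hN : GS 𝒜 N) {A B Λ : List (S × Γ)}
    (hA : HL L 𝒜 A) (hB : HL L 𝒜 B) (hΛ : HL L 𝒜 Λ) (hAB : ∀ a ∈ A, ∀ b ∈ B, a.1 * b.1 ∈ spl Λ) {i : ℤ} {g : Γ}
    (h1 : Ex (T0 (UL L V)) N ⊥ (ims L (B ++ (A ++ Λ))) (i + 1) g)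
    (h2 : Ex (T0 (UL L V)) N ⊥ (ims L (A ++ Λ)) i g)
    (h3 : Ex (T0 (UL L V)) N ⊥ (ims L (B ++ Λ)) i g) : Ex (T0 (UL L V)) N ⊥ (ims L Λ) i g := by
  rw [ims_append, ims_append] at h1
  rw [ims_append] at h2 h3
  let X : Set (Fam L Γ) := {M | GS 𝒜 M ∧ ∃ b ∈ B, sat (im L b) M = M}
  have hX : Cls g (UL L V) (ims L Λ) (ims L A) (ims L B) X := by
    refine ⟨fun M hM => hB.stl hM.1, fun M hM => UL_st hV hM.1, ?_, ?_⟩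
    · rintro M ⟨hM, b, hb, e⟩ y hy
      obtain ⟨b', hb', rfl⟩ := List.mem_map.1 hy
      refine ⟨hM.sat _, b, hb, ?_⟩
      have h1 : St (im L b) M := hM _ _ (hB b hb).1
      have h2 : St (im L b') M := hM _ _ (hB b' hb').1
      rw [sat_comm h1 h2, e]
    · rintro M ⟨hM, b, hb, e⟩ i
      refine K0_acy (ims_unit hΛ.unit) (ims_unit hA.unit) (hA.stl hM) (UL_st hV hM) ?_ i
      intro y hy l hl j
      obtain ⟨a, ha, rfl⟩ := List.mem_map.1 hy
      obtain ⟨l', hl', rfl⟩ : ∃ l', (∀ p ∈ l', p ∈ A) ∧ ims L l' = l := by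
        clear h1 h2 h3
        induction l with
        | nil => exact ⟨[], by simp, rfl⟩
        | cons y l ih =>
          obtain ⟨l', h, e⟩ := ih fun y hy => hl y (by simp [hy])
          obtain ⟨p, hp, e'⟩ := List.mem_map.1 (hl y (by simp))
          exact ⟨p :: l', List.forall_mem_cons.2 ⟨hp, h⟩, by rw [← e, ← e']; rfl⟩
      rw [← ims_append]
      have hl'' : HL L 𝒜 (l' ++ Λ) := HL.append (fun p hp => hA p (hl' p hp)) hΛ
      have hab := SetLike.mul_mem_graded (hA a ha).1 (hB b hb).1
      have uab : IsUnit (algebraMap S L (a.1 * b.1)) := by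
        rw [map_mul]; exact (hA a ha).2.mul (hB b hb).2
      have key := ex_unit hV (hM.sat (im L a)) GS.bot hl'' (f := (a.1 * b.1, a.2 + b.2)) hab uab
        ⟨1, V.one_mem, by
          rw [one_mul]
          exact Ideal.le_radical (spl_mono (fun q hq => List.mem_append_right _ hq) (hAB a ha b hb))⟩ j g
      have uab' : IsUnit (im L (a.1 * b.1, a.2 + b.2) : L × Γ).1 := uab
      rw [sat_bot uab'] at key
      convert key using 1
      refine le_antisymm (le_sat ((hM.sat _) _ _ hab)) ?_
      intro γ x hx
      have stb : St (im L b) (sat (im L a) M) := (hM.sat _) _ _ (hB b hb).1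
      have sta : St (im L a) M := hM _ _ (hA a ha).1
      have ea : sat (im L a) (sat (im L a) M) = sat (im L a) M := sat_idem sta
      have eb : sat (im L b) (sat (im L a) M) = sat (im L a) M := by
        have : St (im L b) M := hM _ _ (hB b hb).1
        rw [sat_comm this sta, e]
      obtain ⟨k, hk⟩ := (mem_sat_iff (show St (im L (a.1 * b.1, a.2 + b.2)) _ from (hM.sat _) _ _ hab)).1 hx
      rw [← eb, mem_sat_iff stb]
      refine ⟨k, ?_⟩
      rw [← ea, mem_sat_iff sta.sat]
      refine ⟨k, ?_⟩
      have e1 : (im L a).1 ^ k * ((im L b).1 ^ k * x) = (im L (a.1 * b.1, a.2 + b.2) : L × Γ).1 ^ k * x := by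
        simp only [im, map_mul]; ring
      have e2 : γ + k • (im L b).2 + k • (im L a).2 = γ + k • (im L (a.1 * b.1, a.2 + b.2) : L × Γ).2 := by
        simp only [im, nsmul_add]; abel
      rw [e1, e2]; exact hk
  exact chase hX (hB.stl hN) (hA.stl hN) (hΛ.stl hN) (ims_unit hA.unit) (ims_unit hB.unit) (ims_unit hΛ.unit)
    (UL_st hV hN) (by
      intro y hy
      obtain ⟨b, hb, rfl⟩ := List.mem_map.1 hy
      exact ⟨hN.sat _, b, hb, sat_idem (hN _ _ (hB b hb).1)⟩) h1 h2 h3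
end
end Cech

/-! ### Primes over the degree zero part -/

namespace Cech
set_option linter.unusedSectionVars false
open DirectSum nonZeroDivisors

section contr
variable {S Δ : Type*} [CommRing S] [CommRing Δ] [Algebra Δ S] {𝒜 : ℤ → AddSubgroup S} [GradedRing 𝒜]

variable (Δ 𝒜) in
/-- `Δ` is the degree zero part of `S`. -/
structure Deg0 : Prop where
  inj : Function.Injective (algebraMap Δ S)
  mem : ∀ x : S, x ∈ 𝒜 0 ↔ ∃ q : Δ, algebraMap Δ S q = x

variable (𝒜) in
/-- The largest homogeneous ideal of `S` lying over an ideal `Q` of the degree zero part. -/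
def PQ (Q : Ideal Δ) : Ideal S where
  carrier := {x | ∀ k : ℤ, ∀ a ∈ 𝒜 (-k), ∃ q ∈ Q, algebraMap Δ S q = a * cmp 𝒜 k x}
  zero_mem' := fun k a _ => ⟨0, Q.zero_mem, by rw [cmp_zero, mul_zero, map_zero]⟩
  add_mem' := by
    intro x y hx hy k a ha
    obtain ⟨q, hq, e⟩ := hx k a ha
    obtain ⟨q', hq', e'⟩ := hy k a ha
    exact ⟨q + q', Q.add_mem hq hq', by rw [map_add, e, e', cmp_add, mul_add]⟩
  smul_mem' := by
    intro s x hx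
    simp only [smul_eq_mul]
    induction s using Decomposition.inductionOn 𝒜 with
    | zero => intro k a _; exact ⟨0, Q.zero_mem, by rw [zero_mul, cmp_zero, mul_zero, map_zero]⟩
    | @homogeneous e s =>
      intro k a ha
      have h1 := SetLike.mul_mem_graded ha s.2
      obtain ⟨q, hq, e1⟩ := hx (k - e) (a * s) (by convert h1 using 2; ring)
      refine ⟨q, hq, ?_⟩
      have h2 := cmp_mul_left 𝒜 s.2 (k - e) x
      rw [show (e : ℤ) + (k - e) = k by ring] at h2
      rw [e1, h2, mul_assoc]
    | add s t hs ht =>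
      intro k a ha
      obtain ⟨q, hq, e⟩ := hs k a ha
      obtain ⟨q', hq', e'⟩ := ht k a ha
      exact ⟨q + q', Q.add_mem hq hq', by rw [map_add, e, e', add_mul, cmp_add, mul_add]⟩


theorem mem_PQ {Q : Ideal Δ} {x : S} :
    x ∈ PQ 𝒜 Q ↔ ∀ k : ℤ, ∀ a ∈ 𝒜 (-k), ∃ q ∈ Q, algebraMap Δ S q = a * cmp 𝒜 k x := Iff.rfl

theorem mem_PQ_hom {Q : Ideal Δ} {k : ℤ} {x : S} (hx : x ∈ 𝒜 k) :
    x ∈ PQ 𝒜 Q ↔ ∀ a ∈ 𝒜 (-k), ∃ q ∈ Q, algebraMap Δ S q = a * x := by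
  constructor
  · intro H a ha
    have := H k a ha
    rwa [cmp_same 𝒜 hx] at this
  · intro H k' a ha
    by_cases e : k = k'
    · subst e; rw [cmp_same 𝒜 hx]; exact H a ha
    · exact ⟨0, Q.zero_mem, by rw [cmp_ne 𝒜 hx e, mul_zero, map_zero]⟩

theorem cmp_mem_PQ {Q : Ideal Δ} {x : S} (hx : x ∈ PQ 𝒜 Q) (k : ℤ) : cmp 𝒜 k x ∈ PQ 𝒜 Q :=
  (mem_PQ_hom (cmp_mem 𝒜 k x)).2 (hx k)

theorem alg_mem_PQ (h : Deg0 Δ 𝒜) {Q : Ideal Δ} {q : Δ} : algebraMap Δ S q ∈ PQ 𝒜 Q ↔ q ∈ Q := by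
  rw [mem_PQ_hom (k := 0) ((h.mem _).2 ⟨q, rfl⟩)]
  constructor
  · intro H
    obtain ⟨q', hq', e⟩ := H 1 (by rw [neg_zero]; exact SetLike.one_mem_graded 𝒜)
    rw [one_mul] at e
    rwa [← h.inj e]
  · intro hq a ha
    rw [neg_zero, h.mem] at ha
    obtain ⟨r, rfl⟩ := ha
    exact ⟨r * q, Q.mul_mem_left _ hq, map_mul _ _ _⟩

theorem PQ_mono {Q Q' : Ideal Δ} (hQ : Q ≤ Q') : PQ 𝒜 Q ≤ PQ 𝒜 Q' := fun _ hx k a ha => by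
  obtain ⟨q, hq, e⟩ := hx k a ha
  exact ⟨q, hQ hq, e⟩

theorem PQ_lt (h : Deg0 Δ 𝒜) {Q Q' : Ideal Δ} (hQ : Q < Q') : PQ 𝒜 Q < PQ 𝒜 Q' := by
  refine lt_of_le_of_ne (PQ_mono hQ.le) fun e => hQ.not_ge fun q hq => ?_
  rw [← alg_mem_PQ h, e, alg_mem_PQ h]; exact hq

theorem PQ_prime (h : Deg0 Δ 𝒜) (Q : Ideal Δ) [hQ : Q.IsPrime] : (PQ 𝒜 Q).IsPrime := by
  refine Ideal.IsHomogeneous.isPrime_of_homogeneous_mem_or_mem (𝒜 := 𝒜) ?_ ?_ ?_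
  · intro i x hx
    exact cmp_mem_PQ hx i
  · rw [Ideal.ne_top_iff_one, ← map_one (algebraMap Δ S), alg_mem_PQ h]
    exact (Ideal.ne_top_iff_one _).1 hQ.ne_top
  · rintro x y ⟨i, hx⟩ ⟨j, hy⟩ hxy
    rw [mem_PQ_hom hx, mem_PQ_hom hy]
    by_contra hcon
    push Not at hcon
    obtain ⟨⟨a, ha, h1⟩, ⟨b, hb, h2⟩⟩ := hcon
    have hax := SetLike.mul_mem_graded ha hx
    have hby := SetLike.mul_mem_graded hb hy
    rw [neg_add_cancel, h.mem] at hax hby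
    obtain ⟨p, hp⟩ := hax
    obtain ⟨q, hq⟩ := hby
    obtain ⟨r, hr, e⟩ := (mem_PQ_hom (SetLike.mul_mem_graded hx hy)).1 hxy (a * b)
      (by convert SetLike.mul_mem_graded ha hb using 2; ring)
    have : r = p * q := h.inj (by rw [e, map_mul, hp, hq]; ring)
    rw [this] at hr
    rcases hQ.mem_or_mem hr with h' | h'
    · exact h1 p h' hp
    · exact h2 q h' hq

theorem cmp0_alg (h : Deg0 Δ 𝒜) (s : S) : ∃ q : Δ, algebraMap Δ S q = cmp 𝒜 0 s := (h.mem _).1 (cmp_mem 𝒜 0 s)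

theorem map_mem (h : Deg0 Δ 𝒜) {𝔞 : Ideal Δ} {q : Δ} (hq : algebraMap Δ S q ∈ 𝔞.map (algebraMap Δ S)) : q ∈ 𝔞 := by
  have : 𝔞.map (algebraMap Δ S) ≤ PQ 𝒜 𝔞 := Ideal.map_le_iff_le_comap.2 fun x hx => (alg_mem_PQ h).2 hx
  exact (alg_mem_PQ h).1 (this hq)

theorem noeth_Δ (h : Deg0 Δ 𝒜) [IsNoetherianRing S] : IsNoetherianRing Δ := by
  have : StrictMono (fun 𝔞 : Ideal Δ => 𝔞.map (algebraMap Δ S)) := by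
    intro 𝔞 𝔟 hab
    refine lt_of_le_of_ne (Ideal.map_mono hab.le) fun e => hab.not_ge fun q hq => ?_
    refine map_mem h ?_
    simp only at e
    rw [e]; exact Ideal.mem_map_of_mem _ hq
  have := this.wellFoundedGT
  exact isNoetherian_iff'.2 this

theorem exists_lt_ht {Q : Ideal Δ} [Q.IsPrime] {n : ℕ} (hn : ((n + 1 : ℕ) : ℕ∞) ≤ Q.height) :
    ∃ Q' : Ideal Δ, Q'.IsPrime ∧ Q' < Q ∧ (n : ℕ∞) ≤ Q'.height := by
  by_contra hcon
  push Not at hcon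
  have : Q.height ≤ n := Ideal.height_le_iff.2 fun Q' hQ' hlt => hcon Q' hQ' hlt
  have := hn.trans this
  exact absurd (Nat.cast_le.1 this) (by omega)

theorem ht_succ {S : Type*} [CommRing S] {P P' : Ideal S} [P.IsPrime] [P'.IsPrime] (hlt : P' < P) {n : ℕ} (hn : (n : ℕ∞) ≤ P'.height) :
    ((n + 1 : ℕ) : ℕ∞) ≤ P.height := by
  have := Ideal.height_add_one_le_of_lt_of_isPrime hlt
  refine le_trans ?_ this
  push_cast
  gcongr

/-- `ht Q ≤ ht PQ`, since `PQ` is strictly monotone. -/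
theorem ht_PQ (h : Deg0 Δ 𝒜) (n : ℕ) (Q : Ideal Δ) [Q.IsPrime] (hn : (n : ℕ∞) ≤ Q.height) : (n : ℕ∞) ≤ (PQ 𝒜 Q).height := by
  induction n generalizing Q with
  | zero => simp
  | succ n ih =>
    obtain ⟨Q', hQ', hlt, hn'⟩ := exists_lt_ht hn
    have := PQ_prime h Q
    have := PQ_prime h Q'
    exact ht_succ (PQ_lt h hlt) (ih Q' hn')
end contr
end Cech

namespace Cech
set_option linter.unusedSectionVars false
open DirectSum nonZeroDivisors

section two
variable {S Δ : Type*} [CommRing S] [CommRing Δ] [Algebra Δ S] {𝒜 : ℤ → AddSubgroup S} [GradedRing 𝒜]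

variable (𝒜) in
/-- `Φ` and `Ψ` are non-zero-divisors of degrees `1` and `-1` generating, up to radical, the ideals spanned by the
elements of positive and of negative degree. -/
structure Two (Φ Ψ : List S) : Prop where
  fdeg : ∀ f ∈ Φ, f ∈ 𝒜 1
  gdeg : ∀ g ∈ Ψ, g ∈ 𝒜 (-1)
  fz : ∀ f ∈ Φ, f ∈ S⁰
  gz : ∀ g ∈ Ψ, g ∈ S⁰
  frad : ∀ k : ℤ, 0 < k → ∀ x ∈ 𝒜 k, x ∈ (Ideal.span {f | f ∈ Φ}).radical
  grad : ∀ k : ℤ, 0 < k → ∀ x ∈ 𝒜 (-k), x ∈ (Ideal.span {g | g ∈ Ψ}).radical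

variable {Φ Ψ : List S}

/-- An ideal contains an element as soon as it contains its homogeneous components. -/
theorem mem_of_cmp {P : Ideal S} {x : S} (H : ∀ k, cmp 𝒜 k x ∈ P) : x ∈ P := by
  classical
  rw [← sum_support_decompose 𝒜 x]
  exact Ideal.sum_mem _ fun k _ => H k

/-- After inverting `f * g`, the ideal `PQ Q` is the extension of `Q`. -/
theorem PQ_le_usat {Q : Ideal Δ} {f g : S} (hf : f ∈ 𝒜 1) (hg : g ∈ 𝒜 (-1)) :
    PQ 𝒜 Q ≤ usat (Submonoid.powers (f * g)) (Q.map (algebraMap Δ S)) := by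
  intro x hx
  refine mem_of_cmp (𝒜 := 𝒜) fun k => ?_
  obtain ⟨n, rfl | rfl⟩ := k.eq_nat_or_neg
  · have hgn : g ^ n ∈ 𝒜 (-(n : ℤ)) := by
      have := SetLike.pow_mem_graded n hg
      simpa using this
    obtain ⟨q, hq, e⟩ := hx _ _ hgn
    refine ⟨_, ⟨n, rfl⟩, ?_⟩
    simp only
    rw [mul_pow, mul_assoc, ← e]
    exact Ideal.mul_mem_left _ _ (Ideal.mem_map_of_mem _ hq)
  · have hfn : f ^ n ∈ 𝒜 (-(-(n : ℤ))) := by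
      have := SetLike.pow_mem_graded n hf
      simpa using this
    obtain ⟨q, hq, e⟩ := hx _ _ hfn
    refine ⟨_, ⟨n, rfl⟩, ?_⟩
    simp only
    rw [mul_comm f g, mul_pow, mul_assoc, ← e]
    exact Ideal.mul_mem_left _ _ (Ideal.mem_map_of_mem _ hq)

/-- Under the Cohen–Macaulay condition, associated primes have height zero. -/
theorem ass_ht [IsNoetherianRing S] {q : Ideal S} [q.IsPrime] (hq : q ∈ associatedPrimes S S) (hCM : CMAt q) : q.height = 0 := by
  obtain ⟨D, x, hD, hx, hreg⟩ := hCM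
  obtain ⟨-, y, hy⟩ := isAssociatedPrime_iff.1 hq
  rcases Nat.eq_zero_or_pos D with rfl | hpos
  · rw [← hD]; rfl
  exfalso
  have hq' : ∀ z, z ∈ q ↔ z * y = 0 := by
    intro z
    rw [hy, Submodule.mem_colon_singleton, smul_eq_mul, Submodule.mem_bot]
  obtain ⟨u, hu, h0⟩ := hreg 0 hpos y (by rw [(hq' _).1 (hx 0 hpos)]; exact zero_mem _)
  rw [ini_zero, Ideal.mem_bot] at h0
  exact hu ((hq' u).2 h0)

/-- A prime of positive height in the degree zero part contains a non-zero-divisor of `S`. -/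
theorem exists_nzd_Q (h : Deg0 Δ 𝒜) [IsNoetherianRing S] (hCM : ∀ (P : Ideal S) [P.IsPrime], CMAt P) {Q : Ideal Δ}
    [Q.IsPrime] (hQ : 1 ≤ Q.height) {f g : S} (hf : f ∈ 𝒜 1) (hg : g ∈ 𝒜 (-1)) (hfz : f ∈ S⁰) (hgz : g ∈ S⁰) :
    ∃ q ∈ Q, algebraMap Δ S q ∈ S⁰ := by
  by_contra hcon
  push Not at hcon
  have hfin : (associatedPrimes S S).Finite := associatedPrimes.finite S S
  have key : (Q : Set Δ) ⊆ ⋃ 𝔮 ∈ (hfin.toFinset : Set (Ideal S)), ((𝔮.comap (algebraMap Δ S) : Ideal Δ) : Set Δ) := by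
    intro q hq
    have h1 := hcon q hq
    have h2 : algebraMap Δ S q ∈ ((S⁰ : Submonoid S) : Set S)ᶜ := h1
    rw [← biUnion_associatedPrimes_eq_compl_nonZeroDivisors] at h2
    simpa using h2
  rw [Ideal.subset_union_prime (⊥ : Ideal S) ⊥ (by
    intro 𝔮 h𝔮 _ _
    have h𝔮' : 𝔮 ∈ associatedPrimes S S := by simpa using h𝔮
    have : 𝔮.IsPrime := IsAssociatedPrime.isPrime h𝔮'
    exact Ideal.IsPrime.comap _)] at key
  obtain ⟨𝔮, h𝔮, hle⟩ := key
  have h𝔮' : 𝔮 ∈ associatedPrimes S S := by simpa using h𝔮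
  have : 𝔮.IsPrime := IsAssociatedPrime.isPrime h𝔮'
  have hP : PQ 𝒜 Q ≤ 𝔮 := by
    intro x hx
    obtain ⟨_, ⟨n, rfl⟩, hn⟩ := PQ_le_usat hf hg hx
    have h1 : (f * g) ^ n * x ∈ 𝔮 := Ideal.map_le_iff_le_comap.2 hle hn
    refine (Ideal.IsPrime.mem_or_mem this h1).resolve_left fun h2 => ?_
    have h3 : f * g ∈ ((S⁰ : Submonoid S) : Set S)ᶜ := by
      rw [← biUnion_associatedPrimes_eq_compl_nonZeroDivisors]
      exact Set.mem_biUnion h𝔮' (Ideal.IsPrime.mem_of_pow_mem this n h2)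
    exact h3 (mul_mem hfz hgz)
  have := PQ_prime h Q
  have h1 := ht_PQ h 1 Q (by simpa using hQ)
  have h2 := h1.trans (Ideal.height_mono hP)
  rw [ass_ht h𝔮' (hCM 𝔮)] at h2
  simp at h2

/-- A finite list of elements of `Q`, non-zero-divisors on `S`, generating `Q`. -/
theorem gens_Q [IsNoetherianRing S] [IsNoetherianRing Δ] {Q : Ideal Δ} (hQ : ∃ q ∈ Q, algebraMap Δ S q ∈ S⁰) :
    ∃ c : List Δ, (∀ q ∈ c, q ∈ Q ∧ algebraMap Δ S q ∈ S⁰) ∧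
      Q.map (algebraMap Δ S) = spl (c.map fun q => (algebraMap Δ S q, (0 : ℤ))) := by
  obtain ⟨p0, hp0, hz⟩ := hQ
  have hle := nzd_gen (algebraMap Δ S) hp0 hz
  obtain ⟨s, hs, e⟩ := (Submodule.fg_span_iff_fg_span_finset_subset (R := Δ)
    {p | p ∈ Q ∧ algebraMap Δ S p ∈ S⁰}).1 (IsNoetherian.noetherian _)
  have hs' : ∀ q ∈ s.toList, q ∈ Q ∧ algebraMap Δ S q ∈ S⁰ := fun q hq => hs (by simpa using hq)
  refine ⟨s.toList, hs', le_antisymm ?_ ?_⟩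
  · refine Ideal.map_le_iff_le_comap.2 (hle.trans ?_)
    change Submodule.span Δ _ ≤ _
    rw [e, Submodule.span_le]
    intro q hq
    exact mem_spl (p := (algebraMap Δ S q, (0 : ℤ))) (List.mem_map.2 ⟨q, by simpa using hq, rfl⟩)
  · rw [spl_le]
    intro p hp
    obtain ⟨q, hq, rfl⟩ := List.mem_map.1 hp
    exact Ideal.mem_map_of_mem _ (hs' q hq).1

/-- An element outside `PQ Q` has a component which some homogeneous element of opposite degree
carries outside `Q`. -/
theorem PQ_compl (h : Deg0 Δ 𝒜) {Q : Ideal Δ} [Q.IsPrime] {u : S} (hu : u ∉ PQ 𝒜 Q) :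
    ∃ δ : ℤ, ∃ a ∈ 𝒜 (-δ), a * cmp 𝒜 δ u ∈ Q.primeCompl.map (algebraMap Δ S) := by
  rw [mem_PQ] at hu
  push Not at hu
  obtain ⟨k, a, ha, H⟩ := hu
  have h0 := SetLike.mul_mem_graded ha (cmp_mem 𝒜 k u)
  rw [neg_add_cancel, h.mem] at h0
  obtain ⟨q, hq⟩ := h0
  exact ⟨k, a, ha, q, fun hqQ => H q hqQ hq, hq⟩

/-- If all products `f * g` lie in `PQ Q`, so do all elements of nonzero degree. -/
theorem all_mem (T : Two 𝒜 Φ Ψ) (h : Deg0 Δ 𝒜) {Q : Ideal Δ} [Q.IsPrime] (H : ∀ f ∈ Φ, ∀ g ∈ Ψ, f * g ∈ PQ 𝒜 Q) {k : ℤ} (hk : k ≠ 0) {x : S} (hx : x ∈ 𝒜 k) :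
    x ∈ PQ 𝒜 Q := by
  have hP := PQ_prime h Q
  have hd0 : ∀ {k : ℤ} {x a : S}, x ∈ 𝒜 k → a ∈ 𝒜 (-k) → a * x ∈ PQ 𝒜 Q → ∃ q ∈ Q, algebraMap Δ S q = a * x := by
    intro k x a hx ha hax
    have h0 := SetLike.mul_mem_graded ha hx
    rw [neg_add_cancel, h.mem] at h0
    obtain ⟨q, hq⟩ := h0
    rw [← hq, alg_mem_PQ h] at hax
    exact ⟨q, hax, hq⟩
  -- if one sign is contained in the prime, so is the other
  have hs : (∀ k : ℤ, 0 < k → ∀ x ∈ 𝒜 k, x ∈ PQ 𝒜 Q) ∨ (∀ k : ℤ, 0 < k → ∀ x ∈ 𝒜 (-k), x ∈ PQ 𝒜 Q) := by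
    by_cases hf : ∀ f ∈ Φ, f ∈ PQ 𝒜 Q
    · exact Or.inl fun k hk x hx => (hP.radical_le_iff.2 (Ideal.span_le.2 hf)) (T.frad k hk x hx)
    · push Not at hf
      obtain ⟨f, hf, hfP⟩ := hf
      refine Or.inr fun k hk x hx => (hP.radical_le_iff.2 (Ideal.span_le.2 fun g hg => ?_)) (T.grad k hk x hx)
      exact (hP.mem_or_mem (H f hf g hg)).resolve_left hfP
  rcases lt_or_gt_of_ne hk with hk | hk <;> rcases hs with hs | hs
  · exact (mem_PQ_hom hx).2 fun a ha => hd0 hx ha (Ideal.mul_mem_right _ _ (hs (-k) (by omega) a ha))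
  · exact hs (-k) (by omega) x (by rwa [neg_neg])
  · exact hs k hk x hx
  · exact (mem_PQ_hom hx).2 fun a ha => hd0 hx ha (Ideal.mul_mem_right _ _ (hs k hk a ha))
end two
end Cech

namespace Cech
set_option linter.unusedSectionVars false
open DirectSum nonZeroDivisors

section ht2
variable {S Δ : Type*} [CommRing S] [CommRing Δ] [Algebra Δ S] {𝒜 : ℤ → AddSubgroup S} [GradedRing 𝒜] {Φ Ψ : List S}

/-- The degree `n` components of the ideal generated by elements of degree `d`. -/
theorem cmp_span_add {s : Set S} {d : ℤ} (hs : ∀ x ∈ s, x ∈ 𝒜 d) {𝔟 : AddSubgroup S} {n : ℤ}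
    (h : ∀ x ∈ s, ∀ t ∈ 𝒜 (n - d), t * x ∈ 𝔟) {y : S} (hy : y ∈ Ideal.span s) : cmp 𝒜 n y ∈ 𝔟 := by
  suffices ∀ t, cmp 𝒜 n (t * y) ∈ 𝔟 by simpa using this 1
  refine Submodule.span_induction (p := fun y _ => ∀ t, cmp 𝒜 n (t * y) ∈ 𝔟) ?_ ?_ ?_ ?_ hy
  · intro x hx t
    have := cmp_mul_right 𝒜 (hs x hx) (n - d) t
    rw [sub_add_cancel] at this
    rw [this]; exact h x hx _ (cmp_mem _ _ _)
  · intro t; rw [mul_zero, cmp_zero]; exact zero_mem _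
  · intro x y _ _ hx hy t
    rw [mul_add, cmp_add]; exact add_mem (hx t) (hy t)
  · intro a x _ hx t
    rw [smul_eq_mul, ← mul_assoc]; exact hx _

/-- The graded pieces of a Noetherian ring are finite over the degree zero part. -/
theorem piece_fg (h : Deg0 Δ 𝒜) [IsNoetherianRing S] (N : ℤ) :
    ∃ (m : ℕ) (e : Fin m → S), (∀ j, e j ∈ 𝒜 N) ∧ ∀ x ∈ 𝒜 N, x ∈ Submodule.span Δ (Set.range e) := by
  obtain ⟨s, hs, hsp⟩ := (Submodule.fg_span_iff_fg_span_finset_subset (R := S)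
    {x | x ∈ 𝒜 N}).1 (IsNoetherian.noetherian _)
  refine ⟨s.card, fun j => s.equivFin.symm j, fun j => hs (s.equivFin.symm j).2, fun x hx => ?_⟩
  have hr : Set.range (fun j => ((s.equivFin.symm j : s) : S)) = s := by
    ext y
    constructor
    · rintro ⟨j, rfl⟩; exact (s.equivFin.symm j).2
    · intro hy; exact ⟨s.equivFin ⟨y, hy⟩, by simp⟩
  rw [hr]
  have hx1 : x ∈ Ideal.span (s : Set S) := by
    change x ∈ Submodule.span S _
    rw [← hsp]; exact Submodule.subset_span hx
  have := cmp_span_add (𝒜 := 𝒜) (d := N) (n := N) (𝔟 := (Submodule.span Δ (s : Set S)).toAddSubgroup)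
    (fun y hy => hs hy) ?_ hx1
  · rwa [cmp_same 𝒜 hx] at this
  · intro y hy t ht
    rw [sub_self, h.mem] at ht
    obtain ⟨q, rfl⟩ := ht
    rw [← Algebra.smul_def]
    exact Submodule.smul_mem _ _ (Submodule.subset_span hy)

/-- When all products `f * g` lie in `Q` but some `f * g` is not in `Q'`, there is a prime strictly between the two
homogeneous primes over `Q'` and `Q`. -/
theorem between (T : Two 𝒜 Φ Ψ) (h : Deg0 Δ 𝒜) [IsNoetherianRing S] {Q Q' : Ideal Δ} [Q.IsPrime] [Q'.IsPrime]
    (hlt : Q' < Q) (H : ∀ f ∈ Φ, ∀ g ∈ Ψ, f * g ∈ PQ 𝒜 Q) {f0 g0 : S} (hf0 : f0 ∈ Φ) (hg0 : g0 ∈ Ψ)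
    (hn : f0 * g0 ∉ PQ 𝒜 Q') : ∃ X : Ideal S, X.IsPrime ∧ PQ 𝒜 Q' < X ∧ X < PQ 𝒜 Q := by
  by_contra hcon
  push Not at hcon
  have hP := PQ_prime h Q
  have hP' := PQ_prime h Q'
  have hf' : f0 ∉ PQ 𝒜 Q' := fun hh => hn (Ideal.mul_mem_right _ _ hh)
  have hg' : g0 ∉ PQ 𝒜 Q' := fun hh => hn (Ideal.mul_mem_left _ _ hh)
  have hrad : ∀ x ∈ PQ 𝒜 Q, x ∈ usat (PQ 𝒜 Q).primeCompl (PQ 𝒜 Q' ⊔ Ideal.span {g0}).radical := by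
    intro x hx
    refine rad_of_unique (I := PQ 𝒜 Q' ⊔ Ideal.span {g0}) (fun X hX hIX hXP => ?_) hx
    by_contra hne
    refine hcon X hX (lt_of_le_of_ne (le_sup_left.trans hIX) ?_) (lt_of_le_of_ne hXP hne)
    rintro rfl
    exact hg' (hIX (Ideal.mem_sup_right (Ideal.mem_span_singleton_self _)))
  -- a single multiplier for a power of the prime
  obtain ⟨u, hu, K, huK⟩ : ∃ u ∉ PQ 𝒜 Q, ∃ K : ℕ, ∀ x ∈ PQ 𝒜 Q ^ K, u * x ∈ PQ 𝒜 Q' ⊔ Ideal.span {g0} := by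
    obtain ⟨m, e, he⟩ := Submodule.fg_iff_exists_fin_generating_family.1 (IsNoetherian.noetherian (PQ 𝒜 Q))
    obtain ⟨u, hu, hue⟩ := usat_single (x := e) (fun i => hrad (e i) (he ▸ Submodule.subset_span ⟨i, rfl⟩))
    have hle : Ideal.span {u} * PQ 𝒜 Q ≤ (PQ 𝒜 Q' ⊔ Ideal.span {g0}).radical := by
      rw [← he]
      change Ideal.span {u} * Ideal.span _ ≤ _
      rw [Ideal.span_mul_span', Ideal.span_le]
      rintro _ ⟨_, rfl, _, ⟨i, rfl⟩, rfl⟩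
      exact hue i
    obtain ⟨K, hK⟩ := Ideal.exists_radical_pow_le_of_fg (PQ 𝒜 Q' ⊔ Ideal.span {g0}) (IsNoetherian.noetherian _)
    refine ⟨u ^ K, fun hh => hu (hP.mem_of_pow_mem K hh), K, fun x hx => hK (Ideal.pow_right_mono hle K ?_)⟩
    rw [mul_pow, Ideal.span_singleton_pow]
    exact Ideal.mul_mem_mul (Ideal.mem_span_singleton_self _) hx
  obtain ⟨K', hK'⟩ := Ideal.exists_radical_pow_le_of_fg (Ideal.span {f | f ∈ Φ}) (IsNoetherian.noetherian _)
  obtain ⟨m, hm⟩ := large_deg (𝒜 := 𝒜)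
  obtain ⟨N, hN1, hN2⟩ : ∃ N : ℕ, ((K * m : ℕ) : ℤ) < N ∧ ((K' * m : ℕ) : ℤ) < (N : ℤ) + 1 :=
    ⟨K * m + K' * m + 1, by push_cast; nlinarith, by push_cast; nlinarith⟩
  have hA1 : ∀ x ∈ 𝒜 (N : ℤ), u * x ∈ PQ 𝒜 Q' ⊔ Ideal.span {g0} := by
    intro x hx
    refine huK x (Ideal.pow_right_mono ?_ K (hm K N hN1 x hx))
    rw [Ideal.span_le]
    rintro y ⟨n, hn, hy⟩
    exact all_mem T h H hn.ne' hy
  have hA2 : ∀ x ∈ 𝒜 ((N : ℤ) + 1), x ∈ Ideal.span {f | f ∈ Φ} := by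
    intro x hx
    refine hK' (Ideal.pow_right_mono ?_ K' (hm K' _ hN2 x hx))
    rw [Ideal.span_le]
    rintro y ⟨n, hn, hy⟩
    exact T.frad n hn y hy
  obtain ⟨r, e, he, hspan⟩ := piece_fg h (N : ℤ)
  have hB : ∀ x ∈ 𝒜 ((N : ℤ) + 1), g0 * x ∈ Q • Submodule.span Δ (Set.range e) := by
    intro x hx
    have := cmp_span_add (𝒜 := 𝒜) (d := 1) (n := (N : ℤ) + 1) (𝔟 := (Q • Submodule.span Δ (Set.range e) :
      Submodule Δ S).toAddSubgroup.comap (AddMonoidHom.mulLeft g0)) (fun y hy => T.fdeg y hy) ?_ (hA2 x hx)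
    · rw [cmp_same 𝒜 hx] at this
      exact this
    · intro f hf t ht
      rw [add_sub_cancel_right] at ht
      change g0 * (t * f) ∈ Q • Submodule.span Δ (Set.range e)
      have h1 := SetLike.mul_mem_graded (T.fdeg f hf) (T.gdeg g0 hg0)
      rw [add_neg_cancel, h.mem] at h1
      obtain ⟨q, hq⟩ := h1
      have h2 := H f hf g0 hg0
      rw [← hq, alg_mem_PQ h] at h2
      rw [show g0 * (t * f) = q • t by rw [Algebra.smul_def, hq]; ring]
      exact Submodule.smul_mem_smul h2 (hspan t ht)
  obtain ⟨τ, hτ⟩ := cmp0_alg h u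
  have hτQ : τ ∉ Q := by
    intro hh
    refine hu (mem_of_cmp (𝒜 := 𝒜) fun k => ?_)
    by_cases hk : k = 0
    · subst hk; rw [← hτ]; exact (alg_mem_PQ h).2 hh
    · exact all_mem T h H hk (cmp_mem 𝒜 k u)
  obtain ⟨τ', hτ', hall⟩ := det_trick (𝔓 := Q) e (𝔟 := PQ 𝒜 Q') hτQ (by
    intro i
    obtain ⟨p, hp, s, hs, hps⟩ := Submodule.mem_sup.1 (hA1 (e i) (he i))
    obtain ⟨s, rfl⟩ := Ideal.mem_span_singleton'.1 hs
    have h1 : cmp 𝒜 N (u * e i) = algebraMap Δ S τ * e i := by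
      have := cmp_mul_right 𝒜 (he i) 0 u
      rwa [zero_add, ← hτ] at this
    have h2 : cmp 𝒜 N (s * g0) = g0 * cmp 𝒜 ((N : ℤ) + 1) s := by
      have := cmp_mul_right 𝒜 (T.gdeg g0 hg0) ((N : ℤ) + 1) s
      rw [add_neg_cancel_right] at this
      rw [this, mul_comm]
    obtain ⟨c, hc, hsum⟩ := (Submodule.mem_ideal_smul_span_iff_exists_sum _ _ _).1 (hB _ (cmp_mem 𝒜 ((N : ℤ) + 1) s))
    refine ⟨c, hc, ?_⟩
    rw [← h1, ← hps, cmp_add, h2, ← hsum, Finsupp.sum_fintype _ _ (by simp)]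
    simp only [Algebra.smul_def, add_sub_cancel_right]
    exact cmp_mem_PQ hp _)
  have hf1 : f0 ^ N ∈ 𝒜 (N : ℤ) := by
    have := SetLike.pow_mem_graded N (T.fdeg f0 hf0)
    simpa using this
  have h3 : algebraMap Δ S τ' * f0 ^ N ∈ PQ 𝒜 Q' := by
    refine Submodule.span_induction (p := fun y _ => algebraMap Δ S τ' * y ∈ PQ 𝒜 Q') ?_ ?_ ?_ ?_ (hspan _ hf1)
    · rintro _ ⟨j, rfl⟩; exact hall j
    · rw [mul_zero]; exact zero_mem _
    · intro x y _ _ hx hy; rw [mul_add]; exact add_mem hx hy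
    · intro a x _ hx
      rw [Algebra.smul_def, mul_left_comm]; exact Ideal.mul_mem_left _ _ hx
  have h4 := (hP'.mem_or_mem h3).resolve_right fun hh => hf' (hP'.mem_of_pow_mem N hh)
  exact hτ' (hlt.le ((alg_mem_PQ h).1 h4))

/-- If all products `f * g` lie in `PQ Q`, then `ht PQ ≥ ht Q + 1`: the height gains one through
`between`. -/
theorem ht_case2 (T : Two 𝒜 Φ Ψ) (h : Deg0 Δ 𝒜) [IsNoetherianRing S] (hΦ : Φ ≠ []) (n : ℕ) (Q : Ideal Δ) [Q.IsPrime]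
    (H : ∀ f ∈ Φ, ∀ g ∈ Ψ, f * g ∈ PQ 𝒜 Q) (hn : (n : ℕ∞) ≤ Q.height) : ((n + 1 : ℕ) : ℕ∞) ≤ (PQ 𝒜 Q).height := by
  induction n generalizing Q with
  | zero =>
    have := PQ_prime h Q
    obtain ⟨f, hf⟩ := List.exists_mem_of_ne_nil _ hΦ
    have := ht_pos_of_nzd (all_mem T h H one_ne_zero (T.fdeg f hf)) (T.fz f hf)
    simpa using this
  | succ n ih =>
    obtain ⟨Q', hQ', hlt, hn'⟩ := exists_lt_ht hn
    have hP := PQ_prime h Q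
    have hP' := PQ_prime h Q'
    by_cases H' : ∀ f ∈ Φ, ∀ g ∈ Ψ, f * g ∈ PQ 𝒜 Q'
    · exact ht_succ (PQ_lt h hlt) (ih Q' H' hn')
    · push Not at H'
      obtain ⟨f, hf, g, hg, hfg⟩ := H'
      obtain ⟨X, hX, h1, h2⟩ := between T h hlt H hf hg hfg
      exact ht_succ h2 (ht_succ h1 (ht_PQ h n Q' hn'))
end ht2
end Cech

/-! ### Descent to the degree zero part -/

namespace Cech
set_option linter.unusedSectionVars false
open DirectSum nonZeroDivisors

section zero
variable {S L Γ : Type*} [CommRing S] [CommRing L] [Algebra S L] [AddCommGroup Γ] [DecidableEq Γ]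
  {𝒜 : Γ → AddSubgroup S} [GradedRing 𝒜]

theorem ex_mono_U {U V : Submonoid S} (hUV : U ≤ V) {N N' : Fam L Γ} {l : List (L × Γ)} {i : ℤ} {g : Γ}
    (h : Ex (T0 (UL L U)) N N' l i g) : Ex (T0 (UL L V)) N N' l i g := by
  rw [ex_T0] at *
  intro z hz hdz
  obtain ⟨_, ⟨u, hu, rfl⟩, w⟩ := h z hz hdz
  exact ⟨_, ⟨u, hUV hu, rfl⟩, w⟩

/-- Exactness in all cohomological degrees survives the addition of elements of degree zero. -/
theorem ex_zero_append {U : Submonoid S} (hU : ∀ u ∈ U, u ∈ 𝒜 0) {N N' : Fam L Γ} (hN : GS 𝒜 N) (hN' : GS 𝒜 N')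
    {l1 l : List (S × Γ)} (h1 : HL L 𝒜 l1) (h0 : ∀ p ∈ l1, p.2 = 0) (h2 : HL L 𝒜 l) {g : Γ}
    (h : ∀ i, Ex (T0 (UL L U)) N N' (ims L l) i g) (i : ℤ) : Ex (T0 (UL L U)) N N' (ims L (l1 ++ l)) i g := by
  induction l1 generalizing i with
  | nil => exact h i
  | cons p l1 ih =>
    have ih := ih h1.tail (fun q hq => h0 q (List.mem_cons_of_mem _ hq))
    have hp := h1 p List.mem_cons_self
    have hz : p.2 = 0 := h0 p List.mem_cons_self
    have hsN : St (im L p) N := hN _ _ hp.1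
    have hsN' : St (im L p) N' := hN' _ _ hp.1
    refine ex_cons0 (l := ims L (l1 ++ l)) hsN hsN' (UL_st hU hN) (UL_st hU hN') (ih i) ?_
    refine ex_sat hp.2 ((h1.tail.append h2).stl hN) ((h1.tail.append h2).stl hN') hsN hsN' fun k => ?_
    change Ex _ _ _ _ _ (g + k • p.2)
    rw [hz, smul_zero, add_zero]
    exact ih _

theorem C_zero {N N' : Fam L Γ} (hN : N 0 ≤ N' 0) {l : List (L × Γ)} (hl : ∀ p ∈ l, p.2 = 0) {i : ℤ} :
    C N l i 0 ≤ C N' l i 0 := by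
  refine C_push (ρ := fun g g' => g = 0 ∧ g' = 0) ?_ ?_ ⟨rfl, rfl⟩
  · rintro _ _ ⟨rfl, rfl⟩; exact hN
  · refine List.forall₂_same.2 fun p hp => ⟨rfl, ?_⟩
    rintro _ _ ⟨rfl, rfl⟩
    rw [hl p hp]; simp
end zero

section main
variable {S Δ L : Type*} [CommRing S] [CommRing Δ] [Algebra Δ S] [CommRing L] [Algebra S L] [Algebra Δ L]
  [IsScalarTower Δ S L] {𝒜 : ℤ → AddSubgroup S} [GradedRing 𝒜] {Φ Ψ : List S}

/-- Exactness in degree zero of a complex on elements of degree zero can be tested on the degree zero part. -/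
theorem transfer (h : Deg0 Δ 𝒜) {Q : Ideal Δ} [Q.IsPrime] {c : List Δ} {i : ℤ}
    (hex : Ex (T0 (UL L (Q.primeCompl.map (algebraMap Δ S)))) (fam L 𝒜) ⊥
      (ims L (c.map fun q => (algebraMap Δ S q, (0 : ℤ)))) i 0) :
    Ex (T0 (UL L Q.primeCompl)) (cst L ℤ (⊤ : Ideal Δ)) ⊥ (ims L (c.map fun q => (q, (0 : ℤ)))) i 0 := by
  have hl : ims L (c.map fun q => (algebraMap Δ S q, (0 : ℤ))) = ims L (c.map fun q => (q, (0 : ℤ))) := by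
    simp only [ims, List.map_map]
    refine List.map_congr_left fun q _ => ?_
    simp only [Function.comp, im, ← IsScalarTower.algebraMap_apply]
  have hz : ∀ p ∈ ims L (c.map fun q => (q, (0 : ℤ))), p.2 = 0 := by
    intro p hp
    simp only [ims, List.map_map, List.mem_map, Function.comp] at hp
    obtain ⟨q, -, rfl⟩ := hp; rfl
  have h1 : cst L ℤ (⊤ : Ideal Δ) 0 ≤ fam L 𝒜 0 := by
    rintro _ ⟨q, -, rfl⟩
    exact ⟨algebraMap Δ S q, (h.mem _).2 ⟨q, rfl⟩, (IsScalarTower.algebraMap_apply Δ S L q).symm⟩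
  have h2 : fam L 𝒜 0 ≤ cst L ℤ (⊤ : Ideal Δ) 0 := by
    rintro _ ⟨s, hs, rfl⟩
    obtain ⟨q, rfl⟩ := (h.mem _).1 hs
    exact ⟨q, trivial, IsScalarTower.algebraMap_apply Δ S L q⟩
  rw [hl, ex_T0] at hex
  rw [ex_T0]
  intro z hz1 hdz
  obtain ⟨_, ⟨_, ⟨u, hu, rfl⟩, rfl⟩, w, hw, hzw⟩ := hex z (C_zero h1 hz hz1) hdz
  refine ⟨algebraMap Δ L u, ⟨u, hu, rfl⟩, w, C_zero h2 hz hw, ?_⟩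
  rw [IsScalarTower.algebraMap_apply Δ S L]
  exact hzw

/-- The Cohen–Macaulay property descends to the degree zero part of a `ℤ`-graded ring, when the local cohomology
modules supported in the elements of positive, respectively negative, degree vanish in degree zero. -/
theorem cm_deg0 (T : Two 𝒜 Φ Ψ) (h : Deg0 Δ 𝒜) [IsNoetherianRing S] (hΦ : Φ ≠ []) (hΨ : Ψ ≠ [])
    (hι : Function.Injective (algebraMap S L)) (hun : ∀ s ∈ S⁰, IsUnit (algebraMap S L s))
    (hCM : ∀ (P : Ideal S) [P.IsPrime], CMAt P)
    (rf : ∀ i, Ex (T0 (UL L (⊥ : Submonoid S))) (fam L 𝒜) ⊥ (ims L (Φ.map fun f => (f, (1 : ℤ)))) i 0)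
    (rg : ∀ i, Ex (T0 (UL L (⊥ : Submonoid S))) (fam L 𝒜) ⊥ (ims L (Ψ.map fun f => (f, (-1 : ℤ)))) i 0)
    (Q : Ideal Δ) [Q.IsPrime] : CMAt Q := by
  have hP := PQ_prime h Q
  have hΔ := noeth_Δ h
  have hιΔ : Function.Injective (algebraMap Δ L) := by
    rw [IsScalarTower.algebraMap_eq Δ S L]; exact hι.comp h.inj
  by_cases hQ : 1 ≤ Q.height
  swap
  · have : Q.height = 0 := by
      by_contra hne; exact hQ (Order.one_le_iff_ne_zero.2 hne)
    exact ⟨0, fun _ => 0, this.symm ▸ rfl, fun k hk => absurd hk (Nat.not_lt_zero _), fun k hk => absurd hk (Nat.not_lt_zero _)⟩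
  obtain ⟨f0, hf0⟩ := List.exists_mem_of_ne_nil _ hΦ
  obtain ⟨g0, hg0⟩ := List.exists_mem_of_ne_nil _ hΨ
  obtain ⟨c, hc, hcs⟩ := gens_Q (exists_nzd_Q h hCM hQ (T.fdeg f0 hf0) (T.gdeg g0 hg0) (T.fz f0 hf0) (T.gz g0 hg0))
  have hΛ : HL L 𝒜 (c.map fun q => (algebraMap Δ S q, (0 : ℤ))) := by
    intro p hp
    obtain ⟨q, hq, rfl⟩ := List.mem_map.1 hp
    exact ⟨(h.mem _).2 ⟨q, rfl⟩, hun _ (hc q hq).2⟩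
  have hV : ∀ u ∈ Q.primeCompl.map (algebraMap Δ S), u ∈ 𝒜 0 := by
    rintro _ ⟨q, -, rfl⟩; exact (h.mem _).2 ⟨q, rfl⟩
  obtain ⟨D, x, hD, hx, hreg⟩ := hCM (PQ 𝒜 Q)
  refine end_lemma (L := L) (Γ := ℤ) (l := c.map fun q => (q, (0 : ℤ))) (g := 0) hιΔ ?_ ?_ fun i hi0 hi => ?_
  · intro p hp
    obtain ⟨q, hq, rfl⟩ := List.mem_map.1 hp
    rw [IsScalarTower.algebraMap_apply Δ S L]; exact hun _ (hc q hq).2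
  · intro p hp
    obtain ⟨q, hq, rfl⟩ := List.mem_map.1 hp
    exact (hc q hq).1
  refine transfer h ?_
  have hiQ : ((i.toNat + 1 : ℕ) : ℕ∞) ≤ Q.height := by
    push_cast; exact Order.add_one_le_of_lt hi
  by_cases H : ∀ f ∈ Φ, ∀ g ∈ Ψ, f * g ∈ PQ 𝒜 Q
  -- `PQ Q` contains everything of nonzero degree and has height at least `ht Q + 1`:
  -- Mayer–Vietoris.
  · have hF : HL L 𝒜 (Φ.map fun f => (f, (1 : ℤ))) := by
      intro p hp
      obtain ⟨q, hq, rfl⟩ := List.mem_map.1 hp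
      exact ⟨T.fdeg q hq, hun _ (T.fz q hq)⟩
    have hG : HL L 𝒜 (Ψ.map fun f => (f, (-1 : ℤ))) := by
      intro p hp
      obtain ⟨q, hq, rfl⟩ := List.mem_map.1 hp
      exact ⟨T.gdeg q hq, hun _ (T.gz q hq)⟩
    have hz : ∀ p ∈ c.map fun q => (algebraMap Δ S q, (0 : ℤ)), p.2 = 0 := by
      intro p hp
      obtain ⟨q, hq, rfl⟩ := List.mem_map.1 hp; rfl
    have hperm : ∀ A : List (S × ℤ), (ims L (A ++ c.map fun q => (algebraMap Δ S q, (0 : ℤ)))).Perm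
        (ims L ((c.map fun q => (algebraMap Δ S q, (0 : ℤ))) ++ A)) := fun A => List.Perm.map _ List.perm_append_comm
    refine chase_gr hV fam_gs hF hG hΛ ?_ ?_ ?_ ?_
    · intro a ha b hb
      obtain ⟨f, hf, rfl⟩ := List.mem_map.1 ha
      obtain ⟨g, hg, rfl⟩ := List.mem_map.1 hb
      have h1 := SetLike.mul_mem_graded (T.fdeg f hf) (T.gdeg g hg)
      rw [add_neg_cancel, h.mem] at h1
      obtain ⟨q, hq⟩ := h1
      have h2 := H f hf g hg
      rw [← hq, alg_mem_PQ h] at h2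
      rw [← hcs]
      change f * g ∈ _
      rw [← hq]
      exact Ideal.mem_map_of_mem _ h2
    · have hall := hG.append (hF.append hΛ)
      have hht := ht_case2 T h hΦ _ Q H hiQ
      rw [← hD] at hht
      have hht : i.toNat + 1 + 1 ≤ D := by exact_mod_cast hht
      refine ex_fam_of_cst hι hall (depth_lemma hι hreg hall.unit (fun k hk => ⟨1, one_mem _, ?_⟩) (i + 1) (by omega) 0)
        fun u hu => PQ_compl h hu
      rw [one_mul]
      refine mem_of_cmp (𝒜 := 𝒜) fun e => ?_
      rcases lt_trichotomy e 0 with he | rfl | he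
      · refine Ideal.radical_mono ?_ (T.grad (-e) (by omega) _ (by rw [neg_neg]; exact cmp_mem 𝒜 e (x k)))
        rw [Ideal.span_le]
        intro g hg
        exact mem_spl (p := (g, (-1 : ℤ))) (List.mem_append_left _ (List.mem_map.2 ⟨g, hg, rfl⟩))
      · refine Ideal.le_radical ?_
        obtain ⟨q, hq, e⟩ := hx k hk 0 1 (by rw [neg_zero]; exact SetLike.one_mem_graded 𝒜)
        rw [one_mul] at e
        rw [← e]
        have := Ideal.mem_map_of_mem (algebraMap Δ S) hq
        rw [hcs] at this
        exact spl_mono (fun p hp => List.mem_append_right _ (List.mem_append_right _ hp)) this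
      · refine Ideal.radical_mono ?_ (T.frad e he _ (cmp_mem 𝒜 e (x k)))
        rw [Ideal.span_le]
        intro f hf
        exact mem_spl (p := (f, (1 : ℤ))) (List.mem_append_right _ (List.mem_append_left _ (List.mem_map.2 ⟨f, hf, rfl⟩)))
    · exact (ex_zero_append hV fam_gs (GS.bot) hΛ hz hF (fun i => ex_mono_U bot_le (rf i)) i).perm (hperm _)
        ((hΛ.append hF).stl fam_gs) ((hΛ.append hF).stl GS.bot)
    · exact (ex_zero_append hV fam_gs (GS.bot) hΛ hz hG (fun i => ex_mono_U bot_le (rg i)) i).perm (hperm _)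
        ((hΛ.append hG).stl fam_gs) ((hΛ.append hG).stl GS.bot)
  -- Some product `f * g` is a unit at `PQ Q`, so `PQ Q` is locally the radical of `Q S`.
  · push Not at H
    obtain ⟨f, hf, g, hg, hfg⟩ := H
    have hht := ht_PQ h _ Q hiQ
    rw [← hD] at hht
    have hht : i.toNat + 1 ≤ D := by exact_mod_cast hht
    refine ex_fam_of_cst hι hΛ (depth_lemma hι hreg hΛ.unit (fun k hk => ?_) i (by omega) 0) fun u hu => PQ_compl h hu
    obtain ⟨_, ⟨n, rfl⟩, hn⟩ := PQ_le_usat (T.fdeg f hf) (T.gdeg g hg) (hx k hk)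
    rw [hcs] at hn
    exact ⟨(f * g) ^ n, fun hh => hfg (hP.mem_of_pow_mem n hh), Ideal.le_radical hn⟩
end main
end Cech

/-! ### Conclusion for `R̄(IJ)` -/

namespace Cech
set_option linter.unusedSectionVars false
open DirectSum nonZeroDivisors AddMonoidAlgebra

section main
variable {S Δ L : Type*} [CommRing S] [CommRing Δ] [CommRing L] [Algebra S L] [IsFractionRing S L] {𝒜 : ℤ → AddSubgroup S} [GradedRing 𝒜] {Φ Ψ : List S}

/-- `cm_deg0` with the degree zero part given by an injective ring homomorphism. -/
theorem cm_deg0_hom (ψ : Δ →+* S) (hψ : Function.Injective ψ) (hψ0 : ∀ x, x ∈ 𝒜 0 ↔ ∃ q, ψ q = x)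
    (T : Two 𝒜 Φ Ψ) [IsNoetherianRing S] (hΦ : Φ ≠ []) (hΨ : Ψ ≠ [])
    (hCM : ∀ (P : Ideal S) [P.IsPrime], CMAt P)
    (rf : ∀ i, Ex (T0 (UL L (⊥ : Submonoid S))) (fam L 𝒜) ⊥
      (ims L (Φ.map fun f => (f, (1 : ℤ)))) i 0)
    (rg : ∀ i, Ex (T0 (UL L (⊥ : Submonoid S))) (fam L 𝒜) ⊥
      (ims L (Ψ.map fun f => (f, (-1 : ℤ)))) i 0)
    (Q : Ideal Δ) [Q.IsPrime] : CMAt Q := by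
  let _ : Algebra Δ S := ψ.toAlgebra
  let _ : Algebra Δ L := ((algebraMap S L).comp ψ).toAlgebra
  have : IsScalarTower Δ S L := IsScalarTower.of_algebraMap_eq' rfl
  exact cm_deg0 (L := L) T ⟨hψ, hψ0⟩ hΦ hΨ (IsFractionRing.injective _ _)
    (fun s hs => IsLocalization.map_units _ (M := S⁰) ⟨s, hs⟩) hCM rf rg Q
end main

section conc
variable {R : Type*} [CommRing R] {I J K : Ideal R} {u : ℕ × ℕ →+ ℕ} {v : ℕ × ℕ}

/-- Elements whose nonzero bigraded components all have positive `u`-degree lie in the radical of every ideal that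
contains `K` in bidegree `v`. -/
theorem rad_wd (D : Dir I J K u v) {𝔟 : Ideal (reesBar2 I J)}
    (hK : ∀ k (hk : k ∈ K), (⟨single v k, single_mem_S (D.mem hk)⟩ : reesBar2 I J) ∈ 𝔟) {k : ℤ}
    (hw : ∀ d, wd d = k → 1 ≤ u d) {x : reesBar2 I J} (hx : x ∈ gr I J wd k) : x ∈ 𝔟.radical := by
  rw [← sum_cp x]
  refine sum_mem fun d hd => hom_rad D hK (e := wz u d) ?_ (mem_gr_of_single rfl)
  have := hw d (hx d (Finsupp.mem_support_iff.1 hd))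
  rw [wz_apply]; omega

/-- A finite list of monomials with non-zero-divisor coefficients generating `K` in bidegree `v`. -/
theorem exists_list [IsNoetherianRing R] (D : Dir I J K u v) (h : ∃ a ∈ K, a ∈ R⁰) :
    ∃ Φ : List (reesBar2 I J), (∀ f ∈ Φ, ∃ a ∈ R⁰, (f : Amb2 R) = single v a) ∧ Φ ≠ [] ∧
      ∀ k (hk : k ∈ K), (⟨single v k, single_mem_S (D.mem hk)⟩ : reesBar2 I J) ∈ Ideal.span {f | f ∈ Φ} := by
  obtain ⟨p0, hp0, hz⟩ := h
  have hle := nzd_gen (RingHom.id R) hp0 hz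
  obtain ⟨s, hs, e⟩ := (Submodule.fg_span_iff_fg_span_finset_subset (R := R)
    {p | p ∈ K ∧ RingHom.id R p ∈ R⁰}).1 (IsNoetherian.noetherian _)
  let m : K → reesBar2 I J := fun k => ⟨single v k.1, single_mem_S (D.mem k.2)⟩
  refine ⟨m ⟨p0, hp0⟩ :: s.attach.toList.map fun p => m ⟨p.1, (hs p.2).1⟩, ?_, by simp, fun k hk => ?_⟩
  · intro f hf
    rcases List.mem_cons.1 hf with rfl | hf
    · exact ⟨p0, hz, rfl⟩
    · obtain ⟨p, -, rfl⟩ := List.mem_map.1 hf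
      exact ⟨p.1, (hs p.2).2, rfl⟩
  · generalize h𝔟 : Ideal.span {f | f ∈ m ⟨p0, hp0⟩ :: s.attach.toList.map fun p => m ⟨p.1, (hs p.2).1⟩} = 𝔟
    have hk' : k ∈ Submodule.span R (s : Set R) := e ▸ hle hk
    obtain ⟨y, hy, hyk⟩ : ∃ y ∈ 𝔟, (y : Amb2 R) = single v k := by
      refine Submodule.span_induction (p := fun k _ => ∃ y ∈ 𝔟, (y : Amb2 R) = single v k) ?_ ?_ ?_ ?_ hk'
      · intro p hp
        refine ⟨m ⟨p, (hs hp).1⟩, ?_, rfl⟩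
        rw [← h𝔟]
        refine Ideal.subset_span (List.mem_cons_of_mem _ (List.mem_map.2 ⟨⟨p, hp⟩, by simp, rfl⟩))
      · exact ⟨0, zero_mem _, by simp⟩
      · rintro a b _ _ ⟨y, hy, h1⟩ ⟨z, hz, h2⟩
        exact ⟨y + z, add_mem hy hz, by rw [Subalgebra.coe_add, h1, h2, single_add]⟩
      · rintro r a _ ⟨y, hy, h1⟩
        refine ⟨r • y, ?_, by rw [Subalgebra.coe_smul, h1, smul_single]⟩
        rw [Algebra.smul_def]; exact Ideal.mul_mem_left _ _ hy
    rwa [show (⟨single v k, single_mem_S (D.mem hk)⟩ : reesBar2 I J) = y from Subtype.ext hyk.symm]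

theorem span_le_spl {S : Type*} [CommRing S] (Φ : List S) :
    Ideal.span {f | f ∈ Φ} ≤ spl (Φ.map fun f => (f, (1 : ℤ))) :=
  Ideal.span_le.2 fun f hf => mem_spl (p := (f, (1 : ℤ))) (List.mem_map.2 ⟨f, hf, rfl⟩)

set_option maxHeartbeats 1000000 in
/-- If `R̄(I,J)` is Cohen–Macaulay at all primes, so is `R̄(IJ)`. -/
theorem conclusion (L : Type*) [CommRing L] [Algebra (reesBar2 I J) L] [IsFractionRing (reesBar2 I J) L] [IsLocalRing R] [IsNoetherianRing R] (hI : ∃ a ∈ I, a ∈ R⁰) (hJ : ∃ a ∈ J, a ∈ R⁰)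
    (hCM : ∀ (P : Ideal (reesBar2 I J)) [P.IsPrime], CMAt P) (Q : Ideal (reesBar1 (I * J))) [Q.IsPrime] : CMAt Q := by
  have hS : IsNoetherianRing (reesBar2 I J) := by
    obtain ⟨a, ha, ha0⟩ := hI
    obtain ⟨b, hb, hb0⟩ := hJ
    exact S_noeth ha hb ha0 hb0 (hCM _)
  have hnzd : ∀ (v : ℕ × ℕ) (f : reesBar2 I J), (∃ a ∈ R⁰, (f : Amb2 R) = single v a) → f ∈ (reesBar2 I J)⁰ := by
    rintro v f ⟨a, ha, e⟩
    refine nzd_S fun y hy => ?_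
    rw [e] at hy; exact single_nzd ha _ hy
  obtain ⟨Φ, hΦ, hΦ0, hΦK⟩ := exists_list (I := I) (J := J) dir_fst hI
  obtain ⟨Ψ, hΨ, hΨ0, hΨK⟩ := exists_list (I := I) (J := J) dir_snd hJ
  have T : Two (gr I J wd) Φ Ψ :=
    { fdeg := fun f hf => by
        obtain ⟨a, -, e⟩ := hΦ f hf
        exact mem_gr_of_single (w := wd) e
      gdeg := fun f hf => by
        obtain ⟨a, -, e⟩ := hΨ f hf
        exact mem_gr_of_single (w := wd) e
      fz := fun f hf => hnzd _ f (hΦ f hf)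
      gz := fun f hf => hnzd _ f (hΨ f hf)
      frad := fun k hk x hx => rad_wd dir_fst hΦK (fun d hd => by
        rw [wd_apply] at hd
        change 1 ≤ d.1
        omega) hx
      grad := fun k hk x hx => rad_wd dir_snd hΨK (fun d hd => by
        rw [wd_apply] at hd
        change 1 ≤ d.2
        omega) hx }
  refine cm_deg0_hom (L := L) psi psi_inj psi_range T hΦ0 hΨ0 hCM ?_ ?_ Q
  · intro i
    have := row_w (L := L) dir_fst (AddMonoidHom.fst ℤ ℤ) (AddMonoidHom.snd ℤ ℤ) (fun _ => rfl) (fun _ => rfl)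
      (fun _ => rfl) rfl (fun d => Int.natCast_nonneg _) hS hCM hΦ hΦ0 (fun k hk => span_le_spl Φ (hΦK k hk)) i
    rwa [show wd (1, 0) = 1 from rfl] at this
  · intro i
    have := row_w (L := L) dir_snd (AddMonoidHom.snd ℤ ℤ) (AddMonoidHom.fst ℤ ℤ) (fun _ => rfl) (fun _ => rfl)
      (fun _ => rfl) rfl (fun d => Int.natCast_nonneg _) hS hCM hΨ hΨ0 (fun k hk => span_le_spl Ψ (hΨK k hk)) i
    rwa [show wd (0, 1) = -1 from rfl] at this
end conc
end Cech

/-- Theorem 5.10.  Let `R` be an analytically unramified Noetherian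
local ring and `I, J` ideals of positive height.  If `\overline{𝓡}(I,J)` is
Cohen-Macaulay then `\overline{𝓡}(IJ)` is Cohen-Macaulay. -/
theorem reesBar_IJ_CM_of_reesBar2_CM
    {R : Type*} [CommRing R] [IsLocalRing R] [IsNoetherianRing R]
    (hur : AnalyticallyUnramified R)
    (I J : Ideal R) (hI : 0 < idealHeight I) (hJ : 0 < idealHeight J)
    (hCM : IsCMRing ↥(reesBar2 I J)) :
    IsCMRing ↥(reesBar1 (I * J)) := by
  have := Cech.reduced_of hur
  intro Q _
  exact Cech.isCM_of_cmAt (Cech.conclusion (FractionRing (reesBar2 I J)) (Cech.exists_nzd hI) (Cech.exists_nzd hJ)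
    (fun P hP => Cech.cmAt_of_isCM (hCM P hP)) Q)
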